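/- Let n ≥ 2 and let (M,g) = (ℝ^n, g) with reference point o be an asymptotically conical Riemannian manifold with opening angle α ∈ (0, π/2) \ {arcsin(1/(2k+1)) : k ∈ ℕ} and asymptotic decay rate μ > 0, and assume the exponential map of (M,g) is proper at every point. Then for every pair of antipodal points a, −a of the ideal boundary ∂_∞M = S^{n−1} there exists a geodesic line Γ : ℝ → M of (M,g) whose ideal boundary is {a, −a} — i.e. Γ(t)/|Γ(t)| → a as t → −∞ and Γ(t)/|Γ(t)| → −a as t → +∞ (after fixing an orientation) — and whose Morse index as a critical point of the energy functional is at most n − 1. -/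

import Mathlib

/-!
Fix a unit vector `a`. In the cone of angle `α`, with `s = sin α`, a geodesic missing the vertex
turns by the angle `π / s` in total, and the condition on `α` says exactly that
`cos (π / (2 s)) ≠ 0`, i.e. that such a geodesic never joins antipodal directions
(`cos_ne_zero_of_angle`). The line is a limit, as `r → ∞`, of geodesics from `r a` to `-r a`.

*Existence for finite `r`* (`sweep_geo`). The broken lines from `r a` to `-r a` through the points
of the ball of radius `r σ` in the hyperplane orthogonal to `a` form an `(n-1)`-parameter family,
whose boundary consists of curves of length less than `2r` by a definite factor
(`sweep_energy`). By Brouwer's theorem (`exists_zero_of_boundary`) every deformation of the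
family relative to its boundary contains a curve through the origin (`exists_poly_zero`), of
length at least about `2r` (`link_bound`). A min-max argument (`minmax`) on the finite-dimensional
spaces of polygons gives almost critical polygons of index at most `n - 1`. Its genericity step
perturbs the energy linearly so that critical points are nondegenerate, and then deforms the family
off the stable manifolds of those of index at least `n`, which have too large codimension to be
met. Refining the polygons yields a geodesic with the same bounds (`minmax_geo`).

*Compactness* (`UGeo.visits`). The geodesic equation has angular momenta that are conserved up to
integrable errors, so far out geodesics follow those of the cone (`UGeo.out_radial`,
`UGeo.turn`). A geodesic of length about `2r` from `r a` to `-r a` that stays far from the origin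
would turn by nearly `π / s`, which is excluded. Hence all these geodesics meet a fixed ball and, with
arc-length parameter starting there, subconverge (`exists_approx`).

*The limit.* The index bound passes to the limit (`IndexProp.limit`). Properness of the exponential
map makes the limit leave every compact set (`IsAsympConical.escape`), and the uniform convergence
rate of directions of outgoing geodesics (`UGeo.out_dir`) identifies its ends (`UGeo.tendsto_dir`).
The identification of solutions of the geodesic equation with metric geodesics rests on
quantitative local minimality (`local_min`).
-/

open scoped RealInnerProductSpace
open Real Set Filter

noncomputable section

/-- Euclidean `n`-space. -/
abbrev En (n : ℕ) : Type := EuclideanSpace ℝ (Fin n)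

/-- A (pointwise) metric tensor on `ℝⁿ`: to each point it assigns a bilinear form,
recorded simply as an `ℝ`-valued function of two tangent vectors (tangent spaces being
identified with `ℝⁿ`). -/
abbrev MetricTensor (n : ℕ) : Type := En n → En n → En n → ℝ

/-- The standard cone metric `g_{C_α^n}` of opening angle `α`, written in Cartesian
coordinates on `ℝⁿ \ {0}`:  `g_{C_α^n} = (1 - sin²α)·dρ⊗dρ + sin²α·(euclidean metric)`,
where `dρ(v) = ⟪v, x/‖x‖⟫`; this is `dρ⊗dρ + ρ² sin²α · g_{S^{n-1}}` in polar
coordinates. -/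
def coneMetric (n : ℕ) (α : ℝ) : MetricTensor n := fun x v w =>
  (1 - Real.sin α ^ 2) * (⟪v, x⟫ * ⟪w, x⟫ / ‖x‖ ^ 2) + Real.sin α ^ 2 * ⟪v, w⟫

variable {n : ℕ}

/-- Length of a curve on `[a,b]` with respect to a metric tensor. -/
def clen (G : MetricTensor n) (γ : ℝ → En n) (a b : ℝ) : ℝ :=
  ∫ t in a..b, Real.sqrt (G (γ t) (deriv γ t) (deriv γ t))

/-- Energy of a curve on `[a,b]` with respect to a metric tensor. -/
def cenergy (G : MetricTensor n) (γ : ℝ → En n) (a b : ℝ) : ℝ :=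
  ∫ t in a..b, G (γ t) (deriv γ t) (deriv γ t)

/-- The Riemannian (length) distance induced by a metric tensor:
the infimum of lengths of `C¹` curves joining the two points. -/
def rdist (G : MetricTensor n) (x y : En n) : ℝ :=
  sInf {L : ℝ | ∃ γ : ℝ → En n, ContDiff ℝ 1 γ ∧ γ 0 = x ∧ γ 1 = y ∧ L = clen G γ 0 1}

/-- The intrinsic (induced length) distance of the subset `S` for the metric tensor `G`:
the infimum of lengths of `C¹` curves joining the two points inside `S`. -/
def rdistIn (G : MetricTensor n) (S : Set (En n)) (x y : En n) : ℝ :=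
  sInf {L : ℝ | ∃ γ : ℝ → En n, ContDiff ℝ 1 γ ∧ (∀ t ∈ Set.Icc (0:ℝ) 1, γ t ∈ S) ∧
    γ 0 = x ∧ γ 1 = y ∧ L = clen G γ 0 1}

/-- `γ`, restricted to the parameter set `I`, is a geodesic of the distance `d` with
constant speed `c`: locally it is a homothety of factor `c` (for `c = 1` this is a local
isometry, i.e. the arc-length parametrisation). -/
def IsGeodesicOn (d : En n → En n → ℝ) (γ : ℝ → En n) (c : ℝ) (I : Set ℝ) : Prop :=
  ∀ t ∈ I, ∃ δ > 0, ∀ s ∈ I, ∀ u ∈ I, |s - t| < δ → |u - t| < δ →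
    d (γ s) (γ u) = c * |s - u|

/-- A length-minimising geodesic segment from `p` to `q`, parametrised on `[0,1]`
with constant speed `d p q`. -/
def IsMinSeg (d : En n → En n → ℝ) (γ : ℝ → En n) (p q : En n) : Prop :=
  γ 0 = p ∧ γ 1 = q ∧
    ∀ s ∈ Set.Icc (0:ℝ) 1, ∀ u ∈ Set.Icc (0:ℝ) 1, d (γ s) (γ u) = d p q * |s - u|

/-- The distance of the standard cone `C_α^n`. -/
def coneDist (n : ℕ) (α : ℝ) : En n → En n → ℝ := rdist (coneMetric n α)

/-- `(ℝⁿ, g)` is an asymptotically conical `C²` Riemannian manifold with opening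
angle `α` and asymptotic decay rate `μ`: `g` is a complete `C²` Riemannian metric and
`A := g - g_{C_α^n}` has components whose derivatives of order `k ≤ 2` are
`O(|x|^{-μ-k})` at infinity. -/
structure IsAsympConical (n : ℕ) (g : MetricTensor n) (α μ : ℝ) : Prop where
  symm : ∀ x v w, g x v w = g x w v
  add_left : ∀ x v w u, g x (v + w) u = g x v u + g x w u
  smul_left : ∀ x (a : ℝ) v u, g x (a • v) u = a * g x v u
  posdef : ∀ x v, v ≠ 0 → 0 < g x v v
  reg : ∀ i j : Fin n, ContDiff ℝ 2
    (fun x => g x (EuclideanSpace.single i 1) (EuclideanSpace.single j 1))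
  decay : ∀ i j : Fin n, ∃ C R : ℝ, 0 < C ∧ ∀ x : En n, R ≤ ‖x‖ → ∀ k : ℕ, k ≤ 2 →
    ‖iteratedFDeriv ℝ k (fun y =>
        g y (EuclideanSpace.single i 1) (EuclideanSpace.single j 1) -
        coneMetric n α y (EuclideanSpace.single i 1) (EuclideanSpace.single j 1)) x‖ ≤
      C * ‖x‖ ^ (-μ - (k : ℝ))
  complete : ∀ u : ℕ → En n,
    (∀ ε > 0, ∃ N, ∀ m ≥ N, ∀ k ≥ N, rdist g (u m) (u k) < ε) →
    ∃ x, ∀ ε > 0, ∃ N, ∀ m ≥ N, rdist g (u m) x < ε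

/-- `ex` is the exponential map of the metric tensor `g` at the point `x`
(tangent spaces being identified with `ℝⁿ`): `ex v = γ_v(1)` where `γ_v` is the
constant-speed geodesic with `γ_v(0) = x`, `γ̇_v(0) = v`. -/
def IsExpAt (g : MetricTensor n) (x : En n) (ex : En n → En n) : Prop :=
  ∀ v : En n, ∃ γ : ℝ → En n, γ 0 = x ∧ deriv γ 0 = v ∧
    IsGeodesicOn (rdist g) γ (Real.sqrt (g x v v)) Set.univ ∧ ex v = γ 1

/-- The exponential map of `g` exists and is proper at every point: preimages of
compact sets are compact. -/
def ProperExpAll (g : MetricTensor n) : Prop :=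
  ∀ x : En n, ∃ ex : En n → En n, IsExpAt g x ex ∧
    ∀ K : Set (En n), IsCompact K → IsCompact (ex ⁻¹' K)

/-- Second variation of the energy of `γ` on `[a,b]` along the variation field `V`
(using the global chart to form the variation `γ + s·V`). -/
def secondVar (g : MetricTensor n) (γ V : ℝ → En n) (a b : ℝ) : ℝ :=
  iteratedDeriv 2 (fun s : ℝ => cenergy g (fun t => γ t + s • V t) a b) 0

/-- The Morse index of `γ` on `[a,b]`, as a critical point of the energy, is at most
`m`: every linear space of `C¹` variation fields vanishing at the endpoints on which the
second variation of the energy is negative definite has dimension at most `m`. -/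
def MorseIndexLEOn (g : MetricTensor n) (γ : ℝ → En n) (a b : ℝ) (m : ℕ) : Prop :=
  ∀ W : Submodule ℝ (ℝ → En n),
    (∀ V ∈ W, ContDiff ℝ 1 V ∧ V a = 0 ∧ V b = 0) →
    (∀ V ∈ W, V ≠ 0 → secondVar g γ V a b < 0) →
    Module.rank ℝ W ≤ (m : Cardinal)

end

noncomputable section
set_option linter.unusedSectionVars false
set_option maxHeartbeats 1000000
open Metric intervalIntegral Module
open Finset (sum_congr sum_le_sum sum_nonneg mul_sum single_le_sum card_range sum_const sum_add_distrib sum_sub_distrib sum_range_sub sum_mul sum_range_succ sum_div smul_sum)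
open MeasureTheory (StronglyMeasurable stronglyMeasurable_const volume)
open EuclideanSpace (single)

/-! ### Brouwer's theorem, in the form of a zero lemma -/

/-- Interpolation weights for determinants: `det (1 + A)` is a fixed linear combination of the
numbers `det (1 + tᵢ A)` for finitely many prescribed parameters `tᵢ`, because
`t ↦ det (1 + t A)` is a polynomial of degree at most the dimension. -/
lemma det_one_add_interpolation {E : Type*} [NormedAddCommGroup E] [NormedSpace ℝ E]
    [FiniteDimensional ℝ E] (ε : ℝ) (hε : 0 < ε) :
    ∃ (m : ℕ) (t w : Fin m → ℝ), (∀ i, 0 < t i ∧ t i < ε) ∧ ∑ i, w i = 1 ∧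
      ∀ A : E →L[ℝ] E, (1 + A).det = ∑ i, w i * (1 + t i • A).det := by
  classical
  set D := finrank ℝ E
  let b := Module.finBasis ℝ E
  let t : Fin (D + 1) → ℝ := fun i => ε * ((i : ℝ) + 1) / (D + 2)
  have ht : Function.Injective t := by
    intro i j hij
    have h2 : (0 : ℝ) < D + 2 := by positivity
    simp only [t] at hij
    rw [div_left_inj' h2.ne'] at hij
    have := mul_left_cancel₀ hε.ne' hij
    have h3 : (i : ℝ) = j := by linarith
    exact Fin.ext (by exact_mod_cast h3)
  let w : Fin (D + 1) → ℝ := fun i =>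
    Polynomial.eval 1 (Lagrange.basis Finset.univ t i)
  refine ⟨D + 1, t, w, ?_, ?_, ?_⟩
  · intro i
    have h2 : (0 : ℝ) < D + 2 := by positivity
    refine ⟨by positivity, ?_⟩
    simp only [t]
    rw [div_lt_iff₀ h2]
    have : (i : ℝ) < D + 1 := by exact_mod_cast i.2
    nlinarith
  · have := Lagrange.sum_basis (s := Finset.univ) (v := t) ht.injOn ⟨0, Finset.mem_univ _⟩
    have h2 := congrArg (Polynomial.eval 1) this
    simpa [Polynomial.eval_finsetSum] using h2
  · intro A
    let M : Matrix (Fin D) (Fin D) ℝ := LinearMap.toMatrix b b (A : E →ₗ[ℝ] E)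
    let p : Polynomial ℝ :=
      ((Polynomial.X : Polynomial ℝ) • M.map Polynomial.C + (1 : Matrix (Fin D) (Fin D) ℝ).map Polynomial.C).det
    have hp (s : ℝ) : p.eval s = (1 + s • A).det := by
      have h1 : p.eval s = (s • M + 1).det := by
        simp only [p]
        rw [← Polynomial.coe_evalRingHom, RingHom.map_det]
        congr 1
        ext i j
        by_cases hij : i = j <;>
        simp [RingHom.mapMatrix_apply, Matrix.map_apply, hij] <;> ring
      have h2 : (1 + s • A).det = LinearMap.det (1 + s • (A : E →ₗ[ℝ] E)) := by
        rw [ContinuousLinearMap.det]; rfl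
      rw [h1, h2, ← LinearMap.det_toMatrix b]
      congr 1
      rw [map_add, map_smul, LinearMap.toMatrix_one, add_comm]
    have hdeg : p.degree < (Finset.univ : Finset (Fin (D + 1))).card := by
      have := Polynomial.natDegree_det_X_add_C_le M 1
      rw [Finset.card_univ, Fintype.card_fin]
      refine lt_of_le_of_lt Polynomial.degree_le_natDegree ?_
      have h3 : p.natDegree ≤ D := by rwa [Fintype.card_fin] at this
      exact_mod_cast Nat.lt_succ_of_le h3
    have h := Lagrange.eq_interpolate (s := Finset.univ) (v := t) ht.injOn hdeg
    have h1 := congrArg (Polynomial.eval 1) h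
    rw [Lagrange.interpolate_apply, Polynomial.eval_finsetSum] at h1
    rw [hp 1, one_smul] at h1
    rw [h1]
    refine sum_congr rfl fun i _ => ?_
    rw [Polynomial.eval_mul, Polynomial.eval_C, hp, mul_comm]

/-- A Lipschitz map on a ball that vanishes on the sphere stays Lipschitz when extended by zero. -/
lemma lipschitz_extend_zero {E : Type*} [NormedAddCommGroup E] [NormedSpace ℝ E]
    {R : ℝ} {K : NNReal} {g : E → E} (hg : LipschitzOnWith K g (closedBall 0 R))
    (h0 : ∀ x, ‖x‖ = R → g x = 0) :
    LipschitzWith K ((closedBall (0 : E) R).indicator g) := by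
  classical
  have key (x y : E) (hx : ‖x‖ ≤ R) (hy : R < ‖y‖) : dist (g x) 0 ≤ K * dist x y := by
    have hc : ContinuousOn (fun s : ℝ => ‖x + s • (y - x)‖) (Icc 0 1) := by fun_prop
    have hiv := intermediate_value_Icc (zero_le_one (α := ℝ)) hc
    have hR : R ∈ Icc ((fun s : ℝ => ‖x + s • (y - x)‖) 0) ((fun s : ℝ => ‖x + s • (y - x)‖) 1) := by
      constructor <;> simp <;> linarith
    obtain ⟨s, hs, hsR⟩ := hiv hR
    have hsR : ‖x + s • (y - x)‖ = R := hsR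
    have h1 := hg.dist_le_mul x (by simpa using hx) (x + s • (y - x)) (by simp [hsR])
    rw [h0 _ hsR] at h1
    refine h1.trans ?_
    have : dist x (x + s • (y - x)) ≤ dist x y := by
      rw [dist_eq_norm, dist_eq_norm]
      have e : x - (x + s • (y - x)) = s • (x - y) := by
        rw [smul_sub, smul_sub]; abel
      rw [e, norm_smul, norm_of_nonneg hs.1]
      nlinarith [norm_nonneg (x - y), hs.2]
    exact mul_le_mul_of_nonneg_left this K.2
  refine LipschitzWith.of_dist_le_mul fun x y => ?_
  by_cases hx : ‖x‖ ≤ R <;> by_cases hy : ‖y‖ ≤ R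
  · rw [indicator_of_mem (by simpa using hx), indicator_of_mem (by simpa using hy)]
    exact hg.dist_le_mul x (by simpa using hx) y (by simpa using hy)
  · rw [indicator_of_mem (by simpa using hx), indicator_of_notMem (by simpa using hy)]
    exact key x y hx (not_le.1 hy)
  · rw [indicator_of_notMem (by simpa using hx), indicator_of_mem (by simpa using hy)]
    rw [dist_comm, dist_comm x]
    exact key y x hy (not_le.1 hx)
  · rw [indicator_of_notMem (by simpa using hx), indicator_of_notMem (by simpa using hy)]
    simp only [dist_self]; positivity

/-- There is no `C¹` retraction of a ball onto its boundary sphere. For small `t` the map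
`id + t (r - id)` is a bijection of the ball, so `∫ det (1 + t (Dr - 1))` is the volume of the ball;
by polynomiality in `t` this persists at `t = 1`, where the integrand vanishes. -/
lemma no_retraction {E : Type*} [NormedAddCommGroup E] [InnerProductSpace ℝ E]
    [FiniteDimensional ℝ E] {r : E → E} (hr : ContDiff ℝ 1 r) {R : ℝ} (hR : 0 < R)
    (hn : ∀ x, ‖r x‖ = R) (hid : ∀ x, ‖x‖ = R → r x = x) : False := by
  classical
  borelize E
  let μ : MeasureTheory.Measure E := MeasureTheory.Measure.addHaar
  set g : E → E := fun x => r x - x with hg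
  have hgd : ContDiff ℝ 1 g := hr.sub contDiff_id
  obtain ⟨K, hK⟩ : ∃ K : NNReal, LipschitzOnWith K g (closedBall 0 R) := by
    have hc : IsCompact (closedBall (0 : E) R) := isCompact_closedBall 0 R
    obtain ⟨C, hC⟩ := hc.exists_bound_of_continuousOn
      (f := fderiv ℝ g) (hgd.continuous_fderiv one_ne_zero).continuousOn
    refine ⟨toNNReal C, ?_⟩
    refine Convex.lipschitzOnWith_of_nnnorm_fderiv_le (𝕜 := ℝ)
      (fun x _ => (hgd.differentiable one_ne_zero) x) (fun x hx => ?_) (convex_closedBall 0 R)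
    rw [← NNReal.coe_le_coe]
    exact (hC x hx).trans (Real.le_coe_toNNReal C)
  have hL := lipschitz_extend_zero hK (fun x hx => by simp [hg, hid x hx])
  set gt : E → E := (closedBall (0 : E) R).indicator g with hgt
  obtain ⟨m, t, w, ht, hw, hdet⟩ := det_one_add_interpolation (E := E) (1 / (K + 1 : ℝ)) (by positivity)
  have hball (s : ℝ) (hs0 : 0 < s) (hs1 : s < 1 / (K + 1 : ℝ)) :
      ∫ x in ball (0 : E) R, (1 + s • fderiv ℝ g x).det ∂μ = (μ (ball 0 R)).toReal := by
    have hsK : s * K < 1 := by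
      rw [lt_div_iff₀ (by positivity)] at hs1; nlinarith
    let F : E → E := fun x => x + s • gt x
    have happ : ApproximatesLinearOn F ((ContinuousLinearEquiv.refl ℝ E : E ≃L[ℝ] E) : E →L[ℝ] E)
        univ (toNNReal s * K) := by
      intro x _ y _
      have h1 := hL.dist_le_mul x y
      have e : F x - F y - ((ContinuousLinearEquiv.refl ℝ E : E ≃L[ℝ] E) : E →L[ℝ] E) (x - y)
        = s • (gt x - gt y) := by
        simp only [F, ContinuousLinearEquiv.coe_refl, ContinuousLinearMap.coe_id', id, smul_sub]; abel
      rw [e, norm_smul, norm_of_nonneg hs0.le, NNReal.coe_mul]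
      rw [dist_eq_norm, dist_eq_norm] at h1
      rw [coe_toNNReal s hs0.le, mul_assoc]
      exact mul_le_mul_of_nonneg_left h1 hs0.le
    have hlt : Subsingleton E ∨ toNNReal s * K <
        ‖(((ContinuousLinearEquiv.refl ℝ E : E ≃L[ℝ] E).symm : E ≃L[ℝ] E) : E →L[ℝ] E)‖₊⁻¹ := by
      rcases subsingleton_or_nontrivial E with h | h
      · exact Or.inl h
      · right
        have : ‖(((ContinuousLinearEquiv.refl ℝ E : E ≃L[ℝ] E).symm : E ≃L[ℝ] E) : E →L[ℝ] E)‖₊ = 1 := by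
          simp
        rw [this, inv_one, ← NNReal.coe_lt_coe]
        rw [NNReal.coe_mul, coe_toNNReal s hs0.le]
        simpa using hsK
    let Φ := happ.toHomeomorph F hlt
    have hΦ x : Φ x = F x := rfl
    have hout x (hx : R ≤ ‖x‖) : F x = x := by
      simp only [F, hgt]
      by_cases h : ‖x‖ ≤ R
      · rw [indicator_of_mem (by simpa using h)]
        simp [hg, hid x (le_antisymm h hx)]
      · rw [indicator_of_notMem (by simpa using h)]; simp
    have himg : (fun x => x + s • g x) '' (ball (0 : E) R) = ball 0 R := by
      have e1 : (fun x => x + s • g x) '' (ball (0 : E) R) = F '' (ball (0 : E) R) := by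
        refine image_congr fun x hx => ?_
        simp only [F, hgt]
        rw [indicator_of_mem (ball_subset_closedBall hx)]
      rw [e1]
      have e2 : F '' (ball (0 : E) R)ᶜ = (ball (0 : E) R)ᶜ := by
        ext y
        constructor
        · rintro ⟨x, hx, rfl⟩
          rw [hout x (by simpa using hx)]; exact hx
        · intro hy
          exact ⟨y, hy, hout y (by simpa using hy)⟩
      have e3 := image_compl_eq (s := ball (0 : E) R) (f := F) Φ.bijective
      rw [e2] at e3
      exact (compl_injective e3).symm
    have hinj : InjOn (fun x => x + s • g x) (ball (0 : E) R) := by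
      intro x hx y hy hxy
      apply Φ.injective
      rw [hΦ, hΦ]
      simp only [F, hgt]
      rw [indicator_of_mem (ball_subset_closedBall hx),
        indicator_of_mem (ball_subset_closedBall hy)]
      exact hxy
    have hder x (_ : x ∈ ball (0 : E) R) : HasFDerivWithinAt (fun x => x + s • g x)
        (1 + s • fderiv ℝ g x) (ball (0 : E) R) x := by
      have := ((hgd.differentiable one_ne_zero) x).hasFDerivAt
      exact ((hasFDerivAt_id x).add (this.const_smul s)).hasFDerivWithinAt
    have hI := MeasureTheory.integral_image_eq_integral_abs_det_fderiv_smul μ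
      isOpen_ball.measurableSet hder hinj (fun _ => (1 : ℝ))
    rw [himg] at hI
    simp only [smul_eq_mul, mul_one, MeasureTheory.setIntegral_const] at hI
    have hpos : ∀ x ∈ ball (0 : E) R, 0 ≤ (1 + s • fderiv ℝ g x).det := by
      -- `det (1 + s' A)` is nonzero for `0 ≤ s' ≤ s` and equals `1` at `s' = 0`
      intro x hx
      have hxK : ‖fderiv ℝ g x‖ ≤ K := by
        have : LipschitzOnWith K g (ball 0 R) := hK.mono ball_subset_closedBall
        exact norm_fderiv_le_of_lipschitzOn ℝ (isOpen_ball.mem_nhds hx) this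
      by_contra hneg
      push Not at hneg
      have hc : ContinuousOn (fun u : ℝ => (1 + u • fderiv ℝ g x).det) (Icc 0 s) := by
        have : Continuous (fun A : E →L[ℝ] E => A.det) := ContinuousLinearMap.continuous_det
        exact (this.comp (by fun_prop)).continuousOn
      have hiv := intermediate_value_Icc' hs0.le hc
      obtain ⟨u, hu, hu0⟩ := hiv (show (0 : ℝ) ∈ _ from by
        constructor
        · exact hneg.le
        · simp [ContinuousLinearMap.det])
      have hu0 : (1 + u • fderiv ℝ g x).det = 0 := hu0
      have hnorm : ‖-(u • fderiv ℝ g x)‖ < 1 := by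
        rw [norm_neg, norm_smul, norm_of_nonneg hu.1]
        calc u * ‖fderiv ℝ g x‖ ≤ s * K := by
              apply mul_le_mul hu.2 hxK (norm_nonneg _) hs0.le
          _ < 1 := hsK
      have hunit : IsUnit (1 + u • fderiv ℝ g x) := by
        have := isUnit_one_sub_of_norm_lt_one hnorm
        simpa using this
      have h2 : IsUnit ((1 + u • fderiv ℝ g x).det) := by
        have := hunit.map (ContinuousLinearMap.toLinearMapRingHom (R₁ := ℝ) (M₁ := E))
        exact (LinearMap.isUnit_iff_isUnit_det _).1 this
      exact h2.ne_zero hu0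
    have hI2 : ∫ x in ball (0 : E) R, (1 + s • fderiv ℝ g x).det ∂μ
        = ∫ x in ball (0 : E) R, |(1 + s • fderiv ℝ g x).det| ∂μ := by
      refine MeasureTheory.setIntegral_congr_fun isOpen_ball.measurableSet fun x hx => ?_
      exact (abs_of_nonneg (hpos x hx)).symm
    rw [hI2, ← hI]; simp [MeasureTheory.Measure.real]
  -- at `t = 1` the determinant vanishes since `r` takes values in a sphere
  have hzero x : (1 + fderiv ℝ g x).det = 0 := by
    have h1 : fderiv ℝ g x = fderiv ℝ r x - 1 := by
      have := ((hr.differentiable one_ne_zero) x).hasFDerivAt.sub (hasFDerivAt_id x)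
      exact this.fderiv
    rw [h1, add_sub_cancel]
    by_contra hne
    have hperp v : ⟪fderiv ℝ r x v, r x⟫ = 0 := by
      have hd := ((hr.differentiable one_ne_zero) x).hasFDerivAt
      have h2 := hd.inner ℝ hd
      have h3 : (fun y => ⟪r y, r y⟫) = fun _ => R ^ 2 := by
        funext y; rw [real_inner_self_eq_norm_sq, hn]
      rw [h3] at h2
      have h4 := h2.unique (hasFDerivAt_const _ _)
      have h5 := congrArg (fun L => L v) h4
      simp [fderivInnerCLM_apply] at h5
      rw [real_inner_comm] at h5
      linarith [real_inner_comm (r x) (fderiv ℝ r x v)]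
    have hu : IsUnit ((fderiv ℝ r x : E →L[ℝ] E) : E →ₗ[ℝ] E) := by
      rw [LinearMap.isUnit_iff_isUnit_det]
      exact isUnit_iff_ne_zero.2 hne
    have hsurj := ((Module.End.isUnit_iff _).1 hu).2
    obtain ⟨v, hv⟩ := hsurj (r x)
    have := hperp v
    have hv' : fderiv ℝ r x v = r x := hv
    rw [hv', real_inner_self_eq_norm_sq, hn] at this
    have : R = 0 := by simpa using this
    linarith
  have hint (s : ℝ) : MeasureTheory.IntegrableOn
      (fun x => (1 + s • fderiv ℝ g x).det) (ball (0 : E) R) μ := by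
    have hc : Continuous (fun x => (1 + s • fderiv ℝ g x).det) := by
      have : Continuous (fun A : E →L[ℝ] E => A.det) := ContinuousLinearMap.continuous_det
      exact this.comp (by fun_prop)
    exact (hc.continuousOn.integrableOn_compact (isCompact_closedBall 0 R)).mono_set
      ball_subset_closedBall
  have h1 : ∫ x in ball (0 : E) R, (1 + fderiv ℝ g x).det ∂μ = (μ (ball 0 R)).toReal := by
    rw [MeasureTheory.integral_congr_ae (Eventually.of_forall fun x => hdet (fderiv ℝ g x))]
    rw [MeasureTheory.integral_finsetSum]
    · simp_rw [MeasureTheory.integral_const_mul]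
      rw [sum_congr rfl fun i _ => by rw [hball (t i) (ht i).1 (ht i).2], ← sum_mul, hw,
        one_mul]
    · intro i _
      exact (hint (t i)).const_mul _
  simp_rw [hzero] at h1
  simp only [MeasureTheory.integral_zero] at h1
  have hpos : 0 < μ (ball (0 : E) R) := measure_ball_pos μ 0 hR
  have hfin : μ (ball (0 : E) R) < ⊤ := MeasureTheory.measure_ball_lt_top
  have := ENNReal.toReal_pos hpos.ne' hfin.ne
  linarith

/-- A continuous map which is the identity off a bounded set has a zero. Otherwise mollifying the
compactly supported difference to the identity and normalising yields a smooth retraction of a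
large ball onto its boundary. -/
lemma exists_zero_of_eq_id_outside {E : Type*} [NormedAddCommGroup E] [InnerProductSpace ℝ E]
    [FiniteDimensional ℝ E] {f : E → E} (hf : Continuous f) {R : ℝ}
    (hid : ∀ x, R ≤ ‖x‖ → f x = x) : ∃ x, f x = 0 := by
  classical
  by_contra hne
  push Not at hne
  borelize E
  let μ : MeasureTheory.Measure E := MeasureTheory.Measure.addHaar
  set g : E → E := fun x => f x - x with hg
  have hgc : Continuous g := hf.sub continuous_id
  have hgs : HasCompactSupport g := by
    refine HasCompactSupport.intro (isCompact_closedBall (0 : E) R) fun x hx => ?_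
    have : R < ‖x‖ := by simpa using hx
    simp [hg, hid x this.le]
  -- a positive lower bound for `‖f‖`
  obtain ⟨ε, hε, hfε⟩ : ∃ ε > 0, ∀ x, ε ≤ ‖f x‖ := by
    by_cases hR : 0 ≤ R
    · obtain ⟨x0, -, hx0⟩ := (isCompact_closedBall (0 : E) (R + 1)).exists_isMinOn
        ⟨0, by simp; linarith⟩ (hf.norm.continuousOn)
      have hp : 0 < ‖f x0‖ := norm_pos_iff.2 (hne x0)
      refine ⟨min ‖f x0‖ (R + 1), lt_min hp (by linarith), fun x => ?_⟩
      by_cases hx : ‖x‖ ≤ R + 1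
      · exact (min_le_left _ _).trans (hx0 (by simpa using hx))
      · rw [hid x (by linarith)]
        exact (min_le_right _ _).trans (by linarith)
    · exact absurd (hid 0 (by simp; linarith)) (hne 0)
  obtain ⟨δ, hδ, hgδ⟩ := Metric.uniformContinuous_iff.1 (hgc.uniformContinuous_of_tendsto_cocompact (x := 0) hgs.is_zero_at_infty)
    (ε / 2) (by positivity)
  let φ : ContDiffBump (0 : E) := ⟨δ / 2, δ, by positivity, by linarith⟩
  set gs : E → E := MeasureTheory.convolution (φ.normed μ) g (ContinuousLinearMap.lsmul ℝ ℝ) μ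
  have hgsd : ContDiff ℝ 1 gs := by
    have := HasCompactSupport.contDiff_convolution_left (μ := μ) (n := 1)
      (ContinuousLinearMap.lsmul ℝ ℝ : ℝ →L[ℝ] E →L[ℝ] E)
      (φ.hasCompactSupport_normed (μ := μ)) (φ.contDiff_normed) hgc.locallyIntegrable
    exact this
  have hgscs : HasCompactSupport gs :=
    HasCompactSupport.convolution _ (φ.hasCompactSupport_normed (μ := μ)) hgs
  have hclose x : dist (gs x) (g x) ≤ ε / 2 := by
    refine ContDiffBump.dist_normed_convolution_le hgc.aestronglyMeasurable fun y hy => ?_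
    exact (hgδ hy).le
  have hnz x : x + gs x ≠ 0 := by
    intro h
    have h1 : f x = g x - gs x := by
      have : f x = x + g x := by simp [hg]
      rw [this, ← sub_eq_zero, show x + g x - (g x - gs x) = x + gs x by abel, h]
    have h2 := hfε x
    have h3 := hclose x
    rw [dist_comm, dist_eq_norm, ← h1] at h3
    linarith
  obtain ⟨R', hR'⟩ := hgscs.isCompact.isBounded.subset_closedBall (0 : E)
  set R1 := max R' 0 + 1
  have hR1p : 0 < R1 := by positivity
  have hout x (hx : ‖x‖ = R1) : gs x = 0 := by
    by_contra h
    have := hR' (subset_tsupport _ h)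
    rw [mem_closedBall_zero_iff] at this
    have := le_max_left R' 0
    linarith
  have hd : ContDiff ℝ 1 (fun x => x + gs x) := contDiff_id.add hgsd
  refine no_retraction (r := fun x => (R1 * ‖x + gs x‖⁻¹) • (x + gs x)) ?_ hR1p ?_ ?_
  · refine ContDiff.smul (contDiff_const.mul ?_) hd
    exact (hd.norm ℝ hnz).inv fun x => norm_ne_zero_iff.2 (hnz x)
  · intro x
    have := norm_pos_iff.2 (hnz x)
    rw [norm_smul, norm_mul, norm_inv, norm_norm, norm_of_nonneg hR1p.le]
    field_simp
  · intro x hx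
    simp only [hout x hx, add_zero, hx]
    rw [mul_inv_cancel₀ hR1p.ne', one_smul]

/-- A continuous map on a ball has a zero as soon as it never points exactly inward on the sphere
(Poincaré–Bohl form of Brouwer's theorem). -/
lemma exists_zero_of_boundary {E : Type*} [NormedAddCommGroup E] [InnerProductSpace ℝ E]
    [FiniteDimensional ℝ E] {f : E → E} (hf : Continuous f) {R : ℝ} (hR : 0 < R)
    (hb : ∀ x, ‖x‖ = R → ∀ l : ℝ, 0 ≤ l → f x ≠ -(l • x)) : ∃ x, ‖x‖ ≤ R ∧ f x = 0 := by
  classical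
  -- `p` is the radial projection to the ball and `θ` interpolates between `f ∘ p` and the identity
  let p : E → E := fun x => (R / max R ‖x‖) • x
  let θ : E → ℝ := fun x => min 1 (max 0 (‖x‖ / R - 1))
  have hmax (x : E) : max R ‖x‖ ≠ 0 := (lt_max_of_lt_left hR).ne'
  have hp : Continuous p := by
    refine Continuous.smul ?_ continuous_id
    exact continuous_const.div (by fun_prop) hmax
  have hθ : Continuous θ := by fun_prop
  obtain ⟨x, hx⟩ := exists_zero_of_eq_id_outside (f := fun x => (1 - θ x) • f (p x) + θ x • x)
    (by fun_prop) (R := 2 * R) (by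
      intro x hx
      have : θ x = 1 := by
        have : 1 ≤ ‖x‖ / R - 1 := by
          rw [le_sub_iff_add_le, le_div_iff₀ hR]; linarith
        simp only [θ]
        rw [min_eq_left]
        exact this.trans (le_max_right _ _)
      simp [this])
  by_cases hxR : ‖x‖ ≤ R
  · refine ⟨x, hxR, ?_⟩
    have h1 : θ x = 0 := by
      have : ‖x‖ / R - 1 ≤ 0 := by
        rw [sub_nonpos, div_le_one hR]; exact hxR
      simp only [θ]
      rw [max_eq_left this]; simp
    have h2 : p x = x := by
      simp only [p]
      rw [max_eq_left hxR, div_self hR.ne', one_smul]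
    simpa [h1, h2] using hx
  · exfalso
    push Not at hxR
    have hx0 : x ≠ 0 := by
      rintro rfl; simp at hxR; linarith
    have hθ1 : θ x ≠ 1 := by
      intro h
      simp [h] at hx
      exact hx0 hx
    have hθ0 : 0 ≤ θ x := le_min zero_le_one (le_max_left _ _)
    have hθ2 : 0 < 1 - θ x := by
      have : θ x ≤ 1 := min_le_left _ _
      have := lt_of_le_of_ne this hθ1
      linarith
    have hxp : p x = (R / ‖x‖) • x := by simp only [p]; rw [max_eq_right hxR.le]
    have hnx : 0 < ‖x‖ := hR.trans hxR
    have hnp : ‖p x‖ = R := by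
      rw [hxp, norm_smul, norm_of_nonneg (by positivity)]; field_simp
    refine hb (p x) hnp (θ x / (1 - θ x) * (‖x‖ / R)) (by positivity) ?_
    rw [hxp] at hx ⊢
    have hx' : (1 - θ x) • f ((R / ‖x‖) • x) = -(θ x • x) := eq_neg_of_add_eq_zero_left hx
    have : f ((R / ‖x‖) • x) = (1 - θ x)⁻¹ • ((1 - θ x) • f ((R / ‖x‖) • x)) := by
      rw [smul_smul, inv_mul_cancel₀ hθ2.ne', one_smul]
    rw [this, hx', smul_neg, smul_smul, smul_smul]
    congr 2
    field_simp

/-! ### A finite-dimensional min-max principle with an index bound -/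

/-- Spectral splitting: an injective symmetric operator `A` which is negative definite on an
`n`-dimensional space admits an involution `σ` (the sign of `A`) with `⟪A x, σ x⟫` positive
definite, whose `+1`-eigenspace has codimension at least `n`. -/
lemma exists_sign_operator {X : Type*} [NormedAddCommGroup X] [InnerProductSpace ℝ X]
    [FiniteDimensional ℝ X] (A : X →L[ℝ] X) (hA : ∀ u v, ⟪A u, v⟫ = ⟪u, A v⟫)
    (hinj : Function.Injective A) {n : ℕ} (L : (Fin n → ℝ) →ₗ[ℝ] X)
    (hL : ∀ α, α ≠ 0 → ⟪A (L α), L α⟫ < 0) :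
    ∃ (σ : X →L[ℝ] X) (l : ℝ), 0 < l ∧ (∀ x, σ (σ x) = x) ∧ (∀ x, ‖σ x‖ = ‖x‖) ∧
      (∀ x, l * ‖x‖ ^ 2 ≤ ⟪A x, σ x⟫) ∧
      finrank ℝ (LinearMap.ker ((1 - σ : X →L[ℝ] X) : X →ₗ[ℝ] X)) + n
        ≤ finrank ℝ X := by
  classical
  have hsymm : (A : X →ₗ[ℝ] X).IsSymmetric := fun u v => hA u v
  set N := finrank ℝ X
  let b := hsymm.eigenvectorBasis (n := N) rfl
  let ev := hsymm.eigenvalues (n := N) rfl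
  have hb i : A (b i) = ev i • b i := hsymm.apply_eigenvectorBasis rfl i
  have hev : ∀ i, ev i ≠ 0 := by
    intro i h
    have h1 := hb i
    rw [h, zero_smul] at h1
    have h2 := hinj (h1.trans (map_zero A).symm)
    have h3 := b.orthonormal.1 i
    rw [h2] at h3; simp at h3
  let s : Fin N → ℝ := fun i => SignType.sign (ev i)
  have hs i : s i * s i = 1 := by
    rcases lt_or_gt_of_ne (hev i) with h | h <;> simp [s, h]
  have hsev i : s i * ev i = |ev i| := by
    exact sign_mul_self (ev i)
  let σ : X →L[ℝ] X := LinearMap.toContinuousLinearMap (b.toBasis.constr ℝ (fun i => s i • b i))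
  have hσb i : σ (b i) = s i • b i := by
    have := b.toBasis.constr_basis ℝ (fun i => s i • b i) i
    rwa [b.coe_toBasis] at this
  have hrep x i : ⟪b i, σ x⟫ = s i * ⟪b i, x⟫ := by
    conv_lhs => rw [← b.sum_repr' x, map_sum, inner_sum]
    rw [Finset.sum_eq_single i]
    · rw [map_smul, hσb, inner_smul_right, inner_smul_right, real_inner_self_eq_norm_sq,
        b.orthonormal.1 i]; ring
    · intro j _ hj
      rw [map_smul, hσb, inner_smul_right, inner_smul_right, b.orthonormal.2 (Ne.symm hj)]; ring
    · simp
  have hArep x i : ⟪A x, b i⟫ = ev i * ⟪b i, x⟫ := by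
    rw [hA, hb, inner_smul_right, real_inner_comm]
  have hnorm x : ‖x‖ ^ 2 = ∑ i, ⟪b i, x⟫ ^ 2 := by
    rw [← real_inner_self_eq_norm_sq, ← b.sum_inner_mul_inner x x]
    refine sum_congr rfl fun i _ => ?_
    rw [real_inner_comm]; ring
  obtain ⟨l, hl, hle⟩ : ∃ l > 0, ∀ i, l ≤ |ev i| := by
    rcases isEmpty_or_nonempty (Fin N) with h | h
    · exact ⟨1, one_pos, fun i => h.elim i⟩
    · obtain ⟨i0, hi0⟩ := Finite.exists_min (fun i => |ev i|)
      exact ⟨|ev i0|, abs_pos.2 (hev i0), hi0⟩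
  have hpos x : l * ‖x‖ ^ 2 ≤ ⟪A x, σ x⟫ := by
    rw [hnorm, ← b.sum_inner_mul_inner (A x) (σ x), mul_sum]
    refine sum_le_sum fun i _ => ?_
    rw [hArep, hrep]
    have : ev i * ⟪b i, x⟫ * (s i * ⟪b i, x⟫) = |ev i| * ⟪b i, x⟫ ^ 2 := by rw [← hsev]; ring
    rw [this]
    exact mul_le_mul_of_nonneg_right (hle i) (sq_nonneg _)
  refine ⟨σ, l, hl, ?_, ?_, hpos, ?_⟩
  · intro x
    refine InnerProductSpace.ext_inner_left_basis b.toBasis fun i => ?_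
    rw [b.coe_toBasis, hrep, hrep, ← mul_assoc, hs, one_mul]
  · intro x
    have : ‖σ x‖ ^ 2 = ‖x‖ ^ 2 := by
      rw [hnorm, hnorm]
      refine sum_congr rfl fun i _ => ?_
      rw [hrep, mul_pow, sq, hs, one_mul]
    exact (sq_eq_sq₀ (norm_nonneg _) (norm_nonneg _)).1 this
  · have hLinj : Function.Injective L := by
      rw [← LinearMap.ker_eq_bot, LinearMap.ker_eq_bot']
      intro α hα
      by_contra hne
      have := hL α hne
      rw [hα] at this; simp at this
    have hr : finrank ℝ (LinearMap.range L) = n := by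
      rw [LinearMap.finrank_range_of_inj hLinj]; simp
    have hdisj : Disjoint (LinearMap.ker ((1 - σ : X →L[ℝ] X) : X →ₗ[ℝ] X)) (LinearMap.range L) := by
      rw [Submodule.disjoint_def]
      rintro x hx ⟨α, rfl⟩
      by_contra hne
      have hα : α ≠ 0 := by rintro rfl; simp at hne
      have h1 := hL α hα
      have h2 := hpos (L α)
      have h3 : L α - σ (L α) = 0 := hx
      rw [← sub_eq_zero.1 h3] at h2
      have : 0 ≤ l * ‖L α‖ ^ 2 := by positivity
      linarith
    have := Submodule.finrank_add_finrank_le_of_disjoint hdisj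
    rwa [hr] at this

/-- Second order Taylor bound for a function whose gradient is Lipschitz on a ball. -/
lemma taylor_upper {X : Type*} [NormedAddCommGroup X] [InnerProductSpace ℝ X]
    {F : X → ℝ} {N : X → X} (hN : ∀ x, HasFDerivAt F (innerSL ℝ (N x)) x) {R M : ℝ}
    (hM : ∀ x y, ‖x‖ ≤ R → ‖y‖ ≤ R → ‖N x - N y‖ ≤ M * ‖x - y‖) (hM0 : 0 ≤ M) {x y : X}
    (hx : ‖x‖ ≤ R) (hy : ‖y‖ ≤ R) : |F y - F x - ⟪N x, y - x⟫| ≤ M * ‖y - x‖ ^ 2 := by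
  have h := Convex.norm_image_sub_le_of_norm_hasFDerivWithin_le' (𝕜 := ℝ) (f := F)
    (f' := fun z => innerSL ℝ (N z)) (φ := innerSL ℝ (N x)) (C := M * ‖y - x‖) (s := segment ℝ x y)
    (x := x) (y := y) (fun z _ => (hN z).hasFDerivWithinAt) ?_ (convex_segment x y)
    (left_mem_segment ℝ x y) (right_mem_segment ℝ x y)
  · rw [norm_eq_abs, innerSL_apply_apply] at h
    refine h.trans (le_of_eq (by ring))
  · intro z hz
    have hzR : ‖z‖ ≤ R := by
      have := (convex_closedBall (0 : X) R).segment_subset (x := x) (y := y)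
        (by simpa using hx) (by simpa using hy) hz
      simpa using this
    rw [← map_sub, innerSL_apply_norm]
    refine (hM z x hzR hx).trans (mul_le_mul_of_nonneg_left ?_ hM0)
    rw [segment_eq_image'] at hz
    obtain ⟨θ, hθ, rfl⟩ := hz
    rw [add_sub_cancel_left, norm_smul, norm_of_nonneg hθ.1]
    exact mul_le_of_le_one_left (norm_nonneg _) hθ.2

lemma exists_pos_le_of_finite {ι : Type*} {s : Set ι} (hs : s.Finite) (f : ι → ℝ)
    (hf : ∀ i ∈ s, 0 < f i) : ∃ ε > 0, ∀ i ∈ s, ε ≤ f i := by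
  induction s, hs using Finite.induction_on with
  | empty => exact ⟨1, one_pos, by simp⟩
  | @insert a s _ _ ih =>
    obtain ⟨ε, hε, h⟩ := ih fun i hi => hf i (mem_insert_of_mem _ hi)
    refine ⟨min ε (f a), lt_min hε (hf a (mem_insert _ _)), ?_⟩
    rintro i (rfl | hi)
    · exact min_le_right _ _
    · exact (min_le_left _ _).trans (h i hi)

/-- Near a nondegenerate critical point the linear field `σ (x - p)` is a pseudo-gradient. -/
lemma local_pseudogradient {X : Type*} [NormedAddCommGroup X] [InnerProductSpace ℝ X]
    {N : X → X} {p : X} {A σ : X →L[ℝ] X} (hN : HasFDerivAt N A p) (h0 : N p = 0) {l : ℝ}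
    (hl : 0 < l) (hσ : ∀ x, ‖σ x‖ = ‖x‖) (hA : ∀ x, l * ‖x‖ ^ 2 ≤ ⟪A x, σ x⟫) :
    ∃ r > 0, ∀ x, ‖x - p‖ ≤ 2 * r → l / 2 * ‖x - p‖ ^ 2 ≤ ⟪N x, σ (x - p)⟫ := by
  have h := (hasFDerivAt_iff_isLittleO.1 hN).def (half_pos hl)
  rw [Metric.eventually_nhds_iff] at h
  obtain ⟨ε, hε, h⟩ := h
  refine ⟨ε / 4, by positivity, fun x hx => ?_⟩
  have h1 := h (show dist x p < ε by rw [dist_eq_norm]; linarith)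
  rw [h0, sub_zero] at h1
  have h2 := abs_real_inner_le_norm (N x - A (x - p)) (σ (x - p))
  rw [hσ, inner_sub_left] at h2
  have h3 := hA (x - p)
  have h4 := (abs_le.1 h2).1
  nlinarith [norm_nonneg (x - p)]

/-- Discrete descent flow: there is an injective bi-Lipschitz-type map `T` decreasing `F`, fixing
low levels, such that a trajectory that never descends below `c1` ends in one of countably many
affine subspaces of codimension at least `n`. -/
lemma exists_descent_map {X : Type*} [NormedAddCommGroup X] [InnerProductSpace ℝ X]
    [FiniteDimensional ℝ X] {F : X → ℝ} {N : X → X} (hF : ContDiff ℝ 1 F) (hNc : ContDiff ℝ 1 N)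
    (hN : ∀ x, HasFDerivAt F (innerSL ℝ (N x)) x) (hcpt : ∀ b, IsCompact {x | F x ≤ b})
    {c0 c1 b1 : ℝ} (hc : c0 < c1) {n : ℕ}
    (hcrit : ∀ p, N p = 0 → c1 ≤ F p → F p ≤ b1 →
      ∃ (σ : X →L[ℝ] X) (l : ℝ), 0 < l ∧ (∀ x, σ (σ x) = x) ∧ (∀ x, ‖σ x‖ = ‖x‖) ∧
      (∀ x, l * ‖x‖ ^ 2 ≤ ⟪fderiv ℝ N p x, σ x⟫) ∧
      finrank ℝ (LinearMap.ker ((1 - σ : X →L[ℝ] X) : X →ₗ[ℝ] X)) + n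
        ≤ finrank ℝ X) :
    ∃ (T : X → X) (Z : Set X) (W : X → Submodule ℝ X), Continuous T ∧ AntilipschitzWith 2 T ∧
      (∀ x, F (T x) ≤ F x) ∧ (∀ x, F x ≤ c0 → T x = x) ∧ Z.Finite ∧
      (∀ p ∈ Z, finrank ℝ (W p) + n ≤ finrank ℝ X) ∧
      ∀ x, F x ≤ b1 → (∀ m, c1 ≤ F (T^[m] x)) → ∃ p ∈ Z, ∃ k, T^[k] x - p ∈ W p := by
  classical
  set Z : Set X := {p | N p = 0 ∧ c1 ≤ F p ∧ F p ≤ b1}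
  have hFc : Continuous F := hF.continuous
  have hNcont : Continuous N := hNc.continuous
  have hloc p : ∃ (σ : X →L[ℝ] X) (l r : ℝ), p ∈ Z → (0 < l ∧ 0 < r ∧ (∀ x, σ (σ x) = x) ∧
      (∀ x, ‖σ x‖ = ‖x‖) ∧
      (∀ x, ‖x - p‖ ≤ 2 * r → l / 2 * ‖x - p‖ ^ 2 ≤ ⟪N x, σ (x - p)⟫) ∧
      finrank ℝ (LinearMap.ker ((1 - σ : X →L[ℝ] X) : X →ₗ[ℝ] X)) + n
        ≤ finrank ℝ X) := by
    by_cases hp : p ∈ Z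
    · obtain ⟨σ, l, hl, h1, h2, h3, h4⟩ := hcrit p hp.1 hp.2.1 hp.2.2
      obtain ⟨r, hr, h5⟩ := local_pseudogradient
        ((hNc.differentiable one_ne_zero) p).hasFDerivAt hp.1 hl h2 h3
      exact ⟨σ, l, r, fun _ => ⟨hl, hr, h1, h2, h5, h4⟩⟩
    · exact ⟨0, 0, 0, fun h => absurd h hp⟩
  choose σ l r hloc using hloc
  have hiso p (hp : p ∈ Z) p' (hp' : p' ∈ Z) (h : ‖p' - p‖ ≤ 2 * r p) : p' = p := by
    obtain ⟨hl, -, -, -, h5, -⟩ := hloc p hp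
    have := h5 p' h
    rw [hp'.1, inner_zero_left] at this
    by_contra hne
    have h1 : 0 < ‖p' - p‖ := norm_pos_iff.2 (sub_ne_zero.2 hne)
    have : 0 < l p / 2 * ‖p' - p‖ ^ 2 := by positivity
    linarith
  have hZc : IsCompact Z := by
    refine (hcpt b1).of_isClosed_subset ?_ fun p hp => hp.2.2
    exact (isClosed_eq hNcont continuous_const).inter
      ((isClosed_le continuous_const hFc).inter (isClosed_le hFc continuous_const))
  have hZf : Z.Finite := by
    obtain ⟨t, ht⟩ := hZc.elim_nhds_subcover' (fun p _ => ball p (2 * r p))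
      (fun p hp => ball_mem_nhds p (by have := (hloc p hp).2.1; positivity))
    refine (t.finite_toSet.image Subtype.val).subset fun q hq => ?_
    obtain ⟨p, hpt, hqp⟩ := mem_iUnion₂.1 (ht hq)
    refine ⟨p, hpt, ?_⟩
    rw [mem_ball, dist_eq_norm] at hqp
    exact (hiso p p.2 q hq hqp.le).symm
  obtain ⟨r0, hr0, hr0le⟩ := exists_pos_le_of_finite hZf r fun p hp => (hloc p hp).2.1
  obtain ⟨l0, hl0, hl0le⟩ := exists_pos_le_of_finite hZf l fun p hp => (hloc p hp).1
  have hsep p (hp : p ∈ Z) : ∀ p' ∈ Z, ‖p' - p‖ ≤ 2 * r0 → p' = p := fun p' hp' h =>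
    hiso p hp p' hp' (h.trans (by have := hr0le p hp; linarith))
  set ρ := r0 / 2 with hρ
  have hρ0 : 0 < ρ := by positivity
  let η : (p : X) → ContDiffBump p := fun p => ⟨ρ, 2 * ρ, hρ0, by linarith⟩
  have hη0 : ∀ p x, 2 * ρ ≤ ‖x - p‖ → η p x = 0 := by
    intro p x h
    exact (η p).zero_of_le_dist (by rw [dist_eq_norm]; exact h)
  have hη1 p x (h : ‖x - p‖ ≤ ρ) : η p x = 1 := by
    exact (η p).one_of_mem_closedBall (by rw [mem_closedBall, dist_eq_norm]; exact h)
  let χ : X → ℝ := fun x =>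
    smoothTransition ((F x - c0) / (c1 - c0)) * smoothTransition (b1 + 1 - F x)
  have hχ0 x : 0 ≤ χ x :=
    mul_nonneg (smoothTransition.nonneg _) (smoothTransition.nonneg _)
  have hχ1 x : χ x ≤ 1 :=
    mul_le_one₀ (smoothTransition.le_one _) (smoothTransition.nonneg _)
      (smoothTransition.le_one _)
  have hχe x (h1 : c1 ≤ F x) (h2 : F x ≤ b1) : χ x = 1 := by
    simp only [χ]
    rw [smoothTransition.one_of_one_le, smoothTransition.one_of_one_le, mul_one]
    · linarith
    · rw [le_div_iff₀ (by linarith)]; linarith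
  have hχlow x (h : F x ≤ c0) : χ x = 0 := by
    simp only [χ]
    rw [smoothTransition.zero_of_nonpos, zero_mul]
    exact div_nonpos_of_nonpos_of_nonneg (by linarith) (by linarith)
  have hχhigh x (h : b1 + 1 ≤ F x) : χ x = 0 := by
    simp only [χ]
    rw [smoothTransition.zero_of_nonpos (x := b1 + 1 - F x) (by linarith), mul_zero]
  let Zf := hZf.toFinset
  let w : X → X := fun x => (1 - ∑ p ∈ Zf, η p x) • N x + ∑ p ∈ Zf, η p x • σ p (x - p)
  let V : X → X := fun x => χ x • w x
  -- at each point at most one cut-off is active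
  have hwp p (hp : p ∈ Z) x (hxp : ‖x - p‖ < 2 * ρ) :
      w x = (1 - η p x) • N x + η p x • σ p (x - p) := by
    have hz q (hq : q ∈ Zf) : q ≠ p → η q x = 0 := by
      intro hne
      apply hη0
      by_contra hlt
      push Not at hlt
      refine hne (hsep p hp q ((Finite.mem_toFinset hZf).1 hq) ?_)
      linarith [norm_sub_le_norm_sub_add_norm_sub q x p, norm_sub_rev q x]
    have hpZ : p ∈ Zf := (Finite.mem_toFinset hZf).2 hp
    simp only [w]
    rw [Finset.sum_eq_single_of_mem p hpZ hz,
      Finset.sum_eq_single_of_mem p hpZ fun q hq hne => by rw [hz q hq hne, zero_smul]]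
  have hwn x (h : ∀ p ∈ Z, 2 * ρ ≤ ‖x - p‖) : w x = N x := by
    have hz q (hq : q ∈ Zf) : η q x = 0 := hη0 q x (h q ((Finite.mem_toFinset hZf).1 hq))
    simp only [w]
    rw [Finset.sum_eq_zero hz, Finset.sum_eq_zero fun q hq => by rw [hz q hq, zero_smul]]
    simp
  have hlin p (hp : p ∈ Z) x (hxp : ‖x - p‖ ≤ ρ) (h1 : c1 ≤ F x) (h2 : F x ≤ b1) :
      V x = σ p (x - p) := by
    simp only [V]
    rw [hχe x h1 h2, one_smul, hwp p hp x (by linarith), hη1 p x hxp]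
    simp
  set C : ℝ := 1 + 2 / l0 with hCdef
  have hC0 : 0 < C := by positivity
  have hC1 : 1 ≤ C := by have : 0 < 2 / l0 := by positivity
                         linarith
  have hCl : 1 ≤ C * (l0 / 2) := by rw [hCdef]; field_simp; linarith
  have hwC x : ‖w x‖ ^ 2 ≤ C * ⟪N x, w x⟫ := by
    by_cases h : ∃ p ∈ Z, ‖x - p‖ < 2 * ρ
    · obtain ⟨p, hp, hxp⟩ := h
      obtain ⟨hl, hr, h1, h2, h3, h4⟩ := hloc p hp
      have hx3 := h3 x (by have := hr0le p hp; linarith)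
      have hll := hl0le p hp
      rw [hwp p hp x hxp]
      set e := η p x
      set s := σ p (x - p)
      have he0 : 0 ≤ e := (η p).nonneg
      have he1 : e ≤ 1 := (η p).le_one
      have hs2 : ‖s‖ ^ 2 ≤ C * ⟪N x, s⟫ := by
        have hs : ‖s‖ = ‖x - p‖ := h2 _
        have h5 : l0 / 2 * ‖x - p‖ ^ 2 ≤ ⟪N x, s⟫ :=
          le_trans (mul_le_mul_of_nonneg_right (by linarith) (sq_nonneg _)) hx3
        rw [hs]
        calc ‖x - p‖ ^ 2 ≤ C * (l0 / 2) * ‖x - p‖ ^ 2 := le_mul_of_one_le_left (sq_nonneg _) hCl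
          _ = C * (l0 / 2 * ‖x - p‖ ^ 2) := by ring
          _ ≤ _ := mul_le_mul_of_nonneg_left h5 hC0.le
      have hconv : ‖(1 - e) • N x + e • s‖ ^ 2 ≤ (1 - e) * ‖N x‖ ^ 2 + e * ‖s‖ ^ 2 := by
        rw [@norm_add_sq_real, norm_smul, norm_smul, inner_smul_left, inner_smul_right,
          norm_of_nonneg he0, norm_of_nonneg (by linarith : (0 : ℝ) ≤ 1 - e)]
        have h6 := @norm_sub_sq_real _ _ _ (N x) s
        have h7 : 0 ≤ ‖N x - s‖ ^ 2 := sq_nonneg _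
        simp only [conj_trivial]
        have h8 := mul_nonneg (mul_nonneg he0 (by linarith : (0 : ℝ) ≤ 1 - e)) h7
        rw [h6] at h8
        refine sub_nonneg.1 (h8.trans_eq ?_)
        ring
      rw [inner_add_right, inner_smul_right, inner_smul_right, real_inner_self_eq_norm_sq]
      have h8 : (1 - e) * ‖N x‖ ^ 2 ≤ C * ((1 - e) * ‖N x‖ ^ 2) :=
        le_mul_of_one_le_left (mul_nonneg (by linarith) (sq_nonneg _)) hC1
      nlinarith [mul_le_mul_of_nonneg_left hs2 he0]
    · push Not at h
      rw [hwn x h, real_inner_self_eq_norm_sq]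
      exact le_mul_of_one_le_left (sq_nonneg _) hC1
  have hwpos x (hx : N x ≠ 0) : 0 < ⟪N x, w x⟫ := by
    have hNx : 0 < ‖N x‖ ^ 2 := by have := norm_pos_iff.2 hx; positivity
    by_cases h : ∃ p ∈ Z, ‖x - p‖ < 2 * ρ
    · obtain ⟨p, hp, hxp⟩ := h
      obtain ⟨hl, hr, h1, h2, h3, h4⟩ := hloc p hp
      have hx3 := h3 x (by have := hr0le p hp; linarith)
      rw [hwp p hp x hxp, inner_add_right, inner_smul_right, inner_smul_right,
        real_inner_self_eq_norm_sq]
      have hne : x ≠ p := by rintro rfl; exact hx hp.1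
      have hpos : 0 < ⟪N x, σ p (x - p)⟫ := by
        refine lt_of_lt_of_le ?_ hx3
        have := norm_pos_iff.2 (sub_ne_zero.2 hne)
        positivity
      have he0 : 0 ≤ η p x := (η p).nonneg
      have he1 : η p x ≤ 1 := (η p).le_one
      rcases he0.eq_or_lt with h0 | h0
      · rw [← h0]; simpa using hNx
      · have : 0 ≤ (1 - η p x) * ‖N x‖ ^ 2 := mul_nonneg (by linarith) (sq_nonneg _)
        have := mul_pos h0 hpos
        linarith
    · push Not at h
      rw [hwn x h, real_inner_self_eq_norm_sq]
      exact hNx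
  have hχd : ContDiff ℝ 1 χ := by
    refine ContDiff.mul ?_ ?_
    · exact smoothTransition.contDiff.comp ((hF.sub contDiff_const).div_const _)
    · exact smoothTransition.contDiff.comp (contDiff_const.sub hF)
  have hVd : ContDiff ℝ 1 V := by
    refine hχd.smul (ContDiff.add (ContDiff.smul (contDiff_const.sub ?_) hNc) ?_)
    · exact ContDiff.sum fun p _ => (η p).contDiff
    · refine ContDiff.sum fun p _ => (η p).contDiff.smul ?_
      exact (σ p).contDiff.comp (contDiff_id.sub contDiff_const)
  have hVs : HasCompactSupport V := by
    refine HasCompactSupport.intro (hcpt (b1 + 1)) fun x hx => ?_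
    have : b1 + 1 ≤ F x := by
      have : ¬ F x ≤ b1 + 1 := hx
      linarith
    simp only [V]; rw [hχhigh x this, zero_smul]
  obtain ⟨K, hK⟩ := ContDiff.lipschitzWith_of_hasCompactSupport hVs hVd one_ne_zero
  obtain ⟨B, hB⟩ := hVs.exists_bound_of_continuous hVd.continuous
  have hB0 : 0 ≤ B := (norm_nonneg _).trans (hB 0)
  obtain ⟨R, hR⟩ := hVs.isCompact.isBounded.subset_closedBall (0 : X)
  obtain ⟨M, hM0, hM⟩ : ∃ M : ℝ, 0 ≤ M ∧ ∀ x y, ‖x‖ ≤ R + 1 → ‖y‖ ≤ R + 1 →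
      ‖N x - N y‖ ≤ M * ‖x - y‖ := by
    obtain ⟨M, hM⟩ := (isCompact_closedBall (0 : X) (R + 1)).exists_bound_of_continuousOn
      (f := fderiv ℝ N) (hNc.continuous_fderiv one_ne_zero).continuousOn
    refine ⟨|M|, abs_nonneg _, fun x y hx hy => ?_⟩
    exact Convex.norm_image_sub_le_of_norm_fderiv_le (𝕜 := ℝ)
      (fun z _ => (hNc.differentiable one_ne_zero) z)
      (fun z hz => (hM z hz).trans (le_abs_self M)) (convex_closedBall 0 (R + 1))
      (by simpa using hy) (by simpa using hx)
  set τ : ℝ := min (min (1 / (B + 1)) (1 / (2 * (K + 1)))) (min (1 / (2 * (M * C + 1))) 1)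
  have hτ0 : 0 < τ := by
    refine lt_min (lt_min ?_ ?_) (lt_min ?_ one_pos) <;> positivity
  have hτB : τ * B ≤ 1 := by
    have := (le_div_iff₀ (by positivity)).1 (show τ ≤ 1 / (B + 1) from (min_le_left _ _).trans (min_le_left _ _))
    nlinarith
  have hτK : τ * K ≤ 1 / 2 := by
    have := (le_div_iff₀ (by positivity)).1 (show τ ≤ 1 / (2 * (K + 1)) from (min_le_left _ _).trans (min_le_right _ _))
    nlinarith
  have hτM : τ * (M * C) ≤ 1 / 2 := by
    have := (le_div_iff₀ (by positivity)).1 (show τ ≤ 1 / (2 * (M * C + 1)) from (min_le_right _ _).trans (min_le_left _ _))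
    nlinarith
  have hτ1 : τ ≤ 1 := (min_le_right _ _).trans (min_le_right _ _)
  let T : X → X := fun x => x - τ • V x
  let q : X → ℝ := fun x => ⟪N x, V x⟫
  have hq x : q x = χ x * ⟪N x, w x⟫ := by simp only [q, V]; rw [inner_smul_right]
  have hVq x : ‖V x‖ ^ 2 ≤ C * q x := by
    rw [hq]
    simp only [V]
    rw [norm_smul, mul_pow, norm_of_nonneg (hχ0 x)]
    calc χ x ^ 2 * ‖w x‖ ^ 2 ≤ χ x * ‖w x‖ ^ 2 := by
          refine mul_le_mul_of_nonneg_right ?_ (sq_nonneg _)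
          nlinarith [hχ0 x, hχ1 x]
      _ ≤ χ x * (C * ⟪N x, w x⟫) := mul_le_mul_of_nonneg_left (hwC x) (hχ0 x)
      _ = _ := by ring
  have hq0 x : 0 ≤ q x := by
    have h1 := hVq x
    have h2 : 0 ≤ C * q x := (sq_nonneg _).trans h1
    exact nonneg_of_mul_nonneg_right h2 hC0
  have hdesc x : F (T x) ≤ F x - τ / 2 * q x := by
    by_cases hx : V x = 0
    · simp [T, q, hx]
    · have hxR : ‖x‖ ≤ R := by simpa using hR (subset_tsupport _ hx)
      have hTx : ‖T x‖ ≤ R + 1 := by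
        refine (norm_sub_le _ _).trans ?_
        rw [norm_smul, norm_of_nonneg hτ0.le]
        have := mul_le_mul_of_nonneg_left (hB x) hτ0.le
        linarith
      have h := taylor_upper hN hM hM0 (by linarith : ‖x‖ ≤ R + 1) hTx
      have e : T x - x = -(τ • V x) := by simp [T]
      rw [e, inner_neg_right, inner_smul_right, norm_neg, norm_smul, norm_of_nonneg hτ0.le] at h
      have h2 := (abs_le.1 h).2
      have h3 := hVq x
      have h4 : M * (τ * ‖V x‖) ^ 2 ≤ τ * (1 / 2) * q x := by
        calc M * (τ * ‖V x‖) ^ 2 = (τ ^ 2 * M) * ‖V x‖ ^ 2 := by ring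
          _ ≤ (τ ^ 2 * M) * (C * q x) := mul_le_mul_of_nonneg_left h3 (by positivity)
          _ = τ * (τ * (M * C)) * q x := by ring
          _ ≤ τ * (1 / 2) * q x := by
            refine mul_le_mul_of_nonneg_right ?_ (hq0 x)
            exact mul_le_mul_of_nonneg_left hτM hτ0.le
      have h5 : q x = ⟪N x, V x⟫ := rfl
      rw [← h5] at h2
      linarith
  have hmono : ∀ x, F (T x) ≤ F x := fun x => by
    have := hdesc x
    have := mul_nonneg (half_pos hτ0).le (hq0 x)
    linarith
  have hTc : Continuous T := continuous_id.sub (hVd.continuous.const_smul τ)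
  refine ⟨T, Z, fun p => LinearMap.ker ((1 - σ p : X →L[ℝ] X) : X →ₗ[ℝ] X), hTc, ?_, hmono, ?_, hZf,
    fun p hp => (hloc p hp).2.2.2.2.2, ?_⟩
  · refine AntilipschitzWith.of_le_mul_dist fun x y => ?_
    have h1 := hK.dist_le_mul x y
    rw [dist_eq_norm, dist_eq_norm] at *
    have h2 : x - y = (T x - T y) + τ • (V x - V y) := by
      simp only [T, smul_sub]; abel
    have h3 : ‖x - y‖ ≤ ‖T x - T y‖ + τ * ‖V x - V y‖ := by
      calc ‖x - y‖ = ‖(T x - T y) + τ • (V x - V y)‖ := by rw [← h2]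
        _ ≤ _ := norm_add_le _ _
        _ = _ := by rw [norm_smul, norm_of_nonneg hτ0.le]
    have h4 : τ * ‖V x - V y‖ ≤ 1 / 2 * ‖x - y‖ := by
      calc τ * ‖V x - V y‖ ≤ τ * (K * ‖x - y‖) := mul_le_mul_of_nonneg_left h1 hτ0.le
        _ = τ * K * ‖x - y‖ := by ring
        _ ≤ _ := mul_le_mul_of_nonneg_right hτK (norm_nonneg _)
    push_cast
    linarith
  · intro x hx
    simp [T, V, hχlow x hx]
  · intro x hxb hxc
    let y : ℕ → X := fun m => T^[m] x
    have hys m : y (m + 1) = T (y m) := Function.iterate_succ_apply' T m x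
    have hant : Antitone fun m => F (y m) := antitone_nat_of_succ_le fun m => by
      rw [hys]; exact hmono _
    have hyb m : F (y m) ≤ b1 := (hant (Nat.zero_le m)).trans hxb
    have hqlim : Tendsto (fun m => q (y m)) atTop (nhds 0) := by
      have hlim := tendsto_atTop_ciInf hant ⟨c1, by rintro _ ⟨m, rfl⟩; exact hxc m⟩
      have h1 := (hlim.sub (hlim.comp (tendsto_add_atTop_nat 1))).const_mul (2 / τ)
      rw [sub_self, mul_zero] at h1
      refine squeeze_zero (fun m => hq0 _) (fun m => ?_) h1
      have := hdesc (y m)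
      rw [← hys] at this
      simp only [Function.comp_apply]
      rw [div_mul_eq_mul_div, le_div_iff₀ hτ0]
      linarith
    have hev : ∃ k, ∀ m ≥ k, ∃ p ∈ Z, ‖y m - p‖ < ρ := by
      set S := {z | F z ≤ b1} ∩ ({z | c1 ≤ F z} ∩ ⋂ p ∈ Z, {z | ρ ≤ ‖z - p‖})
      have hKc : IsCompact S := by
        refine (hcpt b1).inter_right (IsClosed.inter (isClosed_le continuous_const hFc) ?_)
        exact isClosed_biInter fun p _ => isClosed_le continuous_const (by fun_prop)
      have hqc : Continuous q := hNcont.inner hVd.continuous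
      have hpos : ∀ z ∈ S, 0 < q z := by
        rintro z ⟨h1, h2, h3⟩
        rw [hq, hχe z h2 h1, one_mul]
        apply hwpos
        intro h0
        have := mem_iInter₂.1 h3 z ⟨h0, h2, h1⟩
        simp at this
        linarith
      obtain ⟨q0, hq0p, hq0⟩ : ∃ q0 > 0, ∀ z ∈ S, q0 ≤ q z :=
        hKc.exists_forall_le' hqc.continuousOn hpos
      obtain ⟨k, hk⟩ := eventually_atTop.1 (hqlim.eventually_lt_const hq0p)
      refine ⟨k, fun m hm => ?_⟩
      by_contra hcon
      push Not at hcon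
      have := hq0 (y m) ⟨hyb m, hxc m, mem_iInter₂.2 fun p hp => hcon p hp⟩
      have := hk m hm
      linarith
    obtain ⟨k, hk⟩ := hev
    obtain ⟨p, hp, hpk⟩ := hk k le_rfl
    obtain ⟨-, -, hσσ, hσn, -, -⟩ := hloc p hp
    have hstep m (hm : ‖y m - p‖ < ρ) : y (m + 1) - p = (y m - p) - τ • σ p (y m - p) := by
      rw [hys]
      simp only [T]
      rw [hlin p hp (y m) hm.le (hxc m) (hyb m)]; abel
    have hstay j : ‖y (k + j) - p‖ < ρ := by
      induction j with
      | zero => exact hpk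
      | succ j ih =>
        obtain ⟨p', hp', h'⟩ := hk (k + (j + 1)) (by omega)
        have h1 : ‖y (k + (j + 1)) - p‖ ≤ 2 * ρ := by
          rw [← add_assoc, hstep _ ih]
          refine (norm_sub_le _ _).trans ?_
          rw [norm_smul, norm_of_nonneg hτ0.le, hσn]
          nlinarith [norm_nonneg (y (k + j) - p)]
        have : p' = p := hsep p hp p' hp' (by
          linarith [norm_sub_le_norm_sub_add_norm_sub p' (y (k + (j + 1))) p,
            norm_sub_rev p' (y (k + (j + 1)))])
        rwa [this] at h'
    -- the `-1`-component grows geometrically, hence vanishes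
    have hgrow j : (1 - σ p) (y (k + j) - p) = (1 + τ) ^ j • (1 - σ p) (y k - p) := by
      induction j with
      | zero => simp
      | succ j ih =>
        rw [← add_assoc, hstep _ (hstay j), pow_succ', mul_smul, ← ih]
        simp only [sub_apply, one_apply_eq_self, map_sub, map_smul]
        rw [hσσ (y (k + j)), hσσ p]
        module
    refine ⟨p, hp, k, ?_⟩
    show (1 - σ p) (y k - p) = 0
    by_contra hne
    have hpos := norm_pos_iff.2 hne
    have htend := tendsto_pow_atTop_atTop_of_one_lt (by linarith : 1 < 1 + τ)
    obtain ⟨j, hj⟩ := (htend.eventually_gt_atTop (2 * ρ / ‖(1 - σ p) (y k - p)‖)).exists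
    rw [div_lt_iff₀ hpos] at hj
    have h1 : ‖(1 - σ p) (y (k + j) - p)‖ ≤ 2 * ρ := by
      rw [sub_apply, one_apply_eq_self]
      refine (norm_sub_le _ _).trans ?_
      rw [hσn]
      have := hstay j
      linarith
    rw [hgrow, norm_smul, norm_of_nonneg (by positivity)] at h1
    linarith

lemma antilipschitz_iterate {X : Type*} [PseudoEMetricSpace X] {T : X → X} {K : NNReal}
    (hT : AntilipschitzWith K T) (k : ℕ) : AntilipschitzWith (K ^ k) T^[k] := by
  induction k with
  | zero => simpa using AntilipschitzWith.id
  | succ k ih =>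
    rw [Function.iterate_succ', pow_succ]
    exact hT.comp ih

/-- The points of `X` which can be hit by translates of a low-dimensional Lipschitz family inside a
countable union of preimages of affine subspaces form a set with dense complement. -/
lemma dense_avoiding {X Y : Type*} [NormedAddCommGroup X] [InnerProductSpace ℝ X]
    [FiniteDimensional ℝ X] [NormedAddCommGroup Y] [InnerProductSpace ℝ Y]
    [FiniteDimensional ℝ Y] {n : ℕ} (hY : finrank ℝ Y + 1 ≤ n) {T : X → X}
    (hT : AntilipschitzWith 2 T) {Z : Set X} (hZ : Z.Finite) {W : X → Submodule ℝ X}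
    (hW : ∀ p ∈ Z, finrank ℝ (W p) + n ≤ finrank ℝ X) {h : Y → X} {K : NNReal}
    (hh : LipschitzWith K h) :
    Dense {ζ : X | ∀ y, ∀ p ∈ Z, ∀ k, T^[k] (h y + ζ) - p ∉ W p} := by
  by_cases hn : n ≤ finrank ℝ X
  swap
  · have : Z = ∅ := by
      by_contra hne
      obtain ⟨p, hp⟩ := nonempty_iff_ne_empty.2 hne
      have := hW p hp
      omega
    simp [this]
  let Q : X → ℕ → Set (X × Y) := fun p k => {q | T^[k] q.1 - p ∈ W p}
  let S : Set (X × Y) := ⋃ p ∈ Z, ⋃ k, Q p k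
  have hQ p (hp : p ∈ Z) k : dimH (Q p k) ≤ (finrank ℝ X - n + finrank ℝ Y : ℕ) := by
    have hA : AntilipschitzWith (max (2 ^ k) 1) (Prod.map T^[k] (id : Y → Y)) := by
      intro a b
      have h1 := antilipschitz_iterate hT k a.1 b.1
      have h2 : edist a.2 b.2 ≤ (1 : NNReal) * edist a.2 b.2 := by simp
      rw [Prod.edist_eq, Prod.edist_eq]
      refine max_le (h1.trans ?_) (h2.trans ?_)
      · gcongr
        · exact le_max_left _ _
        · exact le_max_left _ _
      · gcongr
        · exact le_max_right _ _
        · exact le_max_right _ _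
    refine (hA.le_dimH_image _).trans ?_
    have hL : LipschitzWith 1 (fun q : W p × Y => ((p + (q.1 : X), q.2) : X × Y)) := by
      refine LipschitzWith.of_dist_le_mul fun a b => ?_
      rw [Prod.dist_eq, Prod.dist_eq]
      simp only [dist_add_left, NNReal.coe_one, one_mul]
      exact le_rfl
    have hsub : Prod.map T^[k] (id : Y → Y) '' Q p k ⊆
        range (fun q : W p × Y => ((p + (q.1 : X), q.2) : X × Y)) := by
      rintro _ ⟨q, hq, rfl⟩
      exact ⟨(⟨T^[k] q.1 - p, hq⟩, q.2), by simp [Prod.map]⟩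
    refine (dimH_mono hsub).trans (hL.dimH_range_le.trans ?_)
    rw [Real.dimH_univ_eq_finrank, finrank_prod]
    have := hW p hp
    exact_mod_cast (by omega : finrank ℝ (W p) + finrank ℝ Y ≤
      finrank ℝ X - n + finrank ℝ Y)
  have hS : dimH S ≤ (finrank ℝ X - n + finrank ℝ Y : ℕ) := by
    simp only [S]
    rw [dimH_bUnion hZ.countable]
    refine iSup₂_le fun p hp => ?_
    rw [dimH_iUnion]
    exact iSup_le fun k => hQ p hp k
  have hLip : LipschitzWith (1 + K) (fun q : X × Y => q.1 - h q.2) := by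
    have := LipschitzWith.prod_fst (α := X) (β := Y) |>.sub
      (hh.comp (LipschitzWith.prod_snd (α := X) (β := Y)))
    simpa using this
  have hD := dense_compl_of_dimH_lt_finrank (s := (fun q : X × Y => q.1 - h q.2) '' S) (by
    refine ((hLip.dimH_image_le S).trans hS).trans_lt ?_
    exact_mod_cast (by omega : finrank ℝ X - n + finrank ℝ Y < finrank ℝ X))
  refine hD.mono fun ζ hζ => ?_
  intro y p hp k hmem
  refine hζ ⟨(h y + ζ, y), ?_, by simp⟩
  exact mem_iUnion₂.2 ⟨p, hp, mem_iUnion.2 ⟨k, hmem⟩⟩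

/-- If all critical points in a slab of levels are nondegenerate with index at least `n`, then a
Lipschitz family of dimension less than `n` can be pushed below the slab, rel. boundary. -/
lemma exists_deformation {X Y : Type*} [NormedAddCommGroup X] [InnerProductSpace ℝ X]
    [FiniteDimensional ℝ X] [NormedAddCommGroup Y] [InnerProductSpace ℝ Y]
    [FiniteDimensional ℝ Y] {n : ℕ} (hY : finrank ℝ Y + 1 ≤ n)
    {F : X → ℝ} {N : X → X} (hF : ContDiff ℝ 1 F) (hNc : ContDiff ℝ 1 N)
    (hN : ∀ x, HasFDerivAt F (innerSL ℝ (N x)) x) (hcpt : ∀ b, IsCompact {x | F x ≤ b})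
    {c c0 c1 b b1 : ℝ} (hc0 : c < c0) (hc : c0 < c1) (hb : b < b1)
    (hcrit : ∀ p, N p = 0 → c1 ≤ F p → F p ≤ b1 →
      ∃ (σ : X →L[ℝ] X) (l : ℝ), 0 < l ∧ (∀ x, σ (σ x) = x) ∧ (∀ x, ‖σ x‖ = ‖x‖) ∧
      (∀ x, l * ‖x‖ ^ 2 ≤ ⟪fderiv ℝ N p x, σ x⟫) ∧
      finrank ℝ (LinearMap.ker ((1 - σ : X →L[ℝ] X) : X →ₗ[ℝ] X)) + n
        ≤ finrank ℝ X)
    {h : Y → X} {K : NNReal} (hh : LipschitzWith K h) (hhb : ∀ y, ‖y‖ ≤ 1 → F (h y) ≤ b)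
    (hhc : ∀ y, ‖y‖ = 1 → F (h y) ≤ c) :
    ∃ H : Y → X, Continuous H ∧ (∀ y, ‖y‖ = 1 → H y = h y) ∧ ∀ y, ‖y‖ ≤ 1 → F (H y) < c1 := by
  obtain ⟨T, Z, W, hTc, hTa, hTF, hTfix, hZ, hW, hT⟩ := exists_descent_map hF hNc hN hcpt hc hcrit
  have hD := dense_avoiding hY hTa hZ hW hh
  have hFc := hF.continuous
  -- uniform continuity of `F` near the compact set `h (ball)`
  have hcpB : IsCompact (closedBall (0 : Y) 1) := isCompact_closedBall _ _
  set e := min (c1 - c0) (b1 - b)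
  have he0 : 0 < e := lt_min (by linarith) (by linarith)
  obtain ⟨d, hd0, hd⟩ : ∃ d > 0, ∀ y, ‖y‖ ≤ 1 → ∀ ζ : X, ‖ζ‖ < d → |F (h y + ζ) - F (h y)| < e := by
    obtain ⟨R, hR⟩ := (hcpB.image hh.continuous).isBounded.subset_closedBall (0 : X)
    have hu := (isCompact_closedBall (0 : X) (R + 1)).uniformContinuousOn_of_continuous
      hFc.continuousOn
    obtain ⟨d, hd0, hd⟩ := Metric.uniformContinuousOn_iff.1 hu e he0
    refine ⟨min d 1, lt_min hd0 one_pos, fun y hy ζ hζ => ?_⟩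
    have h1 : ‖h y‖ ≤ R := by simpa using hR ⟨y, by simpa using hy, rfl⟩
    have h2 : ‖h y + ζ‖ ≤ R + 1 := (norm_add_le _ _).trans
      (add_le_add h1 (hζ.le.trans (min_le_right _ _)))
    rw [← Real.dist_eq]
    refine hd _ (by simpa using h2) _ (by simp; linarith) ?_
    rw [dist_eq_norm]
    simpa using hζ.trans_le (min_le_left _ _)
  obtain ⟨ζ, hζQ, hζd⟩ := hD.exists_dist_lt (0 : X) hd0
  rw [dist_zero_left] at hζd
  let ψ : Y → ℝ := fun y => max 0 (min 1 ((F (h y) - c) / (c0 - c)))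
  have hψ0 y : 0 ≤ ψ y := le_max_left _ _
  have hψ1 y : ψ y ≤ 1 := max_le zero_le_one (min_le_left _ _)
  have hψc : Continuous ψ := by
    have := hh.continuous
    fun_prop
  let H0 : Y → X := fun y => h y + ψ y • ζ
  have hH0c : Continuous H0 := hh.continuous.add (hψc.smul continuous_const)
  have hsm y : ‖ψ y • ζ‖ < d := by
    rw [norm_smul, norm_of_nonneg (hψ0 y)]
    exact (mul_le_of_le_one_left (norm_nonneg _) (hψ1 y)).trans_lt hζd
  have hmono x : Antitone fun m => F (T^[m] x) := by
    refine antitone_nat_of_succ_le fun m => ?_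
    simp only [Function.iterate_succ_apply']
    exact hTF _
  have hev y (hy : ‖y‖ ≤ 1) : ∃ m, F (T^[m] (H0 y)) < c1 := by
    have h1 := (abs_lt.1 (hd y hy _ (hsm y))).2
    by_contra hcon
    push Not at hcon
    by_cases hlow : F (h y) < c0
    · have := hcon 0
      have h2 : e ≤ c1 - c0 := min_le_left _ _
      simp only [Function.iterate_zero, id, H0] at this
      linarith
    · have hψe : ψ y = 1 := by
        simp only [ψ]
        rw [min_eq_left, max_eq_right zero_le_one]
        rw [le_div_iff₀ (by linarith)]
        linarith
      have hb1 : F (H0 y) ≤ b1 := by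
        have h2 : e ≤ b1 - b := min_le_right _ _
        have := hhb y hy
        simp only [H0]
        linarith
      obtain ⟨p, hp, k, hk⟩ := hT _ hb1 hcon
      refine hζQ y p hp k ?_
      have : H0 y = h y + ζ := by simp only [H0]; rw [hψe, one_smul]
      rwa [← this]
  obtain ⟨m, hm⟩ := hcpB.elim_directed_cover (fun m => {y | F (T^[m] (H0 y)) < c1})
    (fun m => isOpen_lt (hFc.comp ((hTc.iterate m).comp hH0c)) continuous_const)
    (fun y hy => mem_iUnion.2 (hev y (by simpa using hy)))
    (fun i j => ⟨max i j, fun y hy => (hmono _ (le_max_left i j)).trans_lt hy,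
      fun y hy => (hmono _ (le_max_right i j)).trans_lt hy⟩)
  refine ⟨fun y => T^[m] (H0 y), (hTc.iterate m).comp hH0c, fun y hy => ?_, fun y hy =>
    hm (by simpa using hy)⟩
  have h1 : ψ y = 0 := by
    simp only [ψ]
    refine max_eq_left ((min_le_right _ _).trans ?_)
    exact div_nonpos_of_nonpos_of_nonneg (by linarith [hhc y hy]) (by linarith)
  have h2 : H0 y = h y := by simp only [H0]; rw [h1, zero_smul, add_zero]
  show T^[m] (H0 y) = h y
  rw [h2]
  exact Function.iterate_fixed (hTfix _ (by linarith [hhc y hy])) m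

/-- Finite-dimensional min-max principle with index bound: if a family of dimension `< n` links at
level `c`, there are almost critical points at about that level whose index is less than `n`. -/
theorem minmax {X Y : Type*} [NormedAddCommGroup X] [InnerProductSpace ℝ X]
    [FiniteDimensional ℝ X] [NormedAddCommGroup Y] [InnerProductSpace ℝ Y]
    [FiniteDimensional ℝ Y] {n : ℕ} (hY : finrank ℝ Y + 1 ≤ n)
    {F : X → ℝ} (hF : ContDiff ℝ 2 F) {k C : ℝ} (hk : 0 < k) (hco : ∀ x, k * ‖x‖ ^ 2 - C ≤ F x)
    {h : Y → X} {K : NNReal} (hh : LipschitzWith K h) {b c δ ε : ℝ} (hδ : 0 < δ) (hε : 0 < ε)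
    (hhb : ∀ y, ‖y‖ ≤ 1 → F (h y) ≤ b) (hhc : ∀ y, ‖y‖ = 1 → F (h y) ≤ c - 2 * δ)
    (link : ∀ H : Y → X, Continuous H → (∀ y, ‖y‖ = 1 → H y = h y) → ∃ y, ‖y‖ ≤ 1 ∧ c ≤ F (H y)) :
    ∃ x, c - δ ≤ F x ∧ F x ≤ b + δ ∧ ‖fderiv ℝ F x‖ ≤ ε ∧
      ∀ L : (Fin n → ℝ) →ₗ[ℝ] X, ∃ α, α ≠ 0 ∧ 0 ≤ fderiv ℝ (fderiv ℝ F) x (L α) (L α) := by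
  by_contra hcon
  push Not at hcon
  borelize X
  have hcb : c ≤ b := by
    obtain ⟨y, hy, hcy⟩ := link h hh.continuous fun _ _ => rfl
    exact hcy.trans (hhb y hy)
  let D := (InnerProductSpace.toDual ℝ X).symm
  let N : X → X := fun x => D (fderiv ℝ F x)
  have hNi x v : ⟪N x, v⟫ = fderiv ℝ F x v :=
    InnerProductSpace.toDual_symm_apply
  have hFd x : HasFDerivAt F (fderiv ℝ F x) x :=
    (hF.differentiable two_ne_zero x).hasFDerivAt
  have hFd1 : ContDiff ℝ 1 (fderiv ℝ F) := hF.fderiv_right (by norm_num)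
  have hNc : ContDiff ℝ 1 N := D.contDiff.comp hFd1
  have hNd x : HasFDerivAt N (fderiv ℝ N x) x :=
    (hNc.differentiable one_ne_zero x).hasFDerivAt
  have hNN : ∀ x v w, ⟪fderiv ℝ N x v, w⟫ = fderiv ℝ (fderiv ℝ F) x v w := by
    intro x v w
    have h1 : HasFDerivAt (fun x => ⟪N x, w⟫)
        ((innerSL ℝ w).comp (fderiv ℝ N x)) x := by
      have := (innerSL ℝ w).hasFDerivAt.comp x (hNd x)
      refine this.congr_of_eventuallyEq (Eventually.of_forall fun z => ?_)
      simp [real_inner_comm]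
    have h2 : HasFDerivAt (fun x => ⟪N x, w⟫)
        ((ContinuousLinearMap.apply ℝ ℝ w).comp (fderiv ℝ (fderiv ℝ F) x)) x := by
      have := (ContinuousLinearMap.apply ℝ ℝ w).hasFDerivAt.comp x
        (hFd1.differentiable one_ne_zero x).hasFDerivAt
      refine this.congr_of_eventuallyEq (Eventually.of_forall fun z => ?_)
      simp [hNi]
    have h3 := congrArg (fun B => B v) (h1.unique h2)
    simpa [real_inner_comm] using h3
  set M := |C + b + δ|
  set R0 := (1 + M) / k + 1
  have hM0 : 0 ≤ M := abs_nonneg _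
  have hR0' : 0 < R0 := by positivity
  have hbig R (hR : R0 < R) : b + δ < k * R ^ 2 - C - R := by
    have h1 : (1 + M) / k < R := by linarith
    have h0 : (0 : ℝ) ≤ (1 + M) / k := by positivity
    have h2 : 1 < R := by linarith
    rw [div_lt_iff₀ hk] at h1
    have h3 := le_abs_self (C + b + δ)
    nlinarith
  -- Sard: small regular values of the gradient
  have hsard : volume (N '' {x | (fderiv ℝ N x).det = 0}) = 0 :=
    MeasureTheory.addHaar_image_eq_zero_of_det_fderivWithin_eq_zero volume
      (fun x _ => (hNd x).hasFDerivWithinAt) fun x hx => hx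
  have hdense : Dense (N '' {x | (fderiv ℝ N x).det = 0})ᶜ :=
    MeasureTheory.Measure.dense_of_ae (MeasureTheory.measure_eq_zero_iff_ae_notMem.1 hsard)
  obtain ⟨ξ, hξN, hξ⟩ := hdense.exists_dist_lt (0 : X)
    (show 0 < min (min ε 1) (δ / 4 / R0) from lt_min (lt_min hε one_pos) (by positivity))
  rw [dist_zero_left] at hξ
  have hξε : ‖ξ‖ ≤ ε := hξ.le.trans ((min_le_left _ _).trans (min_le_left _ _))
  have hξ1 : ‖ξ‖ ≤ 1 := hξ.le.trans ((min_le_left _ _).trans (min_le_right _ _))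
  have hξR : ‖ξ‖ * R0 ≤ δ / 4 := by
    have := hξ.le.trans (min_le_right _ _)
    rwa [le_div_iff₀ hR0'] at this
  let F' : X → ℝ := fun x => F x - ⟪ξ, x⟫
  have hin x : |⟪ξ, x⟫| ≤ ‖ξ‖ * ‖x‖ := abs_real_inner_le_norm ξ x
  have hF'lo : ∀ x, k * ‖x‖ ^ 2 - C - ‖x‖ ≤ F' x := by
    intro x
    have h1 := (abs_le.1 (hin x)).2
    have h2 : ‖ξ‖ * ‖x‖ ≤ ‖x‖ := mul_le_of_le_one_left (norm_nonneg _) hξ1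
    have := hco x
    simp only [F']
    linarith
  have hclose x (hx : ‖x‖ ≤ R0) : |F' x - F x| ≤ δ / 4 := by
    have : F' x - F x = -⟪ξ, x⟫ := by simp only [F']; ring
    rw [this, abs_neg]
    exact (hin x).trans ((mul_le_mul_of_nonneg_left hx (norm_nonneg _)).trans hξR)
  have hsmall' x (hx : F' x ≤ b + δ) : ‖x‖ ≤ R0 := by
    by_contra hlt
    push Not at hlt
    linarith [hbig _ hlt, hF'lo x]
  have hsmall x (hx : F x ≤ b + δ) : ‖x‖ ≤ R0 := by
    by_contra hlt
    push Not at hlt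
    linarith [hbig _ hlt, hco x, norm_nonneg x]
  have hF'c : ContDiff ℝ 2 F' := hF.sub (contDiff_const.inner ℝ contDiff_id)
  have hcpt b' : IsCompact {x | F' x ≤ b'} := by
    refine isCompact_of_isClosed_isBounded (isClosed_le hF'c.continuous continuous_const) ?_
    refine (isBounded_closedBall (x := (0 : X)) (r := (1 + |C + b'|) / k + 1)).subset ?_
    intro x hx
    rw [mem_closedBall_zero_iff]
    by_contra hlt
    push Not at hlt
    have h0 : (0 : ℝ) ≤ (1 + |C + b'|) / k := by positivity
    have h1 : (1 + |C + b'|) / k < ‖x‖ := by linarith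
    have h2 : 1 < ‖x‖ := by linarith
    rw [div_lt_iff₀ hk] at h1
    have h3 := le_abs_self (C + b')
    have h4 := hF'lo x
    have h5 : F' x ≤ b' := hx
    have h6 := abs_nonneg (C + b')
    nlinarith
  obtain ⟨H, hHc, hHs, hHb⟩ := exists_deformation (N := fun x => N x - ξ) hY (hF'c.of_le (by norm_num))
    (hNc.sub contDiff_const)
    (fun x => by
      have h1 : HasFDerivAt (fun x : X => ⟪ξ, x⟫) (innerSL ℝ ξ) x := (innerSL ℝ ξ).hasFDerivAt
      refine ((hFd x).sub h1).congr_fderiv ?_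
      ext v
      simp [hNi])
    hcpt (c := c - 2 * δ + δ / 4) (c0 := c - δ) (c1 := c - δ / 2) (b := b + δ / 4) (b1 := b + δ / 2)
    (by linarith) (by linarith) (by linarith)
    (fun p hp h1 h2 => by
      have hp' : N p = ξ := sub_eq_zero.1 hp
      have hpR := hsmall' p (by linarith)
      have hcl := abs_le.1 (hclose p hpR)
      have hnorm : ‖fderiv ℝ F p‖ ≤ ε := by
        have : ‖N p‖ = ‖fderiv ℝ F p‖ := D.norm_map _
        rw [← this, hp']; exact hξε
      obtain ⟨L, hL⟩ := hcon p (by linarith) (by linarith) hnorm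
      have hdet : (fderiv ℝ N p).det ≠ 0 := fun h0 => hξN ⟨p, h0, hp'⟩
      have hfd : fderiv ℝ (fun x => N x - ξ) p = fderiv ℝ N p := fderiv_sub_const ..
      rw [hfd]
      refine exists_sign_operator (fderiv ℝ N p) ?_ ?_ L ?_
      · intro u v
        have hs : IsSymmSndFDerivAt ℝ F p :=
          hF.contDiffAt.isSymmSndFDerivAt (by simp)
        rw [hNN, real_inner_comm, hNN]
        exact hs u v
      · have := LinearMap.equivOfDetNeZero (fderiv ℝ N p : X →ₗ[ℝ] X) hdet
        have hb := (LinearMap.isUnit_iff_isUnit_det (fderiv ℝ N p : X →ₗ[ℝ] X)).2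
          (isUnit_iff_ne_zero.2 hdet)
        exact ((Module.End.isUnit_iff _).1 hb).injective
      · intro α hα
        rw [hNN]
        exact hL α hα)
    hh
    (fun y hy => by
      have h1 := hhb y hy
      have := abs_le.1 (hclose _ (hsmall _ (by linarith : F (h y) ≤ b + δ)))
      linarith)
    (fun y hy => by
      have h1 := hhc y hy
      have := abs_le.1 (hclose _ (hsmall _ (by linarith : F (h y) ≤ b + δ)))
      linarith)
  obtain ⟨y, hy, hcy⟩ := link H hHc hHs
  have h1 := hHb y hy
  have := abs_le.1 (hclose _ (hsmall' _ (by linarith : F' (H y) ≤ b + δ)))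
  linarith

variable {E : Type*} [NormedAddCommGroup E] [InnerProductSpace ℝ E] [FiniteDimensional ℝ E]
  {G : E → E →L[ℝ] E} {c C s μ K R α : ℝ} {g : MetricTensor n}

/-! ### Metrics of bounded geometry and the geodesic flow -/

/-- `G` is a Riemannian metric on the inner product space `E`, written as a field of symmetric
operators (`g x v w = ⟪G x v, w⟫`), which is `C²`, uniformly elliptic, and bounded together with its
first derivative, the latter being Lipschitz. -/
structure RMet
    (G : E → E →L[ℝ] E) (c C : ℝ) : Prop where
  smooth : ContDiff ℝ 2 G
  symm : ∀ x v w, ⟪G x v, w⟫ = ⟪v, G x w⟫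
  pos : 0 < c
  one_le : 1 ≤ C
  lower : ∀ x v, c * ‖v‖ ^ 2 ≤ ⟪G x v, v⟫
  bd0 : ∀ x, ‖G x‖ ≤ C
  bd1 : ∀ x, ‖fderiv ℝ G x‖ ≤ C
  lipDG : ∀ x y, ‖fderiv ℝ G x - fderiv ℝ G y‖ ≤ C * ‖x - y‖

/-- The force `f(x,v)`, the gradient in `x` of `⟪G x v, v⟫ / 2`. -/
def force (G : E → E →L[ℝ] E) (x v : E) : E :=
  (InnerProductSpace.toDual ℝ E).symm
    ((2 : ℝ)⁻¹ • ((innerSL ℝ v).comp ((ContinuousLinearMap.apply ℝ E v).comp (fderiv ℝ G x))))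

/-- The curve `x` with velocity `v` solves the geodesic equation in Euler–Lagrange form:
`x' = v` and `(G(x) v)' = f(x,v)`. -/
def IsGeo (G : E → E →L[ℝ] E) (x v : ℝ → E) : Prop :=
  ∀ t, HasDerivAt x (v t) t ∧ HasDerivAt (fun s => G (x s) (v s)) (force G (x t) (v t)) t

lemma inner_force (G : E → E →L[ℝ] E) (x v u : E) :
    ⟪force G x v, u⟫ = ⟪fderiv ℝ G x u v, v⟫ / 2 := by
  rw [force, InnerProductSpace.toDual_symm_apply]
  simp [real_inner_comm]
  ring

namespace RMet

lemma Cpos (hG : RMet G c C) : 0 < C := lt_of_lt_of_le one_pos hG.one_le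

lemma upper (hG : RMet G c C) (x v w : E) : |⟪G x v, w⟫| ≤ C * ‖v‖ * ‖w‖ := by
  refine (abs_real_inner_le_norm _ _).trans ?_
  gcongr
  exact (G x).le_of_opNorm_le (hG.bd0 x) v

lemma self_nonneg (hG : RMet G c C) (x v : E) : 0 ≤ ⟪G x v, v⟫ :=
  (mul_nonneg hG.pos.le (sq_nonneg _)).trans (hG.lower x v)

lemma norm_le_of_energy (hG : RMet G c C) {x v : E} {e : ℝ} (he : ⟪G x v, v⟫ ≤ e) :
    ‖v‖ ≤ √(e / c) := by
  refine le_sqrt_of_sq_le ?_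
  rw [le_div_iff₀ hG.pos]
  linarith [hG.lower x v]

lemma norm_apply_le (hG : RMet G c C) (x v : E) : ‖G x v‖ ≤ C * ‖v‖ :=
  (G x).le_of_opNorm_le (hG.bd0 x) v

lemma lower_norm (hG : RMet G c C) (x v : E) : c * ‖v‖ ≤ ‖G x v‖ := by
  rcases eq_or_ne v 0 with rfl | hv
  · simp
  · have h1 := hG.lower x v
    have h2 := real_inner_le_norm (G x v) v
    have h3 := norm_pos_iff.2 hv
    nlinarith

lemma differentiableG (hG : RMet G c C) : Differentiable ℝ G := hG.smooth.differentiable two_ne_zero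

lemma contDiff_fderiv (hG : RMet G c C) : ContDiff ℝ 1 (fderiv ℝ G) :=
  hG.smooth.fderiv_right (by norm_num)

lemma lipG (hG : RMet G c C) (x y : E) : ‖G x - G y‖ ≤ C * ‖x - y‖ :=
  Convex.norm_image_sub_le_of_norm_fderiv_le (𝕜 := ℝ) (fun z _ => hG.differentiableG z)
    (fun z _ => hG.bd1 z) convex_univ (mem_univ y) (mem_univ x)

lemma norm_DG_apply_le (hG : RMet G c C) (x u v : E) : ‖fderiv ℝ G x u v‖ ≤ C * ‖u‖ * ‖v‖ :=
  (ContinuousLinearMap.le_opNorm _ _).trans (mul_le_mul_of_nonneg_right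
    ((fderiv ℝ G x).le_of_opNorm_le (hG.bd1 x) u) (norm_nonneg _))

lemma vel_sub_le (hG : RMet G c C) (x y v w : E) :
    c * ‖v - w‖ ≤ ‖G x v - G y w‖ + C * ‖x - y‖ * ‖w‖ := by
  refine (hG.lower_norm x (v - w)).trans ?_
  have : G x (v - w) = (G x v - G y w) - (G x - G y) w := by
    simp only [map_sub, sub_apply]; abel
  rw [this]
  refine (norm_sub_le _ _).trans ?_
  gcongr
  exact (G x - G y).le_of_opNorm_le (hG.lipG x y) w

lemma force_le (hG : RMet G c C) (x v : E) : ‖force G x v‖ ≤ C / 2 * ‖v‖ ^ 2 := by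
  rcases eq_or_ne (force G x v) 0 with h | h
  · rw [h, norm_zero]; have := hG.Cpos; positivity
  have h1 := inner_force G x v (force G x v)
  rw [real_inner_self_eq_norm_sq] at h1
  have h2 := real_inner_le_norm (fderiv ℝ G x (force G x v) v) v
  have h3 := hG.norm_DG_apply_le x (force G x v) v
  have h4 := mul_le_mul_of_nonneg_right h3 (norm_nonneg v)
  have h5 := norm_pos_iff.2 h
  refine le_of_mul_le_mul_right ?_ h5
  nlinarith

lemma force_sub_le (hG : RMet G c C) (x y v w : E) :
    ‖force G x v - force G y w‖ ≤ C / 2 * (‖x - y‖ * ‖v‖ ^ 2 + ‖v - w‖ * (‖v‖ + ‖w‖)) := by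
  set d := force G x v - force G y w
  have hC := hG.Cpos
  rcases eq_or_ne d 0 with h | h
  · rw [h, norm_zero]; positivity
  have h1 : ⟪d, d⟫ = ⟪fderiv ℝ G x d v, v⟫ / 2 - ⟪fderiv ℝ G y d w, w⟫ / 2 := by
    rw [← inner_force, ← inner_force, ← inner_sub_left]
  have h2 : ⟪fderiv ℝ G x d v, v⟫ - ⟪fderiv ℝ G y d w, w⟫ =
      ⟪(fderiv ℝ G x - fderiv ℝ G y) d v, v⟫ + ⟪fderiv ℝ G y d (v - w), v⟫ +
        ⟪fderiv ℝ G y d w, v - w⟫ := by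
    simp only [map_sub, sub_apply, inner_sub_left, inner_sub_right]; ring
  have e1 : ⟪(fderiv ℝ G x - fderiv ℝ G y) d v, v⟫ ≤ C * ‖x - y‖ * ‖d‖ * ‖v‖ * ‖v‖ := by
    refine (real_inner_le_norm _ _).trans ?_
    gcongr
    refine (ContinuousLinearMap.le_opNorm _ _).trans ?_
    gcongr
    exact ContinuousLinearMap.le_of_opNorm_le _ (hG.lipDG x y) d
  have e2 : ⟪fderiv ℝ G y d (v - w), v⟫ ≤ C * ‖d‖ * ‖v - w‖ * ‖v‖ := by
    refine (real_inner_le_norm _ _).trans ?_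
    gcongr
    exact hG.norm_DG_apply_le y d (v - w)
  have e3 : ⟪fderiv ℝ G y d w, v - w⟫ ≤ C * ‖d‖ * ‖w‖ * ‖v - w‖ := by
    refine (real_inner_le_norm _ _).trans ?_
    gcongr
    exact hG.norm_DG_apply_le y d w
  rw [real_inner_self_eq_norm_sq] at h1
  refine le_of_mul_le_mul_right ?_ (norm_pos_iff.2 h)
  nlinarith

lemma isUnit (hG : RMet G c C) (x : E) : IsUnit (G x) := by
  have hinj : Function.Injective (G x) := by
    refine (injective_iff_map_eq_zero (G x)).2 fun v hv => ?_
    have := hG.lower_norm x v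
    rw [hv, norm_zero] at this
    have h2 : ‖v‖ ≤ 0 := by
      by_contra hlt
      push Not at hlt
      have := mul_pos hG.pos hlt
      linarith
    exact norm_le_zero_iff.1 h2
  let e := (LinearEquiv.ofInjectiveEndo (G x : E →ₗ[ℝ] E) hinj).toContinuousLinearEquiv
  exact ⟨ContinuousLinearEquiv.unitsEquiv ℝ E |>.symm e, by ext v; rfl⟩

lemma G_inv (hG : RMet G c C) (x v : E) : G x (Ring.inverse (G x) v) = v := by
  have := Ring.mul_inverse_cancel _ (hG.isUnit x)
  exact congrArg (fun A : E →L[ℝ] E => A v) this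

lemma inv_G (hG : RMet G c C) (x v : E) : Ring.inverse (G x) (G x v) = v := by
  have := Ring.inverse_mul_cancel _ (hG.isUnit x)
  exact congrArg (fun A : E →L[ℝ] E => A v) this

lemma contDiff_inv (hG : RMet G c C) : ContDiff ℝ 2 fun x => Ring.inverse (G x) := by
  rw [contDiff_iff_contDiffAt]
  intro x
  obtain ⟨u, hu⟩ := hG.isUnit x
  have h1 : ContDiffAt ℝ 2 Ring.inverse (G x) := by rw [← hu]; exact contDiffAt_ringInverse ℝ u
  exact h1.comp x hG.smooth.contDiffAt

end RMet

/-- Time-independent vector field of the geodesic flow on phase space `(x, P)`. -/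
def geoField (G : E → E →L[ℝ] E) (z : E × E) : E × E :=
  (Ring.inverse (G z.1) z.2, force G z.1 (Ring.inverse (G z.1) z.2))

lemma RMet.norm_inv_le (hG : RMet G c C) (x p : E) : ‖Ring.inverse (G x) p‖ ≤ ‖p‖ / c := by
  rw [le_div_iff₀ hG.pos, mul_comm]
  simpa [hG.G_inv] using hG.lower_norm x (Ring.inverse (G x) p)

lemma geoField_lip (hG : RMet G c C) (R : ℝ) (hR : 0 < R) :
    ∃ K : ℝ, 0 ≤ K ∧ (∀ z w : E × E, ‖z.2‖ ≤ R → ‖w.2‖ ≤ R →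
      ‖geoField G z - geoField G w‖ ≤ K * ‖z - w‖) ∧ ∀ z : E × E, ‖z.2‖ ≤ R → ‖geoField G z‖ ≤ K := by
  have hc := hG.pos
  have hC := hG.Cpos
  set B := R / c with hB
  have hB0 : 0 < B := by positivity
  set K1 := (1 + C * B) / c with hK1
  have hK10 : 0 < K1 := by positivity
  refine ⟨K1 + C / 2 * (B ^ 2 + K1 * (B + B)) + B + C / 2 * B ^ 2, by positivity, ?_, ?_⟩
  · intro z w hz hw
    have hv : ‖Ring.inverse (G z.1) z.2‖ ≤ B := (hG.norm_inv_le _ _).trans (by rw [hB]; gcongr)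
    have hw' : ‖Ring.inverse (G w.1) w.2‖ ≤ B := (hG.norm_inv_le _ _).trans (by rw [hB]; gcongr)
    have h1 := hG.vel_sub_le z.1 w.1 (Ring.inverse (G z.1) z.2) (Ring.inverse (G w.1) w.2)
    rw [hG.G_inv, hG.G_inv] at h1
    have d1 : ‖z.1 - w.1‖ ≤ ‖z - w‖ := norm_fst_le (z - w)
    have d2 : ‖z.2 - w.2‖ ≤ ‖z - w‖ := norm_snd_le (z - w)
    set v := Ring.inverse (G z.1) z.2
    set v' := Ring.inverse (G w.1) w.2
    have h2 : ‖v - v'‖ ≤ K1 * ‖z - w‖ := by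
      rw [hK1, div_mul_eq_mul_div, le_div_iff₀ hc, mul_comm]
      have : C * ‖z.1 - w.1‖ * ‖v'‖ ≤ C * ‖z - w‖ * B := by gcongr
      linarith
    have h3 : ‖force G z.1 v - force G w.1 v'‖ ≤ C / 2 * (B ^ 2 + K1 * (B + B)) * ‖z - w‖ := by
      refine (hG.force_sub_le _ _ _ _).trans ?_
      have : ‖z.1 - w.1‖ * ‖v‖ ^ 2 + ‖v - v'‖ * (‖v‖ + ‖v'‖) ≤
          ‖z - w‖ * B ^ 2 + (K1 * ‖z - w‖) * (B + B) := by gcongr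
      calc _ ≤ C / 2 * (‖z - w‖ * B ^ 2 + (K1 * ‖z - w‖) * (B + B)) := by gcongr
        _ = _ := by ring
    have p1 : 0 ≤ C / 2 * (B ^ 2 + K1 * (B + B)) * ‖z - w‖ := by positivity
    have p2 : 0 ≤ (B + C / 2 * B ^ 2) * ‖z - w‖ := by positivity
    have p3 : 0 ≤ K1 * ‖z - w‖ := by positivity
    refine max_le (h2.trans ?_) (h3.trans ?_) <;> linarith
  · intro z hz
    have hv : ‖Ring.inverse (G z.1) z.2‖ ≤ B := (hG.norm_inv_le _ _).trans (by rw [hB]; gcongr)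
    have p1 : 0 ≤ C / 2 * (B ^ 2 + K1 * (B + B)) := by positivity
    have p2 : 0 ≤ C / 2 * B ^ 2 := by positivity
    refine max_le (hv.trans ?_) ((hG.force_le _ _).trans ?_)
    · linarith
    · have : C / 2 * ‖Ring.inverse (G z.1) z.2‖ ^ 2 ≤ C / 2 * B ^ 2 := by gcongr
      linarith

/-- Conservation of energy, also for time-rescaled geodesic motions. -/
lemma energy_deriv (hG : RMet G c C) {x P : ℝ → E} {χ : ℝ} {s : Set ℝ} {t : ℝ}
    (hs : UniqueDiffWithinAt ℝ s t)
    (hx : HasDerivWithinAt x (χ • Ring.inverse (G (x t)) (P t)) s t)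
    (hP : HasDerivWithinAt P (χ • force G (x t) (Ring.inverse (G (x t)) (P t))) s t) :
    HasDerivWithinAt (fun t => ⟪P t, Ring.inverse (G (x t)) (P t)⟫) 0 s t := by
  set v : ℝ → E := fun t => Ring.inverse (G (x t)) (P t) with hv
  have hGx := (hG.differentiableG (x t)).hasFDerivAt.comp_hasDerivWithinAt t hx
  have hIx := ((hG.contDiff_inv.differentiable two_ne_zero) (x t)).hasFDerivAt.comp_hasDerivWithinAt t hx
  have hvd := hIx.clm_apply hP
  set v' := ((fderiv ℝ (fun x => Ring.inverse (G x)) (x t))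
    (χ • Ring.inverse (G (x t)) (P t))) (P t) + ((fun x => Ring.inverse (G x)) ∘ x) t
    (χ • force G (x t) (Ring.inverse (G (x t)) (P t)))
  have hvd' : HasDerivWithinAt v v' s t := hvd
  have hPP := hGx.clm_apply hvd'
  have hPe : HasDerivWithinAt (fun t => G (x t) (v t)) (χ • force G (x t) (v t)) s t := by
    have : (fun t => G (x t) (v t)) = P := by funext t; exact hG.G_inv _ _
    rw [this]; exact hP
  have hin := hP.inner ℝ hvd'
  refine hin.congr_deriv ?_
  have huniq := hs.eq_deriv _ hPP hPe
  have e1 : ⟪P t, v'⟫ = ⟪v t, G (x t) v'⟫ := by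
    rw [← hG.symm, hv]; simp only [hG.G_inv]
  have e2 : G (x t) v' = χ • force G (x t) (v t) - fderiv ℝ G (x t) (χ • v t) (v t) := by
    rw [← huniq]; simp [hv]
  rw [e1, e2, inner_sub_right, inner_smul_left, inner_smul_right, real_inner_comm,
    real_inner_comm _ (v t), inner_force, map_smul, smul_apply, inner_smul_left]
  simp only [conj_trivial]
  ring

lemma exists_geoField_solution (hG : RMet G c C) (z0 : E × E) :
    ∃ R > 0, ∀ T > 0, ∃ z : ℝ → E × E, z 0 = z0 ∧ ∀ t ∈ Icc (-T) T,
      HasDerivWithinAt z (geoField G (z t)) (Icc (-T) T) t ∧ ‖(z t).2‖ ≤ R := by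
  have hC := hG.Cpos
  set h0 := ⟪z0.2, Ring.inverse (G z0.1) z0.2⟫
  set R := C * √(h0 / c) + 1
  have hR0 : 0 < R := by positivity
  refine ⟨R, hR0, fun T hT => ?_⟩
  obtain ⟨K, hK0, hKl, hKb⟩ := geoField_lip hG (2 * R) (by positivity)
  let χ : E → ℝ := fun p => max 0 (min 1 (2 - ‖p‖ / R))
  have hχ0 p : 0 ≤ χ p := le_max_left _ _
  have hχ1 p : χ p ≤ 1 := max_le zero_le_one (min_le_left _ _)
  have hχz p (hp : 2 * R < ‖p‖) : χ p = 0 := by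
    refine max_eq_left ((min_le_right _ _).trans ?_)
    rw [sub_nonpos, le_div_iff₀ hR0]; exact hp.le
  have hχe p (hp : ‖p‖ ≤ R) : χ p = 1 := by
    have : 1 ≤ 2 - ‖p‖ / R := by
      have : ‖p‖ / R ≤ 1 := (div_le_one hR0).2 hp
      linarith
    simp only [χ]
    rw [min_eq_left this, max_eq_right zero_le_one]
  have hχl p q : |χ p - χ q| ≤ ‖p - q‖ / R := by
    refine (abs_max_sub_max_le_max _ _ _ _).trans (max_le (by simp; positivity) ?_)
    refine (abs_min_sub_min_le_max _ _ _ _).trans (max_le (by simp; positivity) ?_)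
    have : 2 - ‖p‖ / R - (2 - ‖q‖ / R) = -((‖p‖ - ‖q‖) / R) := by ring
    rw [this, abs_neg, abs_div, abs_of_pos hR0]
    gcongr
    exact abs_norm_sub_norm_le p q
  let Ψ : E × E → E × E := fun z => χ z.2 • geoField G z
  have hΨb z : ‖Ψ z‖ ≤ K := by
    simp only [Ψ]
    rw [norm_smul, norm_of_nonneg (hχ0 _)]
    by_cases hz : ‖z.2‖ ≤ 2 * R
    · exact (mul_le_of_le_one_left (norm_nonneg _) (hχ1 _)).trans (hKb z hz)
    · rw [hχz _ (not_le.1 hz), zero_mul]; exact hK0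
  have key (z w : E × E) (hw : ‖w.2‖ ≤ 2 * R) : ‖Ψ z - Ψ w‖ ≤ (K + K / R) * ‖z - w‖ := by
    have d2 : ‖z.2 - w.2‖ ≤ ‖z - w‖ := norm_snd_le (z - w)
    have e : Ψ z - Ψ w = χ z.2 • (geoField G z - geoField G w) + (χ z.2 - χ w.2) • geoField G w := by
      simp only [Ψ, smul_sub, sub_smul]; abel
    have h2 : ‖(χ z.2 - χ w.2) • geoField G w‖ ≤ K / R * ‖z - w‖ := by
      rw [norm_smul, norm_eq_abs]
      calc _ ≤ ‖z.2 - w.2‖ / R * K := mul_le_mul (hχl _ _) (hKb w hw) (norm_nonneg _) (by positivity)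
        _ ≤ ‖z - w‖ / R * K := by gcongr
        _ = _ := by ring
    have h1 : ‖χ z.2 • (geoField G z - geoField G w)‖ ≤ K * ‖z - w‖ := by
      rw [norm_smul, norm_of_nonneg (hχ0 _)]
      by_cases hz : ‖z.2‖ ≤ 2 * R
      · exact (mul_le_of_le_one_left (norm_nonneg _) (hχ1 _)).trans (hKl z w hz hw)
      · rw [hχz _ (not_le.1 hz), zero_mul]; positivity
    rw [e, add_mul]
    exact (norm_add_le _ _).trans (add_le_add h1 h2)
  have hΨl : LipschitzWith (K + K / R).toNNReal Ψ := by
    refine LipschitzWith.of_dist_le_mul fun z w => ?_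
    rw [dist_eq_norm, dist_eq_norm, coe_toNNReal _ (by positivity)]
    by_cases hw : ‖w.2‖ ≤ 2 * R
    · exact key z w hw
    by_cases hz : ‖z.2‖ ≤ 2 * R
    · rw [norm_sub_rev, norm_sub_rev z]; exact key w z hz
    · simp only [Ψ]
      rw [hχz _ (not_le.1 hz), hχz _ (not_le.1 hw), zero_smul, zero_smul, sub_zero, norm_zero]
      positivity
  have h0T : (0 : ℝ) ∈ Icc (-T) T := ⟨by linarith, hT.le⟩
  have hPL : IsPicardLindelof (fun _ => Ψ) (⟨0, h0T⟩ : Icc (-T) T) z0 (K * T).toNNReal 0 K.toNNReal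
      (K + K / R).toNNReal :=
    { lipschitzOnWith := fun t _ => hΨl.lipschitzOnWith
      continuousOn := fun _ _ => continuousOn_const
      norm_le := fun t _ z _ => by rw [coe_toNNReal _ hK0]; exact hΨb z
      mul_max_le := by
        rw [coe_toNNReal _ hK0, coe_toNNReal _ (by positivity)]
        simp }
  obtain ⟨z, hz0, hz⟩ := hPL.exists_eq_forall_mem_Icc_hasDerivWithinAt₀
  refine ⟨z, hz0, ?_⟩
  have hE t (ht : t ∈ Icc (-T) T) : HasDerivWithinAt
      (fun t => ⟪(z t).2, Ring.inverse (G (z t).1) (z t).2⟫) 0 (Icc (-T) T) t := by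
    refine energy_deriv hG (χ := χ (z t).2) (x := fun t => (z t).1) (P := fun t => (z t).2)
      (uniqueDiffOn_Icc (by linarith) t ht) ?_ ?_
    · exact (hz t ht).fst
    · exact (hz t ht).snd
  have hEc t (ht : t ∈ Icc (-T) T) : ⟪(z t).2, Ring.inverse (G (z t).1) (z t).2⟫ = h0 := by
    have := (convex_Icc (-T) T).norm_image_sub_le_of_norm_hasDerivWithin_le (C := 0) hE
      (fun _ _ => by simp) h0T ht
    rw [zero_mul, norm_le_zero_iff, sub_eq_zero] at this
    rw [this, hz0]
  have hPR t (ht : t ∈ Icc (-T) T) : ‖(z t).2‖ ≤ R := by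
    have h1 := hEc t ht
    set v := Ring.inverse (G (z t).1) (z t).2
    have hv : G (z t).1 v = (z t).2 := hG.G_inv _ _
    rw [← hv] at h1
    have h2 := hG.norm_le_of_energy h1.le
    have h3 := hG.norm_apply_le (z t).1 v
    rw [hv] at h3
    have : C * ‖v‖ ≤ C * √(h0 / c) := by gcongr
    linarith
  intro t ht
  refine ⟨?_, hPR t ht⟩
  have := hz t ht
  simp only [Ψ] at this
  rwa [hχe _ (hPR t ht), one_smul] at this

/-- Existence of complete geodesics with prescribed initial position and velocity. -/
theorem exists_geo (hG : RMet G c C) (p w : E) :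
    ∃ x v : ℝ → E, x 0 = p ∧ v 0 = w ∧ IsGeo G x v := by
  obtain ⟨R, hR0, hsol⟩ := exists_geoField_solution hG (p, G p w)
  choose! z hz0 hz using hsol
  obtain ⟨K, hK0, hKl, hKb⟩ := geoField_lip hG R hR0
  have hLip : LipschitzOnWith K.toNNReal (geoField G) {z : E × E | ‖z.2‖ ≤ R} := by
    refine LipschitzOnWith.of_dist_le_mul fun a ha b hb => ?_
    rw [dist_eq_norm, dist_eq_norm, coe_toNNReal _ hK0]
    exact hKl a b ha hb
  have huniq S T (hS : 0 < S) (hST : S ≤ T) : ∀ t ∈ Icc (-S) S, z S t = z T t := by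
    have hT : 0 < T := hS.trans_le hST
    have hsub : Icc (-S) S ⊆ Icc (-T) T := Icc_subset_Icc (by linarith) hST
    refine ODE_solution_unique_of_mem_Icc (v := fun _ => geoField G) (t₀ := 0)
      (s := fun _ => {z : E × E | ‖z.2‖ ≤ R}) (fun _ _ => hLip) ⟨by linarith, hS⟩ ?_ ?_ ?_ ?_ ?_ ?_ ?_
    · exact fun t ht => (hz S hS t ht).1.continuousWithinAt
    · intro t ht
      exact (hz S hS t (Ioo_subset_Icc_self ht)).1.hasDerivAt (Icc_mem_nhds ht.1 ht.2)
    · exact fun t ht => (hz S hS t (Ioo_subset_Icc_self ht)).2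
    · exact fun t ht => ((hz T hT t (hsub ht)).1.mono hsub).continuousWithinAt
    · intro t ht
      exact (hz T hT t (hsub (Ioo_subset_Icc_self ht))).1.hasDerivAt
        (Icc_mem_nhds (by linarith [ht.1]) (by linarith [ht.2]))
    · exact fun t ht => (hz T hT t (hsub (Ioo_subset_Icc_self ht))).2
    · rw [hz0 S hS, hz0 T hT]
  let Z : ℝ → E × E := fun t => z (|t| + 1) t
  have hZd t : HasDerivAt Z (geoField G (Z t)) t := by
    have hT : 0 < |t| + 2 := by positivity
    have hev : Z =ᶠ[nhds t] z (|t| + 2) := by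
      filter_upwards [ball_mem_nhds t one_pos] with s hs
      rw [mem_ball, Real.dist_eq] at hs
      have h1 : |s| ≤ |t| + 1 := by
        have := abs_sub_abs_le_abs_sub s t
        linarith
      exact huniq _ _ (by positivity) (by linarith) s
        ⟨by linarith [neg_abs_le s], by linarith [le_abs_self s]⟩
    have h2 : -(|t| + 2) < t := by linarith [neg_abs_le t]
    have h3 : t < |t| + 2 := by linarith [le_abs_self t]
    have := (hz _ hT t ⟨h2.le, h3.le⟩).1.hasDerivAt (Icc_mem_nhds h2 h3)
    rw [hev.eq_of_nhds]
    exact this.congr_of_eventuallyEq hev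
  refine ⟨fun t => (Z t).1, fun t => Ring.inverse (G (Z t).1) (Z t).2, ?_, ?_, fun t => ⟨?_, ?_⟩⟩
  · simp only [Z]; rw [hz0 _ (by positivity)]
  · simp only [Z]; rw [hz0 _ (by positivity)]; exact hG.inv_G _ _
  · exact (hZd t).fst
  · simp only [hG.G_inv]
    exact (hZd t).snd

namespace IsGeo

lemma continuous_x {x v : ℝ → E} (h : IsGeo G x v) : Continuous x :=
  continuous_iff_continuousAt.2 fun t => (h t).1.continuousAt

lemma continuous_P {x v : ℝ → E} (h : IsGeo G x v) : Continuous fun t => G (x t) (v t) :=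
  continuous_iff_continuousAt.2 fun t => (h t).2.continuousAt

lemma continuous_v {x v : ℝ → E} (hG : RMet G c C) (h : IsGeo G x v) : Continuous v := by
  have h1 : Continuous fun t => Ring.inverse (G (x t)) (G (x t) (v t)) :=
    (hG.contDiff_inv.continuous.comp h.continuous_x).clm_apply h.continuous_P
  have : (fun t => Ring.inverse (G (x t)) (G (x t) (v t))) = v := by
    funext t; exact hG.inv_G _ _
  rwa [this] at h1

lemma deriv_x {x v : ℝ → E} (h : IsGeo G x v) : deriv x = v := funext fun t => (h t).1.deriv

lemma contDiff_x {x v : ℝ → E} (hG : RMet G c C) (h : IsGeo G x v) : ContDiff ℝ 1 x := by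
  rw [contDiff_one_iff_deriv, h.deriv_x]
  exact ⟨fun t => (h t).1.differentiableAt, h.continuous_v hG⟩

lemma energy {x v : ℝ → E} (hG : RMet G c C) (h : IsGeo G x v) (t : ℝ) :
    ⟪G (x t) (v t), v t⟫ = ⟪G (x 0) (v 0), v 0⟫ := by
  have hd t : HasDerivAt (fun t => ⟪G (x t) (v t), v t⟫) 0 t := by
    have h1 := energy_deriv hG (x := x) (P := fun t => G (x t) (v t)) (χ := 1) (s := univ) (t := t)
      uniqueDiffWithinAt_univ
      (by rw [hG.inv_G, one_smul]; exact (h t).1.hasDerivWithinAt)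
      (by rw [hG.inv_G, one_smul]; exact (h t).2.hasDerivWithinAt)
    simp only [hG.inv_G] at h1
    exact h1.hasDerivAt univ_mem
  exact is_const_of_deriv_eq_zero (fun t => (hd t).differentiableAt) (fun t => (hd t).deriv) t 0

lemma scale {x v : ℝ → E} (h : IsGeo G x v) (k a : ℝ) :
    IsGeo G (fun t => x (k * t + a)) (fun t => k • v (k * t + a)) := by
  intro t
  have hl : HasDerivAt (fun t : ℝ => k * t + a) k t := by
    simpa using ((hasDerivAt_id t).const_mul k).add_const a
  refine ⟨(h _).1.scomp t hl, ?_⟩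
  have h2 := ((h (k * t + a)).2.scomp t hl).const_smul k
  have e : force G (x (k * t + a)) (k • v (k * t + a)) =
      k • k • force G (x (k * t + a)) (v (k * t + a)) := by
    refine ext_inner_right ℝ fun u => ?_
    simp only [inner_force, inner_smul_left, map_smul, inner_smul_right, conj_trivial]
    ring
  rw [e]
  refine h2.congr_of_eventuallyEq (Eventually.of_forall fun s => ?_)
  simp

lemma close_right (hG : RMet G c C) {R : ℝ} (hR : 0 < R) : ∃ K : ℝ, 0 ≤ K ∧
    ∀ x v y w : ℝ → E, IsGeo G x v → IsGeo G y w →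
      (∀ t, ‖G (x t) (v t)‖ ≤ R) → (∀ t, ‖G (y t) (w t)‖ ≤ R) → ∀ t, 0 ≤ t →
      max ‖x t - y t‖ ‖G (x t) (v t) - G (y t) (w t)‖ ≤
        max ‖x 0 - y 0‖ ‖G (x 0) (v 0) - G (y 0) (w 0)‖ * exp (K * t) := by
  obtain ⟨K, hK0, hKl, -⟩ := geoField_lip hG R hR
  refine ⟨K, hK0, fun x v y w hx hy hxR hyR t ht => ?_⟩
  have hLip : LipschitzOnWith K.toNNReal (geoField G) {z : E × E | ‖z.2‖ ≤ R} := by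
    refine LipschitzOnWith.of_dist_le_mul fun a ha b hb => ?_
    rw [dist_eq_norm, dist_eq_norm, coe_toNNReal _ hK0]
    exact hKl a b ha hb
  have hd (x v : ℝ → E) (h : IsGeo G x v) t : HasDerivAt (fun t => (x t, G (x t) (v t)))
      (geoField G (x t, G (x t) (v t))) t := by
    have := (h t).1.prodMk (h t).2
    simpa only [geoField, hG.inv_G] using this
  have h1 := dist_le_of_trajectories_ODE_of_mem (v := fun _ => geoField G) (a := 0) (b := t)
    (s := fun _ => {z : E × E | ‖z.2‖ ≤ R}) (K := K.toNNReal) (fun _ _ => hLip)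
    (fun s _ => (hd x v hx s).continuousAt.continuousWithinAt)
    (fun s _ => (hd x v hx s).hasDerivWithinAt) (fun s _ => hxR s)
    (fun s _ => (hd y w hy s).continuousAt.continuousWithinAt)
    (fun s _ => (hd y w hy s).hasDerivWithinAt) (fun s _ => hyR s) le_rfl t ⟨ht, le_rfl⟩
  rw [coe_toNNReal _ hK0, sub_zero, dist_eq_norm, dist_eq_norm] at h1
  exact h1

/-- Continuous dependence of geodesics on the initial data (position and momentum), for bounded
energy. -/
lemma close (hG : RMet G c C) (e : ℝ) : ∃ K : ℝ, 0 ≤ K ∧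
    ∀ x v y w : ℝ → E, IsGeo G x v → IsGeo G y w →
      ⟪G (x 0) (v 0), v 0⟫ ≤ e → ⟪G (y 0) (w 0), w 0⟫ ≤ e → ∀ t,
      max ‖x t - y t‖ ‖G (x t) (v t) - G (y t) (w t)‖ ≤
        max ‖x 0 - y 0‖ ‖G (x 0) (v 0) - G (y 0) (w 0)‖ * exp (K * |t|) := by
  have hC := hG.Cpos
  obtain ⟨K, hK0, hK⟩ := close_right hG (R := C * √(e / c) + 1) (by positivity)
  have hbd (x v : ℝ → E) : IsGeo G x v → ⟪G (x 0) (v 0), v 0⟫ ≤ e → ∀ t,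
      ‖G (x t) (v t)‖ ≤ C * √(e / c) + 1 := by
    intro h he t
    have h1 := hG.norm_le_of_energy ((h.energy hG t).le.trans he)
    have h2 := hG.norm_apply_le (x t) (v t)
    have : C * ‖v t‖ ≤ C * √(e / c) := by gcongr
    linarith
  refine ⟨K, hK0, fun x v y w hx hy hex hey t => ?_⟩
  rcases le_total 0 t with ht | ht
  · rw [abs_of_nonneg ht]
    exact hK x v y w hx hy (hbd x v hx hex) (hbd y w hy hey) t ht
  · rw [abs_of_nonpos ht]
    have hx' := hx.scale (-1) 0
    have hy' := hy.scale (-1) 0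
    have := hK _ _ _ _ hx' hy' (fun t => by
      simpa using hbd x v hx hex (-1 * t + 0)) (fun t => by
      simpa using hbd y w hy hey (-1 * t + 0)) (-t) (by linarith)
    have e1 (a b : E) : ‖-a + b‖ = ‖a - b‖ := by
      rw [← norm_neg]; congr 1; abel
    simpa [e1] using this

lemma unique (hG : RMet G c C) {x v y w : ℝ → E} (hx : IsGeo G x v) (hy : IsGeo G y w)
    (h0 : x 0 = y 0) (h1 : v 0 = w 0) : x = y ∧ v = w := by
  obtain ⟨K, hK0, hK⟩ := close hG ⟪G (x 0) (v 0), v 0⟫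
  have key t : x t = y t ∧ G (x t) (v t) = G (y t) (w t) := by
    have := hK x v y w hx hy le_rfl (by rw [h0, h1]) t
    rw [h0, h1, sub_self, sub_self, norm_zero, max_self, zero_mul] at this
    constructor
    · exact sub_eq_zero.1 (norm_le_zero_iff.1 ((le_max_left _ _).trans this))
    · exact sub_eq_zero.1 (norm_le_zero_iff.1 ((le_max_right _ _).trans this))
  refine ⟨funext fun t => (key t).1, funext fun t => ?_⟩
  have := (key t).2
  rw [← (key t).1] at this
  rw [← hG.inv_G (x t) (v t), this, hG.inv_G]

end IsGeo

/-! ### The discrete energy of polygons -/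

/-- The integrand of the second variation of the energy: the second derivative at `s = 0` of
`⟪G (x + s V) (v + s δ), v + s δ⟫`. -/
def qf
    (G : E → E →L[ℝ] E) (x v V δ : E) : ℝ :=
  2 * ⟪G x δ, δ⟫ + 4 * ⟪fderiv ℝ G x V v, δ⟫ + ⟪fderiv ℝ (fderiv ℝ G) x V V v, v⟫

lemma RMet.symm_DG (hG : RMet G c C) (x u v w : E) :
    ⟪fderiv ℝ G x u v, w⟫ = ⟪fderiv ℝ G x u w, v⟫ := by
  have h (v w : E) : HasFDerivAt (fun x => ⟪G x v, w⟫)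
      ((innerSL ℝ w).comp ((ContinuousLinearMap.apply ℝ E v).comp (fderiv ℝ G x))) x := by
    have h1 := ((ContinuousLinearMap.apply ℝ E v).hasFDerivAt.comp x
      (hG.differentiableG x).hasFDerivAt)
    have h2 := (innerSL ℝ w).hasFDerivAt.comp x h1
    refine h2.congr_of_eventuallyEq (Eventually.of_forall fun y => ?_)
    simp [real_inner_comm]
  have e : (fun x => ⟪G x v, w⟫) = fun x => ⟪G x w, v⟫ := by
    funext y; rw [hG.symm, real_inner_comm]
  have h3 := (h v w).unique (e ▸ h w v)
  have := DFunLike.congr_fun h3 u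
  simpa [real_inner_comm] using this

lemma hasDerivAt_line (x V : E) (s : ℝ) : HasDerivAt (fun s : ℝ => x + s • V) V s := by
  simpa using ((hasDerivAt_id s).smul_const V).const_add x

lemma phi_deriv (hG : RMet G c C) (x v V δ : E) (s : ℝ) :
    HasDerivAt (fun s : ℝ => ⟪G (x + s • V) (v + s • δ), v + s • δ⟫)
      (⟪fderiv ℝ G (x + s • V) V (v + s • δ), v + s • δ⟫ +
        2 * ⟪G (x + s • V) (v + s • δ), δ⟫) s := by
  have h1 : HasDerivAt (fun s : ℝ => G (x + s • V)) (fderiv ℝ G (x + s • V) V) s :=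
    (hG.differentiableG _).hasFDerivAt.comp_hasDerivAt s (hasDerivAt_line x V s)
  have h2 := (h1.clm_apply (hasDerivAt_line v δ s)).inner ℝ (hasDerivAt_line v δ s)
  refine h2.congr_deriv ?_
  rw [inner_add_left, hG.symm _ δ, real_inner_comm _ δ]
  ring

lemma phi_deriv2 (hG : RMet G c C) (x v V δ : E) (s : ℝ) :
    HasDerivAt (fun s : ℝ => ⟪fderiv ℝ G (x + s • V) V (v + s • δ), v + s • δ⟫ +
        2 * ⟪G (x + s • V) (v + s • δ), δ⟫) (qf G (x + s • V) (v + s • δ) V δ) s := by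
  have h0 : HasDerivAt (fun s : ℝ => G (x + s • V)) (fderiv ℝ G (x + s • V) V) s :=
    (hG.differentiableG _).hasFDerivAt.comp_hasDerivAt s (hasDerivAt_line x V s)
  have h1 : HasDerivAt (fun s : ℝ => fderiv ℝ G (x + s • V))
      (fderiv ℝ (fderiv ℝ G) (x + s • V) V) s :=
    (hG.contDiff_fderiv.differentiable one_ne_zero _).hasFDerivAt.comp_hasDerivAt s
      (hasDerivAt_line x V s)
  have h1' : HasDerivAt (fun s : ℝ => fderiv ℝ G (x + s • V) V)
      (fderiv ℝ (fderiv ℝ G) (x + s • V) V V) s := by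
    simpa using h1.clm_apply (hasDerivAt_const s V)
  have hl := hasDerivAt_line v δ s
  have h2 := ((h1'.clm_apply hl).inner ℝ hl).add
    (((h0.clm_apply hl).inner ℝ (hasDerivAt_const s δ)).const_mul 2)
  refine h2.congr_deriv ?_
  rw [qf, inner_add_left, inner_add_left, hG.symm_DG _ V δ]
  simp only [inner_zero_right]
  ring

lemma RMet.continuous_qf (hG : RMet G c C) :
    Continuous fun z : E × E × E × E => qf G z.1 z.2.1 z.2.2.1 z.2.2.2 := by
  have h0 : Continuous fun z : E × E × E × E => G z.1 := hG.smooth.continuous.comp continuous_fst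
  have h1 : Continuous fun z : E × E × E × E => fderiv ℝ G z.1 :=
    hG.contDiff_fderiv.continuous.comp continuous_fst
  have h2 : Continuous fun z : E × E × E × E => fderiv ℝ (fderiv ℝ G) z.1 z.2.2.1 :=
    (hG.contDiff_fderiv.continuous_fderiv_apply one_ne_zero).comp
      (f := fun z : E × E × E × E => (z.1, z.2.2.1)) (by fun_prop)
  unfold qf
  have hV : Continuous fun z : E × E × E × E => z.2.2.1 := by fun_prop
  have hv : Continuous fun z : E × E × E × E => z.2.1 := by fun_prop
  have hd : Continuous fun z : E × E × E × E => z.2.2.2 := by fun_prop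
  exact ((((h0.clm_apply hd).inner hd).const_mul 2).add
    ((((h1.clm_apply hV).clm_apply hv).inner hd).const_mul 4)).add
    (((h2.clm_apply hV).clm_apply hv).inner hv)

/-- The nodes of the polygon from `p` to `q` with interior nodes `z`. -/
def node {m : ℕ} (p q : E) (z : PiLp 2 (fun _ : Fin m => E)) (i : ℕ) : E :=
  if i = 0 then p else if h : i - 1 < m then z ⟨i - 1, h⟩ else q

/-- The discrete velocity of the polygon with nodes `x` in the `j`-th of `N` time intervals. -/
def dvel (N : ℕ) (x : ℕ → E) (j : ℕ) : E := (N : ℝ) • (x (j + 1) - x j)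

/-- The discrete energy of a polygon with nodes `x 0, …, x N`. -/
def dE (G : E → E →L[ℝ] E) (N : ℕ) (x : ℕ → E) : ℝ :=
  (∑ j ∈ Finset.range N, ⟪G (x j) (dvel N x j), dvel N x j⟫) / N

lemma node_zero {m : ℕ} (p q : E) (z : PiLp 2 (fun _ : Fin m => E)) : node p q z 0 = p := rfl

lemma node_last {m : ℕ} (p q : E) (z : PiLp 2 (fun _ : Fin m => E)) :
    node p q z (m + 1) = q := by simp [node]

lemma node_succ {m : ℕ} (p q : E) (z : PiLp 2 (fun _ : Fin m => E)) (i : Fin m) :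
    node p q z (i + 1) = z i := by simp [node]

lemma node_add {m : ℕ} (p q : E) (z w : PiLp 2 (fun _ : Fin m => E)) (s : ℝ) (i : ℕ) :
    node p q (z + s • w) i = node p q z i + s • node 0 0 w i := by
  unfold node
  split_ifs <;> simp

lemma dvel_add {m : ℕ} (N : ℕ) (p q : E) (z w : PiLp 2 (fun _ : Fin m => E)) (s : ℝ) (i : ℕ) :
    dvel N (node p q (z + s • w)) i = dvel N (node p q z) i + s • dvel N (node 0 0 w) i := by
  simp only [dvel, node_add, smul_sub, smul_add, smul_smul, mul_comm s]
  abel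

lemma contDiff_node {m : ℕ} (p q : E) (i : ℕ) :
    ContDiff ℝ 2 fun z : PiLp 2 (fun _ : Fin m => E) => node p q z i := by
  unfold node
  split_ifs
  · exact contDiff_const
  · exact (PiLp.proj 2 (𝕜 := ℝ) (fun _ : Fin m => E) _).contDiff
  · exact contDiff_const

lemma contDiff_dE (hG : RMet G c C) {m : ℕ} (N : ℕ) (p q : E) :
    ContDiff ℝ 2 fun z : PiLp 2 (fun _ : Fin m => E) => dE G N (node p q z) := by
  unfold dE
  refine ContDiff.div_const (ContDiff.sum fun j _ => ?_) _
  have h1 : ContDiff ℝ 2 fun z : PiLp 2 (fun _ : Fin m => E) => dvel N (node p q z) j :=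
    ((contDiff_node p q (j + 1)).sub (contDiff_node p q j)).const_smul _
  exact ((hG.smooth.comp (contDiff_node p q j)).clm_apply h1).inner ℝ h1

lemma hasDerivAt_dE (hG : RMet G c C) {m : ℕ} (N : ℕ) (p q : E)
    (z w : PiLp 2 (fun _ : Fin m => E)) (s : ℝ) :
    HasDerivAt (fun s : ℝ => dE G N (node p q (z + s • w)))
      ((∑ j ∈ Finset.range N, (⟪fderiv ℝ G (node p q z j + s • node 0 0 w j) (node 0 0 w j)
          (dvel N (node p q z) j + s • dvel N (node 0 0 w) j),
          dvel N (node p q z) j + s • dvel N (node 0 0 w) j⟫ +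
        2 * ⟪G (node p q z j + s • node 0 0 w j)
          (dvel N (node p q z) j + s • dvel N (node 0 0 w) j), dvel N (node 0 0 w) j⟫)) / N) s := by
  simp only [dE, node_add, dvel_add]
  exact (HasDerivAt.fun_sum fun j _ => phi_deriv hG _ _ _ _ s).div_const _

lemma fderiv_dE_line (hG : RMet G c C) {m : ℕ} (N : ℕ) (p q : E)
    (z w : PiLp 2 (fun _ : Fin m => E)) (s : ℝ) :
    fderiv ℝ (fun z => dE G N (node p q z)) (z + s • w) w =
      (∑ j ∈ Finset.range N, (⟪fderiv ℝ G (node p q z j + s • node 0 0 w j) (node 0 0 w j)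
          (dvel N (node p q z) j + s • dvel N (node 0 0 w) j),
          dvel N (node p q z) j + s • dvel N (node 0 0 w) j⟫ +
        2 * ⟪G (node p q z j + s • node 0 0 w j)
          (dvel N (node p q z) j + s • dvel N (node 0 0 w) j), dvel N (node 0 0 w) j⟫)) / N := by
  have h1 : HasDerivAt (fun s : ℝ => z + s • w) w s := by
    simpa using ((hasDerivAt_id s).smul_const w).const_add z
  have h2 := (((contDiff_dE hG N p q).differentiable two_ne_zero
    (z + s • w)).hasFDerivAt.comp_hasDerivAt s h1)
  exact h2.unique (hasDerivAt_dE hG N p q z w s)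

lemma fderiv_dE (hG : RMet G c C) {m : ℕ} (N : ℕ) (p q : E)
    (z w : PiLp 2 (fun _ : Fin m => E)) :
    fderiv ℝ (fun z => dE G N (node p q z)) z w =
      (∑ j ∈ Finset.range N, (⟪force G (node p q z j) (dvel N (node p q z) j), node 0 0 w j⟫ +
        ⟪G (node p q z j) (dvel N (node p q z) j), dvel N (node 0 0 w) j⟫)) * 2 / N := by
  have := fderiv_dE_line hG N p q z w 0
  simp only [zero_smul, add_zero] at this
  rw [this, sum_mul]
  congr 1
  refine sum_congr rfl fun j _ => ?_
  rw [inner_force]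
  ring

lemma fderiv2_dE (hG : RMet G c C) {m : ℕ} (N : ℕ) (p q : E)
    (z w : PiLp 2 (fun _ : Fin m => E)) :
    fderiv ℝ (fderiv ℝ (fun z => dE G N (node p q z))) z w w =
      (∑ j ∈ Finset.range N, qf G (node p q z j) (dvel N (node p q z) j)
        (node 0 0 w j) (dvel N (node 0 0 w) j)) / N := by
  have h1 : HasDerivAt (fun s : ℝ => z + s • w) w 0 := by
    simpa using ((hasDerivAt_id (0:ℝ)).smul_const w).const_add z
  have hF : ContDiff ℝ 1 (fderiv ℝ (fun z => dE G N (node p q z))) :=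
    (contDiff_dE hG (m := m) N p q).fderiv_right (by norm_num)
  have h2 := ((hF.differentiable one_ne_zero (z + (0:ℝ) • w)).hasFDerivAt.comp_hasDerivAt 0 h1)
  have h3 := h2.clm_apply (hasDerivAt_const (0:ℝ) w)
  have h4 := (HasDerivAt.fun_sum fun j (_ : j ∈ Finset.range N) => phi_deriv2 hG (node p q z j)
    (dvel N (node p q z) j) (node 0 0 w j) (dvel N (node 0 0 w) j) 0).div_const (N : ℝ)
  have h5 := h3.unique (h4.congr_of_eventuallyEq (Eventually.of_forall fun s =>
    fderiv_dE_line hG N p q z w s))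
  simpa using h5

/-- Almost critical polygons almost satisfy the discrete Euler-Lagrange equations. -/
lemma dE_euler_lagrange (hG : RMet G c C) {m : ℕ} (p q : E) (z : PiLp 2 (fun _ : Fin m => E))
    (i : ℕ) (hi : i < m) :
    ‖G (node p q z (i + 1)) (dvel (m + 1) (node p q z) (i + 1)) -
        G (node p q z i) (dvel (m + 1) (node p q z) i) -
        ((m + 1 : ℕ) : ℝ)⁻¹ • force G (node p q z (i + 1)) (dvel (m + 1) (node p q z) (i + 1))‖ ≤
      ‖fderiv ℝ (fun z => dE G (m + 1) (node p q z)) z‖ := by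
  set N : ℕ := m + 1 with hN
  have hN0 : (0 : ℝ) < N := by rw [hN]; positivity
  set x := node p q z
  set D := G (x (i + 1)) (dvel N x (i + 1)) - G (x i) (dvel N x i) -
        (N : ℝ)⁻¹ • force G (x (i + 1)) (dvel N x (i + 1)) with hD
  let w : PiLp 2 (fun _ : Fin m => E) := PiLp.single 2 (⟨i, hi⟩ : Fin m) D
  have hw : ‖w‖ = ‖D‖ := PiLp.norm_single 2 (fun _ : Fin m => E) _ _
  have hwn j : node 0 0 w j = if j = i + 1 then D else 0 := by
    unfold node
    rcases j with _ | j
    · simp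
    · by_cases hj : j = i
      · subst hj; simp [w, hi]
      · have : j + 1 ≠ i + 1 := by omega
        by_cases hjm : j < m
        · simp [w, hj, hjm]
        · simp [hj, hjm]
  have h1 := fderiv_dE hG N p q z w
  have h2 : ∑ j ∈ Finset.range N, (⟪force G (x j) (dvel N x j), node 0 0 w j⟫ +
        ⟪G (x j) (dvel N x j), dvel N (node 0 0 w) j⟫) = - (N * ‖D‖ ^ 2) := by
    have e j : (⟪force G (x j) (dvel N x j), node 0 0 w j⟫ +
        ⟪G (x j) (dvel N x j), dvel N (node 0 0 w) j⟫) =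
        (if j = i + 1 then ⟪force G (x j) (dvel N x j) - (N : ℝ) • G (x j) (dvel N x j), D⟫ else 0)
        + (if j = i then ⟪(N : ℝ) • G (x j) (dvel N x j), D⟫ else 0) := by
      simp only [dvel, hwn, add_left_inj]
      by_cases h1 : j = i + 1
      · have h2 : j ≠ i := by omega
        simp [h1, inner_sub_left, inner_smul_left, inner_smul_right]
        ring
      · by_cases h2 : j = i <;> simp [h1, h2, inner_smul_left, inner_smul_right]
    rw [sum_congr rfl fun j _ => e j, sum_add_distrib, Finset.sum_ite_eq',
      Finset.sum_ite_eq', if_pos (by simp [hN, hi]), if_pos (by simp [hN]; omega),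
      ← inner_add_left, ← real_inner_self_eq_norm_sq]
    have : force G (x (i + 1)) (dvel N x (i + 1)) - (N : ℝ) • G (x (i + 1)) (dvel N x (i + 1)) +
        (N : ℝ) • G (x i) (dvel N x i) = -((N : ℝ) • D) := by
      rw [hD, smul_sub, smul_sub, smul_smul, mul_inv_cancel₀ hN0.ne', one_smul]; abel
    rw [this, inner_neg_left, inner_smul_left]; simp
  rw [h2] at h1
  have h3 : fderiv ℝ (fun z => dE G N (node p q z)) z w = -(2 * ‖D‖ ^ 2) := by
    rw [h1]; field_simp
  have h4 := (fderiv ℝ (fun z => dE G N (node p q z)) z).le_opNorm w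
  rw [h3, hw, norm_neg, norm_of_nonneg (by positivity)] at h4
  by_contra hlt
  push Not at hlt
  have : 0 < ‖D‖ := (ContinuousLinearMap.opNorm_nonneg _).trans_lt hlt
  nlinarith

lemma dE_nonneg (hG : RMet G c C) (N : ℕ) (x : ℕ → E) : 0 ≤ dE G N x :=
  div_nonneg (sum_nonneg fun j _ => hG.self_nonneg _ _) (Nat.cast_nonneg _)

lemma sum_dvel_le (hG : RMet G c C) {N : ℕ} (hN : 0 < N) (x : ℕ → E) :
    c * (∑ j ∈ Finset.range N, ‖dvel N x j‖ ^ 2) ≤ N * dE G N x := by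
  have : (0 : ℝ) < N := by exact_mod_cast hN
  rw [dE, mul_div_cancel₀ _ this.ne', mul_sum]
  exact sum_le_sum fun j _ => hG.lower _ _

lemma sum_dvel_sq_le (hG : RMet G c C) {N : ℕ} (hN : 0 < N) (x : ℕ → E) :
    (∑ j ∈ Finset.range N, ‖dvel N x j‖) ^ 2 ≤ N ^ 2 * dE G N x / c := by
  have h := sum_dvel_le hG hN x
  have h2 := sq_sum_le_card_mul_sum_sq (s := Finset.range N) (f := fun j => ‖dvel N x j‖)
  rw [card_range] at h2
  have : (0 : ℝ) < N := by exact_mod_cast hN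
  rw [le_div_iff₀ hG.pos]
  calc _ ≤ (N * ∑ j ∈ Finset.range N, ‖dvel N x j‖ ^ 2) * c := by
        gcongr; exact hG.pos.le
    _ = N * (c * ∑ j ∈ Finset.range N, ‖dvel N x j‖ ^ 2) := by ring
    _ ≤ N * (N * dE G N x) := by gcongr
    _ = _ := by ring

lemma norm_node_sub_le {N : ℕ} (hN : 0 < N) (x : ℕ → E) (i : ℕ) (hi : i ≤ N) :
    N * ‖x i - x 0‖ ≤ ∑ j ∈ Finset.range N, ‖dvel N x j‖ := by
  have : (0 : ℝ) < N := by exact_mod_cast hN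
  have h1 : x i - x 0 = ∑ j ∈ Finset.range i, (x (j + 1) - x j) := (sum_range_sub x i).symm
  calc (N : ℝ) * ‖x i - x 0‖ ≤ N * ∑ j ∈ Finset.range i, ‖x (j + 1) - x j‖ := by
        rw [h1]; gcongr; exact norm_sum_le _ _
    _ = ∑ j ∈ Finset.range i, ‖dvel N x j‖ := by
        rw [mul_sum]
        refine sum_congr rfl fun j _ => ?_
        rw [dvel, norm_smul, norm_of_nonneg this.le]
    _ ≤ _ := Finset.sum_le_sum_of_subset_of_nonneg
        (Finset.range_mono hi) fun _ _ _ => norm_nonneg _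

lemma dE_coercive (hG : RMet G c C) {m : ℕ} (p q : E) : ∃ k > 0, ∃ B : ℝ,
    ∀ z : PiLp 2 (fun _ : Fin m => E), k * ‖z‖ ^ 2 - B ≤ dE G (m + 1) (node p q z) := by
  have hc := hG.pos
  refine ⟨c / (2 * (m + 1)), by positivity, c * ‖p‖ ^ 2, fun z => ?_⟩
  set F := dE G (m + 1) (node p q z)
  have hF : 0 ≤ F := dE_nonneg hG _ _
  have hb (i : Fin m) : ‖z i‖ ^ 2 ≤ 2 * ‖p‖ ^ 2 + 2 * F / c := by
    have h1 := norm_node_sub_le (N := m + 1) (by omega) (node p q z) (i + 1) (by omega)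
    have h2 := sum_dvel_sq_le hG (N := m + 1) (by omega) (node p q z)
    rw [node_succ, node_zero] at h1
    have h3 : (((m + 1 : ℕ) : ℝ) * ‖z i - p‖) ^ 2 ≤ ((m + 1 : ℕ) : ℝ) ^ 2 * F / c :=
      (pow_le_pow_left₀ (by positivity) h1 2).trans h2
    have h4 : ‖z i - p‖ ^ 2 ≤ F / c := by
      rw [mul_pow, mul_div_assoc] at h3
      exact le_of_mul_le_mul_left h3 (by positivity)
    have h5 : ‖z i‖ ≤ ‖z i - p‖ + ‖p‖ := by
      simpa using norm_add_le (z i - p) p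
    have h6 : ‖z i‖ ^ 2 ≤ (‖z i - p‖ + ‖p‖) ^ 2 := pow_le_pow_left₀ (norm_nonneg _) h5 2
    rw [mul_div_assoc]
    nlinarith [sq_nonneg (‖z i - p‖ - ‖p‖)]
  have hs : ‖z‖ ^ 2 ≤ m * (2 * ‖p‖ ^ 2 + 2 * F / c) := by
    rw [PiLp.norm_sq_eq_of_L2]
    refine (sum_le_sum fun i _ => hb i).trans (le_of_eq ?_)
    simp [mul_add]
  have hs' : ‖z‖ ^ 2 ≤ (m + 1) * (2 * ‖p‖ ^ 2 + 2 * F / c) := by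
    have : 0 ≤ 2 * ‖p‖ ^ 2 + 2 * F / c := by positivity
    linarith
  have : c / (2 * (m + 1)) * ‖z‖ ^ 2 ≤
      c / (2 * (m + 1)) * ((m + 1) * (2 * ‖p‖ ^ 2 + 2 * F / c)) := by gcongr
  have e : c / (2 * (m + 1)) * ((m + 1) * (2 * ‖p‖ ^ 2 + 2 * F / c)) = c * ‖p‖ ^ 2 + F := by
    field_simp
  linarith

/-! ### Almost critical polygons and their limits -/

lemma euler_gronwall {e : ℕ → ℝ} {N : ℕ} {K A : ℝ} (hK : 0 ≤ K) (hA : 0 ≤ A)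
    (h0 : e 0 ≤ 0) (h : ∀ i, i + 1 < N → e (i + 1) ≤ (1 + K / N) * e i + A / N ^ 2) (i : ℕ)
    (hi : i < N) : e i ≤ exp K * A / N := by
  have hN : (0 : ℝ) < N := by exact_mod_cast (Nat.zero_le i).trans_lt hi
  have h1 i : i < N → e i ≤ (1 + K / N) ^ i * (i * (A / N ^ 2)) := by
    induction i with
    | zero => intro _; simpa using h0
    | succ i ih =>
      intro hi
      have hp : (1 : ℝ) ≤ (1 + K / N) ^ (i + 1) := one_le_pow₀ (by linarith [div_nonneg hK hN.le])
      have ha : 0 ≤ A / (N : ℝ) ^ 2 := by positivity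
      calc e (i + 1) ≤ (1 + K / N) * e i + A / N ^ 2 := h i hi
        _ ≤ (1 + K / N) * ((1 + K / N) ^ i * (i * (A / N ^ 2))) + A / N ^ 2 := by
            gcongr; exact ih (by omega)
        _ ≤ (1 + K / N) ^ (i + 1) * (i * (A / N ^ 2)) + (1 + K / N) ^ (i + 1) * (A / N ^ 2) := by
            have e1 : (1 + K / N) * ((1 + K / N) ^ i * (i * (A / N ^ 2))) =
                (1 + K / N) ^ (i + 1) * (i * (A / N ^ 2)) := by ring
            rw [e1]
            have := mul_le_mul_of_nonneg_right hp ha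
            linarith
        _ = _ := by push_cast; ring
  refine (h1 i hi).trans ?_
  have h2 : (1 + K / N) ^ i ≤ exp K := by
    calc (1 + K / N) ^ i ≤ (exp (K / N)) ^ i := by
          gcongr; linarith [add_one_le_exp (K / (N : ℝ))]
      _ = exp (i * (K / N)) := (exp_nat_mul _ _).symm
      _ ≤ exp K := by
          refine exp_le_exp.2 ?_
          rw [mul_div_assoc', div_le_iff₀ hN, mul_comm]
          have : (i : ℝ) ≤ N := by exact_mod_cast hi.le
          gcongr
  have h3 : (i : ℝ) * (A / N ^ 2) ≤ A / N := by
    have : (i : ℝ) ≤ N := by exact_mod_cast hi.le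
    calc (i : ℝ) * (A / N ^ 2) ≤ N * (A / N ^ 2) := by gcongr
      _ = A / N := by field_simp
  calc _ ≤ exp K * (A / N) := by gcongr
    _ = _ := by ring

/-- One Euler step of a curve solving `Z' = Φ Z`, when `Φ` is bounded and Lipschitz along it. -/
lemma euler_step {F : Type*} [NormedAddCommGroup F] [NormedSpace ℝ F] {Z : ℝ → F} {Φ : F → F}
    {K : ℝ} (hZ : ∀ t, HasDerivAt Z (Φ (Z t)) t)
    (hb : ∀ t, ‖Φ (Z t)‖ ≤ K) (hl : ∀ s t, ‖Φ (Z s) - Φ (Z t)‖ ≤ K * ‖Z s - Z t‖)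
    (hK : 0 ≤ K) (t h : ℝ) (hh : 0 ≤ h) : ‖Z (t + h) - Z t - h • Φ (Z t)‖ ≤ K ^ 2 * h ^ 2 := by
  have hlip (s t : ℝ) : ‖Z s - Z t‖ ≤ K * |s - t| :=
    Convex.norm_image_sub_le_of_norm_hasDerivWithin_le (f := Z)
      (fun x _ => (hZ x).hasDerivWithinAt) (fun x _ => hb x) convex_univ (mem_univ t) (mem_univ s)
  have h1 := norm_image_sub_le_of_norm_deriv_le_segment' (f := fun s => Z s - (s - t) • Φ (Z t))
    (f' := fun s => Φ (Z s) - Φ (Z t)) (a := t) (b := t + h) (C := K ^ 2 * h)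
    (fun s _ => by
      have : HasDerivAt (fun s => Z s - (s - t) • Φ (Z t)) (Φ (Z s) - (1 : ℝ) • Φ (Z t)) s :=
        (hZ s).sub (((hasDerivAt_id s).sub_const t).smul_const _)
      rw [one_smul] at this
      exact this.hasDerivWithinAt)
    (fun s hs => by
      refine (hl s t).trans ?_
      have h2 := hlip s t
      have h3 : |s - t| ≤ h := by rw [abs_le]; constructor <;> linarith [hs.1, hs.2]
      calc K * ‖Z s - Z t‖ ≤ K * (K * h) := by
            refine mul_le_mul_of_nonneg_left (h2.trans ?_) hK
            gcongr
        _ = _ := by ring)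
    (t + h) ⟨by linarith, le_rfl⟩
  have e : Z (t + h) - (t + h - t) • Φ (Z t) - (Z t - (t - t) • Φ (Z t)) =
      Z (t + h) - Z t - h • Φ (Z t) := by
    rw [sub_self, zero_smul, add_sub_cancel_left]; abel
  rw [e] at h1
  calc _ ≤ _ := h1
    _ = _ := by ring

lemma IsGeo.hasDerivAt_phase (hG : RMet G c C) {x v : ℝ → E} (h : IsGeo G x v) (t : ℝ) :
    HasDerivAt (fun t => (x t, G (x t) (v t))) (geoField G (x t, G (x t) (v t))) t := by
  have := (h t).1.prodMk (h t).2
  simpa only [geoField, hG.inv_G] using this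

lemma IsGeo.norm_P_le (hG : RMet G c C) {x v : ℝ → E} (h : IsGeo G x v) (t : ℝ) :
    ‖G (x t) (v t)‖ ≤ C * √(C * ‖v 0‖ ^ 2 / c) := by
  have hC := hG.Cpos
  refine (hG.norm_apply_le _ _).trans ?_
  gcongr
  refine hG.norm_le_of_energy (x := x t) ?_
  rw [h.energy hG]
  calc _ ≤ _ := (le_abs_self _).trans (hG.upper _ _ _)
    _ = _ := by ring

/-- The momenta of almost critical polygons are bounded in terms of the energy. -/
lemma discrete_momentum_bound (hG : RMet G c C) (B : ℝ) (hB : 0 ≤ B) {N : ℕ} (hN : 0 < N)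
    {x : ℕ → E} (hE : dE G N x ≤ B)
    (hEL : ∀ i, i + 1 < N → ‖G (x (i + 1)) (dvel N x (i + 1)) - G (x i) (dvel N x i) -
      (N : ℝ)⁻¹ • force G (x (i + 1)) (dvel N x (i + 1))‖ ≤ ((N : ℝ)⁻¹) ^ 2) (i : ℕ) (hi : i < N) :
    ‖G (x i) (dvel N x i)‖ ≤ C * √(B / c) + 2 * (C / 2 * (B / c) + 1) := by
  have hc := hG.pos
  have hC := hG.Cpos
  have hN0 : (0 : ℝ) < N := by exact_mod_cast hN
  have hN1 : (1 : ℝ) ≤ N := by exact_mod_cast hN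
  set P := fun i => G (x i) (dvel N x i)
  set M := C / 2 * (B / c) + 1 with hM
  have hsum : (∑ j ∈ Finset.range N, ‖dvel N x j‖ ^ 2) ≤ N * (B / c) := by
    have h1 := sum_dvel_le hG hN x
    have h2 : N * dE G N x ≤ N * B := by gcongr
    rw [mul_div_assoc', le_div_iff₀ hc]; linarith
  have hstep i (hi : i + 1 < N) : ‖P (i + 1) - P i‖ ≤
      C / 2 * (N : ℝ)⁻¹ * ‖dvel N x (i + 1)‖ ^ 2 + ((N : ℝ)⁻¹) ^ 2 := by
    have h1 := hEL i hi
    have h2 := hG.force_le (x (i + 1)) (dvel N x (i + 1))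
    have h3 := norm_add_le (P (i + 1) - P i - (N : ℝ)⁻¹ • force G (x (i + 1)) (dvel N x (i + 1)))
      ((N : ℝ)⁻¹ • force G (x (i + 1)) (dvel N x (i + 1)))
    rw [sub_add_cancel, norm_smul, norm_of_nonneg (by positivity)] at h3
    have h4 : (N : ℝ)⁻¹ * ‖force G (x (i + 1)) (dvel N x (i + 1))‖ ≤
      (N : ℝ)⁻¹ * (C / 2 * ‖dvel N x (i + 1)‖ ^ 2) := by gcongr
    calc _ ≤ _ := h3
      _ ≤ ((N : ℝ)⁻¹) ^ 2 + (N : ℝ)⁻¹ * (C / 2 * ‖dvel N x (i + 1)‖ ^ 2) := add_le_add h1 h4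
      _ = _ := by ring
  have hdev i (hi : i < N) : ‖P i - P 0‖ ≤ M := by
    have h1 : ‖P i - P 0‖ ≤ ∑ j ∈ Finset.range i,
        (C / 2 * (N : ℝ)⁻¹ * ‖dvel N x (j + 1)‖ ^ 2 + ((N : ℝ)⁻¹) ^ 2) := by
      rw [← sum_range_sub P i]
      refine (norm_sum_le _ _).trans (sum_le_sum fun j hj => hstep j ?_)
      have := Finset.mem_range.1 hj
      omega
    have h2 : ∑ j ∈ Finset.range i, ‖dvel N x (j + 1)‖ ^ 2 ≤
        ∑ j ∈ Finset.range N, ‖dvel N x j‖ ^ 2 := by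
      have := Finset.sum_range_succ' (fun j => ‖dvel N x j‖ ^ 2) i
      have h3 : ∑ j ∈ Finset.range (i + 1), ‖dvel N x j‖ ^ 2 ≤
          ∑ j ∈ Finset.range N, ‖dvel N x j‖ ^ 2 :=
        Finset.sum_le_sum_of_subset_of_nonneg (Finset.range_mono hi) fun _ _ _ => by positivity
      nlinarith [sq_nonneg ‖dvel N x 0‖]
    rw [sum_add_distrib, ← mul_sum, sum_const, card_range,
      nsmul_eq_mul] at h1
    have h4 : (i : ℝ) * ((N : ℝ)⁻¹) ^ 2 ≤ 1 := by
      have : (i : ℝ) ≤ N := by exact_mod_cast hi.le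
      have h5 : (N : ℝ)⁻¹ ≤ 1 := inv_le_one_of_one_le₀ hN1
      calc (i : ℝ) * ((N : ℝ)⁻¹) ^ 2 ≤ N * ((N : ℝ)⁻¹) ^ 2 := by gcongr
        _ = (N : ℝ)⁻¹ := by field_simp
        _ ≤ 1 := h5
    have h5 : C / 2 * (N : ℝ)⁻¹ * ∑ j ∈ Finset.range i, ‖dvel N x (j + 1)‖ ^ 2 ≤
        C / 2 * (N : ℝ)⁻¹ * (N * (B / c)) := by gcongr; exact h2.trans hsum
    have h6 : C / 2 * (N : ℝ)⁻¹ * (N * (B / c)) = C / 2 * (B / c) := by field_simp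
    linarith
  have h0 : ‖P 0‖ ≤ C * √(B / c) + M := by
    have h1 i (hi : i ∈ Finset.range N) : ‖P 0‖ ≤ C * ‖dvel N x i‖ + M := by
      have h2 := hdev i (Finset.mem_range.1 hi)
      have h3 := hG.norm_apply_le (x i) (dvel N x i)
      have h4 := norm_sub_le (P i) (P i - P 0)
      rw [sub_sub_cancel] at h4
      linarith
    have h2 := sum_le_sum h1
    rw [sum_const, card_range, nsmul_eq_mul, sum_add_distrib,
      ← mul_sum, sum_const, card_range, nsmul_eq_mul] at h2
    have h3 : ∑ j ∈ Finset.range N, ‖dvel N x j‖ ≤ N * √(B / c) := by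
      refine abs_le_of_sq_le_sq' ?_ (by positivity) |>.2
      rw [mul_pow, sq_sqrt (by positivity), mul_div_assoc']
      refine (sum_dvel_sq_le hG hN x).trans ?_
      gcongr
    have h4 : C * ∑ j ∈ Finset.range N, ‖dvel N x j‖ ≤ C * (N * √(B / c)) := by gcongr
    refine le_of_mul_le_mul_left ?_ hN0
    linarith
  have h1 := hdev i hi
  have h4 := norm_add_le (P i - P 0) (P 0)
  rw [sub_add_cancel] at h4
  linarith

set_option maxHeartbeats 800000 in
/-- Almost critical polygons follow the geodesic with the same initial data. -/
lemma discrete_tracking (hG : RMet G c C) (B : ℝ) (hB : 0 ≤ B) : ∃ K : ℝ, 0 ≤ K ∧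
    ∀ (N : ℕ) (x : ℕ → E), 0 < N → dE G N x ≤ B →
    (∀ i, i + 1 < N → ‖G (x (i + 1)) (dvel N x (i + 1)) - G (x i) (dvel N x i) -
      (N : ℝ)⁻¹ • force G (x (i + 1)) (dvel N x (i + 1))‖ ≤ ((N : ℝ)⁻¹) ^ 2) →
    (∀ i < N, ‖dvel N x i‖ ≤ K) ∧
    ∀ y w : ℝ → E, IsGeo G y w → y 0 = x 0 → w 0 = dvel N x 0 →
      (∀ i < N, ‖x i - y (i / N)‖ ≤ K / N ∧ ‖dvel N x i - w (i / N)‖ ≤ K / N) ∧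
      ‖x N - y 1‖ ≤ K / N := by
  have hc := hG.pos
  have hC := hG.Cpos
  set M := C * √(B / c) + 2 * (C / 2 * (B / c) + 1)
  have hM0 : 0 < M := by positivity
  set R := M + C * √(C * (M / c) ^ 2 / c) with hR
  obtain ⟨K, hK0, hKl, hKb⟩ := geoField_lip hG R (by positivity)
  set A := K * (K + 1) + 1 + K ^ 2 with hA
  set K1 := exp K * A
  set W := (R / c) with hW
  refine ⟨M / c + (K1 + (K1 + C * K1 * W) / c) + (K1 + K * K1 + K ^ 2), by positivity, ?_⟩
  intro N x hN hE hEL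
  have hN0 : (0 : ℝ) < N := by exact_mod_cast hN
  have hN1 : (1 : ℝ) ≤ N := by exact_mod_cast hN
  have hPM := discrete_momentum_bound hG B hB hN hE hEL
  have hv i (hi : i < N) : ‖dvel N x i‖ ≤ M / c := by
    rw [le_div_iff₀ hc, mul_comm]
    exact (hG.lower_norm _ _).trans (hPM i hi)
  refine ⟨fun i hi => (hv i hi).trans (by
    have : 0 ≤ (K1 + (K1 + C * K1 * W) / c) + (K1 + K * K1 + K ^ 2) := by positivity
    linarith), ?_⟩
  intro y w hy hy0 hw0
  have hMR : M ≤ R := by rw [hR]; linarith [show 0 ≤ C * √(C * (M / c) ^ 2 / c) by positivity]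
  have hQ t : ‖G (y t) (w t)‖ ≤ R := by
    refine (hy.norm_P_le hG t).trans ?_
    have : C * √(C * ‖w 0‖ ^ 2 / c) ≤ C * √(C * (M / c) ^ 2 / c) := by
      rw [hw0]; gcongr; exact hv 0 hN
    linarith
  set Z := fun t => (y t, G (y t) (w t)) with hZ
  set z := fun i => (x i, G (x i) (dvel N x i)) with hz
  have hZd := hy.hasDerivAt_phase hG
  have hstepZ := euler_step (Φ := geoField G) hZd (fun t => hKb _ (hQ t))
    (fun s t => hKl _ _ (hQ s) (hQ t)) hK0
  set h : ℝ := (N : ℝ)⁻¹ with hh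
  have hh0 : 0 < h := by positivity
  have hh1 : h ≤ 1 := inv_le_one_of_one_le₀ hN1
  have hx i : x (i + 1) = x i + h • dvel N x i := by
    rw [dvel, smul_smul, hh, inv_mul_cancel₀ hN0.ne', one_smul]; abel
  have hfield i : geoField G (z i) = (dvel N x i, force G (x i) (dvel N x i)) := by
    simp only [geoField, hz, hG.inv_G]
  have hzR i : i < N → ‖(z i).2‖ ≤ R := fun hi => (hPM i hi).trans hMR
  have hvK i (hi : i < N) : ‖dvel N x i‖ ≤ K ∧ ‖force G (x i) (dvel N x i)‖ ≤ K := by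
    have := hKb _ (hzR i hi)
    rw [hfield, Prod.norm_def] at this
    exact ⟨(le_max_left _ _).trans this, (le_max_right _ _).trans this⟩
  have hzz i (hi : i + 1 < N) : ‖z (i + 1) - z i - h • geoField G (z i)‖ ≤
      (K * (K + 1) + 1) * h ^ 2 := by
    have h1 : ‖x (i + 1) - x i‖ ≤ K * h := by
      rw [hx, add_sub_cancel_left, norm_smul, norm_of_nonneg hh0.le, mul_comm]
      gcongr; exact (hvK i (by omega)).1
    have h2 : ‖(z (i + 1)).2 - (z i).2‖ ≤ (K + 1) * h := by
      have h3 := norm_add_le ((z (i + 1)).2 - (z i).2 -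
        h • force G (x (i + 1)) (dvel N x (i + 1))) (h • force G (x (i + 1)) (dvel N x (i + 1)))
      rw [sub_add_cancel, norm_smul, norm_of_nonneg hh0.le] at h3
      have h4 := hEL i hi
      have h5 : h * ‖force G (x (i + 1)) (dvel N x (i + 1))‖ ≤ h * K := by
        gcongr; exact (hvK _ hi).2
      have h6 : h ^ 2 ≤ h := by nlinarith
      nlinarith
    have h3 : ‖z (i + 1) - z i‖ ≤ (K + 1) * h := by
      refine max_le (h1.trans ?_) h2
      nlinarith
    have h4 : ‖force G (x (i + 1)) (dvel N x (i + 1)) - force G (x i) (dvel N x i)‖ ≤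
        K * ((K + 1) * h) := by
      have h5 := hKl _ _ (hzR _ hi) (hzR i (by omega))
      rw [hfield, hfield] at h5
      exact (le_max_right _ _).trans (h5.trans (by gcongr))
    rw [hfield]
    refine max_le ?_ ?_
    · have : (z (i + 1) - z i - h • (dvel N x i, force G (x i) (dvel N x i))).1 = 0 := by
        simp [hz, hx i]
      rw [this, norm_zero]; positivity
    · have e : (z (i + 1) - z i - h • (dvel N x i, force G (x i) (dvel N x i))).2 =
          ((z (i + 1)).2 - (z i).2 - h • force G (x (i + 1)) (dvel N x (i + 1))) +
          h • (force G (x (i + 1)) (dvel N x (i + 1)) - force G (x i) (dvel N x i)) := by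
        simp only [hz, smul_sub, Prod.snd_sub, Prod.smul_snd]; abel
      rw [e]
      refine (norm_add_le _ _).trans ?_
      rw [norm_smul, norm_of_nonneg hh0.le]
      have h5 : ‖(z (i + 1)).2 - (z i).2 - h • force G (x (i + 1)) (dvel N x (i + 1))‖ ≤ h ^ 2 :=
        hEL i hi
      have h6 := mul_le_mul_of_nonneg_left h4 hh0.le
      nlinarith
  have htime (i : ℕ) : ((i + 1 : ℕ) : ℝ) / N = i / N + h := by
    rw [hh]; push_cast; ring
  have hgr i (hi : i < N) : ‖z i - Z (i / N)‖ ≤ K1 / N := by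
    refine euler_gronwall (e := fun i => ‖z i - Z (i / N)‖) hK0 (A := A) (by positivity) ?_ ?_ i hi
    · simp [hz, hZ, hy0, hw0]
    · intro i hi
      have h1 := hzz i hi
      have h2 := hstepZ (i / N) h hh0.le
      rw [← htime] at h2
      have h3 := hKl _ (Z (i / N)) (hzR i (by omega)) (hQ (i / N))
      have e : z (i + 1) - Z ((i + 1 : ℕ) / N) =
          (z (i + 1) - z i - h • geoField G (z i)) -
          (Z ((i + 1 : ℕ) / N) - Z (i / N) - h • geoField G (Z (i / N))) +
          ((z i - Z (i / N)) + h • (geoField G (z i) - geoField G (Z (i / N)))) := by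
        rw [smul_sub]; abel
      have h4 : ‖h • (geoField G (z i) - geoField G (Z (i / N)))‖ ≤
          h * (K * ‖z i - Z (i / N)‖) := by
        rw [norm_smul, norm_of_nonneg hh0.le]; gcongr
      calc ‖z (i + 1) - Z ((i + 1 : ℕ) / N)‖ ≤
          ((K * (K + 1) + 1) * h ^ 2 + K ^ 2 * h ^ 2) +
            (‖z i - Z (i / N)‖ + h * (K * ‖z i - Z (i / N)‖)) := by
            rw [e]
            refine (norm_add_le _ _).trans (add_le_add ((norm_sub_le _ _).trans
              (add_le_add h1 h2)) ((norm_add_le _ _).trans (add_le_add le_rfl h4)))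
        _ = _ := by rw [hA, hh]; field_simp; ring
  have hxy i (hi : i < N) : ‖x i - y (i / N)‖ ≤ K1 / N :=
    (le_max_left _ _).trans (hgr i hi)
  have hPQ i (hi : i < N) : ‖G (x i) (dvel N x i) - G (y (i / N)) (w (i / N))‖ ≤ K1 / N :=
    (le_max_right _ _).trans (hgr i hi)
  have hwW t : ‖w t‖ ≤ W := by
    rw [hW, le_div_iff₀ hc, mul_comm]
    exact (hG.lower_norm _ _).trans (hQ t)
  constructor
  · intro i hi
    constructor
    · refine (hxy i hi).trans ?_
      have : 0 ≤ M / c + ((K1 + C * K1 * W) / c) + (K1 + K * K1 + K ^ 2) := by positivity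
      gcongr; linarith
    · have h1 := hG.vel_sub_le (x i) (y (i / N)) (dvel N x i) (w (i / N))
      have h2 : C * ‖x i - y (i / N)‖ * ‖w (i / N)‖ ≤ C * (K1 / N) * W := by
        gcongr
        · exact hxy i hi
        · exact hwW _
      have h3 : ‖dvel N x i - w (i / N)‖ ≤ ((K1 + C * K1 * W) / c) / N := by
        rw [div_div, le_div_iff₀ (by positivity)]
        have h4 : c * ‖dvel N x i - w (i / N)‖ ≤ K1 / N + C * (K1 / N) * W :=
          h1.trans (add_le_add (hPQ i hi) h2)
        have h5 : K1 / N + C * (K1 / N) * W = (K1 + C * K1 * W) / N := by ring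
        rw [h5, le_div_iff₀ hN0] at h4
        linarith
      refine h3.trans ?_
      have : 0 ≤ M / c + K1 + (K1 + K * K1 + K ^ 2) := by positivity
      gcongr; linarith
  · obtain ⟨m, rfl⟩ : ∃ m, N = m + 1 := ⟨N - 1, by omega⟩
    have h2 := hstepZ (m / (m + 1 : ℕ)) h hh0.le
    rw [← htime, div_self hN0.ne'] at h2
    have h2' : ‖y 1 - y (m / (m + 1 : ℕ)) - h • w (m / (m + 1 : ℕ))‖ ≤ K ^ 2 * h ^ 2 := by
      refine (le_of_eq ?_).trans ((le_max_left _ _).trans h2)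
      simp only [geoField, hG.inv_G]
      rfl
    have h3 := hKl _ (Z (m / (m + 1 : ℕ))) (hzR m (by omega)) (hQ (m / (m + 1 : ℕ)))
    have h3' : ‖dvel (m + 1) x m - w (m / (m + 1 : ℕ))‖ ≤ K * (K1 / (m + 1 : ℕ)) := by
      refine (le_of_eq ?_).trans ((le_max_left _ _).trans (h3.trans
        (mul_le_mul_of_nonneg_left (hgr m (by omega)) hK0)))
      rw [hfield]
      simp only [hZ, geoField, hG.inv_G]
      rfl
    have h4 := hxy m (by omega)
    have e : x (m + 1) - y 1 = (x m - y (m / (m + 1 : ℕ))) +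
        h • (dvel (m + 1) x m - w (m / (m + 1 : ℕ))) -
        (y 1 - y (m / (m + 1 : ℕ)) - h • w (m / (m + 1 : ℕ))) := by
      rw [hx, smul_sub]; abel
    rw [e]
    have h5 : ‖h • (dvel (m + 1) x m - w (m / (m + 1 : ℕ)))‖ ≤ h * (K * (K1 / (m + 1 : ℕ))) := by
      rw [norm_smul, norm_of_nonneg hh0.le]; gcongr
    have h6 : h * (K * (K1 / (m + 1 : ℕ))) ≤ K * K1 / (m + 1 : ℕ) := by
      have : 0 ≤ K * (K1 / (m + 1 : ℕ)) := by positivity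
      calc _ ≤ 1 * (K * (K1 / (m + 1 : ℕ))) := by gcongr
        _ = _ := by ring
    have h7 : K ^ 2 * h ^ 2 ≤ K ^ 2 / (m + 1 : ℕ) := by
      have : h ^ 2 ≤ h := by nlinarith
      calc K ^ 2 * h ^ 2 ≤ K ^ 2 * h := by gcongr
        _ = _ := by rw [hh]; rfl
    calc _ ≤ K1 / (m + 1 : ℕ) + K * K1 / (m + 1 : ℕ) + K ^ 2 / (m + 1 : ℕ) :=
          (norm_sub_le _ _).trans (add_le_add ((norm_add_le _ _).trans
            (add_le_add h4 (h5.trans h6))) (h2'.trans h7))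
      _ = (K1 + K * K1 + K ^ 2) / (m + 1 : ℕ) := by ring
      _ ≤ _ := by
        have : 0 ≤ M / c + (K1 + (K1 + C * K1 * W) / c) := by positivity
        exact div_le_div_of_nonneg_right (by linarith) hN0.le

/-- Speed bound for geodesics in terms of the energy. -/
lemma IsGeo.norm_v_le (hG : RMet G c C) {x v : ℝ → E} (h : IsGeo G x v) {e : ℝ}
    (he : ⟪G (x 0) (v 0), v 0⟫ ≤ e) (t : ℝ) : ‖v t‖ ≤ √(e / c) :=
  hG.norm_le_of_energy ((h.energy hG t).le.trans he)

/-- Continuous dependence, including the velocities. -/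
lemma IsGeo.close_vel (hG : RMet G c C) (e T : ℝ) : ∃ K : ℝ, 0 ≤ K ∧
    ∀ x v y w : ℝ → E, IsGeo G x v → IsGeo G y w →
      ⟪G (x 0) (v 0), v 0⟫ ≤ e → ⟪G (y 0) (w 0), w 0⟫ ≤ e → ∀ t, |t| ≤ T →
      ‖x t - y t‖ ≤ K * (‖x 0 - y 0‖ + ‖v 0 - w 0‖) ∧
      ‖v t - w t‖ ≤ K * (‖x 0 - y 0‖ + ‖v 0 - w 0‖) := by
  have hc := hG.pos
  have hC := hG.Cpos
  obtain ⟨K, hK0, hK⟩ := IsGeo.close hG e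
  set S := √(e / c)
  set A := (1 + C * S + C) * exp (K * T) with hA
  refine ⟨A + (A + C * A * S) / c, by positivity, fun x v y w hx hy hex hey t ht => ?_⟩
  set d := ‖x 0 - y 0‖ + ‖v 0 - w 0‖ with hd
  have hd0 : 0 ≤ d := by positivity
  have h0 : max ‖x 0 - y 0‖ ‖G (x 0) (v 0) - G (y 0) (w 0)‖ ≤ (1 + C * S + C) * d := by
    have h1 : ‖x 0 - y 0‖ ≤ d := by rw [hd]; linarith [norm_nonneg (v 0 - w 0)]
    have h2 : ‖v 0 - w 0‖ ≤ d := by rw [hd]; linarith [norm_nonneg (x 0 - y 0)]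
    refine max_le ?_ ?_
    · have : 0 ≤ (C * S + C) * d := by positivity
      linarith
    · have e1 : G (x 0) (v 0) - G (y 0) (w 0) = (G (x 0) - G (y 0)) (v 0) + G (y 0) (v 0 - w 0) := by
        simp
      rw [e1]
      have h3 : ‖(G (x 0) - G (y 0)) (v 0)‖ ≤ C * d * S := by
        refine (ContinuousLinearMap.le_opNorm _ _).trans ?_
        refine mul_le_mul ((hG.lipG _ _).trans (by gcongr)) (hx.norm_v_le hG hex 0)
          (norm_nonneg _) (by positivity)
      have h4 : ‖G (y 0) (v 0 - w 0)‖ ≤ C * d := (hG.norm_apply_le _ _).trans (by gcongr)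
      refine (norm_add_le _ _).trans ?_
      linarith
  have h1 : max ‖x t - y t‖ ‖G (x t) (v t) - G (y t) (w t)‖ ≤ A * d := by
    refine (hK x v y w hx hy hex hey t).trans ?_
    calc _ ≤ ((1 + C * S + C) * d) * exp (K * T) := by gcongr
      _ = _ := by rw [hA]; ring
  have hx' := (le_max_left _ _).trans h1
  have hP' := (le_max_right _ _).trans h1
  have hv := hG.vel_sub_le (x t) (y t) (v t) (w t)
  have hw := hy.norm_v_le hG hey t
  have h2 : C * ‖x t - y t‖ * ‖w t‖ ≤ C * (A * d) * S := by gcongr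
  have h3 : ‖v t - w t‖ ≤ (A + C * A * S) / c * d := by
    rw [div_mul_eq_mul_div, le_div_iff₀ hc]
    linarith
  have h4 : 0 ≤ (A + C * A * S) / c * d := by positivity
  have h5 : 0 ≤ A * d := by positivity
  constructor <;> linarith

/-- Sequences of almost critical polygons with bounded energy subconverge to geodesics. -/
lemma discrete_limit (hG : RMet G c C) {B : ℝ} (hB : 0 ≤ B) {p q : E} {N : ℕ → ℕ}
    (hN : ∀ k, 0 < N k) (hNt : Tendsto N atTop atTop) {X : ℕ → ℕ → E}
    (hp : ∀ k, X k 0 = p) (hq : ∀ k, X k (N k) = q) (hE : ∀ k, dE G (N k) (X k) ≤ B)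
    (hEL : ∀ k i, i + 1 < N k → ‖G (X k (i + 1)) (dvel (N k) (X k) (i + 1)) -
      G (X k i) (dvel (N k) (X k) i) -
      (N k : ℝ)⁻¹ • force G (X k (i + 1)) (dvel (N k) (X k) (i + 1))‖ ≤ ((N k : ℝ)⁻¹) ^ 2) :
    ∃ (φ : ℕ → ℕ) (x v : ℝ → E) (η : ℕ → ℝ), StrictMono φ ∧ IsGeo G x v ∧ x 0 = p ∧ x 1 = q ∧
      Tendsto η atTop (nhds 0) ∧ ∀ k i, i < N (φ k) →
        ‖X (φ k) i - x (i / N (φ k))‖ ≤ η k ∧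
        ‖dvel (N (φ k)) (X (φ k)) i - v (i / N (φ k))‖ ≤ η k := by
  have hC := hG.Cpos
  obtain ⟨K, hK0, hK⟩ := discrete_tracking hG B hB
  have hv0 k : dvel (N k) (X k) 0 ∈ closedBall (0 : E) K := by
    simpa using (hK (N k) (X k) (hN k) (hE k) (hEL k)).1 0 (hN k)
  obtain ⟨w0, hw0, φ, hφ, hlim⟩ := (isCompact_closedBall (0 : E) K).tendsto_subseq hv0
  obtain ⟨x, v, hx0, hvv, hxv⟩ := exists_geo hG p w0
  choose y w hy0 hwv hyw using fun k => exists_geo hG p (dvel (N k) (X k) 0)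
  obtain ⟨K', hK'0, hK'⟩ := IsGeo.close_vel hG (C * K ^ 2) 1
  have hen (u : E) (hu : ‖u‖ ≤ K) : ⟪G p u, u⟫ ≤ C * K ^ 2 := by
    calc ⟪G p u, u⟫ ≤ _ := (le_abs_self _).trans (hG.upper _ _ _)
      _ ≤ C * K * K := by gcongr
      _ = _ := by ring
  have hcl k t (ht : |t| ≤ 1) : ‖y k t - x t‖ ≤ K' * ‖dvel (N k) (X k) 0 - w0‖ ∧
      ‖w k t - v t‖ ≤ K' * ‖dvel (N k) (X k) 0 - w0‖ := by
    have := hK' _ _ _ _ (hyw k) hxv (by rw [hy0, hwv]; exact hen _ (by simpa using hv0 k))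
      (by rw [hx0, hvv]; exact hen _ (by simpa using hw0)) t ht
    simpa [hy0, hwv, hx0, hvv] using this
  set η : ℕ → ℝ := fun k => K / N (φ k) + K' * ‖dvel (N (φ k)) (X (φ k)) 0 - w0‖
  have hNφ : Tendsto (fun k => (N (φ k) : ℝ)) atTop atTop :=
    tendsto_natCast_atTop_atTop.comp (hNt.comp hφ.tendsto_atTop)
  have hηt : Tendsto η atTop (nhds 0) := by
    have h1 : Tendsto (fun k => K / (N (φ k) : ℝ)) atTop (nhds 0) := hNφ.const_div_atTop K
    have h2 : Tendsto (fun k => K' * ‖dvel (N (φ k)) (X (φ k)) 0 - w0‖) atTop (nhds (K' * 0)) :=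
      (tendsto_iff_norm_sub_tendsto_zero.1 hlim).const_mul K'
    simpa using h1.add h2
  refine ⟨φ, x, v, η, hφ, hxv, hx0, ?_, hηt, ?_⟩
  · have h1 k : ‖q - x 1‖ ≤ η k := by
      have h2 := ((hK (N (φ k)) (X (φ k)) (hN _) (hE _) (hEL _)).2 (y (φ k)) (w (φ k)) (hyw _)
        (by rw [hy0, hp]) (hwv _)).2
      rw [hq] at h2
      have h3 := (hcl (φ k) 1 (by simp)).1
      calc ‖q - x 1‖ = ‖(q - y (φ k) 1) + (y (φ k) 1 - x 1)‖ := by congr 1; abel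
        _ ≤ _ := (norm_add_le _ _).trans (add_le_add h2 h3)
    have h2 : ‖q - x 1‖ ≤ 0 := ge_of_tendsto' hηt h1
    exact (sub_eq_zero.1 (norm_le_zero_iff.1 h2)).symm
  · intro k i hi
    have h2 := ((hK (N (φ k)) (X (φ k)) (hN _) (hE _) (hEL _)).2 (y (φ k)) (w (φ k)) (hyw _)
        (by rw [hy0, hp]) (hwv _)).1 i hi
    have hN0 : (0 : ℝ) < N (φ k) := by exact_mod_cast hN _
    have ht : |(i : ℝ) / N (φ k)| ≤ 1 := by
      rw [abs_of_nonneg (by positivity), div_le_one hN0]; exact_mod_cast hi.le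
    have h3 := hcl (φ k) _ ht
    constructor
    · calc _ = ‖(X (φ k) i - y (φ k) (i / N (φ k))) +
            (y (φ k) (i / N (φ k)) - x (i / N (φ k)))‖ := by congr 1; abel
        _ ≤ _ := (norm_add_le _ _).trans (add_le_add h2.1 h3.1)
    · calc _ = ‖(dvel (N (φ k)) (X (φ k)) i - w (φ k) (i / N (φ k))) +
            (w (φ k) (i / N (φ k)) - v (i / N (φ k)))‖ := by congr 1; abel
        _ ≤ _ := (norm_add_le _ _).trans (add_le_add h2.2 h3.2)

/-- Dominated convergence for the second variation integrand. -/
lemma qf_limit (hG : RMet G c C) {a b M : ℝ} {x v V δ : ℕ → ℝ → E} {x' v' V' δ' : ℝ → E}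
    (hm : ∀ k, StronglyMeasurable (x k) ∧ StronglyMeasurable (v k) ∧
      StronglyMeasurable (V k) ∧ StronglyMeasurable (δ k))
    (hb : ∀ᶠ k in atTop, ∀ t ∈ Ioo a b, ‖x k t‖ ≤ M ∧ ‖v k t‖ ≤ M ∧ ‖V k t‖ ≤ M ∧ ‖δ k t‖ ≤ M)
    (hab : a ≤ b) {s : Set ℝ} (hs : s.Countable)
    (hlim : ∀ t ∈ Ioo a b, t ∉ s → Tendsto (fun k => x k t) atTop (nhds (x' t)) ∧
      Tendsto (fun k => v k t) atTop (nhds (v' t)) ∧ Tendsto (fun k => V k t) atTop (nhds (V' t)) ∧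
      Tendsto (fun k => δ k t) atTop (nhds (δ' t))) :
    Tendsto (fun k => ∫ t in a..b, qf G (x k t) (v k t) (V k t) (δ k t)) atTop
      (nhds (∫ t in a..b, qf G (x' t) (v' t) (V' t) (δ' t))) := by
  have hcont := hG.continuous_qf
  obtain ⟨D, hD⟩ := (isCompact_closedBall (0 : E × E × E × E) M).exists_bound_of_continuousOn
    hcont.continuousOn
  refine tendsto_integral_filter_of_dominated_convergence (fun _ => D) ?_ ?_ ?_ ?_
  · refine Eventually.of_forall fun k => ?_
    obtain ⟨h1, h2, h3, h4⟩ := hm k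
    have h5 : StronglyMeasurable fun t => (x k t, v k t, V k t, δ k t) :=
      h1.prodMk (h2.prodMk (h3.prodMk h4))
    exact (hcont.comp_stronglyMeasurable h5).aestronglyMeasurable
  · filter_upwards [hb] with k hk
    have h0 : ∀ᵐ t : ℝ, t ∉ ({b} : Set ℝ) := (countable_singleton b).ae_notMem _
    filter_upwards [h0] with t htb ht
    rw [uIoc_of_le hab] at ht
    obtain ⟨h1, h2, h3, h4⟩ := hk t ⟨ht.1, lt_of_le_of_ne ht.2 htb⟩
    refine hD (x k t, v k t, V k t, δ k t) ?_
    rw [mem_closedBall_zero_iff]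
    exact max_le h1 (max_le h2 (max_le h3 h4))
  · exact intervalIntegrable_const
  · have h0 : ∀ᵐ t : ℝ, t ∉ s ∪ {b} :=
      ((hs.union (countable_singleton b)).ae_notMem _)
    filter_upwards [h0] with t ht hI
    rw [uIoc_of_le hab] at hI
    simp only [mem_union, mem_singleton_iff, not_or] at ht
    obtain ⟨h1, h2, h3, h4⟩ := hlim t ⟨hI.1, lt_of_le_of_ne hI.2 ht.2⟩ ht.1
    have h5 : Tendsto (fun k => (x k t, v k t, V k t, δ k t)) atTop
        (nhds (x' t, v' t, V' t, δ' t)) :=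
      h1.prodMk_nhds (h2.prodMk_nhds (h3.prodMk_nhds h4))
    have h6 := (hcont.tendsto (x' t, v' t, V' t, δ' t)).comp h5
    simp only [Function.comp_def] at h6
    exact h6

lemma sum_eq_integral_floor {N : ℕ} (hN : 0 < N) (f : ℕ → ℝ) :
    (∑ j ∈ Finset.range N, f j) / N = ∫ t in (0 : ℝ)..1, f ⌊(N : ℝ) * t⌋₊ := by
  have hN0 : (0 : ℝ) < N := by exact_mod_cast hN
  have hpiece (j : ℕ) : EqOn (fun t : ℝ => f ⌊(N : ℝ) * t⌋₊) (fun _ => f j)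
      (Ioo ((j : ℝ) / N) ((j + 1 : ℕ) / N)) := by
    intro t ht
    have h1 : (j : ℝ) < N * t := by have := ht.1; rw [div_lt_iff₀ hN0] at this; linarith
    have h2 : (N : ℝ) * t < j + 1 := by
      have := ht.2; rw [lt_div_iff₀ hN0] at this; push_cast at this; linarith
    have : ⌊(N : ℝ) * t⌋₊ = j := by
      rw [Nat.floor_eq_iff (by linarith [(Nat.cast_nonneg j : (0 : ℝ) ≤ j)])]
      exact ⟨h1.le, h2⟩
    simp [this]
  have hle (j : ℕ) : (j : ℝ) / N ≤ (j + 1 : ℕ) / N := by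
    gcongr; omega
  have hae (j : ℕ) : (fun t : ℝ => f ⌊(N : ℝ) * t⌋₊) =ᵐ[MeasureTheory.volume.restrict
      (uIoc ((j : ℝ) / N) ((j + 1 : ℕ) / N))] fun _ => f j := by
    rw [uIoc_of_le (hle j), ← MeasureTheory.restrict_Ioo_eq_restrict_Ioc]
    exact (MeasureTheory.ae_restrict_iff' measurableSet_Ioo).2
      (Eventually.of_forall fun t ht => hpiece j ht)
  have h1 := sum_integral_adjacent_intervals (f := fun t : ℝ => f ⌊(N : ℝ) * t⌋₊)
    (μ := volume) (a := fun j : ℕ => (j : ℝ) / N) (n := N) (fun j _ => by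
      exact (intervalIntegrable_const (c := f j)).congr_ae (hae j).symm)
  simp only [Nat.cast_zero, zero_div, div_self hN0.ne'] at h1
  rw [← h1, sum_div]
  refine sum_congr rfl fun j _ => ?_
  have : ∫ t in ((j : ℝ) / N)..((j + 1 : ℕ) / N), f ⌊(N : ℝ) * t⌋₊ =
      ∫ t in ((j : ℝ) / N)..((j + 1 : ℕ) / N), f j := by
    refine integral_congr_ae_restrict ?_
    exact hae j
  rw [this, integral_const, smul_eq_mul]
  push_cast
  field_simp
  ring

/-! ### The index bound in the limit of fine polygons -/

/-- Among any `n` variation fields along `(x, v)` vanishing at the ends of `[a, b]` there is a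
nontrivial combination with nonnegative second variation. -/
def IndexProp
    (G : E → E →L[ℝ] E) (n : ℕ) (x v : ℝ → E) (a b : ℝ) : Prop :=
  ∀ V : Fin n → ℝ → E, (∀ i, ContDiff ℝ 1 (V i)) → (∀ i, V i a = 0) → (∀ i, V i b = 0) →
    ∃ α : Fin n → ℝ, ‖α‖ = 1 ∧
      0 ≤ ∫ t in a..b, qf G (x t) (v t) (∑ i, α i • V i t) (∑ i, α i • deriv (V i) t)

lemma tendsto_diffquot {f : ℝ → E} {f' : E} {t : ℝ} (hf : HasStrictDerivAt f f' t)
    {N s s' : ℕ → ℝ} (hs : Tendsto s atTop (nhds t)) (hs' : Tendsto s' atTop (nhds t))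
    (hN : ∀ k, N k * (s' k - s k) = 1) :
    Tendsto (fun k => N k • (f (s' k) - f (s k))) atTop (nhds f') := by
  have h1 := (hasStrictDerivAt_iff_hasStrictFDerivAt.1 hf).isLittleO.comp_tendsto
    (hs'.prodMk_nhds hs)
  rw [tendsto_iff_norm_sub_tendsto_zero]
  have hne k : s' k - s k ≠ 0 := fun h => by have := hN k; rw [h] at this; simp at this
  have h3 := (Asymptotics.isLittleO_iff_tendsto' (Eventually.of_forall fun k hk =>
    absurd hk (norm_ne_zero_iff.2 (hne k)))).1 h1.norm_norm
  refine h3.congr fun k => ?_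
  have e : N k • (f (s' k) - f (s k)) - f' = N k • (f (s' k) - f (s k) - (s' k - s k) • f') := by
    rw [smul_sub (N k) _ ((s' k - s k) • f'), smul_smul, hN, one_smul]
  have hNe : |N k| = |s' k - s k|⁻¹ := by
    rw [← abs_inv, eq_inv_of_mul_eq_one_left (hN k)]
  rw [e, norm_smul, norm_eq_abs (N k), hNe]
  simp only [Function.comp, norm_eq_abs, ContinuousLinearMap.toSpanSingleton_apply]
  rw [div_eq_inv_mul]

lemma tendsto_floor_div {N : ℕ → ℕ} (hN : ∀ k, 0 < N k) (hNt : Tendsto N atTop atTop) {t : ℝ}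
    (ht : 0 ≤ t) : Tendsto (fun k => (⌊(N k : ℝ) * t⌋₊ : ℝ) / N k) atTop (nhds t) ∧
      Tendsto (fun k => ((⌊(N k : ℝ) * t⌋₊ + 1 : ℕ) : ℝ) / N k) atTop (nhds t) := by
  have hNr : Tendsto (fun k => (N k : ℝ)) atTop atTop := tendsto_natCast_atTop_atTop.comp hNt
  have h0 : Tendsto (fun k => 1 / (N k : ℝ)) atTop (nhds 0) := hNr.const_div_atTop 1
  have hpos k : (0 : ℝ) < N k := by exact_mod_cast hN k
  have hle k : (⌊(N k : ℝ) * t⌋₊ : ℝ) / N k ≤ t := by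
    rw [div_le_iff₀ (hpos k), mul_comm]; exact Nat.floor_le (by have := hpos k; positivity)
  have hge k : t ≤ (⌊(N k : ℝ) * t⌋₊ : ℝ) / N k + 1 / N k := by
    rw [← add_div, le_div_iff₀ (hpos k), mul_comm]; exact (Nat.lt_floor_add_one _).le
  have h1 : Tendsto (fun k => (⌊(N k : ℝ) * t⌋₊ : ℝ) / N k) atTop (nhds t) := by
    refine tendsto_of_tendsto_of_tendsto_of_le_of_le (g := fun k => t - 1 / (N k : ℝ))
      (h := fun _ => t) ?_ tendsto_const_nhds (fun k => by linarith [hge k]) hle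
    simpa using tendsto_const_nhds.sub h0
  refine ⟨h1, ?_⟩
  have := h1.add h0
  rw [add_zero] at this
  refine this.congr fun k => ?_
  push_cast; ring

lemma floor_mem {N : ℕ} (hN : 0 < N) {t : ℝ} (ht : t ∈ Ioo (0 : ℝ) 1) :
    ⌊(N : ℝ) * t⌋₊ < N ∧ (⌊(N : ℝ) * t⌋₊ : ℝ) / N ∈ Icc (0 : ℝ) 1 := by
  have hp : (0 : ℝ) < N := by exact_mod_cast hN
  have h : ⌊(N : ℝ) * t⌋₊ < N := by
    rw [Nat.floor_lt (mul_nonneg hp.le ht.1.le)]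
    nlinarith [ht.2]
  exact ⟨h, by positivity, (div_le_one hp).2 (by exact_mod_cast h.le)⟩

/-- Step functions tracking a continuous curve at the nodes are bounded and converge to it. -/
lemma floor_track {N : ℕ → ℕ} (hN : ∀ k, 0 < N k) (hNt : Tendsto N atTop atTop) {x : ℝ → E}
    (hx : Continuous x) {η : ℕ → ℝ} (hη : Tendsto η atTop (nhds 0)) {X : ℕ → ℕ → E}
    (htr : ∀ k i, i < N k → ‖X k i - x (i / N k)‖ ≤ η k) :
    (∃ M, ∀ᶠ k in atTop, ∀ t ∈ Ioo (0 : ℝ) 1, ‖X k ⌊(N k : ℝ) * t⌋₊‖ ≤ M) ∧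
      ∀ t ∈ Ioo (0 : ℝ) 1, Tendsto (fun k => X k ⌊(N k : ℝ) * t⌋₊) atTop (nhds (x t)) := by
  obtain ⟨M, hM⟩ := (isCompact_Icc (a := (0 : ℝ)) (b := 1)).exists_bound_of_continuousOn
    hx.continuousOn
  refine ⟨⟨M + 1, ?_⟩, fun t ht => ?_⟩
  · filter_upwards [hη.eventually_lt_const one_pos] with k hk t ht
    obtain ⟨h1, h2⟩ := floor_mem (hN k) ht
    linarith [htr k _ h1, hM _ h2, norm_le_norm_add_norm_sub' (X k ⌊(N k : ℝ) * t⌋₊)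
      (x ((⌊(N k : ℝ) * t⌋₊ : ℝ) / N k))]
  · have h1 : Tendsto (fun k => X k ⌊(N k : ℝ) * t⌋₊ - x ((⌊(N k : ℝ) * t⌋₊ : ℝ) / N k)) atTop
        (nhds 0) := squeeze_zero_norm (fun k => htr k _ (floor_mem (hN k) ht).1) hη
    simpa [Function.comp_def] using
      h1.add ((hx.tendsto t).comp (tendsto_floor_div hN hNt ht.1.le).1)

lemma clamp_lipschitz {a b : ℝ} {V : ℝ → E} (hV : ContDiff ℝ 1 V) :
    ∃ L : ℝ, 0 ≤ L ∧ ∀ s t, ‖V (max a (min b s)) - V (max a (min b t))‖ ≤ L * |s - t| := by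
  obtain ⟨L, hL⟩ := (isCompact_Icc (a := min a b) (b := max a b)).exists_bound_of_continuousOn
    (hV.continuous_deriv le_rfl).continuousOn
  have hL' s t : s ∈ Icc (min a b) (max a b) → t ∈ Icc (min a b) (max a b) →
      ‖V s - V t‖ ≤ max L 0 * |s - t| := fun hs ht =>
    (convex_Icc _ _).norm_image_sub_le_of_norm_deriv_le
      (fun x _ => (hV.differentiable one_ne_zero) x)
      (fun x hx => (hL x hx).trans (le_max_left _ _)) ht hs
  have hm t : max a (min b t) ∈ Icc (min a b) (max a b) :=
    ⟨(min_le_left _ _).trans (le_max_left _ _),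
      max_le (le_max_left _ _) ((min_le_left _ _).trans (le_max_right _ _))⟩
  refine ⟨max L 0, le_max_right _ _, fun s t => (hL' _ _ (hm s) (hm t)).trans ?_⟩
  refine mul_le_mul_of_nonneg_left ?_ (le_max_right _ _)
  refine (abs_max_sub_max_le_max _ _ _ _).trans ?_
  rw [sub_self, abs_zero, max_eq_right (abs_nonneg _)]
  refine (abs_min_sub_min_le_max _ _ _ _).trans ?_
  rw [sub_self, abs_zero, max_eq_right (abs_nonneg _)]

lemma clamp_hasStrictDerivAt {a b : ℝ} (hab : a < b) {V : ℝ → E} (hV : ContDiff ℝ 1 V) {t : ℝ}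
    (ha : t ≠ a) (hb : t ≠ b) : HasStrictDerivAt (fun s => V (max a (min b s)))
      (if t ∈ Ioo a b then deriv V t else 0) t := by
  split_ifs with ht
  · have h1 : HasStrictDerivAt V (deriv V t) t := hV.contDiffAt.hasStrictDerivAt one_ne_zero
    refine h1.congr_of_eventuallyEq ?_
    filter_upwards [isOpen_Ioo.mem_nhds ht] with s hs
    rw [min_eq_right hs.2.le, max_eq_right hs.1.le]
  · rcases lt_or_gt_of_ne ha with h | h
    · refine (hasStrictDerivAt_const t (V a)).congr_of_eventuallyEq ?_
      filter_upwards [isOpen_Iio.mem_nhds h] with s hs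
      rw [min_eq_right ((le_of_lt hs).trans hab.le), max_eq_left (le_of_lt hs)]
    · have h' : b < t := lt_of_le_of_ne (not_lt.1 fun h2 => ht ⟨h, h2⟩) hb.symm
      refine (hasStrictDerivAt_const t (V b)).congr_of_eventuallyEq ?_
      filter_upwards [isOpen_Ioi.mem_nhds h'] with s hs
      rw [min_eq_left (le_of_lt hs), max_eq_right hab.le]

lemma stronglyMeasurable_floor (N : ℕ) (f : ℕ → E) :
    StronglyMeasurable fun t : ℝ => f ⌊(N : ℝ) * t⌋₊ := by
  have h1 : StronglyMeasurable f := MeasureTheory.StronglyMeasurable.of_discrete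
  exact h1.comp_measurable (Nat.measurable_floor.comp (measurable_const_mul (N : ℝ)))

lemma norm_sum_smul_le {n : ℕ} {α : Fin n → ℝ} (hα : ‖α‖ ≤ 1) {w : Fin n → E} {L : Fin n → ℝ}
    (h : ∀ i, ‖w i‖ ≤ L i) : ‖∑ i, α i • w i‖ ≤ ∑ i, L i := by
  refine (norm_sum_le _ _).trans (sum_le_sum fun i _ => ?_)
  rw [norm_smul]
  have := (norm_le_pi_norm α i).trans hα
  nlinarith [norm_nonneg (w i), h i, norm_nonneg (α i)]

/-- The samples of the fields `U i` at the interior nodes, as a linear map in the coefficients. -/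
def sampleMap {n : ℕ} (U : Fin n → ℝ → E) (m : ℕ) :
    (Fin n → ℝ) →ₗ[ℝ] PiLp 2 (fun _ : Fin m => E) where
  toFun α := WithLp.toLp 2 fun j => ∑ i, α i • U i (((j : ℕ) + 1 : ℕ) / ((m + 1 : ℕ) : ℝ))
  map_add' α β := by
    ext j
    simp [add_smul, sum_add_distrib]
  map_smul' r α := by
    ext j
    simp [smul_sum, mul_smul]

lemma node_sampleMap {n : ℕ} {U : Fin n → ℝ → E} (h0 : ∀ i, U i 0 = 0) (h1 : ∀ i, U i 1 = 0)
    (m : ℕ) (α : Fin n → ℝ) (j : ℕ) (hj : j ≤ m + 1) :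
    node 0 0 (sampleMap U m α) j = ∑ i, α i • U i (j / ((m + 1 : ℕ) : ℝ)) := by
  rcases j with _ | j
  · simp [node_zero, h0]
  · rcases Nat.lt_or_ge j m with h | h
    · have := node_succ (0 : E) 0 (sampleMap U m α) ⟨j, h⟩
      simp only at this
      rw [this]
      simp [sampleMap]
    · have hjm : j = m := by omega
      subst hjm
      rw [node_last]
      have : (((j + 1 : ℕ) : ℝ)) / ((j + 1 : ℕ) : ℝ) = 1 := div_self (by positivity)
      simp only [this, h1, smul_zero, Finset.sum_const_zero]

/-- Passing the discrete index bound to the limit geodesic, on every subinterval. -/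
lemma discrete_index (hG : RMet G c C) {n : ℕ} {p q : E} {m : ℕ → ℕ} (hmt : Tendsto m atTop atTop)
    {z : ∀ k, PiLp 2 (fun _ : Fin (m k) => E)} {x v : ℝ → E} (h : IsGeo G x v) {η : ℕ → ℝ}
    (hη : Tendsto η atTop (nhds 0))
    (htr : ∀ k i, i < m k + 1 →
      ‖node p q (z k) i - x (i / ((m k + 1 : ℕ) : ℝ))‖ ≤ η k ∧
      ‖dvel (m k + 1) (node p q (z k)) i - v (i / ((m k + 1 : ℕ) : ℝ))‖ ≤ η k)
    (hidx : ∀ k, ∀ L : (Fin n → ℝ) →ₗ[ℝ] PiLp 2 (fun _ : Fin (m k) => E), ∃ α, α ≠ 0 ∧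
      0 ≤ fderiv ℝ (fderiv ℝ (fun z => dE G (m k + 1) (node p q z))) (z k) (L α) (L α))
    {a b : ℝ} (ha : 0 ≤ a) (hab : a < b) (hb : b ≤ 1) : IndexProp G n x v a b := by
  intro V hV hVa hVb
  set U : Fin n → ℝ → E := fun i t => V i (max a (min b t)) with hU
  have hU0 i t (ht : t ∉ Ioo a b) : U i t = 0 := by
    rcases le_or_gt t a with h' | h'
    · simp only [hU]; rw [min_eq_right (h'.trans hab.le), max_eq_left h', hVa]
    · have : b ≤ t := not_lt.1 fun h2 => ht ⟨h', h2⟩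
      simp only [hU]; rw [min_eq_left this, max_eq_right hab.le, hVb]
  have hU1 i t (ht : t ∈ Ioo a b) : U i t = V i t := by
    simp only [hU]; rw [min_eq_right ht.2.le, max_eq_right ht.1.le]
  have hUz i : U i 0 = 0 := hU0 i 0 fun h' => absurd h'.1 (not_lt.2 ha)
  have hUo i : U i 1 = 0 := hU0 i 1 fun h' => absurd h'.2 (not_lt.2 hb)
  have hLip i : ∃ L : ℝ, 0 ≤ L ∧ ∀ s t, ‖U i s - U i t‖ ≤ L * |s - t| :=
    clamp_lipschitz (hV i)
  choose L hL0 hL using hLip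
  have hUc i : Continuous (U i) := by
    simp only [hU]
    exact (hV i).continuous.comp (continuous_const.max (continuous_const.min continuous_id))
  have hex k : ∃ α : Fin n → ℝ, ‖α‖ = 1 ∧
      0 ≤ fderiv ℝ (fderiv ℝ (fun z => dE G (m k + 1) (node p q z))) (z k)
        (sampleMap U (m k) α) (sampleMap U (m k) α) := by
    obtain ⟨α, hα, hα2⟩ := hidx k (sampleMap U (m k))
    refine ⟨‖α‖⁻¹ • α, ?_, ?_⟩
    · rw [norm_smul, norm_inv, norm_norm, inv_mul_cancel₀ (norm_ne_zero_iff.2 hα)]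
    · simp only [map_smul, smul_apply, smul_eq_mul]
      positivity
  choose α hα hα2 using hex
  obtain ⟨α0, hα0, φ, hφ, hlim⟩ := (isCompact_sphere (0 : Fin n → ℝ) 1).tendsto_subseq
    (fun k => mem_sphere_zero_iff_norm.2 (hα k))
  rw [mem_sphere_zero_iff_norm] at hα0
  refine ⟨α0, hα0, ?_⟩
  set N : ℕ → ℕ := fun k => m (φ k) + 1
  have hN0 k : 0 < N k := Nat.succ_pos _
  have hNpos k : (0 : ℝ) < N k := by exact_mod_cast hN0 k
  have hNt : Tendsto N atTop atTop :=
    tendsto_atTop_mono (fun k => Nat.le_succ _) (hmt.comp hφ.tendsto_atTop)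
  set xs : ℕ → ℝ → E := fun k t => node p q (z (φ k)) ⌊(N k : ℝ) * t⌋₊
  set vs : ℕ → ℝ → E := fun k t => dvel (N k) (node p q (z (φ k))) ⌊(N k : ℝ) * t⌋₊
  set Vs : ℕ → ℝ → E := fun k t => ∑ i, α (φ k) i • U i ((⌊(N k : ℝ) * t⌋₊ : ℝ) / N k)
  set δs : ℕ → ℝ → E := fun k t => ∑ i, α (φ k) i •
    ((N k : ℝ) • (U i (((⌊(N k : ℝ) * t⌋₊ + 1 : ℕ) : ℝ) / N k) - U i ((⌊(N k : ℝ) * t⌋₊ : ℝ) / N k)))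
  set D : Fin n → ℝ → E := fun i t => if t ∈ Ioo a b then deriv (V i) t else 0 with hD
  have hpos k : 0 ≤ ∫ t in (0 : ℝ)..1, qf G (xs k t) (vs k t) (Vs k t) (δs k t) := by
    have h1 := hα2 (φ k)
    rw [fderiv2_dE hG] at h1
    have h2 j (hj : j ∈ Finset.range (N k)) : qf G (node p q (z (φ k)) j)
        (dvel (m (φ k) + 1) (node p q (z (φ k))) j)
        (node 0 0 (sampleMap U (m (φ k)) (α (φ k))) j)
        (dvel (m (φ k) + 1) (node 0 0 (sampleMap U (m (φ k)) (α (φ k)))) j) =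
        qf G (node p q (z (φ k)) j) (dvel (N k) (node p q (z (φ k))) j)
          (∑ i, α (φ k) i • U i ((j : ℝ) / N k))
          (∑ i, α (φ k) i • ((N k : ℝ) • (U i (((j + 1 : ℕ) : ℝ) / N k) - U i ((j : ℝ) / N k)))) := by
      rw [Finset.mem_range] at hj
      have e1 := node_sampleMap hUz hUo (m (φ k)) (α (φ k)) j hj.le
      have e2 := node_sampleMap hUz hUo (m (φ k)) (α (φ k)) (j + 1) hj
      congr 1
      rw [dvel, e1, e2, ← sum_sub_distrib, smul_sum]
      refine sum_congr rfl fun i _ => ?_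
      rw [← smul_sub, smul_comm]
    rw [sum_congr rfl h2, sum_eq_integral_floor (hN0 k)
      (fun j => qf G (node p q (z (φ k)) j) (dvel (N k) (node p q (z (φ k))) j)
          (∑ i, α (φ k) i • U i ((j : ℝ) / N k))
          (∑ i, α (φ k) i • ((N k : ℝ) • (U i (((j + 1 : ℕ) : ℝ) / N k) - U i ((j : ℝ) / N k)))))] at h1
    exact h1
  have hηφ : Tendsto (fun k => η (φ k)) atTop (nhds 0) := hη.comp hφ.tendsto_atTop
  obtain ⟨⟨Mx, hMx⟩, hx⟩ := floor_track hN0 hNt h.continuous_x hηφ fun k i hi => (htr (φ k) i hi).1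
  obtain ⟨⟨Mv, hMv⟩, hv⟩ := floor_track hN0 hNt (h.continuous_v hG) hηφ
    fun k i hi => (htr (φ k) i hi).2
  set M := max (max Mx Mv) (∑ i, L i)
  have key := qf_limit hG (a := 0) (b := 1) (M := M) (x := xs) (v := vs) (V := Vs) (δ := δs)
    (x' := x) (v' := v) (V' := fun t => ∑ i, α0 i • U i t) (δ' := fun t => ∑ i, α0 i • D i t)
    (fun k => ⟨stronglyMeasurable_floor (N k) _, stronglyMeasurable_floor (N k) _,
      stronglyMeasurable_floor (N k) (fun j => ∑ i, α (φ k) i • U i ((j : ℝ) / N k)),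
      stronglyMeasurable_floor (N k) (fun j => ∑ i, α (φ k) i •
        ((N k : ℝ) • (U i (((j + 1 : ℕ) : ℝ) / N k) - U i ((j : ℝ) / N k))))⟩)
    (by
      filter_upwards [hMx, hMv] with k h1 h2 t ht
      obtain ⟨hfr, hfr1⟩ := (floor_mem (hN0 k) ht).2
      refine ⟨(h1 t ht).trans ((le_max_left _ _).trans (le_max_left _ _)),
        (h2 t ht).trans ((le_max_right _ _).trans (le_max_left _ _)), ?_, ?_⟩
      · refine (norm_sum_smul_le (hα _).le fun i => ?_).trans (le_max_right _ _)
        have h2 := hL i ((⌊(N k : ℝ) * t⌋₊ : ℝ) / N k) 0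
        rw [hUz, sub_zero, sub_zero, abs_of_nonneg hfr] at h2
        nlinarith [hL0 i, hfr1]
      · refine (norm_sum_smul_le (hα _).le fun i => ?_).trans (le_max_right _ _)
        have h2 := hL i (((⌊(N k : ℝ) * t⌋₊ + 1 : ℕ) : ℝ) / N k) ((⌊(N k : ℝ) * t⌋₊ : ℝ) / N k)
        have h3 : ((⌊(N k : ℝ) * t⌋₊ + 1 : ℕ) : ℝ) / N k - (⌊(N k : ℝ) * t⌋₊ : ℝ) / N k
            = (N k : ℝ)⁻¹ := by push_cast; ring
        rw [h3, abs_of_pos (inv_pos.2 (hNpos k))] at h2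
        rw [norm_smul, norm_eq_abs, abs_of_pos (hNpos k)]
        calc (N k : ℝ) * _ ≤ N k * (L i * (N k : ℝ)⁻¹) := by
              exact mul_le_mul_of_nonneg_left h2 (hNpos k).le
          _ = L i := by have := (hNpos k).ne'; field_simp)
    zero_le_one (s := {a, b}) (by simp [countable_insert])
    (by
      intro t ht hts
      have hta : t ≠ a := fun e => hts (by simp [e])
      have htb : t ≠ b := fun e => hts (by simp [e])
      obtain ⟨hf1, hf2⟩ := tendsto_floor_div hN0 hNt ht.1.le
      have hα' i : Tendsto (fun k => α (φ k) i) atTop (nhds (α0 i)) := by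
        have := (continuous_apply i).tendsto α0 |>.comp hlim
        simp only [Function.comp_def] at this
        exact this
      refine ⟨hx t ht, hv t ht, ?_, ?_⟩
      · refine tendsto_finsetSum _ fun i _ => (hα' i).smul ?_
        have h2 := ((hUc i).tendsto t).comp hf1
        simp only [Function.comp_def] at h2
        exact h2
      · refine tendsto_finsetSum _ fun i _ => (hα' i).smul ?_
        refine tendsto_diffquot (clamp_hasStrictDerivAt hab (hV i) hta htb) hf1 hf2 fun k => ?_
        have := (hNpos k).ne'
        push_cast
        field_simp
        ring)
  have hfin := ge_of_tendsto' key hpos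
  have heq : (fun t => qf G (x t) (v t) (∑ i, α0 i • U i t) (∑ i, α0 i • D i t)) =
      (Ioo a b).indicator fun t => qf G (x t) (v t) (∑ i, α0 i • V i t)
        (∑ i, α0 i • deriv (V i) t) := by
    funext t
    by_cases ht : t ∈ Ioo a b
    · rw [indicator_of_mem ht]
      simp only [hD, if_pos ht, hU1 _ t ht]
    · rw [indicator_of_notMem ht]
      simp only [hD, if_neg ht, hU0 _ t ht]
      simp [qf]
  rw [integral_of_le zero_le_one, heq,
    MeasureTheory.setIntegral_indicator measurableSet_Ioo,
    inter_eq_self_of_subset_right (show Ioo a b ⊆ Ioc 0 1 from fun t ht =>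
      ⟨ha.trans_lt ht.1, ht.2.le.trans hb⟩), ← MeasureTheory.integral_Ioc_eq_integral_Ioo,
    ← integral_of_le hab.le] at hfin
  exact hfin

lemma discrete_energy (hG : RMet G c C) {N : ℕ → ℕ} (hN0 : ∀ k, 0 < N k)
    (hNt : Tendsto N atTop atTop) {X : ℕ → ℕ → E} {x v : ℝ → E} (h : IsGeo G x v) {η : ℕ → ℝ}
    (hη : Tendsto η atTop (nhds 0))
    (htr : ∀ k i, i < N k → ‖X k i - x (i / N k)‖ ≤ η k ∧ ‖dvel (N k) (X k) i - v (i / N k)‖ ≤ η k) :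
    Tendsto (fun k => dE G (N k) (X k)) atTop (nhds ⟪G (x 0) (v 0), v 0⟫) := by
  set xs : ℕ → ℝ → E := fun k t => X k ⌊(N k : ℝ) * t⌋₊
  set vs : ℕ → ℝ → E := fun k t => dvel (N k) (X k) ⌊(N k : ℝ) * t⌋₊
  obtain ⟨⟨Mx, hMx⟩, hx⟩ := floor_track hN0 hNt h.continuous_x hη fun k i hi => (htr k i hi).1
  obtain ⟨⟨Mv, hMv⟩, hv⟩ := floor_track hN0 hNt (h.continuous_v hG) hη fun k i hi => (htr k i hi).2
  set M := max (max Mx Mv) 0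
  have key := qf_limit hG (a := 0) (b := 1) (M := M) (x := xs) (v := fun _ _ => 0)
    (V := fun _ _ => 0) (δ := vs) (x' := x) (v' := fun _ => 0) (V' := fun _ => 0) (δ' := v)
    (fun k => ⟨stronglyMeasurable_floor (N k) _, stronglyMeasurable_const,
      stronglyMeasurable_const, stronglyMeasurable_floor (N k) _⟩)
    (by
      filter_upwards [hMx, hMv] with k h1 h2 t ht
      have h0 : ‖(0 : E)‖ ≤ M := by rw [norm_zero]; exact le_max_right _ _
      exact ⟨(h1 t ht).trans ((le_max_left _ _).trans (le_max_left _ _)), h0, h0,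
        (h2 t ht).trans ((le_max_right _ _).trans (le_max_left _ _))⟩)
    zero_le_one (s := ∅) (by simp)
    (fun t ht _ => ⟨hx t ht, tendsto_const_nhds, tendsto_const_nhds, hv t ht⟩)
  -- with vanishing base velocity and variation, `qf` is twice the energy density
  have hq (x δ : E) : qf G x 0 0 δ = 2 * ⟪G x δ, δ⟫ := by simp [qf]
  simp only [hq, h.energy hG] at key
  have e2 k : dE G (N k) (X k) = (∫ t in (0 : ℝ)..1, 2 * ⟪G (xs k t) (vs k t), vs k t⟫) / 2 := by
    rw [dE, sum_eq_integral_floor (hN0 k) (fun j => ⟪G (X k j) (dvel (N k) (X k) j),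
      dvel (N k) (X k) j⟫), integral_const_mul]
    ring
  have := key.div_const 2
  simp only [integral_const, sub_zero, one_smul] at this
  rw [mul_div_cancel_left₀ _ two_ne_zero] at this
  exact this.congr fun k => (e2 k).symm

/-- The mountain-pass geodesic: if, for arbitrarily fine discretisations, the discrete energy admits
a linked family of polygons from `p` to `q`, then there is a geodesic from `p` to `q` of energy
close to the minmax level and of index less than `n`. -/
theorem minmax_geo (hG : RMet G c C) {Y : Type*} [NormedAddCommGroup Y] [InnerProductSpace ℝ Y]
    [FiniteDimensional ℝ Y] {n : ℕ} (hY : finrank ℝ Y + 1 ≤ n) {p q : E} {m : ℕ → ℕ}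
    (hmt : Tendsto m atTop atTop) {b e δ : ℝ} (hδ : 0 < δ)
    {h : ∀ k, Y → PiLp 2 (fun _ : Fin (m k) => E)} {K : ℕ → NNReal}
    (hh : ∀ k, LipschitzWith (K k) (h k))
    (hhb : ∀ k y, ‖y‖ ≤ 1 → dE G (m k + 1) (node p q (h k y)) ≤ b)
    (hhc : ∀ k y, ‖y‖ = 1 → dE G (m k + 1) (node p q (h k y)) ≤ e - 2 * δ)
    (link : ∀ k, ∀ H : Y → PiLp 2 (fun _ : Fin (m k) => E), Continuous H →
      (∀ y, ‖y‖ = 1 → H y = h k y) → ∃ y, ‖y‖ ≤ 1 ∧ e ≤ dE G (m k + 1) (node p q (H y))) :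
    ∃ x v : ℝ → E, IsGeo G x v ∧ x 0 = p ∧ x 1 = q ∧ e - δ ≤ ⟪G (x 0) (v 0), v 0⟫ ∧
      ∀ s t, 0 ≤ s → s < t → t ≤ 1 → IndexProp G n x v s t := by
  have hz k : ∃ z : PiLp 2 (fun _ : Fin (m k) => E),
      e - δ ≤ dE G (m k + 1) (node p q z) ∧ dE G (m k + 1) (node p q z) ≤ b + δ ∧
      ‖fderiv ℝ (fun z => dE G (m k + 1) (node p q z)) z‖ ≤ (((m k + 1 : ℕ) : ℝ)⁻¹) ^ 2 ∧
      ∀ L : (Fin n → ℝ) →ₗ[ℝ] PiLp 2 (fun _ : Fin (m k) => E), ∃ α, α ≠ 0 ∧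
        0 ≤ fderiv ℝ (fderiv ℝ (fun z => dE G (m k + 1) (node p q z))) z (L α) (L α) := by
    obtain ⟨k', hk', B, hB⟩ := dE_coercive hG (m := m k) p q
    exact minmax hY (contDiff_dE hG (m := m k) (m k + 1) p q) hk' hB (hh k) hδ (by positivity) (hhb k)
      (hhc k) (link k)
  choose z hz1 hz2 hz3 hz4 using hz
  have hB : 0 ≤ b + δ := (dE_nonneg hG _ _).trans (hz2 0)
  obtain ⟨φ, x, v, η, hφ, hgeo, h0, h1, hη, htr⟩ := discrete_limit hG hB (p := p) (q := q)
    (N := fun k => m k + 1) (fun k => Nat.succ_pos _)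
    (tendsto_atTop_mono (fun k => Nat.le_succ _) hmt) (X := fun k => node p q (z k))
    (fun k => node_zero _ _ _) (fun k => node_last _ _ _) hz2
    (fun k i hi => (dE_euler_lagrange hG p q (z k) i (by omega)).trans (hz3 k))
  refine ⟨x, v, hgeo, h0, h1, ?_, fun s t hs hst ht => ?_⟩
  · refine ge_of_tendsto' (discrete_energy hG (N := fun k => m (φ k) + 1)
      (X := fun k => node p q (z (φ k))) (fun k => Nat.succ_pos _)
      (tendsto_atTop_mono (fun k => Nat.le_succ _) (hmt.comp hφ.tendsto_atTop)) hgeo hη htr)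
      fun k => hz1 (φ k)
  · exact discrete_index hG (m := fun k => m (φ k)) (hmt.comp hφ.tendsto_atTop)
      (z := fun k => z (φ k)) hgeo hη htr (fun k => hz4 (φ k)) hs hst ht

/-! ### Local minimality and metric geodesics -/

/-- Length of the curve `σ` over `[a, b]` for the metric `⟪G x v, w⟫`. -/
def glen
    (G : E → E →L[ℝ] E) (σ : ℝ → E) (a b : ℝ) : ℝ :=
  ∫ t in a..b, √⟪G (σ t) (deriv σ t), deriv σ t⟫

lemma RMet.taylorG (hG : RMet G c C) (x V : E) :
    ‖G (x + V) - G x - fderiv ℝ G x V‖ ≤ C * ‖V‖ * ‖V‖ := by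
  have h := Convex.norm_image_sub_le_of_norm_fderiv_le' (𝕜 := ℝ) (f := G) (s := segment ℝ x (x + V))
    (x := x) (y := x + V) (C := C * ‖V‖) (φ := fderiv ℝ G x) (fun z _ => hG.differentiableG z)
    (fun z hz => (hG.lipDG z x).trans ?_) (convex_segment _ _) (left_mem_segment _ _ _)
    (right_mem_segment _ _ _)
  · simpa using h
  · have := hG.Cpos
    gcongr
    rw [segment_eq_image'] at hz
    obtain ⟨θ, hθ, rfl⟩ := hz
    simp only [add_sub_cancel_left, norm_smul, norm_eq_abs, abs_of_nonneg hθ.1]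
    nlinarith [norm_nonneg V, hθ.2]

lemma energy_lower (hG : RMet G c C) (x v V w : E) {r : ℝ} (hr : 0 < r) :
    r ^ 2 * ⟪G x v, v⟫ + 2 * r ^ 2 * ⟪force G x v, V⟫ + 2 * r * ⟪G x v, w⟫ -
      C * r ^ 2 * ‖V‖ ^ 2 * ‖v‖ ^ 2 - 2 * C * r * ‖V‖ * ‖v‖ * ‖w‖ + c * ‖w‖ ^ 2 ≤
    ⟪G (x + V) (r • v + w), r • v + w⟫ := by
  have e : ⟪G (x + V) (r • v + w), r • v + w⟫ = r ^ 2 * ⟪G (x + V) v, v⟫ +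
      2 * r * ⟪G (x + V) v, w⟫ + ⟪G (x + V) w, w⟫ := by
    have : ⟪G (x + V) w, v⟫ = ⟪G (x + V) v, w⟫ := by rw [hG.symm, real_inner_comm]
    simp only [map_add, map_smul, inner_add_left, inner_add_right, real_inner_smul_left,
      real_inner_smul_right, this]
    ring
  have h1 : ⟪G x v, v⟫ + 2 * ⟪force G x v, V⟫ - C * ‖V‖ ^ 2 * ‖v‖ ^ 2 ≤ ⟪G (x + V) v, v⟫ := by
    have e2 : ⟪G (x + V) v, v⟫ = ⟪G x v, v⟫ + 2 * ⟪force G x v, V⟫ +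
        ⟪(G (x + V) - G x - fderiv ℝ G x V) v, v⟫ := by
      rw [inner_force]
      simp only [sub_apply, inner_sub_left]
      ring
    have h3 : |⟪(G (x + V) - G x - fderiv ℝ G x V) v, v⟫| ≤ C * ‖V‖ * ‖V‖ * ‖v‖ * ‖v‖ := by
      refine (abs_real_inner_le_norm _ _).trans ?_
      gcongr
      exact ContinuousLinearMap.le_of_opNorm_le _ (hG.taylorG x V) v
    have := (abs_le.1 h3).1
    rw [e2]; nlinarith
  have h2 : ⟪G x v, w⟫ - C * ‖V‖ * ‖v‖ * ‖w‖ ≤ ⟪G (x + V) v, w⟫ := by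
    have e2 : ⟪G (x + V) v, w⟫ = ⟪G x v, w⟫ + ⟪(G (x + V) - G x) v, w⟫ := by
      simp only [sub_apply, inner_sub_left]; ring
    have h3 : |⟪(G (x + V) - G x) v, w⟫| ≤ C * ‖V‖ * ‖v‖ * ‖w‖ := by
      refine (abs_real_inner_le_norm _ _).trans ?_
      gcongr
      have := hG.lipG (x + V) x
      rw [add_sub_cancel_left] at this
      exact ContinuousLinearMap.le_of_opNorm_le _ this v
    have := (abs_le.1 h3).1
    rw [e2]; linarith
  have h3 := hG.lower (x + V) w
  have h4 := mul_le_mul_of_nonneg_left h1 (sq_nonneg r)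
  have h5 := mul_le_mul_of_nonneg_left h2 (by positivity : 0 ≤ 2 * r)
  rw [e]
  linarith

lemma continuous_speed (hG : RMet G c C) {σ : ℝ → E} (hσ : ContDiff ℝ 1 σ) :
    Continuous fun t => √⟪G (σ t) (deriv σ t), deriv σ t⟫ :=
  Real.continuous_sqrt.comp (((hG.smooth.continuous.comp hσ.continuous).clm_apply
    (hσ.continuous_deriv le_rfl)).inner (hσ.continuous_deriv le_rfl))

lemma glen_nonneg {σ : ℝ → E} {a b : ℝ} (hab : a ≤ b) : 0 ≤ glen G σ a b :=
  integral_nonneg hab fun _ _ => sqrt_nonneg _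

/-- Quantitative local minimality: a curve `σ` joining two nearby points of a unit speed geodesic is
at least as long as the geodesic, and if it is not much longer then it is uniformly close to it.
The proof compares `σ` with the geodesic in the parametrisation `φ` by (regularised) arc length of
`σ`. -/
lemma local_min (hG : RMet G c C) : ∃ ℓ₀ > 0, ∀ x v : ℝ → E, IsGeo G x v →
    ⟪G (x 0) (v 0), v 0⟫ = 1 → ∀ ℓ, 0 < ℓ → ℓ ≤ ℓ₀ → ∀ σ : ℝ → E, ContDiff ℝ 1 σ → σ 0 = x 0 →
    σ 1 = x ℓ → ∀ η > 0, ℓ ^ 2 ≤ glen G σ 0 1 * (glen G σ 0 1 + η) ∧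
      ∀ t ∈ Icc (0 : ℝ) 1, ‖σ t - x (ℓ * (glen G σ 0 t + η * t) / (glen G σ 0 1 + η))‖ ^ 2 ≤
        2 / c * (glen G σ 0 1 * (glen G σ 0 1 + η) - ℓ ^ 2) := by
  have hc := hG.pos
  have hC := hG.Cpos
  set S := √(1 / c)
  obtain ⟨ℓ₀, hℓ₀, hsmall⟩ : ∃ ℓ₀ > 0, ∀ ℓ, 0 < ℓ → ℓ ≤ ℓ₀ →
      C * S ^ 2 * ℓ ^ 2 + 2 * C * S * ℓ ≤ c / 2 := by
    set B := C * S ^ 2 + 2 * C * S + 1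
    have hB : 0 < B := by positivity
    refine ⟨min 1 (c / 2 / B), by positivity, fun ℓ h1 h2 => ?_⟩
    have h3 := h2.trans (min_le_left _ _)
    have h4 := h2.trans (min_le_right _ _)
    rw [le_div_iff₀ hB] at h4
    have h5 : C * S ^ 2 * ℓ ^ 2 ≤ C * S ^ 2 * ℓ := by
      have : 0 ≤ C * S ^ 2 := by positivity
      exact mul_le_mul_of_nonneg_left (by nlinarith) this
    nlinarith
  refine ⟨ℓ₀, hℓ₀, fun x v hgeo hu ℓ hℓ hℓ' σ hσ hσ0 hσ1 η hη => ?_⟩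
  set L := glen G σ 0 1 with hLdef
  have hL0 : 0 ≤ L := glen_nonneg zero_le_one
  set sp : ℝ → ℝ := fun t => √⟪G (σ t) (deriv σ t), deriv σ t⟫
  have hspc : Continuous sp := continuous_speed hG hσ
  set φ : ℝ → ℝ := fun t => ℓ * (glen G σ 0 t + η * t) / (L + η) with hφ
  set r : ℝ → ℝ := fun t => ℓ * (sp t + η) / (L + η) with hr
  have hrpos t : 0 < r t := by
    have : 0 ≤ sp t := sqrt_nonneg _
    simp only [hr]; positivity
  have hrc : Continuous r := by simp only [hr]; fun_prop
  have hφd t : HasDerivAt φ (r t) t := by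
    have h1 : HasDerivAt (fun t => glen G σ 0 t) (sp t) t :=
      integral_hasDerivAt_right (hspc.intervalIntegrable _ _)
        (hspc.stronglyMeasurableAtFilter _ _) hspc.continuousAt
    have h2 : HasDerivAt (fun t : ℝ => η * t) η t := by simpa using (hasDerivAt_id t).const_mul η
    exact ((h1.add h2).const_mul ℓ).div_const (L + η)
  have hφ0 : φ 0 = 0 := by simp [hφ, glen]
  have hφ1 : φ 1 = ℓ := by
    simp only [hφ, mul_one, ← hLdef]
    field_simp
  set V : ℝ → E := fun t => σ t - x (φ t) with hV
  set w : ℝ → E := fun t => deriv σ t - r t • v (φ t) with hw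
  have hφc : Continuous φ := continuous_iff_continuousAt.2 fun t => (hφd t).continuousAt
  have hwc : Continuous w := (hσ.continuous_deriv le_rfl).sub
    (hrc.smul ((hgeo.continuous_v hG).comp hφc))
  have hVd t : HasDerivAt V (w t) t :=
    ((hσ.differentiable one_ne_zero) t).hasDerivAt.sub ((hgeo _).1.scomp t (hφd t))
  have hVc : Continuous V := continuous_iff_continuousAt.2 fun t => (hVd t).continuousAt
  have hV0 : V 0 = 0 := by simp [hV, hφ0, hσ0]
  have hV1 : V 1 = 0 := by simp [hV, hφ1, hσ1]
  set A := ∫ t in (0 : ℝ)..1, ‖w t‖ with hA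
  have hVA t (ht : t ∈ Icc (0 : ℝ) 1) : ‖V t‖ ≤ A := by
    have h1 : V t = ∫ s in (0 : ℝ)..t, w s := by
      rw [integral_eq_sub_of_hasDerivAt (fun s _ => hVd s)
        (hwc.intervalIntegrable _ _), hV0, sub_zero]
    rw [h1]
    refine (norm_integral_le_integral_norm ht.1).trans ?_
    exact integral_mono_interval le_rfl ht.1 ht.2
      (Eventually.of_forall fun _ => norm_nonneg _) (hwc.norm.intervalIntegrable _ _)
  have hA0 : 0 ≤ A := integral_nonneg zero_le_one fun _ _ => norm_nonneg _
  have hdc : Continuous fun t => ‖w t‖ ^ 2 / r t :=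
    (hwc.norm.pow 2).div hrc fun t => (hrpos t).ne'
  set D := ∫ t in (0 : ℝ)..1, ‖w t‖ ^ 2 / r t with hD
  have hD0 : 0 ≤ D := integral_nonneg zero_le_one fun t _ =>
    div_nonneg (sq_nonneg _) (hrpos t).le
  have hri : ∫ t in (0 : ℝ)..1, r t = ℓ := by
    rw [integral_eq_sub_of_hasDerivAt (fun s _ => hφd s)
        (hrc.intervalIntegrable _ _), hφ0, hφ1, sub_zero]
  -- Cauchy–Schwarz
  have hAD : A ^ 2 ≤ ℓ * D := by
    rcases hA0.eq_or_lt with h | h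
    · rw [← h]; simp; positivity
    set κ := A / ℓ with hκ
    have hκ0 : 0 < κ := by positivity
    have h1 : A ≤ ∫ t in (0 : ℝ)..1, ((κ / 2) * r t + (1 / (2 * κ)) * (‖w t‖ ^ 2 / r t)) := by
      refine integral_mono_on zero_le_one (hwc.norm.intervalIntegrable _ _)
        (((hrc.const_mul _).add (hdc.const_mul _)).intervalIntegrable _ _) fun t _ => ?_
      have hrt := hrpos t
      have : (κ / 2) * r t + (1 / (2 * κ)) * (‖w t‖ ^ 2 / r t) - ‖w t‖ =
          (κ * r t - ‖w t‖) ^ 2 / (2 * κ * r t) := by field_simp; ring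
      have h2 : 0 ≤ (κ * r t - ‖w t‖) ^ 2 / (2 * κ * r t) := by positivity
      linarith
    rw [integral_add ((hrc.const_mul _).intervalIntegrable _ _)
      ((hdc.const_mul _).intervalIntegrable _ _), integral_const_mul,
      integral_const_mul, hri, ← hD] at h1
    have h2 : κ / 2 * ℓ = A / 2 := by rw [hκ]; field_simp
    have h3 : 1 / (2 * κ) * D = ℓ * D / (2 * A) := by rw [hκ]; field_simp
    rw [h2, h3] at h1
    have h4 : A / 2 ≤ ℓ * D / (2 * A) := by linarith
    rw [le_div_iff₀ (by positivity)] at h4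
    nlinarith
  set P : ℝ → E := fun t => G (x (φ t)) (v (φ t))
  set f : ℝ → E := fun t => force G (x (φ t)) (v (φ t)) with hf
  have hPd t : HasDerivAt (fun t => ⟪P t, V t⟫) (⟪P t, w t⟫ + ⟪r t • f t, V t⟫) t :=
    HasDerivAt.inner ℝ ((hgeo _).2.scomp t (hφd t)) (hVd t)
  have hPc : Continuous P := hgeo.continuous_P.comp hφc
  have hvS t : ‖v t‖ ≤ S := hgeo.norm_v_le hG hu.le t
  have hpt : ∀ t ∈ Icc (0 : ℝ) 1,
      r t + 2 * (⟪P t, w t⟫ + ⟪r t • f t, V t⟫) ≤ sp t * ((L + η) / ℓ) +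
        C * S ^ 2 * A ^ 2 * r t + 2 * C * S * A * ‖w t‖ - c * (‖w t‖ ^ 2 / r t) := by
    intro t ht
    have hrt := hrpos t
    have h1 := energy_lower hG (x (φ t)) (v (φ t)) (V t) (w t) hrt
    have e1 : x (φ t) + V t = σ t := by simp [hV]
    have e2 : r t • v (φ t) + w t = deriv σ t := by simp [hw]
    have e3 : ⟪G (x (φ t)) (v (φ t)), v (φ t)⟫ = 1 := (hgeo.energy hG _).trans hu
    have e4 : ⟪G (σ t) (deriv σ t), deriv σ t⟫ = sp t ^ 2 :=
      (sq_sqrt (hG.self_nonneg _ _)).symm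
    rw [e1, e2, e3, e4] at h1
    have hV' : C * r t ^ 2 * ‖V t‖ ^ 2 * ‖v (φ t)‖ ^ 2 ≤ C * r t ^ 2 * A ^ 2 * S ^ 2 := by
      have := hVA t ht
      have := hvS (φ t)
      gcongr
    have hV'' : 2 * C * r t * ‖V t‖ * ‖v (φ t)‖ * ‖w t‖ ≤ 2 * C * r t * A * S * ‖w t‖ := by
      have := hVA t ht
      have := hvS (φ t)
      gcongr
    have hs0 : 0 ≤ sp t := sqrt_nonneg _
    have h5 : sp t ^ 2 ≤ r t * (sp t * ((L + η) / ℓ)) := by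
      have : r t * (sp t * ((L + η) / ℓ)) = sp t * (sp t + η) := by
        simp only [hr]; field_simp
      rw [this]; nlinarith
    have e6 : ⟪r t • f t, V t⟫ = r t * ⟪f t, V t⟫ := real_inner_smul_left _ _ _
    rw [e6]
    have h7 : r t * (c * (‖w t‖ ^ 2 / r t)) = c * ‖w t‖ ^ 2 := by field_simp
    refine le_of_mul_le_mul_left ?_ hrt
    have h8 : r t * (sp t * ((L + η) / ℓ) + C * S ^ 2 * A ^ 2 * r t + 2 * C * S * A * ‖w t‖ -
        c * (‖w t‖ ^ 2 / r t)) = r t * (sp t * ((L + η) / ℓ)) + C * r t ^ 2 * A ^ 2 * S ^ 2 +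
          2 * C * r t * A * S * ‖w t‖ - c * ‖w t‖ ^ 2 := by
      rw [mul_sub, h7]; ring
    rw [h8]
    change r t ^ 2 * 1 + 2 * r t ^ 2 * ⟪f t, V t⟫ + 2 * r t * ⟪P t, w t⟫ - _ - _ + _ ≤ _ at h1
    linarith
  have hfc : Continuous fun t => ⟪r t • f t, V t⟫ := by
    have : (fun t => ⟪r t • f t, V t⟫) =
        fun t => r t * (⟪fderiv ℝ G (x (φ t)) (V t) (v (φ t)), v (φ t)⟫ / 2) := by
      funext t
      rw [real_inner_smul_left, hf, inner_force]
    rw [this]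
    have hvc : Continuous fun t => v (φ t) := (hgeo.continuous_v hG).comp hφc
    exact hrc.mul (((((hG.contDiff_fderiv.continuous.comp (hgeo.continuous_x.comp hφc)).clm_apply
      hVc).clm_apply hvc).inner hvc).div_const 2)
  have hgc : Continuous fun t => ⟪P t, w t⟫ + ⟪r t • f t, V t⟫ := (hPc.inner hwc).add hfc
  have hint : ∫ t in (0 : ℝ)..1, (r t + 2 * (⟪P t, w t⟫ + ⟪r t • f t, V t⟫)) ≤
      ∫ t in (0 : ℝ)..1, (sp t * ((L + η) / ℓ) +
        C * S ^ 2 * A ^ 2 * r t + 2 * C * S * A * ‖w t‖ - c * (‖w t‖ ^ 2 / r t)) :=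
    integral_mono_on zero_le_one
    ((hrc.add (hgc.const_mul 2)).intervalIntegrable 0 1)
    (((((hspc.mul_const ((L + η) / ℓ)).add (hrc.const_mul (C * S ^ 2 * A ^ 2))).add
      (hwc.norm.const_mul (2 * C * S * A))).sub (hdc.const_mul c)).intervalIntegrable 0 1) hpt
  have hi2 : Continuous fun t => sp t * ((L + η) / ℓ) + C * S ^ 2 * A ^ 2 * r t :=
    (hspc.mul_const _).add (hrc.const_mul _)
  have hi3 : Continuous fun t => sp t * ((L + η) / ℓ) + C * S ^ 2 * A ^ 2 * r t +
      2 * C * S * A * ‖w t‖ := hi2.add (hwc.norm.const_mul _)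
  have hz : ∫ t in (0 : ℝ)..1, (⟪P t, w t⟫ + ⟪r t • f t, V t⟫) = 0 := by
    rw [integral_eq_sub_of_hasDerivAt (fun s _ => hPd s)
      (hgc.intervalIntegrable _ _), hV0, hV1, inner_zero_right, inner_zero_right, sub_zero]
  rw [integral_add (hrc.intervalIntegrable _ _)
      ((hgc.const_mul 2).intervalIntegrable _ _), integral_const_mul, hz, hri,
    integral_sub (hi3.intervalIntegrable _ _)
      ((hdc.const_mul c).intervalIntegrable _ _),
    integral_add (hi2.intervalIntegrable _ _)
      ((hwc.norm.const_mul _).intervalIntegrable _ _),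
    integral_add ((hspc.mul_const _).intervalIntegrable _ _)
      ((hrc.const_mul _).intervalIntegrable _ _), integral_mul_const,
    integral_const_mul, integral_const_mul,
    integral_const_mul, hri, ← hA, ← hD] at hint
  have hLi : ∫ t in (0 : ℝ)..1, sp t = L := rfl
  rw [hLi] at hint
  have hfin : ℓ ^ 2 + c / 2 * (ℓ * D) ≤ L * (L + η) := by
    have h1 := hsmall ℓ hℓ hℓ'
    have h2 : C * S ^ 2 * A ^ 2 * ℓ + 2 * C * S * A * A ≤ c / 2 * D := by
      have h3 : C * S ^ 2 * A ^ 2 * ℓ ≤ C * S ^ 2 * (ℓ * D) * ℓ := by gcongr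
      have h4 : 2 * C * S * A * A ≤ 2 * C * S * (ℓ * D) := by
        have : 2 * C * S * A * A = 2 * C * S * A ^ 2 := by ring
        rw [this]; gcongr
      have h5 := mul_le_mul_of_nonneg_right h1 hD0
      nlinarith
    have h6 : ℓ + c / 2 * D ≤ L * ((L + η) / ℓ) := by linarith
    have h7 : L * ((L + η) / ℓ) = L * (L + η) / ℓ := by ring
    rw [h7, le_div_iff₀ hℓ] at h6
    nlinarith
  have hcD : 0 ≤ c / 2 * (ℓ * D) := by positivity
  refine ⟨by linarith, fun t ht => ?_⟩
  have h1 : ‖V t‖ ^ 2 ≤ ℓ * D := by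
    refine le_trans ?_ hAD
    have := hVA t ht
    gcongr
  refine h1.trans ?_
  have : ℓ * D = 2 / c * (c / 2 * (ℓ * D)) := by field_simp
  rw [this]
  gcongr
  linarith

/-- The Riemannian distance of the metric `⟪G x v, w⟫`. -/
def rd
    (G : E → E →L[ℝ] E) (p q : E) : ℝ :=
  sInf {L : ℝ | ∃ σ : ℝ → E, ContDiff ℝ 1 σ ∧ σ 0 = p ∧ σ 1 = q ∧ L = glen G σ 0 1}

lemma rd_bddBelow (p q : E) : BddBelow
    {L : ℝ | ∃ σ : ℝ → E, ContDiff ℝ 1 σ ∧ σ 0 = p ∧ σ 1 = q ∧ L = glen G σ 0 1} :=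
  ⟨0, by rintro _ ⟨σ, -, -, -, rfl⟩; exact glen_nonneg zero_le_one⟩

lemma rd_nonempty (p q : E) :
    {L : ℝ | ∃ σ : ℝ → E, ContDiff ℝ 1 σ ∧ σ 0 = p ∧ σ 1 = q ∧ L = glen G σ 0 1}.Nonempty :=
  ⟨_, fun t => p + t • (q - p), by fun_prop, by simp, by simp, rfl⟩

lemma rd_le {σ : ℝ → E} (hσ : ContDiff ℝ 1 σ) : rd G (σ 0) (σ 1) ≤ glen G σ 0 1 :=
  csInf_le (rd_bddBelow _ _) ⟨σ, hσ, rfl, rfl, rfl⟩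

lemma exists_near_min (p q : E) {ε : ℝ} (hε : 0 < ε) :
    ∃ σ : ℝ → E, ContDiff ℝ 1 σ ∧ σ 0 = p ∧ σ 1 = q ∧ rd G p q ≤ glen G σ 0 1 ∧
      glen G σ 0 1 < rd G p q + ε := by
  obtain ⟨L, ⟨σ, h1, h2, h3, rfl⟩, h4⟩ := Real.lt_sInf_add_pos (rd_nonempty (G := G) p q) hε
  refine ⟨σ, h1, h2, h3, ?_, h4⟩
  have := rd_le (G := G) h1
  rwa [h2, h3] at this

lemma norm_sub_le_glen (hG : RMet G c C) {σ : ℝ → E} (hσ : ContDiff ℝ 1 σ) :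
    √c * ‖σ 1 - σ 0‖ ≤ glen G σ 0 1 := by
  have hd := hσ.continuous_deriv le_rfl
  have h1 : σ 1 - σ 0 = ∫ t in (0 : ℝ)..1, deriv σ t :=
    (integral_eq_sub_of_hasDerivAt
      (fun t _ => ((hσ.differentiable one_ne_zero) t).hasDerivAt) (hd.intervalIntegrable _ _)).symm
  calc √c * ‖σ 1 - σ 0‖ ≤ √c * ∫ t in (0 : ℝ)..1, ‖deriv σ t‖ := by
        rw [h1]; gcongr; exact norm_integral_le_integral_norm zero_le_one
    _ = ∫ t in (0 : ℝ)..1, √c * ‖deriv σ t‖ := (integral_const_mul _ _).symm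
    _ ≤ _ := by
        refine integral_mono_on zero_le_one
          ((hd.norm.const_mul _).intervalIntegrable _ _)
          ((continuous_speed hG hσ).intervalIntegrable _ _) fun t _ => ?_
        refine le_sqrt_of_sq_le ?_
        rw [mul_pow, sq_sqrt hG.pos.le]
        exact hG.lower _ _

lemma norm_sub_le_rd (hG : RMet G c C) (p q : E) : √c * ‖p - q‖ ≤ rd G p q := by
  refine le_csInf (rd_nonempty _ _) ?_
  rintro _ ⟨σ, h1, rfl, rfl, rfl⟩
  rw [norm_sub_rev]
  exact norm_sub_le_glen hG h1

lemma rd_self (p : E) : rd G p p ≤ 0 := by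
  have := rd_le (G := G) (σ := fun _ => p) contDiff_const
  simpa [glen] using this

lemma glen_geo (hG : RMet G c C) {x v : ℝ → E} (h : IsGeo G x v) (hu : ⟪G (x 0) (v 0), v 0⟫ = 1)
    {ℓ : ℝ} (hℓ : 0 ≤ ℓ) : rd G (x 0) (x ℓ) ≤ ℓ := by
  have h1 := h.scale ℓ 0
  have h2 := rd_le (G := G) (h1.contDiff_x hG)
  simp only [add_zero, mul_zero, mul_one] at h2
  refine h2.trans (le_of_eq ?_)
  have h3 t : ⟪G (x (ℓ * t)) (ℓ • v (ℓ * t)), ℓ • v (ℓ * t)⟫ = ℓ ^ 2 := by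
    rw [map_smul, real_inner_smul_left, real_inner_smul_right, h.energy hG, hu]; ring
  have h4 := h1.deriv_x
  simp only [add_zero] at h4
  simp only [glen, h4, h3, sqrt_sq hℓ]
  simp

/-- Unit speed solutions of the geodesic equation are locally distance realising, at a uniform
scale. -/
lemma rd_geo (hG : RMet G c C) : ∃ ℓ₀ > 0, ∀ x v : ℝ → E, IsGeo G x v →
    ⟪G (x 0) (v 0), v 0⟫ = 1 → ∀ s u, |s - u| ≤ ℓ₀ → rd G (x s) (x u) = |s - u| := by
  obtain ⟨ℓ₀, h0, hm⟩ := local_min hG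
  refine ⟨ℓ₀, h0, ?_⟩
  have key (x v : ℝ → E) (h : IsGeo G x v) (hu : ⟪G (x 0) (v 0), v 0⟫ = 1) ℓ (hℓ : 0 ≤ ℓ) (hℓ' : ℓ ≤ ℓ₀) :
      rd G (x 0) (x ℓ) = ℓ := by
    refine le_antisymm (glen_geo hG h hu hℓ) (le_csInf (rd_nonempty _ _) ?_)
    rintro _ ⟨σ, hσ, hσ0, hσ1, rfl⟩
    have hL := glen_nonneg (G := G) (σ := σ) (zero_le_one (α := ℝ))
    rcases hℓ.eq_or_lt with rfl | hℓ0
    · exact hL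
    by_contra hlt
    push Not at hlt
    set L := glen G σ 0 1
    have h1 := (hm x v h hu ℓ hℓ0 hℓ' σ hσ hσ0 hσ1 (ℓ - L) (by linarith)).1
    have : L * (L + (ℓ - L)) = L * ℓ := by ring
    rw [this] at h1
    nlinarith
  intro x v h hu s u hsu
  rcases le_total s u with hle | hle
  · have h1 := key _ _ (h.scale 1 s) (by simpa using (h.energy hG _).trans hu) (u - s)
      (by linarith) (by rwa [abs_of_nonpos (by linarith), neg_sub] at hsu)
    simp only [one_mul, zero_add, sub_add_cancel] at h1
    rw [h1, abs_of_nonpos (by linarith), neg_sub]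
  · have h1 := key _ _ (h.scale (-1) s) (by simpa using (h.energy hG _).trans hu) (s - u)
      (by linarith) (by rwa [abs_of_nonneg (by linarith)] at hsu)
    simp only [mul_zero, zero_add] at h1
    rw [show -1 * (s - u) + s = u by ring] at h1
    rw [h1, abs_of_nonneg (by linarith)]

lemma glen_piece (hG : RMet G c C) {σ σ1 : ℝ → E} (h1 : ContDiff ℝ 1 σ1) {φ : ℝ → ℝ}
    (hφ : ContDiff ℝ 1 φ) (hm : Monotone φ) {a b : ℝ} (hab : a ≤ b)
    (he : ∀ t ∈ Icc a b, σ t = σ1 (φ t))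
    (hd : ∀ t ∈ Icc a b, deriv σ t = deriv φ t • deriv σ1 (φ t)) :
    glen G σ a b = glen G σ1 (φ a) (φ b) := by
  have h := integral_comp_mul_deriv' (a := a) (b := b) (f := φ) (f' := deriv φ)
    (g := fun t => √⟪G (σ1 t) (deriv σ1 t), deriv σ1 t⟫)
    (fun t _ => ((hφ.differentiable one_ne_zero) t).hasDerivAt)
    (hφ.continuous_deriv le_rfl).continuousOn (continuous_speed hG h1).continuousOn
  rw [glen, glen, ← h]
  refine integral_congr fun t ht => ?_
  rw [uIcc_of_le hab] at ht
  have h0 : 0 ≤ deriv φ t := hm.deriv_nonneg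
  simp only [Function.comp]
  rw [he t ht, hd t ht, map_smul, real_inner_smul_left, real_inner_smul_right, ← mul_assoc,
    sqrt_mul (mul_self_nonneg _), Real.sqrt_mul_self h0, mul_comm]

/-- Concatenation of two `C¹` curves into a `C¹` curve, by slowing down at the junction. -/
lemma exists_concat (hG : RMet G c C) {σ1 σ2 : ℝ → E} (h1 : ContDiff ℝ 1 σ1) (h2 : ContDiff ℝ 1 σ2)
    (h12 : σ1 1 = σ2 0) : ∃ σ : ℝ → E, ContDiff ℝ 1 σ ∧ σ 0 = σ1 0 ∧ σ 1 = σ2 1 ∧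
      σ (1 / 2) = σ1 1 ∧ glen G σ 0 (1 / 2) = glen G σ1 0 1 ∧
      glen G σ 0 1 = glen G σ1 0 1 + glen G σ2 0 1 := by
  set φ1 : ℝ → ℝ := fun t => smoothTransition (2 * t) with hφ1
  set φ2 : ℝ → ℝ := fun t => smoothTransition (2 * t - 1) with hφ2
  have hs1 : ContDiff ℝ 1 φ1 := (smoothTransition.contDiff (n := 1)).comp (by fun_prop)
  have hs2 : ContDiff ℝ 1 φ2 := (smoothTransition.contDiff (n := 1)).comp (by fun_prop)
  have hm1 : Monotone φ1 := fun a b hab => smoothTransition.monotone (by linarith)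
  have hm2 : Monotone φ2 := fun a b hab => smoothTransition.monotone (by linarith)
  have e1 t : 1 / 2 ≤ t → φ1 t = 1 := fun ht =>
    smoothTransition.one_of_one_le (by linarith)
  have e2 t : t ≤ 1 / 2 → φ2 t = 0 := fun ht =>
    smoothTransition.zero_of_nonpos (by linarith)
  have d1 t : 1 / 2 ≤ t → deriv φ1 t = 0 := fun ht => by
    refine IsLocalMax.deriv_eq_zero (Eventually.of_forall fun s => ?_)
    rw [e1 t ht]; exact smoothTransition.le_one _
  have d2 t : t ≤ 1 / 2 → deriv φ2 t = 0 := fun ht => by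
    refine IsLocalMin.deriv_eq_zero (Eventually.of_forall fun s => ?_)
    rw [e2 t ht]; exact smoothTransition.nonneg _
  set σ : ℝ → E := fun t => σ1 (φ1 t) + σ2 (φ2 t) - σ1 1 with hσ
  have hσc : ContDiff ℝ 1 σ := ((h1.comp hs1).add (h2.comp hs2)).sub contDiff_const
  have hσd t : deriv σ t = deriv φ1 t • deriv σ1 (φ1 t) + deriv φ2 t • deriv σ2 (φ2 t) := by
    exact ((((h1.differentiable one_ne_zero) _).hasDerivAt.scomp t
      ((hs1.differentiable one_ne_zero) t).hasDerivAt).add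
      (((h2.differentiable one_ne_zero) _).hasDerivAt.scomp t
      ((hs2.differentiable one_ne_zero) t).hasDerivAt)).sub_const (σ1 1) |>.deriv
  have l1 : ∀ t, t ≤ 1 / 2 → σ t = σ1 (φ1 t) := fun t ht => by
    simp only [hσ, e2 t ht, ← h12]; abel
  have l2 t : 1 / 2 ≤ t → σ t = σ2 (φ2 t) := fun ht => by
    simp only [hσ, e1 t ht]; abel
  have z1 : φ1 0 = 0 := by simp [hφ1]
  have z2 : φ2 1 = 1 := by simp only [hφ2]; norm_num
  have g1 : glen G σ 0 (1 / 2) = glen G σ1 0 1 := by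
    have := glen_piece hG h1 hs1 hm1 (σ := σ) (a := 0) (b := 1 / 2) (by norm_num)
      (fun t ht => l1 t ht.2) (fun t ht => by rw [hσd, d2 t ht.2, zero_smul, add_zero])
    rwa [z1, e1 _ le_rfl] at this
  have g2 : glen G σ (1 / 2) 1 = glen G σ2 0 1 := by
    have := glen_piece hG h2 hs2 hm2 (σ := σ) (a := 1 / 2) (b := 1) (by norm_num)
      (fun t ht => l2 t ht.1) (fun t ht => by rw [hσd, d1 t ht.1, zero_smul, zero_add])
    rwa [z2, e2 _ le_rfl] at this
  have hsc := continuous_speed hG hσc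
  refine ⟨σ, hσc, by rw [l1 0 (by norm_num), z1], by rw [l2 1 (by norm_num), z2],
    by rw [l1 _ le_rfl, e1 _ le_rfl], g1, ?_⟩
  rw [← g1, ← g2]
  exact (integral_add_adjacent_intervals (hsc.intervalIntegrable _ _)
    (hsc.intervalIntegrable _ _)).symm

lemma shoot_estimate (hG : RMet G c C) : ∃ K : ℝ, 0 ≤ K ∧ ∀ x v : ℝ → E, IsGeo G x v →
    ‖x 1 - x 0 - v 0‖ ≤ K * ‖v 0‖ ^ 2 := by
  have hc := hG.pos
  have hC := hG.Cpos
  set S := √(C / c)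
  refine ⟨(C / 2 * S ^ 2 + C * S) / c, by positivity, fun x v h => ?_⟩
  set R := ‖v 0‖ with hR
  have hv t : ‖v t‖ ≤ S * R := by
    have h1 : ⟪G (x 0) (v 0), v 0⟫ ≤ C * R ^ 2 := by
      have := (abs_le.1 (hG.upper (x 0) (v 0) (v 0))).2
      rw [← hR] at this; linarith
    refine (h.norm_v_le hG h1 t).trans (le_of_eq ?_)
    rw [mul_div_right_comm, sqrt_mul (by positivity), sqrt_sq (norm_nonneg _)]
  have hx t (ht : t ∈ Icc (0 : ℝ) 1) : ‖x t - x 0‖ ≤ S * R := by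
    have := norm_image_sub_le_of_norm_deriv_le_segment' (f := x) (f' := v) (C := S * R)
      (fun s _ => (h s).1.hasDerivWithinAt) (fun s _ => hv s) t ht
    refine this.trans ?_
    have : 0 ≤ S * R := by positivity
    nlinarith [ht.2]
  have hP t (ht : t ∈ Icc (0 : ℝ) 1) : ‖G (x t) (v t) - G (x 0) (v 0)‖ ≤ C / 2 * S ^ 2 * R ^ 2 := by
    have := norm_image_sub_le_of_norm_deriv_le_segment' (f := fun t => G (x t) (v t))
      (f' := fun t => force G (x t) (v t)) (C := C / 2 * (S * R) ^ 2)
      (fun s _ => (h s).2.hasDerivWithinAt) (fun s _ => (hG.force_le _ _).trans (by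
        have := hv s; gcongr)) t ht
    refine this.trans ?_
    have : 0 ≤ C / 2 * (S * R) ^ 2 := by positivity
    nlinarith [ht.2]
  have hvd t (ht : t ∈ Icc (0 : ℝ) 1) : ‖v t - v 0‖ ≤ (C / 2 * S ^ 2 + C * S) / c * R ^ 2 := by
    have h1 := hG.vel_sub_le (x t) (x 0) (v t) (v 0)
    have h2 : C * ‖x t - x 0‖ * ‖v 0‖ ≤ C * (S * R) * R := by
      have := hx t ht; gcongr
    have h3 := hP t ht
    rw [div_mul_eq_mul_div, le_div_iff₀ hc]
    nlinarith
  have := norm_image_sub_le_of_norm_deriv_le_segment_01' (f := fun t => x t - t • v 0)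
    (f' := fun t => v t - v 0) (C := (C / 2 * S ^ 2 + C * S) / c * R ^ 2)
    (fun s _ => ((h s).1.sub (by simpa using (hasDerivAt_id s).smul_const (v 0))).hasDerivWithinAt)
    (fun s hs => hvd s ⟨hs.1, hs.2.le⟩)
  simp only [one_smul, zero_smul, sub_zero] at this
  rwa [sub_right_comm] at this

/-- Nearby points are joined by a short geodesic, by a degree argument for the shooting map. -/
lemma short_geo (hG : RMet G c C) : ∃ ε > 0, ∀ p q : E, p ≠ q → ‖p - q‖ ≤ ε →
    ∃ x v : ℝ → E, IsGeo G x v ∧ x 0 = p ∧ x 1 = q ∧ ‖v 0‖ ≤ 2 * ‖p - q‖ := by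
  obtain ⟨K, hK0, hK⟩ := shoot_estimate hG
  have hC := hG.Cpos
  refine ⟨1 / (8 * (K + 1)), by positivity, fun p q hpq hε => ?_⟩
  choose X W hX hW hgeo using exists_geo hG p
  set R := 2 * ‖p - q‖ with hR
  have hpq0 : 0 < ‖p - q‖ := norm_pos_iff.2 (sub_ne_zero.2 hpq)
  have hcont : Continuous fun w => X w 1 - q := by
    refine Continuous.sub (continuous_iff_continuousAt.2 fun w0 => ?_) continuous_const
    obtain ⟨A, hA0, hA⟩ := IsGeo.close_vel hG (C * (‖w0‖ + 1) ^ 2) 1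
    have hen w (hw : ‖w - w0‖ ≤ 1) : ⟪G (X w 0) (W w 0), W w 0⟫ ≤ C * (‖w0‖ + 1) ^ 2 := by
      have h1 := (abs_le.1 (hG.upper (X w 0) (W w 0) (W w 0))).2
      rw [hW w] at h1 ⊢
      have h2 : ‖w‖ ≤ ‖w0‖ + 1 := by linarith [norm_le_norm_add_norm_sub' w w0]
      refine h1.trans ?_
      rw [mul_assoc, ← sq]; gcongr
    rw [ContinuousAt, tendsto_iff_norm_sub_tendsto_zero]
    refine squeeze_zero' (g := fun w => A * ‖w - w0‖) (Eventually.of_forall fun _ => norm_nonneg _) ?_ ?_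
    · filter_upwards [closedBall_mem_nhds w0 one_pos] with w hw
      rw [mem_closedBall_iff_norm] at hw
      have := (hA _ _ _ _ (hgeo w) (hgeo w0) (hen w hw) (hen w0 (by simp)) 1 (by simp)).1
      simpa [hX, hW] using this
    · have : Continuous fun w => A * ‖w - w0‖ := by fun_prop
      simpa using this.tendsto w0
  obtain ⟨w, hw, hw0⟩ := exists_zero_of_boundary hcont (R := R) (by positivity) (by
    intro w hw l hl heq
    have h1 := hK _ _ (hgeo w)
    rw [hX, hW] at h1
    have h2 : (1 + l) • w = (q - p) - (X w 1 - p - w) := by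
      have : X w 1 = q - l • w := by rw [sub_eq_iff_eq_add'.1 heq, ← sub_eq_add_neg]
      rw [this, add_smul, one_smul]; abel
    have h3 : (1 + l) * R ≤ ‖p - q‖ + K * R ^ 2 := by
      have : ‖(1 + l) • w‖ = (1 + l) * R := by
        rw [norm_smul, hw, norm_eq_abs, abs_of_nonneg (by linarith)]
      rw [← this, h2]
      refine (norm_sub_le _ _).trans ?_
      rw [norm_sub_rev q p, ← hw]; gcongr
    rw [le_div_iff₀ (by positivity)] at hε
    have h4 : K * R ^ 2 = K * ‖p - q‖ * 4 * ‖p - q‖ := by rw [hR]; ring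
    have h5 : K * ‖p - q‖ * 4 ≤ 1 / 2 := by nlinarith
    have h6 : K * R ^ 2 ≤ 1 / 2 * ‖p - q‖ := by rw [h4]; gcongr
    nlinarith [mul_nonneg hl (by positivity : 0 ≤ R)])
  exact ⟨X w, W w, hgeo w, hX w, sub_eq_zero.1 hw0, by rw [hW]; exact hw⟩

/-- A short curve realising `rd` between all its points is a solution of the geodesic equation:
it is squeezed onto the solution joining its endpoints by the quantitative minimality. -/
lemma min_is_geo (hG : RMet G c C) : ∃ ε > 0, ∀ (γ : ℝ → E) (ℓ : ℝ), 0 < ℓ → ℓ ≤ ε →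
    (∀ s ∈ Icc 0 ℓ, ∀ u ∈ Icc 0 ℓ, rd G (γ s) (γ u) = |s - u|) →
    ∃ x v : ℝ → E, IsGeo G x v ∧ ∀ m ∈ Icc 0 ℓ, γ m = x m := by
  have hc := hG.pos
  have hC := hG.Cpos
  obtain ⟨ℓ₁, hℓ₁, hm⟩ := local_min hG
  obtain ⟨ℓ₂, hℓ₂, hrd⟩ := rd_geo hG
  obtain ⟨ε0, hε0, hsh⟩ := short_geo hG
  have hsc : 0 < √c := sqrt_pos.2 hc
  refine ⟨min (√c * ε0) (min ℓ₁ (√c * ℓ₂ / (2 * √C))), by positivity, fun γ ℓ hℓ hℓε hγ => ?_⟩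
  have hl1 : ℓ ≤ √c * ε0 := hℓε.trans (min_le_left _ _)
  have hl2 : ℓ ≤ ℓ₁ := hℓε.trans ((min_le_right _ _).trans (min_le_left _ _))
  have hl3 : ℓ ≤ √c * ℓ₂ / (2 * √C) := hℓε.trans ((min_le_right _ _).trans (min_le_right _ _))
  have h0m : (0:ℝ) ∈ Icc 0 ℓ := ⟨le_rfl, hℓ.le⟩
  have hlm : ℓ ∈ Icc 0 ℓ := ⟨hℓ.le, le_rfl⟩
  have hpq : rd G (γ 0) (γ ℓ) = ℓ := by
    rw [hγ 0 h0m ℓ hlm, zero_sub, abs_neg, abs_of_pos hℓ]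
  have hne : γ 0 ≠ γ ℓ := by
    intro h
    have := rd_self (G := G) (γ 0)
    rw [← h] at hpq; linarith
  have hn := norm_sub_le_rd hG (γ 0) (γ ℓ)
  rw [hpq] at hn
  have hn1 : ‖γ 0 - γ ℓ‖ ≤ ε0 := le_of_mul_le_mul_left (hn.trans hl1) hsc
  obtain ⟨y, w, hy, hy0, hy1, hw⟩ := hsh _ _ hne hn1
  set e := √⟪G (y 0) (w 0), w 0⟫ with he
  have hle : ℓ ≤ e := by
    have h2 := rd_le (G := G) (hy.contDiff_x hG)
    rw [hy0, hy1, hpq] at h2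
    refine h2.trans (le_of_eq ?_)
    simp only [glen, hy.deriv_x, hy.energy hG, ← he]
    simp
  have he0 : 0 < e := hℓ.trans_le hle
  have hsq : ⟪G (y 0) (w 0), w 0⟫ = e ^ 2 := (sq_sqrt (hG.self_nonneg _ _)).symm
  have hel : e ≤ ℓ₂ := by
    have h1 : e ≤ √C * ‖w 0‖ := by
      rw [he, ← sqrt_sq (norm_nonneg (w 0)), ← sqrt_mul hC.le]
      refine Real.sqrt_le_sqrt ?_
      have := (abs_le.1 (hG.upper (y 0) (w 0) (w 0))).2
      linarith
    have h2 : √c * e ≤ √C * 2 * ℓ := by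
      calc √c * e ≤ √c * (√C * (2 * ‖γ 0 - γ ℓ‖)) := by gcongr; exact h1.trans (by gcongr)
        _ = √C * 2 * (√c * ‖γ 0 - γ ℓ‖) := by ring
        _ ≤ _ := by gcongr
    rw [le_div_iff₀ (by positivity)] at hl3
    refine le_of_mul_le_mul_left (h2.trans ?_) hsc
    linarith
  have hx := hy.scale e⁻¹ 0
  have hxu : ⟪G (y (e⁻¹ * 0 + 0)) (e⁻¹ • w (e⁻¹ * 0 + 0)), e⁻¹ • w (e⁻¹ * 0 + 0)⟫ = 1 := by
    rw [mul_zero, add_zero, map_smul, real_inner_smul_left, real_inner_smul_right, hsq]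
    field_simp
  set x : ℝ → E := fun t => y (e⁻¹ * t + 0) with hxdef
  have hx0 : x 0 = γ 0 := by simp [hxdef, hy0]
  have hxe : x e = γ ℓ := by simp [hxdef, he0.ne', hy1]
  have hee : ℓ = e := by
    have := hrd x _ hx hxu 0 e (by rw [zero_sub, abs_neg, abs_of_pos he0]; exact hel)
    rw [hx0, hxe, hpq, zero_sub, abs_neg, abs_of_pos he0] at this
    exact this
  rw [← hee] at hxe
  refine ⟨x, _, hx, fun m hmm => ?_⟩
  rcases hmm.1.eq_or_lt with rfl | hm0
  · exact hx0.symm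
  have key (k : ℕ) : ∃ z : ℝ, ℓ * m / (ℓ + 3 * (1 / ((k:ℝ) + 1))) ≤ z ∧
      z ≤ m + 3 / 2 * (1 / ((k:ℝ) + 1)) ∧
      ‖γ m - x z‖ ^ 2 ≤ 2 / c * ((ℓ + 2 * (1 / ((k:ℝ) + 1))) * (ℓ + 3 * (1 / ((k:ℝ) + 1))) - ℓ ^ 2) := by
    set η : ℝ := 1 / ((k:ℝ) + 1)
    have hη0 : 0 < η := by positivity
    obtain ⟨σ1, a1, a2, a3, a4, a5⟩ := exists_near_min (G := G) (γ 0) (γ m) hη0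
    obtain ⟨σ2, b1, b2, b3, b4, b5⟩ := exists_near_min (G := G) (γ m) (γ ℓ) hη0
    obtain ⟨σ, c1, c2, c3, c4, c5, c6⟩ := exists_concat hG a1 b1 (a3.trans b2.symm)
    rw [hγ 0 h0m m hmm, zero_sub, abs_neg, abs_of_pos hm0] at a4 a5
    rw [hγ m hmm ℓ hlm, abs_sub_comm, abs_of_nonneg (by linarith [hmm.2])] at b4 b5
    obtain ⟨-, d2⟩ := hm x _ hx hxu ℓ hℓ hl2 σ c1 (by rw [c2, a2, hx0]) (by rw [c3, b3, hxe]) η hη0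
    have d3 := d2 (1 / 2) ⟨by norm_num, by norm_num⟩
    rw [c4, a3, c5] at d3
    set L := glen G σ 0 1
    set L1 := glen G σ1 0 1
    have hL0 : ℓ ≤ L := by linarith
    have hL1 : L ≤ ℓ + 2 * η := by linarith
    refine ⟨_, ?_, ?_, d3.trans ?_⟩
    · rw [div_le_div_iff₀ (by positivity) (by linarith)]
      have : m * (L + η) ≤ (L1 + η * (1 / 2)) * (ℓ + 3 * η) := by
        
        refine mul_le_mul (by linarith) (by linarith) (by linarith) (by linarith)
      have h7 := mul_le_mul_of_nonneg_left this hℓ.le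
      linarith
    · rw [div_le_iff₀ (by linarith)]
      calc ℓ * (L1 + η * (1 / 2)) ≤ ℓ * (m + 3 / 2 * η) :=
          mul_le_mul_of_nonneg_left (by linarith) hℓ.le
        _ = (m + 3 / 2 * η) * ℓ := mul_comm _ _
        _ ≤ (m + 3 / 2 * η) * (L + η) :=
          mul_le_mul_of_nonneg_left (by linarith) (by linarith)
    · have : 0 ≤ L := hℓ.le.trans hL0
      exact mul_le_mul_of_nonneg_left (sub_le_sub_right (mul_le_mul hL1 (by linarith)
        (by linarith) (by linarith)) _) (by positivity)
  choose z hz1 hz2 hz3 using key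
  have hη := tendsto_one_div_add_atTop_nhds_zero_nat (𝕜 := ℝ)
  have hzt : Tendsto z atTop (nhds m) := by
    refine tendsto_of_tendsto_of_tendsto_of_le_of_le ?_ ?_ hz1 hz2
    · have h1 : Tendsto (fun k : ℕ => ℓ * m / (ℓ + 3 * (1 / ((k:ℝ) + 1)))) atTop
          (nhds (ℓ * m / (ℓ + 3 * 0))) :=
        tendsto_const_nhds.div (tendsto_const_nhds.add (hη.const_mul 3)) (by simpa using hℓ.ne')
      have h2 : ℓ * m / (ℓ + 3 * 0) = m := by field_simp; ring
      rwa [h2] at h1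
    · have h1 := (hη.const_mul (3 / 2)).const_add m
      simpa using h1
  have hxc : Tendsto (fun k => ‖γ m - x (z k)‖ ^ 2) atTop (nhds (‖γ m - x m‖ ^ 2)) :=
    (tendsto_const_nhds.sub ((hx.continuous_x.tendsto m).comp hzt)).norm.pow 2
  have hr : Tendsto (fun k : ℕ => 2 / c * ((ℓ + 2 * (1 / ((k:ℝ) + 1))) *
      (ℓ + 3 * (1 / ((k:ℝ) + 1))) - ℓ ^ 2)) atTop (nhds (2 / c * ((ℓ + 2 * 0) * (ℓ + 3 * 0) - ℓ ^ 2))) :=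
    ((((hη.const_mul 2).const_add ℓ).mul ((hη.const_mul 3).const_add ℓ)).sub_const _).const_mul _
  have hfin := le_of_tendsto_of_tendsto' hxc hr hz3
  have : 2 / c * ((ℓ + 2 * 0) * (ℓ + 3 * 0) - ℓ ^ 2) = 0 := by ring
  rw [this] at hfin
  have h4 : ‖γ m - x m‖ = 0 := by
    have := norm_nonneg (γ m - x m)
    nlinarith
  exact sub_eq_zero.1 (norm_eq_zero.1 h4)

/-- Metric geodesics of positive speed solve the geodesic equation. -/
lemma metric_geo_is_geo (hG : RMet G c C) {γ : ℝ → E} {κ : ℝ} (hκ : 0 < κ)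
    (hγ : ∀ t, ∃ δ > 0, ∀ s u, |s - t| < δ → |u - t| < δ → rd G (γ s) (γ u) = κ * |s - u|) :
    ∃ v : ℝ → E, IsGeo G γ v := by
  obtain ⟨ε, hε, hmin⟩ := min_is_geo hG
  have hloc t : ∃ x v : ℝ → E, IsGeo G x v ∧ γ =ᶠ[nhds t] x := by
    obtain ⟨δ, hδ, h⟩ := hγ t
    set d := min (δ / 2) (ε / (2 * κ)) with hd
    have hd0 : 0 < d := by positivity
    have hdδ : d < δ := (min_le_left _ _).trans_lt (by linarith)
    have hdε : κ * (2 * d) ≤ ε := by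
      have := min_le_right (δ / 2) (ε / (2 * κ))
      rw [← hd, le_div_iff₀ (by positivity)] at this
      linarith
    have hr s (hs : s ∈ Icc 0 (κ * (2 * d))) : |(t - d + κ⁻¹ * s) - t| < δ := by
      have h1 : κ⁻¹ * s ≤ 2 * d := by rw [inv_mul_le_iff₀ hκ]; exact hs.2
      have h2 : 0 ≤ κ⁻¹ * s := mul_nonneg (by positivity) hs.1
      rw [abs_lt]; constructor <;> linarith
    obtain ⟨x, v, hx, he⟩ := hmin (fun s => γ (t - d + κ⁻¹ * s)) (κ * (2 * d)) (by positivity) hdε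
      (fun s hs u hu => by
        rw [h _ _ (hr s hs) (hr u hu)]
        have : t - d + κ⁻¹ * s - (t - d + κ⁻¹ * u) = κ⁻¹ * (s - u) := by ring
        rw [this, abs_mul, abs_of_pos (by positivity : 0 < κ⁻¹), ← mul_assoc,
          mul_inv_cancel₀ hκ.ne', one_mul])
    refine ⟨_, _, hx.scale κ (κ * (d - t)), ?_⟩
    filter_upwards [ball_mem_nhds t hd0] with m hm
    rw [mem_ball_iff_norm, norm_eq_abs, abs_lt] at hm
    have := he (κ * m + κ * (d - t)) ⟨by nlinarith, by nlinarith⟩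
    rw [← this]
    congr 1
    field_simp
    ring
  choose x v hx he using hloc
  have huniq t s (hts : (x t) =ᶠ[nhds s] x 0) : x t = x 0 := by
    have h1 := (hx t).scale 1 s
    have h2 := (hx 0).scale 1 s
    have h3 : v t s = v 0 s := by
      rw [← (hx t).deriv_x, ← (hx 0).deriv_x]; exact hts.deriv_eq
    have := (IsGeo.unique hG h1 h2 (by simpa using hts.eq_of_nhds) (by simpa using h3)).1
    funext r
    have := congrFun this (r - s)
    simpa using this
  have hA : IsClopen {t | γ =ᶠ[nhds t] x 0} := by
    refine ⟨isClosed_of_closure_subset fun t ht => ?_, isOpen_iff_mem_nhds.2 fun t ht => ?_⟩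
    · have h1 : ∀ᶠ s in nhds t, γ =ᶠ[nhds s] x t := eventually_eventually_nhds.2 (he t)
      obtain ⟨s, hs1, hs2⟩ := (mem_closure_iff_nhds.1 ht) _ h1
      have h3 := huniq t s ((EventuallyEq.symm hs1).trans hs2)
      have h4 := he t
      rw [h3] at h4
      exact h4
    · exact eventually_eventually_nhds.2 ht
  have hall := hA.eq_univ ⟨0, he 0⟩
  have hγx : γ = x 0 := funext fun t => by
    have : t ∈ {t | γ =ᶠ[nhds t] x 0} := by rw [hall]; trivial
    exact this.eq_of_nhds
  exact ⟨v 0, by rw [hγx]; exact hx 0⟩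

/-! ### Geodesics far out in a nearly conical metric -/

/-- The infinitesimal rotation `z ↦ ⟪a, z⟫ b - ⟪b, z⟫ a`. -/
def rotJ (a b z : E) : E :=
  ⟪a, z⟫ • b - ⟪b, z⟫ • a

/-- `G` is asymptotic to the cone metric with `s = sin α`, in the form used for the dynamics:
`G` is close to the cone operator, almost invariant under dilations (`rad`), and almost invariant
under rotations (`rot`), with errors of size `‖x‖ ^ (-μ)` outside the ball of radius `R`. -/
structure ACon
    (G : E → E →L[ℝ] E) (s μ K R : ℝ) : Prop where
  s_pos : 0 < s
  s_lt : s < 1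
  μ_pos : 0 < μ
  μ_le : μ ≤ 1 / 2
  K_pos : 0 < K
  one_le_R : 1 ≤ R
  near : ∀ x v w, R ≤ ‖x‖ → |⟪G x v, w⟫ - ((1 - s ^ 2) * (⟪x, v⟫ * ⟪x, w⟫ / ‖x‖ ^ 2) + s ^ 2 * ⟪v, w⟫)| ≤
    K * ‖x‖ ^ (-μ) * ‖v‖ * ‖w‖
  rad : ∀ x v, R ≤ ‖x‖ → |⟪fderiv ℝ G x x v, v⟫| ≤ K * ‖x‖ ^ (-μ) * ‖v‖ ^ 2
  rot : ∀ x v a b, R ≤ ‖x‖ → |⟪fderiv ℝ G x (rotJ a b x) v, v⟫ + 2 * ⟪G x (rotJ a b v), v⟫| ≤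
    K * ‖x‖ ^ (-μ) * ‖a‖ * ‖b‖ * ‖v‖ ^ 2

lemma rotJ_inner_self (a b z : E) : ⟪rotJ a b z, z⟫ = 0 := by
  simp only [rotJ, inner_sub_left, real_inner_smul_left]; ring

lemma rotJ_smul (a b z : E) (r : ℝ) : rotJ a b (r • z) = r • rotJ a b z := by
  simp only [rotJ, real_inner_smul_right, smul_sub, smul_smul]

lemma norm_rotJ_le (a b z : E) : ‖rotJ a b z‖ ≤ 2 * ‖a‖ * ‖b‖ * ‖z‖ := by
  have h1 : ‖⟪a, z⟫ • b‖ ≤ ‖a‖ * ‖z‖ * ‖b‖ := by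
    rw [norm_smul]; gcongr; exact norm_inner_le_norm _ _
  have h2 : ‖⟪b, z⟫ • a‖ ≤ ‖b‖ * ‖z‖ * ‖a‖ := by
    rw [norm_smul]; gcongr; exact norm_inner_le_norm _ _
  refine (norm_sub_le _ _).trans ?_
  linarith

lemma hasDerivAt_rotJ {x : ℝ → E} {x' : E} {t : ℝ} (a b : E) (h : HasDerivAt x x' t) :
    HasDerivAt (fun t => rotJ a b (x t)) (rotJ a b x') t := by
  have h1 := ((hasDerivAt_const t a).inner ℝ h).smul_const b
  have h2 := ((hasDerivAt_const t b).inner ℝ h).smul_const a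
  refine (h1.sub h2).congr_deriv ?_
  simp [rotJ]

/-- Mean value inequality with a real majorant. -/
lemma mv_le {F : Type*} [NormedAddCommGroup F] [NormedSpace ℝ F] {f f' : ℝ → F} {g g' : ℝ → ℝ}
    {a b : ℝ} (hab : a ≤ b) (hf : ∀ t ∈ Icc a b, HasDerivAt f (f' t) t)
    (hg : ∀ t ∈ Icc a b, HasDerivAt g (g' t) t) (h : ∀ t ∈ Icc a b, ‖f' t‖ ≤ g' t) :
    ‖f b - f a‖ ≤ g b - g a := by
  refine image_norm_le_of_norm_deriv_right_le_deriv_boundary' (f := fun t => f t - f a) (f' := f')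
    (B := fun t => g t - g a) (B' := g') (a := a) (b := b) ?_ ?_ (by simp) ?_ ?_ ?_
    (right_mem_Icc.2 hab)
  · exact fun t ht => ((hf t ht).continuousAt.sub continuousAt_const).continuousWithinAt
  · exact fun t ht => ((hf t (Ico_subset_Icc_self ht)).sub_const _).hasDerivWithinAt
  · exact fun t ht => ((hg t ht).continuousAt.sub continuousAt_const).continuousWithinAt
  · exact fun t ht => ((hg t (Ico_subset_Icc_self ht)).sub_const _).hasDerivWithinAt
  · exact fun t ht => h t (Ico_subset_Icc_self ht)

lemma mv_const {F : Type*} [NormedAddCommGroup F] [NormedSpace ℝ F] {f f' : ℝ → F} {M : ℝ}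
    {a b : ℝ} (hab : a ≤ b) (hf : ∀ t ∈ Icc a b, HasDerivAt f (f' t) t)
    (h : ∀ t ∈ Icc a b, ‖f' t‖ ≤ M) : ‖f b - f a‖ ≤ M * (b - a) := by
  have := mv_le hab hf (g := fun t => M * t) (g' := fun _ => M)
    (fun t _ => by simpa using (hasDerivAt_id t).const_mul M) h
  linarith

/-- Continuous induction: a positive function whose nonnegativity up to time `τ` forces positivity
at time `τ` stays positive. -/
lemma cont_ind {f : ℝ → ℝ} (hf : Continuous f) (h0 : 0 < f 0)
    (h : ∀ τ, 0 ≤ τ → (∀ σ ∈ Icc 0 τ, 0 ≤ f σ) → 0 < f τ) : ∀ τ, 0 ≤ τ → 0 < f τ := by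
  by_contra! hcon
  obtain ⟨τ, hτ, hfτ⟩ := hcon
  have hcpt : IsCompact (Icc 0 τ ∩ {t | f t ≤ 0}) :=
    isCompact_Icc.inter_right (isClosed_le hf continuous_const)
  obtain ⟨z, ⟨hz1, hz2⟩, hz3⟩ := hcpt.exists_isLeast ⟨τ, ⟨hτ, le_rfl⟩, hfτ⟩
  have hlt σ (hσ : σ ∈ Ico 0 z) : 0 < f σ := by
    by_contra! hn
    exact absurd (hz3 ⟨⟨hσ.1, hσ.2.le.trans hz1.2⟩, hn⟩) (not_le.2 hσ.2)
  have hzne : z ≠ 0 := by rintro rfl; exact absurd hz2 (not_le.2 h0)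
  have hcl : ∀ σ ∈ Icc 0 z, 0 ≤ f σ := by
    have : Icc 0 z ⊆ {t | 0 ≤ f t} := by
      rw [← closure_Ico hzne.symm]
      exact (isClosed_le continuous_const hf).closure_subset_iff.2 fun σ hσ => (hlt σ hσ).le
    exact fun σ hσ => this hσ
  exact absurd hz2 (not_le.2 (h z hz1.1 hcl))

/-- A unit speed solution of the geodesic equation. -/
def UGeo
    (G : E → E →L[ℝ] E) (x v : ℝ → E) : Prop :=
  IsGeo G x v ∧ ⟪G (x 0) (v 0), v 0⟫ = 1

namespace UGeo
variable {x v : ℝ → E}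

lemma energy (hG : RMet G c C) (h : UGeo G x v) (t : ℝ) : ⟪G (x t) (v t), v t⟫ = 1 := by
  rw [h.1.energy hG, h.2]

lemma norm_v (hG : RMet G c C) (h : UGeo G x v) (t : ℝ) : ‖v t‖ ≤ √(1 / c) :=
  h.1.norm_v_le hG h.2.le t

lemma shift (hG : RMet G c C) (h : UGeo G x v) (a : ℝ) :
    UGeo G (fun t => x (t + a)) (fun t => v (t + a)) := by
  refine ⟨?_, by simpa using h.energy hG a⟩
  simpa using h.1.scale 1 a

lemma reverse (hG : RMet G c C) (h : UGeo G x v) (a : ℝ) :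
    UGeo G (fun t => x (a - t)) (fun t => -v (a - t)) := by
  refine ⟨?_, by simpa using h.energy hG a⟩
  have := h.1.scale (-1) a
  simpa [neg_add_eq_sub] using this

lemma hasDerivAt_S (h : UGeo G x v) (t : ℝ) : HasDerivAt (fun t => ⟪x t, G (x t) (v t)⟫)
    (⟪fderiv ℝ G (x t) (x t) (v t), v t⟫ / 2 + ⟪G (x t) (v t), v t⟫) t := by
  have := (h.1 t).1.inner ℝ (h.1 t).2
  refine this.congr_deriv ?_
  rw [real_inner_comm, inner_force, real_inner_comm (v t) (G (x t) (v t))]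

lemma hasDerivAt_J (h : UGeo G x v) (a b : E) (t : ℝ) :
    HasDerivAt (fun t => ⟪rotJ a b (x t), G (x t) (v t)⟫)
    ((⟪fderiv ℝ G (x t) (rotJ a b (x t)) (v t), v t⟫ + 2 * ⟪rotJ a b (v t), G (x t) (v t)⟫) / 2) t := by
  have := (hasDerivAt_rotJ a b (h.1 t).1).inner ℝ (h.1 t).2
  refine this.congr_deriv ?_
  rw [real_inner_comm, inner_force]; ring

/-- The basic estimates along a unit speed geodesic while it is far out, with a single constant. -/
lemma basic (hG : RMet G c C) (hA : ACon G s μ K R) :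
    ∃ B : ℝ, 0 < B ∧ ∀ x v : ℝ → E, UGeo G x v → ∀ t, R ≤ ‖x t‖ →
      |⟪fderiv ℝ G (x t) (x t) (v t), v t⟫ / 2 + ⟪G (x t) (v t), v t⟫ - 1| ≤ B * ‖x t‖ ^ (-μ) ∧
      |⟪x t, G (x t) (v t)⟫ - ⟪x t, v t⟫| ≤ B * ‖x t‖ ^ (-μ) * ‖x t‖ ∧
      (∀ a b : E, |(⟪fderiv ℝ G (x t) (rotJ a b (x t)) (v t), v t⟫ +
        2 * ⟪rotJ a b (v t), G (x t) (v t)⟫) / 2| ≤ B * ‖x t‖ ^ (-μ) * (‖a‖ * ‖b‖)) ∧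
      (∀ a b : E, |⟪rotJ a b (x t), G (x t) (v t)⟫ - s ^ 2 * ⟪rotJ a b (x t), v t⟫| ≤
        B * ‖x t‖ ^ (-μ) * ‖x t‖ * (‖a‖ * ‖b‖)) ∧
      |1 - ((1 - s ^ 2) * (⟪x t, v t⟫ ^ 2 / ‖x t‖ ^ 2) + s ^ 2 * ‖v t‖ ^ 2)| ≤ B * ‖x t‖ ^ (-μ) := by
  set V := √(1 / c) with hV
  have hK := hA.K_pos
  have hc := hG.pos
  have hVp : 0 < V := sqrt_pos.2 (by positivity)
  refine ⟨K * (V ^ 2 + 2 * V), by positivity, fun x v h t hR => ?_⟩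
  have hv := h.norm_v hG t
  rw [← hV] at hv
  have hx0 : 0 < ‖x t‖ := lt_of_lt_of_le one_pos (hA.one_le_R.trans hR)
  have he : 0 ≤ ‖x t‖ ^ (-μ) := by positivity
  have hen := h.energy hG t
  set e := ‖x t‖ ^ (-μ)
  have hv2 : ‖v t‖ ^ 2 ≤ V ^ 2 := by gcongr
  have b1 : K * e * ‖v t‖ ^ 2 ≤ K * (V ^ 2 + 2 * V) * e := by
    have : K * e * ‖v t‖ ^ 2 ≤ K * e * (V ^ 2 + 2 * V) := by gcongr; linarith
    linarith
  have b2 : K * e * ‖v t‖ * 2 ≤ K * (V ^ 2 + 2 * V) * e := by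
    have : K * e * (‖v t‖ * 2) ≤ K * e * (V ^ 2 + 2 * V) := by
      refine mul_le_mul_of_nonneg_left ?_ (by positivity)
      nlinarith [sq_nonneg V]
    linarith
  have hp : 0 ≤ K * e * ‖v t‖ ^ 2 := by positivity
  refine ⟨?_, ?_, fun a b => ?_, fun a b => ?_, ?_⟩
  · have := hA.rad (x t) (v t) hR
    rw [hen, add_sub_cancel_right, abs_div, abs_two]
    linarith
  · have h1 := hA.near (x t) (v t) (x t) hR
    rw [real_inner_comm]
    have h2 : (1 - s ^ 2) * (⟪x t, v t⟫ * ⟪x t, x t⟫ / ‖x t‖ ^ 2) + s ^ 2 * ⟪v t, x t⟫ =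
        ⟪x t, v t⟫ := by
      rw [real_inner_self_eq_norm_sq, real_inner_comm (v t)]; field_simp; ring
    rw [h2] at h1
    refine h1.trans ?_
    exact mul_le_mul_of_nonneg_right (by linarith) hx0.le
  · have := hA.rot (x t) (v t) a b hR
    rw [hG.symm] at this
    rw [abs_div, abs_two]
    have h2 : K * e * ‖a‖ * ‖b‖ * ‖v t‖ ^ 2 ≤ K * (V ^ 2 + 2 * V) * e * (‖a‖ * ‖b‖) := by
      calc _ = K * e * ‖v t‖ ^ 2 * (‖a‖ * ‖b‖) := by ring
        _ ≤ _ := by gcongr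
    have h3 : 0 ≤ K * e * ‖a‖ * ‖b‖ * ‖v t‖ ^ 2 := by positivity
    linarith
  · have h1 := hA.near (x t) (v t) (rotJ a b (x t)) hR
    rw [real_inner_comm (rotJ a b (x t)) (x t), rotJ_inner_self, mul_zero, zero_div, mul_zero,
      zero_add] at h1
    rw [real_inner_comm, real_inner_comm (v t) (rotJ a b (x t))]
    refine h1.trans ?_
    calc _ ≤ K * e * ‖v t‖ * (2 * ‖a‖ * ‖b‖ * ‖x t‖) := by gcongr; exact norm_rotJ_le _ _ _
      _ = K * e * ‖v t‖ * 2 * (‖x t‖ * (‖a‖ * ‖b‖)) := by ring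
      _ ≤ K * (V ^ 2 + 2 * V) * e * (‖x t‖ * (‖a‖ * ‖b‖)) := by gcongr
      _ = _ := by ring
  · have h1 := hA.near (x t) (v t) (v t) hR
    rw [hen, real_inner_self_eq_norm_sq, ← sq] at h1
    refine h1.trans ?_
    linarith

end UGeo

lemma rpow_neg_half_le {y z μ : ℝ} (hy : 0 < y) (hz : y / 2 ≤ z) (h0 : 0 < μ) (h1 : μ ≤ 1 / 2) :
    z ^ (-μ) ≤ 2 * y ^ (-μ) := by
  have h2 : z ^ (-μ) ≤ (y / 2) ^ (-μ) :=
    rpow_le_rpow_of_nonpos (by positivity) hz (by linarith)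
  have h3 : (y / 2) ^ (-μ) = 2 ^ μ * y ^ (-μ) := by
    rw [Real.div_rpow hy.le (by norm_num), rpow_neg (by norm_num : (0:ℝ) ≤ 2), div_inv_eq_mul,
      mul_comm]
  have h4 : (2:ℝ) ^ μ ≤ 2 := by
    calc (2:ℝ) ^ μ ≤ 2 ^ (1:ℝ) := rpow_le_rpow_of_exponent_le (by norm_num) (by linarith)
      _ = 2 := by norm_num
  have h5 : 0 ≤ y ^ (-μ) := by positivity
  rw [h3] at h2
  exact h2.trans (by gcongr)

lemma exists_rpow_small {μ : ℝ} (h0 : 0 < μ) (B R η : ℝ) (hη : 0 < η) :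
    ∃ M : ℝ, R ≤ M ∧ 1 ≤ M ∧ ∀ y, M ≤ y → B * y ^ (-μ) ≤ η := by
  have h1 : Tendsto (fun y : ℝ => B * y ^ (-μ)) atTop (nhds (B * 0)) :=
    (tendsto_rpow_neg_atTop h0).const_mul B
  rw [mul_zero] at h1
  obtain ⟨M, hM⟩ := eventually_atTop.1 (h1.eventually_le_const hη)
  exact ⟨max M (max R 1), by simp, by simp, fun y hy => hM y ((le_max_left _ _).trans hy)⟩

/-- A geodesic which is far out and not moving inwards escapes, and `‖x‖²` grows as in a cone. -/
lemma UGeo.out_radial (hG : RMet G c C) (hA : ACon G s μ K R) :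
    ∃ B M : ℝ, 0 < B ∧ 2 * R ≤ M ∧ ∀ x v : ℝ → E, UGeo G x v → M ≤ ‖x 0‖ → 0 ≤ ⟪x 0, v 0⟫ →
      ∀ τ, 0 ≤ τ → (‖x 0‖ + τ) / 2 ≤ ‖x τ‖ ∧ ‖x τ‖ ≤ (1 + √(1 / c)) * (‖x 0‖ + τ) ∧
        |‖x τ‖ ^ 2 - ‖x 0‖ ^ 2 - τ ^ 2 - 2 * ⟪x 0, v 0⟫ * τ| ≤
          B * ‖x 0‖ ^ (-μ) * (‖x 0‖ + τ) ^ 2 := by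
  obtain ⟨B, hB, hb⟩ := UGeo.basic hG hA
  set V := √(1 / c)
  have hV0 : 0 ≤ V := sqrt_nonneg _
  set B1 := 12 * B * (1 + V) with hB1
  have hB₁p : 0 < B1 := by positivity
  obtain ⟨M, hM1, hM2, hM3⟩ := exists_rpow_small hA.μ_pos B1 (2 * R) (1 / 8) (by norm_num)
  refine ⟨B1, M, hB₁p, hM1, fun x v h hM hin => ?_⟩
  have hr0 : 0 < ‖x 0‖ := by linarith
  set r := ‖x 0‖ with hr
  set e := r ^ (-μ) with he
  have hup τ (hτ : 0 ≤ τ) : ‖x τ‖ ≤ (1 + V) * (r + τ) := by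
    have h1 : ‖x τ - x 0‖ ≤ V * (τ - 0) :=
      mv_const hτ (fun t _ => (h.1 t).1) (fun t _ => h.norm_v hG t)
    have h2 := norm_sub_norm_le (x τ) (x 0)
    nlinarith
  have hmain τ (hτ : 0 ≤ τ) (hp : (∀ σ ∈ Icc 0 τ, 0 ≤ ‖x σ‖ - (r + σ) / 2)) :
      |‖x τ‖ ^ 2 - r ^ 2 - τ ^ 2 - 2 * ⟪x 0, v 0⟫ * τ| ≤ B1 * e * (r + τ) ^ 2 := by
    have hlow σ (hσ : σ ∈ Icc 0 τ) : R ≤ ‖x σ‖ ∧ ‖x σ‖ ^ (-μ) ≤ 2 * e := by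
      have := hp σ hσ
      have h3 := hσ.1
      exact ⟨by linarith, rpow_neg_half_le hr0 (by linarith) hA.μ_pos hA.μ_le⟩
    have hS σ (hσ : σ ∈ Icc 0 τ) : |⟪x σ, G (x σ) (v σ)⟫ - σ - ⟪x 0, G (x 0) (v 0)⟫| ≤ 2 * B * e * σ := by
      have h1 := mv_const (f := fun t => ⟪x t, G (x t) (v t)⟫ - t) (a := 0) (b := σ)
        (M := 2 * B * e) hσ.1 (fun t _ => (h.hasDerivAt_S t).sub (hasDerivAt_id t)) (fun t ht => by
          have ht' : t ∈ Icc 0 τ := ⟨ht.1, ht.2.trans hσ.2⟩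
          obtain ⟨h2, h3⟩ := hlow t ht'
          refine ((hb x v h t h2).1).trans ?_
          calc _ ≤ B * (2 * e) := by gcongr
            _ = _ := by ring)
      rw [norm_eq_abs] at h1
      have h5 : ⟪x σ, G (x σ) (v σ)⟫ - σ - ⟪x 0, G (x 0) (v 0)⟫ =
        ⟪x σ, G (x σ) (v σ)⟫ - σ - (⟪x 0, G (x 0) (v 0)⟫ - 0) := by ring
      rw [h5]
      simpa using h1
    have hf := mv_const (f := fun t => ‖x t‖ ^ 2 - t ^ 2 - 2 * ⟪x 0, v 0⟫ * t) (a := 0) (b := τ)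
      (f' := fun t => 2 * ⟪x t, v t⟫ - 2 * t - 2 * ⟪x 0, v 0⟫) (M := B1 * e * (r + τ)) hτ
      (fun t _ => by
        have h1 := (h.1 t).1.norm_sq
        have h2 := hasDerivAt_pow 2 t
        have h3 := (hasDerivAt_id t).const_mul (2 * ⟪x 0, v 0⟫)
        refine ((h1.sub h2).sub h3).congr_deriv ?_
        simp) (fun t ht => by
        obtain ⟨h2, h3⟩ := hlow t ht
        obtain ⟨h20, h30⟩ := hlow 0 ⟨le_rfl, hτ⟩
        have i1 := (hb x v h t h2).2.1
        have i2 := (hb x v h 0 h20).2.1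
        have i3 := hS t ht
        have j1 : B * ‖x t‖ ^ (-μ) * ‖x t‖ ≤ B * (2 * e) * ((1 + V) * (r + τ)) := by
          have := hup t ht.1
          have h4 : ‖x t‖ ≤ (1 + V) * (r + τ) := this.trans (by gcongr; exact ht.2)
          gcongr
        have j2 : B * ‖x 0‖ ^ (-μ) * ‖x 0‖ ≤ B * (2 * e) * ((1 + V) * (r + τ)) := by
          have := hup 0 le_rfl
          have h4 : ‖x 0‖ ≤ (1 + V) * (r + τ) := this.trans (by gcongr)
          gcongr
        have j3 : 2 * B * e * t ≤ B * (2 * e) * ((1 + V) * (r + τ)) := by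
          have h4 : t ≤ (1 + V) * (r + τ) := by nlinarith [ht.2, ht.1]
          calc _ = B * (2 * e) * t := by ring
            _ ≤ _ := by gcongr
        have := abs_le.1 (i1.trans j1)
        have := abs_le.1 (i2.trans j2)
        have := abs_le.1 (i3.trans j3)
        have hB' : B1 * e * (r + τ) = 6 * (B * (2 * e) * ((1 + V) * (r + τ))) := by rw [hB1]; ring
        rw [hB', norm_eq_abs, abs_le]
        constructor <;> linarith)
    rw [norm_eq_abs] at hf
    have h5 : ‖x τ‖ ^ 2 - r ^ 2 - τ ^ 2 - 2 * ⟪x 0, v 0⟫ * τ = ‖x τ‖ ^ 2 - τ ^ 2 -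
      2 * ⟪x 0, v 0⟫ * τ - (‖x 0‖ ^ 2 - 0 ^ 2 - 2 * ⟪x 0, v 0⟫ * 0) := by rw [← hr]; ring
    rw [h5]
    refine hf.trans ?_
    rw [sub_zero, sq, ← mul_assoc]
    gcongr
    linarith
  have hpos : ∀ τ, 0 ≤ τ → 0 < ‖x τ‖ - (r + τ) / 2 := by
    refine cont_ind (by have := h.1.continuous_x; fun_prop) (by rw [← hr]; linarith) ?_
    intro τ hτ hp
    have h1 := (abs_le.1 (hmain τ hτ hp)).1
    have h2 := hM3 r hM
    rw [← he] at h2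
    have h3 : B1 * e * (r + τ) ^ 2 ≤ 1 / 8 * (r + τ) ^ 2 := by gcongr
    have h4 : 0 ≤ 2 * ⟪x 0, v 0⟫ * τ := by positivity
    have h5 : ((r + τ) / 2) ^ 2 < ‖x τ‖ ^ 2 := by nlinarith [sq_nonneg (r - τ)]
    have := lt_of_pow_lt_pow_left₀ 2 (norm_nonneg _) h5
    linarith
  intro τ hτ
  exact ⟨by linarith [hpos τ hτ], hup τ hτ, hmain τ hτ fun σ hσ => (hpos σ hσ.1).le⟩

/-- Derivative of the direction `x / ‖x‖`. -/
lemma hasDerivAt_dir {x : ℝ → E} {w : E} {t : ℝ} (h : HasDerivAt x w t) (hx : x t ≠ 0) :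
    HasDerivAt (fun t => ‖x t‖⁻¹ • x t)
      (‖x t‖⁻¹ • (w - ⟪‖x t‖⁻¹ • x t, w⟫ • (‖x t‖⁻¹ • x t))) t := by
  have hn : 0 < ‖x t‖ := norm_pos_iff.2 hx
  have h1 : HasDerivAt (fun t => √(‖x t‖ ^ 2)) ((2 * ⟪x t, w⟫) / (2 * √(‖x t‖ ^ 2))) t :=
    (h.norm_sq).sqrt (by positivity)
  simp only [sqrt_sq (norm_nonneg _)] at h1
  have h2 := (h1.fun_inv hn.ne').smul h
  refine h2.congr_deriv ?_
  rw [real_inner_smul_left, smul_sub, smul_smul, smul_smul, sub_eq_add_neg, ← neg_smul]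
  congr 2
  field_simp

/-- The direction `x / ‖x‖`. -/
def dir (x : E) : E :=
  ‖x‖⁻¹ • x

/-- The derivative of the direction of a curve at `x` with velocity `v`. -/
def angv (x v : E) : E :=
  ‖x‖⁻¹ • (v - ⟪dir x, v⟫ • dir x)

lemma norm_dir {x : E} (hx : x ≠ 0) : ‖dir x‖ = 1 := by
  rw [dir, norm_smul, norm_inv, norm_norm, inv_mul_cancel₀ (norm_ne_zero_iff.2 hx)]

lemma norm_smul_dir {x : E} (hx : x ≠ 0) : ‖x‖ • dir x = x := by
  rw [dir, smul_smul, mul_inv_cancel₀ (norm_ne_zero_iff.2 hx), one_smul]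

lemma inner_dir_angv {x : E} (v : E) (hx : x ≠ 0) : ⟪dir x, angv x v⟫ = 0 := by
  rw [angv, real_inner_smul_right, inner_sub_right, real_inner_smul_right,
    real_inner_self_eq_norm_sq, norm_dir hx]
  ring

lemma smul_angv {x : E} (v : E) (hx : x ≠ 0) : ‖x‖ • angv x v = v - ⟪dir x, v⟫ • dir x := by
  rw [angv, smul_smul, mul_inv_cancel₀ (norm_ne_zero_iff.2 hx), one_smul]

/-- The angular momentum in terms of the angular velocity. -/
lemma inner_rotJ_vel {x : E} (v a b : E) (hx : x ≠ 0) :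
    ⟪rotJ a b x, v⟫ = ‖x‖ ^ 2 * ⟪rotJ a b (dir x), angv x v⟫ := by
  have h1 : v = ‖x‖ • angv x v + ⟪dir x, v⟫ • dir x := by rw [smul_angv v hx]; abel
  have h2 : rotJ a b x = ‖x‖ • rotJ a b (dir x) := by rw [← rotJ_smul, norm_smul_dir hx]
  conv_lhs => rw [h2, h1]
  rw [real_inner_smul_left, inner_add_right, real_inner_smul_right, real_inner_smul_right,
    rotJ_inner_self]
  ring

lemma UGeo.hasDerivAt_dir {x v : ℝ → E} (h : UGeo G x v) {t : ℝ} (hx : x t ≠ 0) :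
    HasDerivAt (fun t => dir (x t)) (angv (x t) (v t)) t := _root_.hasDerivAt_dir (h.1 t).1 hx

lemma rotJ_dir_left {x b : E} (hx : x ≠ 0) (hb : ⟪dir x, b⟫ = 0) : rotJ (dir x) b (dir x) = b := by
  rw [rotJ, real_inner_self_eq_norm_sq, norm_dir hx, real_inner_comm, hb]; simp

/-- Almost conservation of all angular momenta along an escaping geodesic. -/
lemma UGeo.out_ang (hG : RMet G c C) (hA : ACon G s μ K R) :
    ∃ B M : ℝ, 0 < B ∧ 2 * R ≤ M ∧ ∀ x v : ℝ → E, UGeo G x v → M ≤ ‖x 0‖ → 0 ≤ ⟪x 0, v 0⟫ →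
      ∀ τ, 0 ≤ τ → ∀ a b : E,
        |s ^ 2 * (‖x τ‖ ^ 2 * ⟪rotJ a b (dir (x τ)), angv (x τ) (v τ)⟫) -
          ⟪rotJ a b (x 0), G (x 0) (v 0)⟫| ≤
          B * ((‖x 0‖ + τ) ^ (-μ) * (‖x 0‖ + τ)) * (‖a‖ * ‖b‖) := by
  obtain ⟨B, hB, hb⟩ := UGeo.basic hG hA
  obtain ⟨B1, M, hB1, hM, hout⟩ := UGeo.out_radial hG hA
  set V := √(1 / c)
  have hμ := hA.μ_pos
  have hμ' := hA.μ_le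
  have hR1 := hA.one_le_R
  refine ⟨4 * B + 2 * B * (1 + V), M, by positivity, hM, fun x v h hxM hin τ hτ a b => ?_⟩
  have hr0 : 0 < ‖x 0‖ := by linarith
  have ho := hout x v h hxM hin
  set r := ‖x 0‖
  have hfar σ (hσ : 0 ≤ σ) : R ≤ ‖x σ‖ ∧ ‖x σ‖ ^ (-μ) ≤ 2 * (r + σ) ^ (-μ) := by
    have h1 := (ho σ hσ).1
    exact ⟨by linarith, rpow_neg_half_le (by linarith) h1 hμ hμ'⟩
  set q := ‖a‖ * ‖b‖
  have h1 := mv_le (f := fun t => ⟪rotJ a b (x t), G (x t) (v t)⟫) (a := 0) (b := τ)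
    (g := fun t => 4 * B * q * (r + t) ^ (-μ + 1))
    (g' := fun t => 4 * B * q * (1 * (-μ + 1) * (r + t) ^ (-μ + 1 - 1)))
    hτ (fun t _ => h.hasDerivAt_J a b t)
    (fun t ht => by
      have h2 : HasDerivAt (fun t => r + t) 1 t := (hasDerivAt_id t).const_add r
      have h3 : r + t ≠ 0 := by have := ht.1; positivity
      exact (h2.rpow_const (Or.inl h3)).const_mul _)
    (fun t ht => by
      obtain ⟨i1, i2⟩ := hfar t ht.1
      have ht0 := ht.1
      refine ((hb x v h t i1).2.2.1 a b).trans ?_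
      rw [add_sub_cancel_right]
      calc B * ‖x t‖ ^ (-μ) * q ≤ B * (2 * (r + t) ^ (-μ)) * q := by gcongr
        _ = 4 * B * q * (1 * (1 / 2) * (r + t) ^ (-μ)) := by ring
        _ ≤ _ := by gcongr; linarith)
  obtain ⟨i1, i2⟩ := hfar τ hτ
  have h2 := (hb x v h τ i1).2.2.2.1 a b
  have hx : x τ ≠ 0 := norm_pos_iff.1 (by linarith)
  rw [inner_rotJ_vel (v τ) _ _ hx] at h2
  have h3 : B * ‖x τ‖ ^ (-μ) * ‖x τ‖ * q ≤ 2 * B * (1 + V) * ((r + τ) ^ (-μ) * (r + τ)) * q := by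
    have := (ho τ hτ).2.1
    calc _ ≤ B * (2 * (r + τ) ^ (-μ)) * ((1 + V) * (r + τ)) * q := by gcongr
      _ = _ := by ring
  have h4 : (0:ℝ) ≤ 4 * B * q * (r + 0) ^ (-μ + 1) := by positivity
  rw [norm_eq_abs] at h1
  have h5 : (r + τ) ^ (-μ + 1) = (r + τ) ^ (-μ) * (r + τ) := Real.rpow_add_one (by positivity) _
  simp only [h5] at h1
  have := abs_le.1 h1
  have := abs_le.1 (h2.trans h3)
  rw [abs_le]
  constructor <;> linarith

/-- The direction of an escaping geodesic converges, with a uniform rate. -/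
lemma UGeo.out_dir (hG : RMet G c C) (hA : ACon G s μ K R) :
    ∃ B M : ℝ, 0 < B ∧ 2 * R ≤ M ∧ ∀ x v : ℝ → E, UGeo G x v → M ≤ ‖x 0‖ → 0 ≤ ⟪x 0, v 0⟫ →
      ∀ τ1 τ2, 0 ≤ τ1 → τ1 ≤ τ2 → ‖dir (x τ2) - dir (x τ1)‖ ≤
        B * (‖x 0‖ / (‖x 0‖ + τ1) + (‖x 0‖ + τ1) ^ (-μ)) := by
  obtain ⟨B1, M1, hB1, hM1, hang⟩ := UGeo.out_ang hG hA
  obtain ⟨B2, M2, hB2, hM2, hout⟩ := UGeo.out_radial hG hA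
  set V := √(1 / c)
  have hV0 : 0 ≤ V := sqrt_nonneg _
  have hμ := hA.μ_pos
  have hμ' := hA.μ_le
  have hR1 := hA.one_le_R
  have hs := hA.s_pos
  have hC := hG.Cpos
  set D := 4 * (2 * C * V + B1) / s ^ 2 with hD
  have hD0 : 0 < D := by positivity
  refine ⟨D / μ, max M1 M2, by positivity, hM1.trans (le_max_left _ _), ?_⟩
  intro x v h hxM hin τ1 τ2 h0 h12
  have hxM1 := (le_max_left M1 M2).trans hxM
  have hxM2 := (le_max_right M1 M2).trans hxM
  have hr0 : 0 < ‖x 0‖ := by linarith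
  have ho := hout x v h hxM2 hin
  have ha := hang x v h hxM1 hin
  set r := ‖x 0‖
  have hx t : 0 ≤ t → x t ≠ 0 := fun ht => norm_pos_iff.1 (by linarith [(ho t ht).1])
  have hw t (ht : 0 ≤ t) : ‖angv (x t) (v t)‖ ≤ D * (r / (r + t) ^ 2 + (r + t) ^ (-μ - 1)) := by
    set w := angv (x t) (v t)
    have hwo : ⟪dir (x t), w⟫ = 0 := inner_dir_angv _ (hx t ht)
    have h1 := ha t ht (dir (x t)) w
    rw [rotJ_dir_left (hx t ht) hwo, norm_dir (hx t ht), real_inner_self_eq_norm_sq, one_mul] at h1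
    have h2 : |⟪rotJ (dir (x t)) w (x 0), G (x 0) (v 0)⟫| ≤ 2 * C * V * r * ‖w‖ := by
      refine (abs_real_inner_le_norm _ _).trans ?_
      have i1 := norm_rotJ_le (dir (x t)) w (x 0)
      rw [norm_dir (hx t ht), mul_one] at i1
      have i2 : ‖G (x 0) (v 0)‖ ≤ C * V :=
        (hG.norm_apply_le _ _).trans (by gcongr; exact h.norm_v hG 0)
      calc _ ≤ 2 * ‖w‖ * r * (C * V) := by gcongr
        _ = _ := by ring
    have hrt : 0 < r + t := by linarith
    have h3 : s ^ 2 * (‖x t‖ ^ 2 * ‖w‖ ^ 2) ≤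
        (2 * C * V * r + B1 * ((r + t) ^ (-μ) * (r + t))) * ‖w‖ := by
      have := abs_le.1 h1
      have := abs_le.1 h2
      linarith
    have h4 : ((r + t) / 2) ^ 2 ≤ ‖x t‖ ^ 2 := by
      have := (ho t ht).1
      gcongr
    have h5 : s ^ 2 * (((r + t) / 2) ^ 2 * ‖w‖ ^ 2) ≤
        (2 * C * V * r + B1 * ((r + t) ^ (-μ) * (r + t))) * ‖w‖ := le_trans (by gcongr) h3
    set p := (r + t) ^ (-μ)
    have hp0 : 0 < p := by positivity
    have hpe : (r + t) ^ (-μ - 1) = p / (r + t) := rpow_sub_one hrt.ne' _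
    rw [hpe]
    rcases (norm_nonneg w).eq_or_lt with hw0 | hw0
    · rw [← hw0]; positivity
    have h6 : s ^ 2 * (r + t) ^ 2 * ‖w‖ ≤ 4 * (2 * C * V * r + B1 * (p * (r + t))) := by
      refine le_of_mul_le_mul_right ?_ hw0
      nlinarith
    have h7 : D * (r / (r + t) ^ 2 + p / (r + t)) =
        4 * (2 * C * V + B1) * (r + p * (r + t)) / (s ^ 2 * (r + t) ^ 2) := by
      rw [hD]; field_simp
    rw [h7, le_div_iff₀ (by positivity)]
    have h8 : 2 * C * V * r + B1 * (p * (r + t)) ≤ (2 * C * V + B1) * (r + p * (r + t)) := by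
      have : 0 ≤ 2 * C * V * (p * (r + t)) := by positivity
      have : 0 ≤ B1 * r := by positivity
      linarith
    linarith
  have hmv := mv_le (f := fun t => dir (x t)) (a := τ1) (b := τ2)
    (g := fun t => D * (-(r * (r + t)⁻¹) - (r + t) ^ (-μ) / μ))
    (g' := fun t => D * (-(r * (-1 / (r + t) ^ 2)) - (1 * (-μ) * (r + t) ^ (-μ - 1)) / μ)) h12
    (fun t ht => h.hasDerivAt_dir (hx t (h0.trans ht.1)))
    (fun t ht => by
      have ht0 := h0.trans ht.1
      have h2 : HasDerivAt (fun t => r + t) 1 t := (hasDerivAt_id t).const_add r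
      have h3 : r + t ≠ 0 := by positivity
      exact ((((h2.fun_inv h3).const_mul r).neg).sub
        ((h2.rpow_const (Or.inl h3)).div_const μ)).const_mul D)
    (fun t ht => by
      refine (hw t (h0.trans ht.1)).trans (le_of_eq ?_)
      field_simp
      ring)
  refine hmv.trans ?_
  have hr2 : 0 < r + τ2 := by linarith
  have p1 : 0 ≤ D * (r * (r + τ2)⁻¹ + (r + τ2) ^ (-μ) / μ) := by positivity
  have p2 : r * (r + τ1)⁻¹ ≤ r / (r + τ1) / μ := by
    rw [← div_eq_mul_inv, le_div_iff₀ hμ]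
    have : 0 ≤ r / (r + τ1) := by positivity
    nlinarith
  have p3 : D * (r * (r + τ1)⁻¹ + (r + τ1) ^ (-μ) / μ) ≤
      D * (r / (r + τ1) / μ + (r + τ1) ^ (-μ) / μ) := by gcongr
  have p4 : D / μ * (r / (r + τ1) + (r + τ1) ^ (-μ)) =
      D * (r / (r + τ1) / μ + (r + τ1) ^ (-μ) / μ) := by ring
  rw [p4]
  linarith

lemma ang_speed_close {r ρ t B2 e s : ℝ} (hs : 0 < s) (hr0 : 0 < r) (hρ0 : 0 < ρ) (ht : 0 ≤ t)
    (hB2 : 0 < B2) (he0 : 0 < e) (hρ2 : ((r + t) / 2) ^ 2 ≤ ρ ^ 2)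
    (ho3 : |ρ ^ 2 - r ^ 2 - t ^ 2| ≤ B2 * e * (r + t) ^ 2) :
    |r / (s * ρ ^ 2) - 1 / (1 + (t / r) ^ 2) * (1 / r) / s| ≤ 8 * B2 / s * (e / r) := by
  have i1 : r / (s * ρ ^ 2) - 1 / (1 + (t / r) ^ 2) * (1 / r) / s =
      (r / (s * ρ ^ 2 * (r ^ 2 + t ^ 2))) * -(ρ ^ 2 - r ^ 2 - t ^ 2) := by
    field_simp; ring
  rw [i1, abs_mul, abs_neg, abs_of_nonneg (by positivity)]
  have i2 : (r + t) ^ 2 * (r + t) ^ 2 ≤ 8 * (ρ ^ 2 * (r ^ 2 + t ^ 2)) := by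
    have : (r + t) ^ 2 ≤ 2 * (r ^ 2 + t ^ 2) := by nlinarith [sq_nonneg (r - t)]
    have : (r + t) ^ 2 * (r + t) ^ 2 ≤ (4 * ρ ^ 2) * (2 * (r ^ 2 + t ^ 2)) := by
      gcongr; linarith
    linarith
  calc _ ≤ (r / (s * ρ ^ 2 * (r ^ 2 + t ^ 2))) * (B2 * e * (r + t) ^ 2) := by gcongr
    _ = r ^ 2 * (r + t) ^ 2 * (B2 * e) / (s * (ρ ^ 2 * (r ^ 2 + t ^ 2)) * r) := by
        field_simp
    _ ≤ 8 * B2 / s * (e / r) := by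
        rw [div_le_iff₀ (by positivity)]
        have i3 : 8 * B2 / s * (e / r) * (s * (ρ ^ 2 * (r ^ 2 + t ^ 2)) * r) =
          8 * (ρ ^ 2 * (r ^ 2 + t ^ 2)) * (B2 * e) := by field_simp
        rw [i3]
        have : r ^ 2 * (r + t) ^ 2 ≤ (r + t) ^ 2 * (r + t) ^ 2 := by gcongr; linarith
        exact mul_le_mul_of_nonneg_right (this.trans i2) (by positivity)

/-- The angular velocity of a geodesic with perihelion `x 0` far out is close to that of the cone. -/
lemma UGeo.angv_close (hG : RMet G c C) (hA : ACon G s μ K R) :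
    ∃ B M : ℝ, 0 < B ∧ 2 * R ≤ M ∧ ∀ x v : ℝ → E, UGeo G x v → M ≤ ‖x 0‖ → ⟪x 0, v 0⟫ = 0 →
      ∀ t, 0 ≤ t → ‖angv (x t) (v t) - (1 / (1 + (t / ‖x 0‖) ^ 2) * (1 / ‖x 0‖) / s) •
        rotJ (dir (x 0)) (dir (v 0)) (dir (x t))‖ ≤ B * ‖x 0‖ ^ (-μ) / ‖x 0‖ := by
  obtain ⟨B, hB, hb⟩ := UGeo.basic hG hA
  obtain ⟨B1, M1, hB1, hM1, hang⟩ := UGeo.out_ang hG hA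
  obtain ⟨B2, M2, hB2, hM2, hout⟩ := UGeo.out_radial hG hA
  have hμ := hA.μ_pos
  have hμ' := hA.μ_le
  have hR1 := hA.one_le_R
  have hs := hA.s_pos
  have hs1 := hA.s_lt
  refine ⟨4 * (B1 + 3 * B) / s ^ 2 + 16 * B2 / s, max M1 M2, by positivity,
    hM1.trans (le_max_left _ _), ?_⟩
  intro x v h hxM hin t ht
  have hxM1 := (le_max_left M1 M2).trans hxM
  have hxM2 := (le_max_right M1 M2).trans hxM
  have hr0 : 0 < ‖x 0‖ := by linarith
  obtain ⟨ho1, -, ho3⟩ := hout x v h hxM2 hin.ge t ht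
  have ha := hang x v h hxM1 hin.ge t ht
  have hx0 : x 0 ≠ 0 := norm_pos_iff.1 hr0
  have hv0 : v 0 ≠ 0 := by
    intro h0; have := h.2; rw [h0] at this; simp at this
  obtain ⟨-, -, -, hb4, hb5⟩ := hb x v h 0 (by linarith)
  rw [hin, mul_zero, zero_mul, sub_zero] at ho3
  rw [hin] at hb5
  set r := ‖x 0‖
  set e := r ^ (-μ) with he
  have he0 : 0 < e := by positivity
  have hxt : x t ≠ 0 := norm_pos_iff.1 (by linarith)
  set ω := dir (x t) with hω
  set w := angv (x t) (v t) with hw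
  set Jω := rotJ (dir (x 0)) (dir (v 0)) ω with hJω
  set ρ := ‖x t‖ with hρ
  have hρ0 : 0 < ρ := by linarith
  have hrt : 0 < r + t := by linarith
  have hρ2 : ((r + t) / 2) ^ 2 ≤ ρ ^ 2 := by gcongr
  have hωn : ‖ω‖ = 1 := norm_dir hxt
  have hJn : ‖Jω‖ ≤ 2 := by
    have := norm_rotJ_le (dir (x 0)) (dir (v 0)) ω
    rwa [norm_dir hx0, norm_dir hv0, hωn, mul_one, mul_one, mul_one] at this
  set l := r / (s * ρ ^ 2) with hl
  set b := w - l • Jω with hbdef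
  have hbo : ⟪ω, b⟫ = 0 := by
    rw [hbdef, inner_sub_right, inner_dir_angv _ hxt, real_inner_smul_right, real_inner_comm,
      rotJ_inner_self]; ring
  have h1 := ha ω b
  rw [rotJ_dir_left hxt hbo, hωn, one_mul] at h1
  have h2 := hb4 ω b
  rw [hωn, one_mul] at h2
  have h3 : ⟪rotJ ω b (x 0), v 0⟫ = r * ‖v 0‖ * ⟪b, Jω⟫ := by
    conv_lhs => rw [← norm_smul_dir hx0, ← norm_smul_dir hv0]
    rw [rotJ_smul, real_inner_smul_left, real_inner_smul_right, hJω]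
    simp only [rotJ, inner_sub_left, inner_sub_right, real_inner_smul_left, real_inner_smul_right]
    rw [real_inner_comm ω, real_inner_comm ω (dir (v 0))]
    ring
  have h4 : |1 - s * ‖v 0‖| ≤ B * e := by
    have hp : 0 ≤ s * ‖v 0‖ := by positivity
    have i1 : |1 - s * ‖v 0‖| ≤ |1 - s * ‖v 0‖| * (1 + s * ‖v 0‖) :=
      le_mul_of_one_le_right (abs_nonneg _) (by linarith)
    have i2 : |1 - s * ‖v 0‖| * (1 + s * ‖v 0‖) = |1 - s ^ 2 * ‖v 0‖ ^ 2| := by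
      rw [← abs_of_nonneg (by linarith : 0 ≤ 1 + s * ‖v 0‖), ← abs_mul]; congr 1
      ring
    have i3 : 1 - ((1 - s ^ 2) * ((0:ℝ) ^ 2 / r ^ 2) + s ^ 2 * ‖v 0‖ ^ 2) = 1 - s ^ 2 * ‖v 0‖ ^ 2 := by
      ring
    rw [i3] at hb5
    linarith
  have h5 : |⟪b, Jω⟫| ≤ ‖b‖ * 2 := (abs_real_inner_le_norm _ _).trans (by gcongr)
  have hpe : (r + t) ^ (-μ) ≤ e := rpow_le_rpow_of_nonpos hr0 (by linarith) (by linarith)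
  have h6 : |s ^ 2 * (ρ ^ 2 * ⟪b, w⟫) - s * r * ⟪b, Jω⟫| ≤ (B1 + 3 * B) * e * (r + t) * ‖b‖ := by
    have j1 : B1 * ((r + t) ^ (-μ) * (r + t)) * ‖b‖ ≤ B1 * (e * (r + t)) * ‖b‖ := by gcongr
    have j2 : B * e * r * ‖b‖ ≤ B * e * (r + t) * ‖b‖ := by gcongr; linarith
    have j3 : |s * r * ((1 - s * ‖v 0‖) * ⟪b, Jω⟫)| ≤ 1 * (r + t) * (B * e * (‖b‖ * 2)) := by
      rw [abs_mul, abs_mul (1 - _), abs_of_nonneg (by positivity)]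
      have : s * r ≤ 1 * (r + t) := by nlinarith
      gcongr
    rw [h3] at h2
    have k1 := abs_le.1 (h1.trans j1)
    have k2 := abs_le.1 (h2.trans j2)
    have k3 := abs_le.1 j3
    rw [abs_le]
    constructor <;> linarith
  have h7 : s ^ 2 * (ρ ^ 2 * ⟪b, w⟫) - s * r * ⟪b, Jω⟫ = s ^ 2 * ρ ^ 2 * ‖b‖ ^ 2 := by
    have hbb : ⟪b, w - l • Jω⟫ = ⟪b, w⟫ - l * ⟪b, Jω⟫ := by
      rw [inner_sub_right, real_inner_smul_right]
    rw [← hbdef, real_inner_self_eq_norm_sq] at hbb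
    rw [hbb, hl]
    field_simp
  rw [h7, abs_of_nonneg (by positivity)] at h6
  have h8 : ‖b‖ ≤ 4 * (B1 + 3 * B) / s ^ 2 * (e / r) := by
    rcases (norm_nonneg b).eq_or_lt with hb0 | hb0
    · rw [← hb0]; positivity
    have i1 : s ^ 2 * ρ ^ 2 * ‖b‖ ≤ (B1 + 3 * B) * e * (r + t) := by
      refine le_of_mul_le_mul_right ?_ hb0
      linarith
    have i2 : s ^ 2 * ((r + t) / 2) ^ 2 * ‖b‖ ≤ (B1 + 3 * B) * e * (r + t) :=
      le_trans (by gcongr) i1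
    have i3 : s ^ 2 * (r + t) * ‖b‖ ≤ 4 * ((B1 + 3 * B) * e) := by
      refine le_of_mul_le_mul_right ?_ hrt
      linarith
    have i4 : s ^ 2 * r * ‖b‖ ≤ s ^ 2 * (r + t) * ‖b‖ := by gcongr; linarith
    have i5 : 4 * (B1 + 3 * B) / s ^ 2 * (e / r) = 4 * ((B1 + 3 * B) * e) / (s ^ 2 * r) := by
      field_simp
    rw [i5, le_div_iff₀ (by positivity)]
    linarith
  have h9 : |l - 1 / (1 + (t / r) ^ 2) * (1 / r) / s| ≤ 8 * B2 / s * (e / r) :=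
    ang_speed_close hs hr0 hρ0 ht hB2 he0 hρ2 ho3
  have h10 : w - (1 / (1 + (t / r) ^ 2) * (1 / r) / s) • Jω =
      b + (l - 1 / (1 + (t / r) ^ 2) * (1 / r) / s) • Jω := by
    rw [hbdef, sub_smul]; abel
  rw [h10]
  refine (norm_add_le _ _).trans ?_
  rw [norm_smul, norm_eq_abs]
  have h11 : |l - 1 / (1 + (t / r) ^ 2) * (1 / r) / s| * ‖Jω‖ ≤ 8 * B2 / s * (e / r) * 2 := by gcongr
  calc _ ≤ 4 * (B1 + 3 * B) / s ^ 2 * (e / r) + 8 * B2 / s * (e / r) * 2 := by linarith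
    _ = _ := by ring

/-- Comparison of the direction with the model solution in the cone. -/
lemma UGeo.dir_close (hG : RMet G c C) (hA : ACon G s μ K R) :
    ∃ B M : ℝ, 0 < B ∧ 2 * R ≤ M ∧ ∀ x v : ℝ → E, UGeo G x v → M ≤ ‖x 0‖ → ⟪x 0, v 0⟫ = 0 →
      ∀ τ, 0 ≤ τ → |⟪dir (x 0), dir (x τ)⟫ - cos (arctan (τ / ‖x 0‖) / s)| ≤
        B * ‖x 0‖ ^ (-μ) * (τ / ‖x 0‖) := by
  obtain ⟨B, M1, hB, hM1, hw⟩ := UGeo.angv_close hG hA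
  obtain ⟨B2, M2, hB2, hM2, hout⟩ := UGeo.out_radial hG hA
  have hR1 := hA.one_le_R
  refine ⟨4 * B, max M1 M2, by positivity, hM1.trans (le_max_left _ _), ?_⟩
  intro x v h hxM hin τ hτ
  have hxM1 := (le_max_left M1 M2).trans hxM
  have hxM2 := (le_max_right M1 M2).trans hxM
  have hr0 : 0 < ‖x 0‖ := by linarith
  have ho := hout x v h hxM2 hin.ge
  have hw' := hw x v h hxM1 hin
  have hx0 : x 0 ≠ 0 := norm_pos_iff.1 hr0
  have hv0 : v 0 ≠ 0 := by
    intro h0; have := h.2; rw [h0] at this; simp at this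
  set r := ‖x 0‖
  set e1 := dir (x 0) with he1
  set e2 := dir (v 0) with he2
  have hn1 : ‖e1‖ = 1 := norm_dir hx0
  have hn2 : ‖e2‖ = 1 := norm_dir hv0
  have h12 : ⟪e1, e2⟫ = 0 := by
    rw [he1, he2, dir, dir, real_inner_smul_left, real_inner_smul_right, hin]; ring
  have hx t : 0 ≤ t → x t ≠ 0 := fun ht => norm_pos_iff.1 (by linarith [(ho t ht).1])
  set θ : ℝ → ℝ := fun t => arctan (t / r) / s with hθ
  set θ' : ℝ → ℝ := fun t => 1 / (1 + (t / r) ^ 2) * (1 / r) / s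
  have hθd t : HasDerivAt θ (θ' t) t :=
    (((hasDerivAt_id t).div_const r).arctan).div_const s
  set err : ℝ → E := fun t => angv (x t) (v t) - θ' t • rotJ e1 e2 (dir (x t)) with herr
  set δ := B * r ^ (-μ) / r with hδ
  have herrn : ∀ t, 0 ≤ t → ‖err t‖ ≤ δ := hw'
  have hd (u : E) t (ht : 0 ≤ t) :
      HasDerivAt (fun t => ⟪u, dir (x t)⟫) ⟪u, angv (x t) (v t)⟫ t := by
    simpa using (hasDerivAt_const t u).inner ℝ (h.hasDerivAt_dir (hx t ht))
  have hav u t : ⟪u, angv (x t) (v t)⟫ = ⟪u, err t⟫ + θ' t * ⟪u, rotJ e1 e2 (dir (x t))⟫ := by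
    simp only [herr, inner_sub_right, real_inner_smul_right]; ring
  have hJ1 z : ⟪e1, rotJ e1 e2 z⟫ = -⟪e2, z⟫ := by
    rw [rotJ, inner_sub_right, real_inner_smul_right,
      real_inner_smul_right, h12, real_inner_self_eq_norm_sq, hn1]
    ring
  have hJ2 z : ⟪e2, rotJ e1 e2 z⟫ = ⟪e1, z⟫ := by
    rw [rotJ, inner_sub_right, real_inner_smul_right,
      real_inner_smul_right, real_inner_comm e1 e2, h12, real_inner_self_eq_norm_sq, hn2]
    ring
  have hw1 t : ⟪e1, angv (x t) (v t)⟫ = ⟪e1, err t⟫ - θ' t * ⟪e2, dir (x t)⟫ := by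
    rw [hav e1 t, hJ1]; ring
  have hw2 t : ⟪e2, angv (x t) (v t)⟫ = ⟪e2, err t⟫ + θ' t * ⟪e1, dir (x t)⟫ := by
    rw [hav e2 t, hJ2]
  have habs : ∀ u : E, ‖u‖ = 1 → ∀ t, 0 ≤ t → |⟪u, err t⟫| ≤ δ := fun u hu t ht => by
    refine (abs_real_inner_le_norm _ _).trans ?_
    rw [hu, one_mul]; exact herrn t ht
  have hcs : ∀ p q φ : ℝ, |p| ≤ δ → |q| ≤ δ → |p * cos φ + q * sin φ| ≤ 2 * δ := by
    intro p q φ hp hq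
    refine (abs_add_le _ _).trans ?_
    rw [abs_mul, abs_mul]
    have h1 := abs_cos_le_one φ
    have h2 := abs_sin_le_one φ
    have := abs_nonneg p
    have := abs_nonneg q
    nlinarith
  have hA1 := mv_const (f := fun t => ⟪e1, dir (x t)⟫ * cos (θ t) + ⟪e2, dir (x t)⟫ * sin (θ t))
    (f' := fun t => (⟪e1, angv (x t) (v t)⟫ * cos (θ t) + ⟪e1, dir (x t)⟫ * (-sin (θ t) * θ' t)) +
      (⟪e2, angv (x t) (v t)⟫ * sin (θ t) + ⟪e2, dir (x t)⟫ * (cos (θ t) * θ' t))) (M := 2 * δ) hτ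
    (fun t ht => ((hd e1 t ht.1).mul (hθd t).cos).add ((hd e2 t ht.1).mul (hθd t).sin))
    (fun t ht => by
      rw [hw1, hw2, norm_eq_abs]
      have := hcs _ _ (θ t) (habs e1 hn1 t ht.1) (habs e2 hn2 t ht.1)
      convert this using 2
      ring)
  have hA2 := mv_const (f := fun t => ⟪e2, dir (x t)⟫ * cos (θ t) - ⟪e1, dir (x t)⟫ * sin (θ t))
    (f' := fun t => (⟪e2, angv (x t) (v t)⟫ * cos (θ t) + ⟪e2, dir (x t)⟫ * (-sin (θ t) * θ' t)) -
      (⟪e1, angv (x t) (v t)⟫ * sin (θ t) + ⟪e1, dir (x t)⟫ * (cos (θ t) * θ' t))) (M := 2 * δ) hτ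
    (fun t ht => ((hd e2 t ht.1).mul (hθd t).cos).sub ((hd e1 t ht.1).mul (hθd t).sin))
    (fun t ht => by
      rw [hw1, hw2, norm_eq_abs]
      have := hcs _ (-⟪e1, err t⟫) (θ t) (habs e2 hn2 t ht.1)
        (by rw [abs_neg]; exact habs e1 hn1 t ht.1)
      convert this using 2
      ring)
  have hθ0 : θ 0 = 0 := by simp [hθ]
  have hi1 : ⟪e1, dir (x 0)⟫ = 1 := by rw [← he1, real_inner_self_eq_norm_sq, hn1]; norm_num
  have hi2 : ⟪e2, dir (x 0)⟫ = 0 := by rw [← he1, real_inner_comm, h12]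
  simp only [hθ0, hi1, hi2, Real.cos_zero, Real.sin_zero, mul_one, mul_zero, add_zero, sub_zero,
    norm_eq_abs] at hA1 hA2
  set ω1 := ⟪e1, dir (x τ)⟫
  set ω2 := ⟪e2, dir (x τ)⟫
  have hfin : ω1 - cos (θ τ) = (ω1 * cos (θ τ) + ω2 * sin (θ τ) - 1) * cos (θ τ) -
      (ω2 * cos (θ τ) - ω1 * sin (θ τ)) * sin (θ τ) := by
    have := Real.sin_sq_add_cos_sq (θ τ)
    linear_combination (-ω1) * this
  change |ω1 - cos (θ τ)| ≤ _
  rw [hfin]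
  refine (abs_sub _ _).trans ?_
  rw [abs_mul, abs_mul]
  have k1 : |ω1 * cos (θ τ) + ω2 * sin (θ τ) - 1| * |cos (θ τ)| ≤ 2 * δ * τ * 1 := by
    exact mul_le_mul hA1 (abs_cos_le_one _) (abs_nonneg _) ((abs_nonneg _).trans hA1)
  have k2 : |ω2 * cos (θ τ) - ω1 * sin (θ τ)| * |sin (θ τ)| ≤ 2 * δ * τ * 1 := by
    exact mul_le_mul hA2 (abs_sin_le_one _) (abs_nonneg _) ((abs_nonneg _).trans hA2)
  have k3 : 4 * B * r ^ (-μ) * (τ / r) = 4 * δ * τ := by rw [hδ]; ring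
  rw [k3]
  linarith

/-- A geodesic with perihelion `x 0` far out turns, along a branch that is long compared with the
perihelion distance, by an angle close to `π / (2 s)`. -/
lemma UGeo.turn (hG : RMet G c C) (hA : ACon G s μ K R) {ε : ℝ} (hε : 0 < ε) :
    ∃ S M : ℝ, 0 < S ∧ 2 * R ≤ M ∧ ∀ x v : ℝ → E, UGeo G x v → M ≤ ‖x 0‖ → ⟪x 0, v 0⟫ = 0 →
      ∀ τ, S * ‖x 0‖ ≤ τ → |⟪dir (x 0), dir (x τ)⟫ - cos (π / 2 / s)| ≤ ε := by
  obtain ⟨B1, M1, hB1, hM1, h1⟩ := UGeo.out_dir hG hA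
  obtain ⟨B2, M2, hB2, hM2, h2⟩ := UGeo.dir_close hG hA
  have hμ := hA.μ_pos
  have hR1 := hA.one_le_R
  have hlim : Tendsto (fun S => cos (arctan S / s)) atTop (nhds (cos (π / 2 / s))) := by
    refine (Real.continuous_cos.tendsto _).comp ?_
    exact ((tendsto_nhds_of_tendsto_nhdsWithin tendsto_arctan_atTop)).div_const s
  have hev := (Metric.tendsto_nhds.1 hlim (ε / 4) (by positivity)).and
    (eventually_ge_atTop (max 1 (4 * B1 / ε)))
  obtain ⟨S, hS1, hS2⟩ := hev.exists
  have hS3 : 1 ≤ S := (le_max_left _ _).trans hS2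
  have hS4 : 4 * B1 / ε ≤ S := (le_max_right _ _).trans hS2
  obtain ⟨M3, hM3, -, h3⟩ := exists_rpow_small hμ B1 R (η := ε / 4) (by positivity)
  obtain ⟨M₄, hM₄, -, h4⟩ := exists_rpow_small hμ (B2 * S) R (η := ε / 4) (by positivity)
  refine ⟨S, max (max M1 M2) (max M3 M₄), by linarith,
    hM1.trans ((le_max_left _ _).trans (le_max_left _ _)), ?_⟩
  intro x v h hx hin τ hτ
  simp only [max_le_iff] at hx
  obtain ⟨⟨hx1, hx2⟩, hx3, hx4⟩ := hx
  have hm0 : 0 < ‖x 0‖ := by linarith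
  have hSm : 0 ≤ S * ‖x 0‖ := by positivity
  have k1 := h1 x v h hx1 hin.ge (S * ‖x 0‖) τ hSm hτ
  have k2 := h2 x v h hx2 hin (S * ‖x 0‖) hSm
  rw [mul_div_assoc, div_self hm0.ne', mul_one] at k2
  have k3 := h3 _ hx3
  have k4 := h4 _ hx4
  have hx0 : x 0 ≠ 0 := norm_pos_iff.1 hm0
  have k5 : |⟪dir (x 0), dir (x τ)⟫ - ⟪dir (x 0), dir (x (S * ‖x 0‖))⟫| ≤
      ‖dir (x τ) - dir (x (S * ‖x 0‖))‖ := by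
    rw [← inner_sub_right]
    refine (abs_real_inner_le_norm _ _).trans ?_
    rw [norm_dir hx0, one_mul]
  have k6 : B1 * (‖x 0‖ / (‖x 0‖ + S * ‖x 0‖)) ≤ ε / 4 := by
    have : ‖x 0‖ / (‖x 0‖ + S * ‖x 0‖) = 1 / (1 + S) := by field_simp
    rw [this, mul_one_div, div_le_iff₀ (by linarith)]
    rw [div_le_iff₀ hε] at hS4
    nlinarith
  have k7 : B1 * (‖x 0‖ + S * ‖x 0‖) ^ (-μ) ≤ ε / 4 := by
    refine le_trans ?_ k3
    exact mul_le_mul_of_nonneg_left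
      (rpow_le_rpow_of_nonpos hm0 (by linarith) (by linarith)) hB1.le
  rw [Real.dist_eq] at hS1
  have k8 : B2 * ‖x 0‖ ^ (-μ) * S ≤ ε / 4 := by linarith
  rw [mul_add] at k1
  have a1 := abs_le.1 (k5.trans k1)
  have a2 := abs_le.1 k2
  have a3 := abs_lt.1 hS1
  rw [abs_le]
  constructor <;> linarith [a1.1, a1.2, a2.1, a2.2, a3.1, a3.2]

/-- First-order condition at a minimum over an interval. -/
lemma min_Icc_deriv {f : ℝ → ℝ} {f' L t : ℝ} (hmin : IsMinOn f (Icc 0 L) t)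
    (ht : t ∈ Icc 0 L) (hf : HasDerivAt f f' t) : 0 ≤ f' * (L - t) ∧ f' * t ≤ 0 := by
  have key u (hu : u ∈ Icc 0 L) : 0 ≤ f' * (u - t) := by
    have h1 : IsLocalMinOn f (Icc 0 L) t := hmin.localize
    have := h1.hasFDerivWithinAt_nonneg hf.hasFDerivAt.hasFDerivWithinAt
      (y := u - t) (sub_mem_posTangentConeAt_of_segment_subset
        ((convex_Icc 0 L).segment_subset ht hu))
    simpa [mul_comm] using this
  have hL : 0 ≤ L := ht.1.trans ht.2
  refine ⟨key L ⟨hL, le_rfl⟩, ?_⟩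
  have := key 0 ⟨le_rfl, hL⟩
  linarith

set_option maxHeartbeats 2000000 in
/-- A long geodesic between far antipodal points visits a fixed ball: otherwise it stays in the
nearly conical region, where the total turning angle is close to `π / s`, incompatible with
antipodal ends because `cos (π / (2 s)) ≠ 0`. -/
lemma UGeo.visits (hG : RMet G c C) (hA : ACon G s μ K R) (hcos : cos (π / 2 / s) ≠ 0) :
    ∃ R2 ε : ℝ, 0 < ε ∧ 1 ≤ R2 ∧ ∀ x v : ℝ → E, UGeo G x v → ∀ a : E, ‖a‖ = 1 → ∀ r L : ℝ,
      R2 ≤ r → x 0 = r • a → x L = -(r • a) → 2 * r * (1 - ε) ≤ L →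
      ∃ t ∈ Icc 0 L, ‖x t‖ ≤ R2 := by
  set c0 := |cos (π / 2 / s)| with hc0
  have hc₀p : 0 < c0 := abs_pos.2 hcos
  obtain ⟨S, M1, hS, hM1, hturn⟩ := UGeo.turn hG hA (ε := c0 / 2) (by positivity)
  obtain ⟨B, M2, hB, hM2, hout⟩ := UGeo.out_radial hG hA
  have hμ := hA.μ_pos
  have hR1 := hA.one_le_R
  set ε : ℝ := min (1 / 8) ((1 / (2 * S)) ^ 2 / 16)
  have hε0 : 0 < ε := by positivity
  have hε1 : ε ≤ 1 / 8 := min_le_left _ _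
  have hε2 : ε ≤ (1 / (2 * S)) ^ 2 / 16 := min_le_right _ _
  obtain ⟨M3, hM3, -, h3⟩ := exists_rpow_small hμ B R ε hε0
  refine ⟨max (max M1 M2) M3, ε, hε0,
    (by linarith : (1:ℝ) ≤ M1).trans ((le_max_left _ _).trans (le_max_left _ _)), ?_⟩
  intro x v h a ha r L hr hx0 hxL hL
  by_contra! hcon
  simp only [max_le_iff] at hr
  obtain ⟨⟨hr1, hr2⟩, hr3⟩ := hr
  have hr0 : 0 < r := by linarith
  have hL0 : 0 < L := by nlinarith
  have hrn : ‖r • a‖ = r := by rw [norm_smul, ha, mul_one, norm_of_nonneg hr0.le]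
  have hcontx : Continuous x := h.1.continuous_x
  obtain ⟨t, ht, hmin⟩ := isCompact_Icc.exists_isMinOn (nonempty_Icc.2 hL0.le)
    ((hcontx.norm.pow 2).continuousOn (s := Icc 0 L))
  have hm := hcon t ht
  simp only [max_lt_iff] at hm
  obtain ⟨⟨hm1, hm2⟩, hm3⟩ := hm
  have hd : HasDerivAt (fun t => ‖x t‖ ^ 2) (2 * ⟪x t, v t⟫) t := (h.1 t).1.norm_sq
  obtain ⟨d1, d2⟩ := min_Icc_deriv hmin ht hd
  have hp := h.shift hG t
  have hn := h.reverse hG t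
  have hmr : ‖x t‖ ≤ r := by
    have := hmin (⟨le_rfl, hL0.le⟩ : (0:ℝ) ∈ Icc 0 L)
    have : ‖x t‖ ^ 2 ≤ ‖x 0‖ ^ 2 := this
    rw [hx0, hrn] at this
    exact le_of_sq_le_sq this hr0.le
  -- the minimum is not attained at an end point
  have ht0 : t ≠ 0 := by
    rintro rfl
    have h0 : 0 ≤ ⟪x 0, v 0⟫ := by
      rw [sub_zero] at d1
      by_contra! hneg
      nlinarith
    have := (hout x v h hm2.le h0 L hL0.le).1
    rw [hxL, norm_neg, hrn, hx0, hrn] at this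
    nlinarith
  have htL : t ≠ L := by
    rintro rfl
    have h0 : 0 ≤ ⟪x t, -v t⟫ := by
      rw [inner_neg_right]
      by_contra! hneg
      nlinarith
    have := (hout _ _ hn (by simpa using hm2.le) (by simpa using h0) t hL0.le).1
    simp only [sub_self, sub_zero] at this
    rw [hx0, hrn, hxL, norm_neg, hrn] at this
    nlinarith
  have htp : 0 < t := lt_of_le_of_ne ht.1 (Ne.symm ht0)
  have htq : 0 < L - t := sub_pos.2 (lt_of_le_of_ne ht.2 htL)
  have hin : ⟪x t, v t⟫ = 0 := by
    refine le_antisymm ?_ ?_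
    · by_contra! hneg; nlinarith [mul_pos hneg htp]
    · by_contra! hneg; nlinarith [mul_pos (neg_pos.2 hneg) htq]
  set m := ‖x t‖ with hmdef
  have hm0 : 0 < m := by linarith
  have hη := h3 m hm3.le
  have rad (y w : ℝ → E) (hy : UGeo G y w) (hy0 : ‖y 0‖ = m) (hyin : ⟪y 0, w 0⟫ = 0) τ (hτ : 0 ≤ τ) (hyr : ‖y τ‖ = r) :
      |r ^ 2 - m ^ 2 - τ ^ 2| ≤ ε * (4 * r ^ 2) := by
    obtain ⟨o1, -, o3⟩ := hout y w hy (by rw [hy0]; exact hm2.le) hyin.ge τ hτ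
    rw [hyin, hyr, hy0, mul_zero, zero_mul, sub_zero] at o3
    rw [hyr, hy0] at o1
    refine o3.trans ?_
    have : (m + τ) ^ 2 ≤ (2 * r) ^ 2 := by gcongr; linarith
    calc _ ≤ ε * (m + τ) ^ 2 := mul_le_mul_of_nonneg_right hη (sq_nonneg _)
      _ ≤ ε * (2 * r) ^ 2 := mul_le_mul_of_nonneg_left this hε0.le
      _ = _ := by ring
  have hy1 : x (L - t + t) = x L := by congr 1; ring
  have r1 := rad _ _ hp (by simp [hmdef]) (by simpa using hin) (L - t) htq.le
    (by simp only [hy1]; rw [hxL, norm_neg, hrn])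
  have r2 := rad _ _ hn (by simp [hmdef]) (by simpa using hin) t htp.le
    (by simp only [sub_self]; rw [hx0, hrn])
  have a1 := abs_le.1 r1
  have a2 := abs_le.1 r2
  -- each branch has length at most `r (1 + 2 ε)`, hence at least `r (1 - 4 ε)`
  have up (τ : ℝ) (hτ : 0 < τ) (h : τ ^ 2 ≤ r ^ 2 * (1 + 4 * ε)) : τ ≤ r * (1 + 2 * ε) := by
    refine le_of_sq_le_sq (h.trans ?_) (by positivity)
    have : 0 ≤ (r * ε) ^ 2 := sq_nonneg _
    nlinarith
  have u1 := up _ htq (by nlinarith [sq_nonneg m])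
  have u2 := up _ htp (by nlinarith [sq_nonneg m])
  have lo (τ : ℝ) (hτ : r * (1 - 4 * ε) ≤ τ) (h : ε * (4 * r ^ 2) ≥ -(r ^ 2 - m ^ 2 - τ ^ 2)) :
      S * m ≤ τ := by
    have l1 : r / 2 ≤ τ := by nlinarith
    have l2 : (r * (1 - 4 * ε)) ^ 2 ≤ τ ^ 2 := by
      have : 0 ≤ r * (1 - 4 * ε) := mul_nonneg hr0.le (by linarith)
      gcongr
    have l3 : m ^ 2 ≤ r ^ 2 * (12 * ε) := by nlinarith [sq_nonneg (r * ε)]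
    have l4 : m ^ 2 ≤ (r * (1 / (2 * S))) ^ 2 := by
      rw [mul_pow]
      refine l3.trans (mul_le_mul_of_nonneg_left ?_ (sq_nonneg _))
      have : 0 ≤ (1 / (2 * S)) ^ 2 := sq_nonneg _
      linarith
    have l5 : m ≤ r * (1 / (2 * S)) := le_of_sq_le_sq l4 (by positivity)
    have l6 : S * m ≤ S * (r * (1 / (2 * S))) := mul_le_mul_of_nonneg_left l5 hS.le
    have l7 : S * (r * (1 / (2 * S))) = r / 2 := by field_simp
    linarith
  have v1 := lo (L - t) (by linarith) (by linarith [a1.1])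
  have v2 := lo t (by linarith) (by linarith [a2.1])
  have q1 := hturn _ _ hp (by simpa using hm1.le) (by simpa using hin) (L - t) (by simpa using v1)
  have q2 := hturn _ _ hn (by simpa using hm1.le) (by simpa using hin) t (by simpa using v2)
  simp only [zero_add, sub_zero, sub_self, hy1] at q1 q2
  have hneg : dir (x L) = -dir (x 0) := by
    rw [hxL, hx0, dir, dir, norm_neg, smul_neg]
  rw [hneg, inner_neg_right] at q1
  have b1 := abs_le.1 q1
  have b2 := abs_le.1 q2
  have : c0 ≤ c0 / 2 := by
    rw [hc0, abs_le]
    constructor <;> linarith [b1.1, b1.2, b2.1, b2.2]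
  linarith

lemma bdd_on_compact {X Y : Type*} [TopologicalSpace X] [NormedAddCommGroup Y] {f : X → Y}
    {S : Set X} (hS : IsCompact S) (hf : ContinuousOn f S) : ∃ B, 0 ≤ B ∧ ∀ x ∈ S, ‖f x‖ ≤ B := by
  obtain ⟨B, hB⟩ := hS.exists_bound_of_continuousOn hf
  exact ⟨max B 0, le_max_right _ _, fun x hx => (hB x hx).trans (le_max_left _ _)⟩

/-- A `C²` function on `E \ {0}`, homogeneous of degree `0`, is bounded with its derivatives of
order at most `2` outside the unit ball. -/
lemma homog_bound {f : E → ℝ} (hf : ∀ x, x ≠ 0 → ContDiffAt ℝ 2 f x)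
    (hh : ∀ l : ℝ, 0 < l → ∀ x, f (l • x) = f x) :
    ∃ B, ∀ x, 1 ≤ ‖x‖ → ‖f x‖ ≤ B ∧ ‖fderiv ℝ f x‖ ≤ B ∧ ‖fderiv ℝ (fderiv ℝ f) x‖ ≤ B := by
  have hS : IsCompact (sphere (0 : E) 1) := isCompact_sphere 0 1
  have hne x (hx : x ∈ sphere (0 : E) 1) : x ≠ 0 := by
    intro h; rw [h] at hx; simp at hx
  have h1 x : x ≠ 0 → ContDiffAt ℝ 1 (fderiv ℝ f) x := fun hx =>
    (hf x hx).fderiv_right (by norm_num)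
  have h2 x : x ≠ 0 → ContDiffAt ℝ 0 (fderiv ℝ (fderiv ℝ f)) x := fun hx =>
    (h1 x hx).fderiv_right (by norm_num)
  obtain ⟨B0, p0, hB0⟩ := bdd_on_compact hS (f := f)
    (fun x hx => (hf x (hne x hx)).continuousAt.continuousWithinAt)
  obtain ⟨B1, p1, hB1⟩ := bdd_on_compact hS (f := fderiv ℝ f)
    (fun x hx => (h1 x (hne x hx)).continuousAt.continuousWithinAt)
  obtain ⟨B2, p2, hB2⟩ := bdd_on_compact hS (f := fderiv ℝ (fderiv ℝ f))
    (fun x hx => (h2 x (hne x hx)).continuousAt.continuousWithinAt)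
  refine ⟨B0 + B1 + B2, fun x hx => ?_⟩
  set l := ‖x‖ with hl
  have hl0 : 0 < l := by linarith
  set u := l⁻¹ • x with hu
  have hxu : x = l • u := by rw [hu, smul_smul, mul_inv_cancel₀ hl0.ne', one_smul]
  have huS : u ∈ sphere (0 : E) 1 := by
    rw [mem_sphere_zero_iff_norm, hu, norm_smul, norm_inv, norm_of_nonneg hl0.le, ← hl]
    exact inv_mul_cancel₀ hl0.ne'
  have hd y : fderiv ℝ f (l • y) = l⁻¹ • fderiv ℝ f y := by
    have := fderiv_comp_smul (f := f) (x := y) l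
    simp only [hh l hl0] at this
    rw [this, smul_smul, inv_mul_cancel₀ hl0.ne', one_smul]
  have hd2 : fderiv ℝ (fderiv ℝ f) (l • u) = l⁻¹ • l⁻¹ • fderiv ℝ (fderiv ℝ f) u := by
    have := fderiv_comp_smul (f := fderiv ℝ f) (x := u) l
    simp only [hd] at this
    rw [fderiv_fun_const_smul ((h1 u (hne u huS)).differentiableAt one_ne_zero)] at this
    rw [this]
    exact (inv_smul_smul₀ hl0.ne' _).symm
  have hli : ‖l⁻¹‖ ≤ 1 := by
    rw [norm_inv, norm_of_nonneg hl0.le]; exact inv_le_one_of_one_le₀ hx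
  have key : ∀ {Y : Type _} [NormedAddCommGroup Y] [NormedSpace ℝ Y] (z : Y), ‖l⁻¹ • z‖ ≤ ‖z‖ := by
    intro Y _ _ z
    rw [norm_smul]; exact mul_le_of_le_one_left (norm_nonneg _) hli
  refine ⟨?_, ?_, ?_⟩
  · rw [hxu, hh l hl0]; linarith [hB0 u huS]
  · rw [hxu, hd]; linarith [hB1 u huS, key (fderiv ℝ f u)]
  · rw [hxu, hd2]
    linarith [hB2 u huS, key (fderiv ℝ (fderiv ℝ f) u), key (l⁻¹ • fderiv ℝ (fderiv ℝ f) u)]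

/-- A `C²` function that differs by a bounded `C²` amount from a homogeneous one is bounded with its
derivatives of order at most `2`. -/
lemma global_bound {f fc : E → ℝ} (hf : ContDiff ℝ 2 f) (hfc : ∀ x, x ≠ 0 → ContDiffAt ℝ 2 fc x)
    (hh : ∀ l : ℝ, 0 < l → ∀ x, fc (l • x) = fc x) {C R : ℝ}
    (hd : ∀ x : E, R ≤ ‖x‖ → ∀ k : ℕ, k ≤ 2 → ‖iteratedFDeriv ℝ k (fun y => f y - fc y) x‖ ≤ C) :
    ∃ B, 0 ≤ B ∧
      ∀ x, ‖f x‖ ≤ B ∧ ‖fderiv ℝ f x‖ ≤ B ∧ ‖fderiv ℝ (fderiv ℝ f) x‖ ≤ B := by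
  obtain ⟨B, hB⟩ := homog_bound hfc hh
  have h1 : ContDiff ℝ 1 (fderiv ℝ f) := hf.fderiv_right (by norm_num)
  have h2 : ContDiff ℝ 0 (fderiv ℝ (fderiv ℝ f)) := h1.fderiv_right (by norm_num)
  have hS : IsCompact (closedBall (0 : E) (max R 1)) := isCompact_closedBall 0 _
  obtain ⟨B0, p0, hB0⟩ := bdd_on_compact hS hf.continuous.continuousOn
  obtain ⟨B1, p1, hB1⟩ := bdd_on_compact hS h1.continuous.continuousOn
  obtain ⟨B2, p2, hB2⟩ := bdd_on_compact hS h2.continuous.continuousOn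
  refine ⟨B0 + B1 + B2 + |C| + |B|, by positivity, fun x => ?_⟩
  have hB' := le_abs_self B
  have hC' := le_abs_self C
  have nB := abs_nonneg B
  have nC := abs_nonneg C
  rcases le_total ‖x‖ (max R 1) with hx | hx
  · have hx' : x ∈ closedBall (0 : E) (max R 1) := by simpa using hx
    exact ⟨by linarith [hB0 x hx'], by linarith [hB1 x hx'], by linarith [hB2 x hx']⟩
  have hxR := (le_max_left _ _).trans hx
  have hx1 := (le_max_right _ _).trans hx
  have hx0 : x ≠ 0 := by
    rintro rfl; simp at hx1; linarith
  obtain ⟨b0, b1, b2⟩ := hB x hx1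
  set A : E → ℝ := fun y => f y - fc y with hA
  have d0 := hd x hxR 0 (by norm_num)
  have d1 := hd x hxR 1 (by norm_num)
  have d2 := hd x hxR 2 le_rfl
  rw [norm_iteratedFDeriv_zero] at d0
  rw [norm_iteratedFDeriv_one] at d1
  rw [show (2 : ℕ) = 1 + 1 from rfl, ← norm_iteratedFDeriv_fderiv, norm_iteratedFDeriv_one] at d2
  have hAc y : y ≠ 0 → ContDiffAt ℝ 2 A y := fun hy => hf.contDiffAt.sub (hfc y hy)
  have e1 y (hy : y ≠ 0) : fderiv ℝ f y = fderiv ℝ A y + fderiv ℝ fc y := by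
    rw [← fderiv_fun_add ((hAc y hy).differentiableAt two_ne_zero)
      ((hfc y hy).differentiableAt two_ne_zero)]
    simp [hA]
  have e2 : fderiv ℝ (fderiv ℝ f) x = fderiv ℝ (fderiv ℝ A) x + fderiv ℝ (fderiv ℝ fc) x := by
    have : fderiv ℝ f =ᶠ[nhds x] fun y => fderiv ℝ A y + fderiv ℝ fc y := by
      filter_upwards [isOpen_ne.mem_nhds hx0] with y hy using e1 y hy
    rw [this.fderiv_eq, fderiv_fun_add]
    · exact ((hAc x hx0).fderiv_right (m := 1) (by norm_num)).differentiableAt one_ne_zero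
    · exact ((hfc x hx0).fderiv_right (m := 1) (by norm_num)).differentiableAt one_ne_zero
  refine ⟨?_, ?_, ?_⟩
  · have : f x = A x + fc x := by simp [hA]
    rw [this]
    linarith [norm_add_le (A x) (fc x)]
  · rw [e1 x hx0]
    linarith [norm_add_le (fderiv ℝ A x) (fderiv ℝ fc x)]
  · rw [e2]
    linarith [norm_add_le (fderiv ℝ (fderiv ℝ A) x) (fderiv ℝ (fderiv ℝ fc) x)]

/-! ### Asymptotically conical metrics as operator fields -/

/-- The rank-one operator `v ↦ v i • e j`. -/
def rankOne (n : ℕ) (i j : Fin n) : En n →L[ℝ] En n :=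
  (innerSL ℝ (single i (1:ℝ) : En n)).smulRight (single j (1:ℝ))

/-- The field of symmetric operators representing a metric tensor `g`, i.e.
`⟪opOf g x v, w⟫ = g x v w`. -/
def opOf {n : ℕ} (g : MetricTensor n) (x : En n) : En n →L[ℝ] En n :=
  ∑ i, ∑ j, g x (single i 1) (single j 1) • rankOne n i j

lemma inner_rankOne (i j : Fin n) (v w : En n) : ⟪rankOne n i j v, w⟫ = v i * w j := by
  simp [rankOne, real_inner_smul_left, EuclideanSpace.inner_single_left]

lemma abs_coord_le (v : En n) (i : Fin n) : |v i| ≤ ‖v‖ := by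
  simpa using PiLp.norm_apply_le v i

lemma norm_rankOne_le (i j : Fin n) : ‖rankOne n i j‖ ≤ 1 := by
  refine ContinuousLinearMap.opNorm_le_bound _ zero_le_one fun v => ?_
  rw [rankOne, ContinuousLinearMap.smulRight_apply, norm_smul]
  simp [EuclideanSpace.inner_single_left, abs_coord_le]

lemma sum_single (v : En n) : v = ∑ i, v i • (single i (1:ℝ) : En n) := by
  ext j
  simp [Finset.sum_apply, Pi.single_apply]

lemma IsAsympConical.expand (hg : IsAsympConical n g α μ) (x v w : En n) :
    g x v w = ∑ i, ∑ j, g x (single i 1) (single j 1) * (v i * w j) := by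
  have hsum : ∀ (S : Finset (Fin n)) (f : Fin n → En n) (u : En n),
      g x (∑ i ∈ S, f i) u = ∑ i ∈ S, g x (f i) u := by
    intro S f u
    classical
    induction S using Finset.induction_on with
    | empty =>
      have := hg.smul_left x 0 0 u
      simpa using this
    | insert i S hi ih => rw [Finset.sum_insert hi, Finset.sum_insert hi, hg.add_left, ih]
  have h1 : ∀ (v u : En n), g x v u = ∑ i, v i * g x (single i 1) u := by
    intro v u
    conv_lhs => rw [sum_single v, hsum]
    simp only [hg.smul_left]
  rw [h1 v w]
  refine sum_congr rfl fun i _ => ?_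
  rw [hg.symm, h1 w, mul_sum]
  refine sum_congr rfl fun j _ => ?_
  rw [hg.symm]; ring

lemma IsAsympConical.inner_opOf (hg : IsAsympConical n g α μ) (x v w : En n) :
    ⟪opOf g x v, w⟫ = g x v w := by
  rw [hg.expand, opOf]
  simp only [sum_apply, smul_apply, sum_inner, real_inner_smul_left,
    inner_rankOne]

/-- The components of the cone metric. -/
lemma cone_comp_smooth (i j : Fin n) (x : En n) (hx : x ≠ 0) : ContDiffAt ℝ 2
    (fun y => coneMetric n α y (single i 1) (single j 1)) x := by
  unfold coneMetric
  refine ContDiffAt.add (ContDiffAt.mul contDiffAt_const ?_) contDiffAt_const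
  refine ContDiffAt.div ?_ (contDiff_norm_sq ℝ).contDiffAt (by simpa using hx)
  exact ((contDiff_const.inner ℝ contDiff_id).mul (contDiff_const.inner ℝ contDiff_id)).contDiffAt

lemma cone_homog (v w x : En n) (l : ℝ) (hl : 0 < l) :
    coneMetric n α (l • x) v w = coneMetric n α x v w := by
  unfold coneMetric
  congr 2
  rw [real_inner_smul_right, real_inner_smul_right, norm_smul, mul_pow, norm_eq_abs, sq_abs]
  rw [show l * ⟪v, x⟫ * (l * ⟪w, x⟫) = l ^ 2 * (⟪v, x⟫ * ⟪w, x⟫) by ring]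
  exact mul_div_mul_left _ _ (by positivity)

lemma cone_expand (x v w : En n) :
    coneMetric n α x v w = ∑ i, ∑ j, coneMetric n α x (single i 1)
      (single j 1) * (v i * w j) := by
  have e1 (y : En n) : ⟪y, x⟫ = ∑ i, y i * ⟪(single i (1:ℝ) : En n), x⟫ := by
    conv_lhs => rw [sum_single y]
    rw [sum_inner]
    simp only [real_inner_smul_left]
  have e2 : ⟪v, w⟫ = ∑ i, ∑ j, ⟪(single i (1:ℝ) : En n),
      single j (1:ℝ)⟫ * (v i * w j) := by
    conv_lhs => rw [sum_single v, sum_single w]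
    rw [sum_inner]
    refine sum_congr rfl fun i _ => ?_
    rw [inner_sum]
    refine sum_congr rfl fun j _ => ?_
    rw [real_inner_smul_left, real_inner_smul_right]; ring
  unfold coneMetric
  rw [e2, e1 v, e1 w, Finset.sum_mul_sum]
  simp only [sum_div, mul_sum, ← sum_add_distrib]
  refine sum_congr rfl fun i _ => sum_congr rfl fun j _ => ?_
  ring

/-- The operator field of an asymptotically conical metric satisfies uniform global bounds. -/
lemma IsAsympConical.comp_bound (hg : IsAsympConical n g α μ) (hμ : 0 < μ) : ∃ B, 0 ≤ B ∧
    ∀ i j : Fin n, ∀ x,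
      ‖g x (single i 1) (single j 1)‖ ≤ B ∧
      ‖fderiv ℝ (fun x => g x (single i 1) (single j 1)) x‖ ≤ B ∧
      ‖fderiv ℝ (fderiv ℝ (fun x => g x (single i 1)
        (single j 1))) x‖ ≤ B := by
  have key (i j : Fin n) : ∃ B, 0 ≤ B ∧ ∀ x,
      ‖g x (single i 1) (single j 1)‖ ≤ B ∧
      ‖fderiv ℝ (fun x => g x (single i 1) (single j 1)) x‖ ≤ B ∧
      ‖fderiv ℝ (fderiv ℝ (fun x => g x (single i 1)
        (single j 1))) x‖ ≤ B := by
    obtain ⟨C, R, hC, hd⟩ := hg.decay i j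
    refine global_bound (hg.reg i j) (cone_comp_smooth (α := α) i j)
      (fun l hl x => cone_homog _ _ x l hl) (C := C) (R := max R 1) ?_
    intro x hx k hk
    have hx1 : 1 ≤ ‖x‖ := (le_max_right _ _).trans hx
    refine (hd x ((le_max_left _ _).trans hx) k hk).trans ?_
    refine mul_le_of_le_one_right hC.le (Real.rpow_le_one_of_one_le_of_nonpos hx1 ?_)
    have : (0:ℝ) ≤ k := k.cast_nonneg
    linarith
  choose B hB0 hB using key
  refine ⟨∑ i, ∑ j, B i j, sum_nonneg fun i _ => sum_nonneg fun j _ => hB0 i j, ?_⟩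
  intro i j x
  have : B i j ≤ ∑ i, ∑ j, B i j :=
    (single_le_sum (f := fun j => B i j) (fun j _ => hB0 i j) (Finset.mem_univ j)).trans
    (single_le_sum (f := fun i => ∑ j, B i j)
      (fun i _ => sum_nonneg fun j _ => hB0 i j) (Finset.mem_univ i))
  exact ⟨(hB i j x).1.trans this, (hB i j x).2.1.trans this, (hB i j x).2.2.trans this⟩

lemma IsAsympConical.contDiff_opOf (hg : IsAsympConical n g α μ) : ContDiff ℝ 2 (opOf g) := by
  unfold opOf
  exact ContDiff.sum fun i _ => ContDiff.sum fun j _ => (hg.reg i j).smul contDiff_const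

lemma IsAsympConical.fderiv_opOf (hg : IsAsympConical n g α μ) (x : En n) :
    fderiv ℝ (opOf g) x = ∑ i, ∑ j, (fderiv ℝ (fun x => g x (single i 1)
      (single j 1)) x).smulRight (rankOne n i j) := by
  have : HasFDerivAt (opOf g) (∑ i, ∑ j, (fderiv ℝ (fun x => g x (single i 1)
      (single j 1)) x).smulRight (rankOne n i j)) x := by
    unfold opOf
    refine HasFDerivAt.fun_sum fun i _ => HasFDerivAt.fun_sum fun j _ => ?_
    have h := ((hg.reg i j).differentiable two_ne_zero x).hasFDerivAt
    exact h.smul_const (rankOne n i j)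
  exact this.fderiv

/-- Closeness of the metric to the cone metric, to first order. -/
lemma IsAsympConical.close (hg : IsAsympConical n g α μ) (hμ : 0 < μ) :
    ∃ C R : ℝ, 0 < C ∧ 1 ≤ R ∧ ∀ x, R ≤ ‖x‖ → (∀ v w : En n,
      |g x v w - coneMetric n α x v w| ≤ C * ‖x‖ ^ (-(min μ (1/2))) * ‖v‖ * ‖w‖) ∧
      ∀ u v : En n, ∃ d : ℝ, |d| ≤ C * ‖x‖ ^ (-(min μ (1/2))) * (‖u‖ / ‖x‖) * ‖v‖ ^ 2 ∧
        HasDerivAt (fun t : ℝ => g (x + t • u) v v - coneMetric n α (x + t • u) v v) d 0 := by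
  choose C R hC hd using hg.decay
  set C' : ℝ := ∑ i, ∑ j, C i j
  have hCle i j : C i j ≤ C' + 1 := by
    have := (single_le_sum (f := fun j => C i j) (fun j _ => (hC i j).le)
      (Finset.mem_univ j)).trans
      (single_le_sum (f := fun i => ∑ j, C i j)
      (fun i _ => sum_nonneg fun j _ => (hC i j).le) (Finset.mem_univ i))
    linarith
  have hC'0 : 0 ≤ C' := sum_nonneg fun i _ => sum_nonneg fun j _ => (hC i j).le
  set R' : ℝ := ∑ i, ∑ j, |R i j|
  have hRle i j : R i j ≤ R' + 1 := by
    have := (single_le_sum (f := fun j => |R i j|) (fun j _ => abs_nonneg _)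
      (Finset.mem_univ j)).trans
      (single_le_sum (f := fun i => ∑ j, |R i j|)
      (fun i _ => sum_nonneg fun j _ => abs_nonneg _) (Finset.mem_univ i))
    linarith [le_abs_self (R i j)]
  have hR'0 : 0 ≤ R' := sum_nonneg fun i _ => sum_nonneg fun j _ => abs_nonneg _
  set ν := min μ (1/2)
  have hsum : ∀ (f : Fin n → Fin n → ℝ) (b : ℝ), (∀ i j, |f i j| ≤ b) → |∑ i, ∑ j, f i j| ≤
      (n * n : ℝ) * b := by
    intro f b hf
    refine (Finset.abs_sum_le_sum_abs _ _).trans ?_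
    calc ∑ i, |∑ j, f i j| ≤ ∑ _i : Fin n, ∑ _j : Fin n, b :=
          sum_le_sum fun i _ => (Finset.abs_sum_le_sum_abs _ _).trans
            (sum_le_sum fun j _ => hf i j)
      _ = (n * n : ℝ) * b := by simp [mul_assoc]
  refine ⟨(n * n : ℝ) * (C' + 1) + 1, R' + 1, by positivity, by linarith, ?_⟩
  intro x hx
  have hx1 : 1 ≤ ‖x‖ := by linarith
  have hx0 : x ≠ 0 := norm_pos_iff.1 (by linarith)
  have hpw : ‖x‖ ^ (-μ) ≤ ‖x‖ ^ (-ν) :=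
    rpow_le_rpow_of_exponent_le hx1 (neg_le_neg (min_le_left _ _))
  constructor
  · intro v w
    rw [hg.expand, cone_expand]
    simp only [← sum_sub_distrib, ← sub_mul]
    refine (hsum _ ((C' + 1) * ‖x‖ ^ (-ν) * (‖v‖ * ‖w‖)) ?_).trans ?_
    · intro i j
      have := hd i j x ((hRle i j).trans hx) 0 (by norm_num)
      rw [norm_iteratedFDeriv_zero, Nat.cast_zero, sub_zero, norm_eq_abs] at this
      rw [abs_mul, abs_mul]
      refine mul_le_mul (this.trans ?_) (mul_le_mul (abs_coord_le v i) (abs_coord_le w j)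
        (abs_nonneg _) (norm_nonneg _)) (by positivity) (by positivity)
      exact mul_le_mul (hCle i j) hpw (by positivity) (by positivity)
    · have : 0 ≤ ‖x‖ ^ (-ν) * ‖v‖ * ‖w‖ := by positivity
      linarith
  · intro u v
    refine ⟨∑ i, ∑ j, (fderiv ℝ (fun y => g y (single i 1)
      (single j 1) - coneMetric n α y (single i 1)
      (single j 1)) x u) * (v i * v j), ?_, ?_⟩
    · refine (hsum _ ((C' + 1) * ‖x‖ ^ (-ν) * (‖u‖ / ‖x‖) * ‖v‖ ^ 2) ?_).trans ?_
      · intro i j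
        have := hd i j x ((hRle i j).trans hx) 1 (by norm_num)
        rw [norm_iteratedFDeriv_one, Nat.cast_one] at this
        rw [rpow_sub_one (by positivity)] at this
        rw [abs_mul, abs_mul, sq]
        refine mul_le_mul ?_ (mul_le_mul (abs_coord_le v i) (abs_coord_le v j)
          (abs_nonneg _) (norm_nonneg _)) (by positivity) (by positivity)
        refine (ContinuousLinearMap.le_of_opNorm_le _ this u).trans ?_
        calc C i j * (‖x‖ ^ (-μ) / ‖x‖) * ‖u‖ = C i j * ‖x‖ ^ (-μ) * (‖u‖ / ‖x‖) := by ring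
          _ ≤ (C' + 1) * ‖x‖ ^ (-ν) * (‖u‖ / ‖x‖) := by
            refine mul_le_mul_of_nonneg_right ?_ (by positivity)
            exact mul_le_mul (hCle i j) hpw (by positivity) (by positivity)
      · have : 0 ≤ ‖x‖ ^ (-ν) * (‖u‖ / ‖x‖) * ‖v‖ ^ 2 := by positivity
        linarith
    · have hfun : (fun t : ℝ => g (x + t • u) v v - coneMetric n α (x + t • u) v v) =
          fun t : ℝ => ∑ i, ∑ j, (g (x + t • u) (single i 1)
            (single j 1) - coneMetric n α (x + t • u) (single i 1)
            (single j 1)) * (v i * v j) := by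
        funext t
        rw [hg.expand, cone_expand]
        simp only [← sum_sub_distrib, ← sub_mul]
      rw [hfun]
      refine HasDerivAt.fun_sum fun i _ => HasDerivAt.fun_sum fun j _ => HasDerivAt.mul_const ?_ _
      have h1 : HasDerivAt (fun t : ℝ => x + t • u) u 0 := by
        simpa using ((hasDerivAt_id (0:ℝ)).smul_const u).const_add x
      have h2 : DifferentiableAt ℝ (fun y => g y (single i 1)
          (single j 1) - coneMetric n α y (single i 1)
          (single j 1)) x :=
        ((hg.reg i j).differentiable two_ne_zero).differentiableAt.sub
          ((cone_comp_smooth i j x hx0).differentiableAt two_ne_zero)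
      have h3 := h2.hasFDerivAt
      have h4 : x + (0:ℝ) • u = x := by simp
      rw [← h4] at h3
      have h5 := h3.comp_hasDerivAt (0:ℝ) h1
      rw [h4] at h5
      exact h5

lemma norm_sum_sum_le {F : Type*} [NormedAddCommGroup F] (f : Fin n → Fin n → F) (b : ℝ)
    (hf : ∀ i j, ‖f i j‖ ≤ b) : ‖∑ i, ∑ j, f i j‖ ≤ (n * n : ℝ) * b := by
  refine (norm_sum_le _ _).trans ?_
  calc ∑ i, ‖∑ j, f i j‖ ≤ ∑ _i : Fin n, ∑ _j : Fin n, b :=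
        sum_le_sum fun i _ => (norm_sum_le _ _).trans
          (sum_le_sum fun j _ => hf i j)
    _ = (n * n : ℝ) * b := by simp [mul_assoc]

lemma norm_smulRight_le_norm {E F : Type*} [NormedAddCommGroup E] [NormedSpace ℝ E]
    [NormedAddCommGroup F] [NormedSpace ℝ F] (φ : E →L[ℝ] ℝ) (T : F) (hT : ‖T‖ ≤ 1) :
    ‖φ.smulRight T‖ ≤ ‖φ‖ := by
  rw [ContinuousLinearMap.norm_smulRight_apply]
  exact mul_le_of_le_one_right (norm_nonneg _) hT

lemma norm_smulRight_sub_le {E F : Type*} [NormedAddCommGroup E] [NormedSpace ℝ E]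
    [NormedAddCommGroup F] [NormedSpace ℝ F] (φ ψ : E →L[ℝ] ℝ) (T : F) (hT : ‖T‖ ≤ 1) :
    ‖φ.smulRight T - ψ.smulRight T‖ ≤ ‖φ - ψ‖ := by
  have : φ.smulRight T - ψ.smulRight T = (φ - ψ).smulRight T := by
    ext1 z
    simp [sub_smul]
  rw [this]
  exact norm_smulRight_le_norm _ _ hT

lemma norm_sum_smulRight_le {E F : Type*} [NormedAddCommGroup E] [NormedSpace ℝ E]
    [NormedAddCommGroup F] [NormedSpace ℝ F] (φ : Fin n → Fin n → E →L[ℝ] ℝ)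
    (T : Fin n → Fin n → F) (b : ℝ) (hT : ∀ i j, ‖T i j‖ ≤ 1) (hφ : ∀ i j, ‖φ i j‖ ≤ b) :
    ‖∑ i, ∑ j, (φ i j).smulRight (T i j)‖ ≤ (n * n : ℝ) * b :=
  norm_sum_sum_le _ b fun i j => (norm_smulRight_le_norm _ _ (hT i j)).trans (hφ i j)

lemma norm_sum_smulRight_sub_le {E F : Type*} [NormedAddCommGroup E] [NormedSpace ℝ E]
    [NormedAddCommGroup F] [NormedSpace ℝ F] (φ ψ : Fin n → Fin n → E →L[ℝ] ℝ)
    (T : Fin n → Fin n → F) (b : ℝ) (hT : ∀ i j, ‖T i j‖ ≤ 1)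
    (hφ : ∀ i j, ‖φ i j - ψ i j‖ ≤ b) :
    ‖∑ i, ∑ j, (φ i j).smulRight (T i j) - ∑ i, ∑ j, (ψ i j).smulRight (T i j)‖ ≤
      (n * n : ℝ) * b := by
  simp only [← sum_sub_distrib]
  exact norm_sum_sum_le _ b fun i j => (norm_smulRight_sub_le _ _ _ (hT i j)).trans (hφ i j)

lemma IsAsympConical.lower (hg : IsAsympConical n g α μ) (hμ : 0 < μ) (hs : 0 < sin α) :
    ∃ c > 0, ∀ x v : En n, c * ‖v‖ ^ 2 ≤ ⟪opOf g x v, v⟫ := by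
  obtain ⟨C, R, hC, hR, hcl⟩ := hg.close hμ
  have hν : 0 < min μ (1/2) := lt_min hμ (by norm_num)
  obtain ⟨M, hM, hM1, hsm⟩ := exists_rpow_small hν C R (sin α ^ 2 / 2) (by positivity)
  have hcont : Continuous (fun p : En n × En n => ⟪opOf g p.1 p.2, p.2⟫) := by
    have := hg.contDiff_opOf.continuous
    fun_prop
  have hS : IsCompact ((closedBall (0 : En n) M) ×ˢ (sphere (0 : En n) 1)) :=
    (isCompact_closedBall _ _).prod (isCompact_sphere _ _)
  have hc : ∃ c > 0, ∀ x ∈ closedBall (0 : En n) M, ∀ v ∈ sphere (0 : En n) 1,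
      c ≤ ⟪opOf g x v, v⟫ := by
    rcases ((closedBall (0 : En n) M) ×ˢ (sphere (0 : En n) 1)).eq_empty_or_nonempty
      with he | hne
    · refine ⟨1, one_pos, fun x hx v hv => ?_⟩
      have : (x, v) ∈ (closedBall (0 : En n) M) ×ˢ (sphere (0 : En n) 1) := ⟨hx, hv⟩
      rw [he] at this
      exact this.elim
    · obtain ⟨p, hp, hmin⟩ := hS.exists_isMinOn hne hcont.continuousOn
      refine ⟨_, ?_, fun x hx v hv => hmin (a := (x, v)) ⟨hx, hv⟩⟩
      change (0:ℝ) < ⟪opOf g p.1 p.2, p.2⟫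
      rw [hg.inner_opOf]
      refine hg.posdef _ _ fun h => ?_
      have := hp.2
      rw [h] at this; simp at this
  obtain ⟨c1, hc1, h1⟩ := hc
  refine ⟨min c1 (sin α ^ 2 / 2), by positivity, fun x v => ?_⟩
  rcases le_total M ‖x‖ with hx | hx
  · have h2 := (hcl x (hM.trans hx)).1 v v
    have h3 := mul_le_mul_of_nonneg_right (hsm _ hx) (sq_nonneg ‖v‖)
    have h4 : sin α ^ 2 * ‖v‖ ^ 2 ≤ coneMetric n α x v v := by
      unfold coneMetric
      rw [real_inner_self_eq_norm_sq]
      have : 0 ≤ (1 - sin α ^ 2) * (⟪v, x⟫ * ⟪v, x⟫ / ‖x‖ ^ 2) :=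
        mul_nonneg (by nlinarith [sin_sq_add_cos_sq α, sq_nonneg (cos α)])
          (div_nonneg (mul_self_nonneg _) (sq_nonneg _))
      linarith
    have h5 : min c1 (sin α ^ 2 / 2) * ‖v‖ ^ 2 ≤ sin α ^ 2 / 2 * ‖v‖ ^ 2 :=
      mul_le_mul_of_nonneg_right (min_le_right _ _) (sq_nonneg _)
    rw [hg.inner_opOf]
    have h6 := (abs_le.1 h2).1
    linarith
  · rcases eq_or_ne v 0 with rfl | hv
    · simp
    have h2 := h1 x (by simpa using hx) (‖v‖⁻¹ • v) (by simp [norm_smul, hv])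
    rw [map_smul, real_inner_smul_left, real_inner_smul_right] at h2
    have h3 : c1 * ‖v‖ ^ 2 ≤ ⟪opOf g x v, v⟫ := by
      have := mul_le_mul_of_nonneg_right h2 (sq_nonneg ‖v‖)
      have e : ‖v‖⁻¹ * (‖v‖⁻¹ * ⟪opOf g x v, v⟫) * ‖v‖ ^ 2 = ⟪opOf g x v, v⟫ := by
        field_simp
      rwa [e] at this
    exact (mul_le_mul_of_nonneg_right (min_le_left _ _) (sq_nonneg _)).trans h3

/-- An asymptotically conical metric is globally a uniformly controlled metric. -/
lemma IsAsympConical.rmet (hg : IsAsympConical n g α μ) (hμ : 0 < μ) (hs : 0 < sin α) :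
    ∃ c C, RMet (opOf g) c C := by
  obtain ⟨c, hc, hlow⟩ := hg.lower hμ hs
  obtain ⟨B, hB0, hB⟩ := hg.comp_bound hμ
  refine ⟨c, (n * n : ℝ) * B + 1, ⟨hg.contDiff_opOf, ?_, hc, ?_, hlow, ?_, ?_, ?_⟩⟩
  · intro x v w
    rw [hg.inner_opOf, real_inner_comm, hg.inner_opOf, hg.symm]
  · have : 0 ≤ (n * n : ℝ) * B := by positivity
    linarith
  · intro x
    refine (norm_sum_sum_le _ B fun i j => ?_).trans (by linarith)
    rw [norm_smul]
    calc _ ≤ B * 1 := mul_le_mul (hB i j x).1 (norm_rankOne_le i j) (norm_nonneg _) hB0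
      _ = B := mul_one B
  · intro x
    rw [hg.fderiv_opOf]
    exact (norm_sum_smulRight_le _ _ B (fun i j => norm_rankOne_le i j)
      (fun i j => (hB i j x).2.1)).trans (by linarith)
  · intro x y
    rw [hg.fderiv_opOf, hg.fderiv_opOf]
    refine (norm_sum_smulRight_sub_le _ _ _ (B * ‖x - y‖) (fun i j => norm_rankOne_le i j)
      (fun i j => ?_)).trans (by linarith [norm_nonneg (x - y)])
    refine (convex_univ).norm_image_sub_le_of_norm_fderiv_le (𝕜 := ℝ) (s := univ)
      (fun z _ => ?_) (fun z _ => (hB i j z).2.2) (mem_univ y) (mem_univ x)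
    exact (((hg.reg i j).fderiv_right (m := 1) (by norm_num)).differentiable
      one_ne_zero).differentiableAt

lemma hasDerivAt_cone (x u v : En n) (hx : x ≠ 0) :
    HasDerivAt (fun t : ℝ => coneMetric n α (x + t • u) v v)
      ((1 - sin α ^ 2) * ((2 * ⟪v, x⟫ * ⟪v, u⟫ * ‖x‖ ^ 2 - ⟪v, x⟫ ^ 2 * (2 * ⟪x, u⟫)) /
        (‖x‖ ^ 2) ^ 2)) 0 := by
  have h1 : HasDerivAt (fun t : ℝ => x + t • u) u 0 := by
    simpa using ((hasDerivAt_id (0:ℝ)).smul_const u).const_add x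
  have h2 : HasDerivAt (fun t : ℝ => ⟪v, x + t • u⟫) ⟪v, u⟫ 0 := by
    simpa using (hasDerivAt_const (0:ℝ) v).inner ℝ h1
  have h3 : HasDerivAt (fun t : ℝ => ‖x + t • u‖ ^ 2) (2 * ⟪x, u⟫) 0 := by
    simpa using h1.norm_sq
  have h4 := ((h2.mul h2).div h3 (by simpa using hx)).const_mul (1 - sin α ^ 2)
  have h5 := h4.add_const (sin α ^ 2 * ⟪v, v⟫)
  refine h5.congr_deriv ?_
  simp only [zero_smul, add_zero, Pi.mul_apply]
  ring

/-- An asymptotically conical metric is almost invariant under dilations and rotations. -/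
lemma IsAsympConical.acon (hg : IsAsympConical n g α μ) (hμ : 0 < μ) (hs : 0 < sin α)
    (hs1 : sin α < 1) : ∃ K R, ACon (opOf g) (sin α) (min μ (1/2)) K R := by
  obtain ⟨C, R, hC, hR, hcl⟩ := hg.close hμ
  have hν : 0 < min μ (1/2) := lt_min hμ (by norm_num)
  have hder x u v (hx : R ≤ ‖x‖) : |⟪fderiv ℝ (opOf g) x u v, v⟫ -
      (1 - sin α ^ 2) * ((2 * ⟪v, x⟫ * ⟪v, u⟫ * ‖x‖ ^ 2 - ⟪v, x⟫ ^ 2 * (2 * ⟪x, u⟫)) /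
        (‖x‖ ^ 2) ^ 2)| ≤ C * ‖x‖ ^ (-(min μ (1/2))) * (‖u‖ / ‖x‖) * ‖v‖ ^ 2 := by
    obtain ⟨d, hd, hdd⟩ := (hcl x hx).2 u v
    have hx0 : x ≠ 0 := norm_pos_iff.1 (by linarith)
    have h1 : HasDerivAt (fun t : ℝ => x + t • u) u 0 := by
      simpa using ((hasDerivAt_id (0:ℝ)).smul_const u).const_add x
    have h4 : x + (0:ℝ) • u = x := by simp
    have h3 := (hg.contDiff_opOf.differentiable two_ne_zero x).hasFDerivAt
    rw [← h4] at h3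
    have h5 := h3.comp_hasDerivAt (0:ℝ) h1
    rw [h4] at h5
    have h6 := (h5.clm_apply (hasDerivAt_const (0:ℝ) v)).inner ℝ (hasDerivAt_const (0:ℝ) v)
    simp only [Function.comp_def, map_zero, add_zero, inner_zero_right, zero_add] at h6
    simp only [hg.inner_opOf] at h6
    have h7 := h6.sub (hasDerivAt_cone (α := α) x u v hx0)
    have h8 := h7.unique hdd
    rw [h8]; exact hd
  refine ⟨6 * C, R, ⟨hs, hs1, hν, min_le_right _ _, by positivity, hR, ?_, ?_, ?_⟩⟩
  · intro x v w hx
    have := (hcl x hx).1 v w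
    rw [hg.inner_opOf]
    unfold coneMetric at this
    rw [real_inner_comm v x, real_inner_comm w x]
    refine this.trans ?_
    have : 0 ≤ C * ‖x‖ ^ (-(min μ (1/2))) * ‖v‖ * ‖w‖ := by positivity
    linarith
  · intro x v hx
    have hx0 : 0 < ‖x‖ := by linarith
    have := hder x x v hx
    rw [real_inner_self_eq_norm_sq, div_self hx0.ne'] at this
    have e : (2 * ⟪v, x⟫ * ⟪v, x⟫ * ‖x‖ ^ 2 - ⟪v, x⟫ ^ 2 * (2 * ‖x‖ ^ 2)) = 0 := by ring
    rw [e, zero_div, mul_zero, sub_zero] at this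
    refine this.trans ?_
    have : 0 ≤ C * ‖x‖ ^ (-(min μ (1/2))) * ‖v‖ ^ 2 := by positivity
    linarith
  · intro x v a b hx
    have hx0 : 0 < ‖x‖ := by linarith
    have h1 := hder x (rotJ a b x) v hx
    have h2 := (hcl x hx).1 (rotJ a b v) v
    have hJ : ⟪x, rotJ a b x⟫ = 0 := by rw [real_inner_comm, rotJ_inner_self]
    have hJv : ⟪rotJ a b v, x⟫ = -⟪v, rotJ a b x⟫ := by
      simp only [rotJ, inner_sub_left, inner_sub_right, real_inner_smul_left,
        real_inner_smul_right, real_inner_comm v]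
      ring
    have hc : coneMetric n α x (rotJ a b v) v =
        -((1 - sin α ^ 2) * (⟪v, rotJ a b x⟫ * ⟪v, x⟫ / ‖x‖ ^ 2)) := by
      unfold coneMetric
      rw [rotJ_inner_self, hJv]; ring
    rw [hJ] at h1
    have e : (2 * ⟪v, x⟫ * ⟪v, rotJ a b x⟫ * ‖x‖ ^ 2 - ⟪v, x⟫ ^ 2 * (2 * 0)) / (‖x‖ ^ 2) ^ 2 =
        2 * (⟪v, rotJ a b x⟫ * ⟪v, x⟫ / ‖x‖ ^ 2) := by field_simp; ring
    rw [e] at h1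
    rw [hc] at h2
    rw [hg.inner_opOf]
    set p := ‖x‖ ^ (-(min μ (1/2)))
    have b1 : C * p * (‖rotJ a b x‖ / ‖x‖) * ‖v‖ ^ 2 ≤ C * p * (2 * ‖a‖ * ‖b‖) * ‖v‖ ^ 2 := by
      have : ‖rotJ a b x‖ / ‖x‖ ≤ 2 * ‖a‖ * ‖b‖ := by
        rw [div_le_iff₀ hx0]; exact norm_rotJ_le a b x
      gcongr
    have b2 : C * p * ‖rotJ a b v‖ * ‖v‖ ≤ C * p * (2 * ‖a‖ * ‖b‖ * ‖v‖) * ‖v‖ := by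
      have := norm_rotJ_le a b v
      gcongr
    have a1 := abs_le.1 (h1.trans b1)
    have a2 := abs_le.1 (h2.trans b2)
    rw [abs_le]
    constructor <;> linarith [a1.1, a1.2, a2.1, a2.2]

/-! ### The sweepout and its linking property -/

/-- The regularised distance `√(S² + |x|²)` from the origin. -/
def rho {E : Type*} [NormedAddCommGroup E] (S : ℝ) (x : E) : ℝ :=
  √(S ^ 2 + ‖x‖ ^ 2)

lemma rho_sq (S : ℝ) (x : E) : rho S x ^ 2 = S ^ 2 + ‖x‖ ^ 2 := sq_sqrt (by positivity)

lemma le_rho {S : ℝ} (x : E) : S ≤ rho S x := le_sqrt_of_sq_le (by nlinarith [sq_nonneg ‖x‖])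

lemma norm_le_rho {S : ℝ} (x : E) : ‖x‖ ≤ rho S x := le_sqrt_of_sq_le (by nlinarith [sq_nonneg S])

lemma rho_le {S : ℝ} (hS : 0 < S) (x : E) : rho S x ≤ S + ‖x‖ :=
  sqrt_le_iff.mpr ⟨by positivity, by nlinarith [norm_nonneg x]⟩

/-- A first order Taylor estimate for `rho`, whose Hessian is at most `1/S`. -/
lemma rho_sub {S : ℝ} (hS : 0 < S) (x y : E) :
    |rho S y - rho S x| ≤ |⟪x, y - x⟫| / rho S x + ‖y - x‖ ^ 2 / S := by
  have hx := hS.trans_le (le_rho (S := S) x)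
  have hy := hS.trans_le (le_rho (S := S) y)
  have h2 : ‖y‖ ^ 2 = ‖x‖ ^ 2 + 2 * ⟪x, y - x⟫ + ‖y - x‖ ^ 2 := by
    have := norm_add_sq_real x (y - x)
    rwa [add_sub_cancel] at this
  have hxs := rho_sq S x
  have hys := rho_sq S y
  have e2 : ‖y - x‖ ^ 2 / rho S x ≤ ‖y - x‖ ^ 2 / S := by
    gcongr; exact le_rho x
  have e3 : rho S y * rho S x ≥ rho S x ^ 2 + ⟪x, y - x⟫ := by
    have h3 : ⟪x, y⟫ ≤ ‖x‖ * ‖y‖ := real_inner_le_norm x y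
    have h4 : rho S x ^ 2 + ⟪x, y - x⟫ = S ^ 2 + ⟪x, y⟫ := by
      rw [hxs, inner_sub_right, real_inner_self_eq_norm_sq]; ring
    rw [h4]
    have h5 : S ^ 2 + ‖x‖ * ‖y‖ ≤ rho S y * rho S x := by
      refine abs_le_of_sq_le_sq' ?_ (by positivity) |>.2
      rw [mul_pow, hxs, hys]
      nlinarith [sq_nonneg (S * (‖x‖ - ‖y‖))]
    linarith
  have e4 : |⟪x, y - x⟫| / rho S x + ‖y - x‖ ^ 2 / rho S x ≤
    |⟪x, y - x⟫| / rho S x + ‖y - x‖ ^ 2 / S := by linarith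
  refine le_trans ?_ e4
  rw [← add_div, le_div_iff₀ hx, ← abs_of_pos hx, ← abs_mul, abs_of_pos hx]
  have := neg_abs_le ⟪x, y - x⟫
  have := le_abs_self ⟪x, y - x⟫
  refine abs_le.mpr ⟨?_, ?_⟩
  · nlinarith [sq_nonneg ‖y - x‖]
  · nlinarith [sq_nonneg (rho S y - rho S x), sq_nonneg ‖y - x‖]

/-- The metric dominates `(1 - η) dρ²` for a sufficiently regularised distance `ρ`. -/
lemma exists_rho (hG : RMet G c C) (hA : ACon G s μ K R) {η : ℝ} (hη : 0 < η) (hη1 : η < 1) :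
    ∃ S, 0 < S ∧ ∀ x v, (1 - η) * (⟪x, v⟫ / rho S x) ^ 2 ≤ ⟪G x v, v⟫ := by
  have hs := hA.s_pos
  obtain ⟨M, hRM, hM1, hM⟩ := exists_rpow_small hA.μ_pos K R (min η (s ^ 2)) (by positivity)
  have hc := hG.pos
  refine ⟨M / √c, by positivity, fun x v => ?_⟩
  set S := M / √c with hS
  have hSp : 0 < S := by positivity
  have hr := hSp.trans_le (le_rho (S := S) x)
  have hip : ⟪x, v⟫ ^ 2 ≤ ‖x‖ ^ 2 * ‖v‖ ^ 2 := by
    have := abs_real_inner_le_norm x v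
    rw [← mul_pow, ← sq_abs]; gcongr
  rcases le_total M ‖x‖ with h | h
  · have hx : 0 < ‖x‖ := by linarith
    have h1 := hA.near x v v (hRM.trans h)
    have h2 := hM ‖x‖ h
    have h3 := (h2.trans (min_le_left _ _))
    have h4 := (h2.trans (min_le_right _ _))
    have h5 := (abs_le.mp h1).1
    have e1 : ⟪x, v⟫ * ⟪x, v⟫ / ‖x‖ ^ 2 ≤ ‖v‖ ^ 2 := by
      rw [div_le_iff₀ (by positivity)]; nlinarith
    have e2 : (⟪x, v⟫ / rho S x) ^ 2 ≤ ⟪x, v⟫ * ⟪x, v⟫ / ‖x‖ ^ 2 := by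
      rw [div_pow, ← sq]; gcongr; exact norm_le_rho x
    rw [real_inner_self_eq_norm_sq] at h5
    set q := ⟪x, v⟫ * ⟪x, v⟫ / ‖x‖ ^ 2
    set κ := K * ‖x‖ ^ (-μ)
    have hq : 0 ≤ q := le_trans (sq_nonneg _) e2
    have e3 : (1 - η) * (⟪x, v⟫ / rho S x) ^ 2 ≤ (1 - η) * q :=
      mul_le_mul_of_nonneg_left e2 (by linarith)
    have e4 : 0 ≤ (s ^ 2 - κ) * (‖v‖ ^ 2 - q) := mul_nonneg (by linarith) (by linarith)
    have e5 : 0 ≤ (η - κ) * q := mul_nonneg (by linarith) hq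
    nlinarith
  · have e1 : (⟪x, v⟫ / rho S x) ^ 2 ≤ c * ‖v‖ ^ 2 := by
      rw [div_pow, div_le_iff₀ (by positivity), rho_sq]
      have e2 : c * S ^ 2 = M ^ 2 := by
        rw [hS, div_pow, sq_sqrt hc.le]; field_simp
      have e3 : ‖x‖ ^ 2 ≤ M ^ 2 := by gcongr
      have e4 : ‖x‖ ^ 2 * ‖v‖ ^ 2 ≤ M ^ 2 * ‖v‖ ^ 2 := by gcongr
      have e5 : 0 ≤ c * ‖v‖ ^ 2 * ‖x‖ ^ 2 := by positivity
      nlinarith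
    have := hG.lower x v
    nlinarith [sq_nonneg (⟪x, v⟫ / rho S x)]

lemma dE_eq {N : ℕ} (hN : 0 < N) (x : ℕ → E) :
    dE G N x = N * ∑ j ∈ Finset.range N, ⟪G (x j) (x (j + 1) - x j), x (j + 1) - x j⟫ := by
  have : (N : ℝ) ≠ 0 := by positivity
  simp only [dE, dvel, map_smul, real_inner_smul_left, real_inner_smul_right, ← mul_sum]
  field_simp

/-- A polygon through the origin whose endpoints have norm `r` has energy almost `(2r)²`. -/
lemma link_bound (hG : RMet G c C) (hA : ACon G s μ K R) {η : ℝ} (hη : 0 < η) (hη1 : η < 1) :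
    ∃ r0, ∀ r ≥ r0, ∃ N0 : ℕ, ∀ N ≥ N0, ∀ x : ℕ → E, ‖x 0‖ = r → ‖x N‖ = r → ∀ i < N, ∀ τ ∈ Icc (0:ℝ) 1,
      x i + τ • (x (i + 1) - x i) = 0 → 4 * r ^ 2 * (1 - η) ≤ dE G N x := by
  obtain ⟨S, hS, hrho⟩ := exists_rho hG hA (η := η / 2) (by linarith) (by linarith)
  have hc := hG.pos
  refine ⟨max 1 (2 * (2 * S + 2) / η), fun r hr => ?_⟩
  have hr1 : 1 ≤ r := (le_max_left _ _).trans hr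
  have hr2 : 2 * (2 * S + 2) ≤ r * η := (div_le_iff₀ hη).1 ((le_max_right _ _).trans hr)
  obtain ⟨N0, hN0⟩ := exists_nat_gt (max (16 * r ^ 2 / c) (4 * r ^ 2 / (c * S)))
  refine ⟨N0, fun N hN x h0 h1 i hi τ hτ hz => ?_⟩
  have hNr : (N0 : ℝ) ≤ N := by exact_mod_cast hN
  have hn1 : 16 * r ^ 2 < N * c :=
    (div_lt_iff₀ hc).1 (((le_max_left _ _).trans_lt hN0).trans_le hNr)
  have hn2 : 4 * r ^ 2 < N * (c * S) :=
    (div_lt_iff₀ (by positivity)).1 (((le_max_right _ _).trans_lt hN0).trans_le hNr)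
  have hNp : 0 < N := by omega
  have hNp' : (0:ℝ) < N := by exact_mod_cast hNp
  by_contra! hlt
  set e := dE G N x with he
  have he4 : e < 4 * r ^ 2 := by nlinarith
  have heq := dE_eq (G := G) hNp x
  set q : ℕ → ℝ := fun j => ⟪G (x j) (x (j + 1) - x j), x (j + 1) - x j⟫
  have hqn j : c * ‖x (j + 1) - x j‖ ^ 2 ≤ q j := hG.lower _ _
  have hsum : ∑ j ∈ Finset.range N, c * ‖x (j + 1) - x j‖ ^ 2 ≤ e / N := by
    rw [le_div_iff₀ hNp', he, heq, mul_comm]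
    gcongr with j
    exact hqn j
  rw [← mul_sum] at hsum
  have hD : c * ∑ j ∈ Finset.range N, ‖x (j + 1) - x j‖ ^ 2 < 4 * r ^ 2 / N :=
    hsum.trans_lt (by gcongr)
  rw [lt_div_iff₀ hNp'] at hD
  set D := ∑ j ∈ Finset.range N, ‖x (j + 1) - x j‖ ^ 2
  have hDi : ‖x (i + 1) - x i‖ ^ 2 ≤ D :=
    single_le_sum (f := fun j => ‖x (j + 1) - x j‖ ^ 2) (fun j _ => by positivity)
      (Finset.mem_range.mpr hi)
  have hD1 : D ≤ 1 / 4 := by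
    by_contra! h
    have : N * c * D ≥ N * c * (1 / 4) := by gcongr
    nlinarith
  have hD2 : D / S ≤ 1 := by
    rw [div_le_one hS]
    by_contra! h
    have : N * c * D ≥ N * c * S := by gcongr
    nlinarith
  have hi1 : ‖x (i + 1) - x i‖ ≤ 1 / 2 := by nlinarith [norm_nonneg (x (i + 1) - x i)]
  have hxi : ‖x i‖ ≤ 1 / 2 := by
    rw [eq_neg_of_add_eq_zero_left hz, norm_neg, norm_smul, norm_eq_abs, abs_of_nonneg hτ.1]
    nlinarith [hτ.2, norm_nonneg (x (i + 1) - x i)]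
  have hρi := rho_le hS (x i)
  have hρ0 := norm_le_rho (S := S) (x 0)
  have hρN := norm_le_rho (S := S) (x N)
  -- the total variation of the regularised distance along the polygon
  have htv : 2 * r - 2 * S - 1 ≤ ∑ j ∈ Finset.range N, |rho S (x (j + 1)) - rho S (x j)| := by
    rw [← Finset.sum_range_add_sum_Ico _ hi.le]
    have a1 : rho S (x 0) - rho S (x i) ≤
        ∑ j ∈ Finset.range i, |rho S (x (j + 1)) - rho S (x j)| := by
      have := sum_range_sub (fun j => rho S (x j)) i
      rw [← neg_sub, ← this, ← Finset.sum_neg_distrib]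
      exact sum_le_sum fun j _ => neg_le_abs _
    have a2 : rho S (x N) - rho S (x i) ≤
        ∑ j ∈ Finset.Ico i N, |rho S (x (j + 1)) - rho S (x j)| := by
      have := Finset.sum_Ico_sub (fun j => rho S (x j)) hi.le
      rw [← this]
      exact sum_le_sum fun j _ => le_abs_self _
    linarith
  have hcs : (∑ j ∈ Finset.range N, |⟪x j, x (j + 1) - x j⟫| / rho S (x j)) ^ 2 * (1 - η / 2) ≤ e := by
    have a1 := sq_sum_le_card_mul_sum_sq (s := Finset.range N)
      (f := fun j => |⟪x j, x (j + 1) - x j⟫| / rho S (x j))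
    rw [card_range] at a1
    rw [he, heq]
    calc _ ≤ N * (∑ j ∈ Finset.range N, (|⟪x j, x (j + 1) - x j⟫| / rho S (x j)) ^ 2) * (1 - η / 2) := by
          gcongr; linarith
      _ = N * ∑ j ∈ Finset.range N, (1 - η / 2) * (⟪x j, x (j + 1) - x j⟫ / rho S (x j)) ^ 2 := by
          rw [← mul_sum]
          simp only [div_pow, sq_abs]; ring
      _ ≤ _ := by
          gcongr with j
          exact hrho _ _
  have hle : 2 * r - 2 * S - 2 ≤ ∑ j ∈ Finset.range N, |⟪x j, x (j + 1) - x j⟫| / rho S (x j) := by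
    have a1 : ∑ j ∈ Finset.range N, |rho S (x (j + 1)) - rho S (x j)| ≤
        ∑ j ∈ Finset.range N, (|⟪x j, x (j + 1) - x j⟫| / rho S (x j) + ‖x (j + 1) - x j‖ ^ 2 / S) :=
      sum_le_sum fun j _ => rho_sub hS _ _
    rw [sum_add_distrib, ← sum_div] at a1
    linarith
  have h2 : 0 ≤ 2 * r - 2 * S - 2 := by nlinarith
  have h3 : (2 * r - 2 * S - 2) ^ 2 * (1 - η / 2) ≤ e :=
    le_trans (mul_le_mul_of_nonneg_right (by gcongr) (by linarith)) hcs
  have h4 : 2 * r * (1 - η / 4) ≤ 2 * r - 2 * S - 2 := by nlinarith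
  have h5 : (2 * r * (1 - η / 4)) ^ 2 ≤ (2 * r - 2 * S - 2) ^ 2 := by
    have : 0 ≤ 2 * r * (1 - η / 4) := mul_nonneg (by linarith) (by linarith)
    gcongr
  have h6 : (2 * r * (1 - η / 4)) ^ 2 * (1 - η / 2) ≤ e :=
    le_trans (mul_le_mul_of_nonneg_right h5 (by linarith)) h3
  have h7 : 1 - η ≤ (1 - η / 4) ^ 2 * (1 - η / 2) := by nlinarith [sq_nonneg η]
  have h8 : 4 * r ^ 2 * (1 - η) ≤ 4 * r ^ 2 * ((1 - η / 4) ^ 2 * (1 - η / 2)) := by gcongr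
  nlinarith

/-- The polygon with nodes `x 0, …, x N`, traversed at unit time per edge and stopped at both ends. -/
def poly
    (N : ℕ) (x : ℕ → E) (w : ℝ) : E :=
  x 0 + ∑ j ∈ Finset.range N, max 0 (min 1 (w - j)) • (x (j + 1) - x j)

lemma poly_of_ge (x : ℕ → E) (N : ℕ) {w : ℝ} (hw : N ≤ w) : poly N x w = x N := by
  have : ∀ j ∈ Finset.range N, max 0 (min 1 (w - j)) • (x (j + 1) - x j) = x (j + 1) - x j := by
    intro j hj
    have h1 : (j : ℝ) + 1 ≤ N := by exact_mod_cast Finset.mem_range.mp hj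
    rw [min_eq_left (by linarith), max_eq_right zero_le_one, one_smul]
  rw [poly, sum_congr rfl this, sum_range_sub]; abel

lemma poly_of_le (x : ℕ → E) (N : ℕ) {w : ℝ} (hw : w ≤ 0) : poly N x w = x 0 := by
  have : ∀ j ∈ Finset.range N, max 0 (min 1 (w - j)) • (x (j + 1) - x j) = 0 := by
    intro j _
    rw [max_eq_left ((min_le_right _ _).trans (by linarith)), zero_smul]
  rw [poly, sum_congr rfl this, Finset.sum_const_zero, add_zero]

lemma poly_seg (x : ℕ → E) {w : ℝ} (hw : 0 ≤ w) (N : ℕ) (hN : 0 < N) :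
    ∃ i < N, ∃ τ ∈ Icc (0:ℝ) 1, poly N x w = x i + τ • (x (i + 1) - x i) := by
  induction N with
  | zero => omega
  | succ k ih =>
    have hsucc : poly (k + 1) x w = poly k x w + max 0 (min 1 (w - k)) • (x (k + 1) - x k) := by
      simp only [poly, sum_range_succ, add_assoc]
    rcases le_total (k : ℝ) w with h | h
    · refine ⟨k, by omega, max 0 (min 1 (w - k)), ⟨le_max_left _ _, ?_⟩, ?_⟩
      · exact max_le zero_le_one (min_le_left _ _)
      · rw [hsucc, poly_of_ge x k h]
    · rcases Nat.eq_zero_or_pos k with h0 | h0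
      · subst h0
        have : w = 0 := le_antisymm (by simpa using h) hw
        exact ⟨0, by omega, 0, by simp, by rw [poly_of_le x _ this.le]; simp⟩
      · obtain ⟨i, hi, τ, hτ, h1⟩ := ih h0
        refine ⟨i, by omega, τ, hτ, ?_⟩
        rw [hsucc, max_eq_left ((min_le_right _ _).trans (by linarith)), zero_smul, add_zero, h1]

lemma sum_clamp {w : ℝ} (hw : 0 ≤ w) (k : ℕ) :
    ∑ j ∈ Finset.range k, max 0 (min 1 (w - j)) = min (k : ℝ) w := by
  induction k with
  | zero => simp [hw]
  | succ k ih =>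
    rw [sum_range_succ, ih]
    push_cast
    rcases le_total w k with h | h
    · rw [min_eq_right h, max_eq_left ((min_le_right _ _).trans (by linarith)),
        min_eq_right (by linarith), add_zero]
    · rw [min_eq_left h]
      rcases le_total w (k + 1) with h' | h'
      · rw [min_eq_right h', min_eq_right (by linarith), max_eq_right (by linarith)]; ring
      · rw [min_eq_left h', min_eq_left (by linarith), max_eq_right zero_le_one]

/-- The broken line from `r a` through `r σ y` to `-r a`. -/
def sweep
    (a : E) (r σ : ℝ) (y : E) (t : ℝ) : E := r • ((1 - 2 * t) • a + (σ * (1 - |2 * t - 1|)) • y)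

/-- The increments of `sweep` over a partition into `2 H` equal parts. -/
lemma sweep_diff (a : E) (r σ : ℝ) (y : E) {H : ℕ} (hH : 0 < H) (j : ℕ) :
    sweep a r σ y ((j + 1 : ℕ) / (2 * H : ℕ)) - sweep a r σ y (j / (2 * H : ℕ)) =
      (1 / (2 * H : ℕ) : ℝ) • (r • ((-2 : ℝ) • a + ((if j < H then 1 else -1) * 2 * σ) • y)) := by
  have hH' : (0:ℝ) < H := by exact_mod_cast hH
  have e1 : 2 * (j / (2 * H : ℕ) : ℝ) - 1 = (j - H) / H := by push_cast; field_simp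
  have e2 : 2 * ((j + 1 : ℕ) / (2 * H : ℕ) : ℝ) - 1 = (j + 1 - H) / H := by push_cast; field_simp
  have e3 : 1 - 2 * (j / (2 * H : ℕ) : ℝ) = (H - j) / H := by push_cast; field_simp
  have e4 : 1 - 2 * ((j + 1 : ℕ) / (2 * H : ℕ) : ℝ) = (H - j - 1) / H := by push_cast; field_simp; ring
  simp only [sweep, e1, e2, e3, e4]
  rw [← smul_sub, smul_comm (1 / ((2 * H : ℕ) : ℝ)) r]
  congr 1
  have key : |((j : ℝ) + 1 - H) / H| - |((j : ℝ) - H) / H| = (if j < H then -1 else 1) / H := by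
    rw [abs_div, abs_div, abs_of_pos hH', ← sub_div]
    congr 1
    split_ifs with h
    · have : (j : ℝ) + 1 ≤ H := by exact_mod_cast h
      rw [abs_of_nonpos (by linarith), abs_of_nonpos (by linarith)]; ring
    · have : (H : ℝ) ≤ j := by exact_mod_cast not_lt.mp h
      rw [abs_of_nonneg (by linarith), abs_of_nonneg (by linarith)]; ring
  have e5 : σ * (1 - |((j : ℝ) + 1 - H) / H|) - σ * (1 - |((j : ℝ) - H) / H|) =
      (1 / (2 * H : ℕ) : ℝ) * ((if j < H then 1 else -1) * 2 * σ) := by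
    have : σ * (1 - |((j : ℝ) + 1 - H) / H|) - σ * (1 - |((j : ℝ) - H) / H|) =
      -σ * (|((j : ℝ) + 1 - H) / H| - |((j : ℝ) - H) / H|) := by ring
    rw [this, key]
    push_cast
    split_ifs <;> field_simp
  have e6 : ((H : ℝ) - j - 1) / H - (H - j) / H = (1 / (2 * H : ℕ) : ℝ) * (-2) := by
    push_cast; field_simp; ring
  rw [smul_add, smul_smul, smul_smul, ← e5, ← e6, sub_smul, sub_smul]
  abel

/-- Lagrange's identity gives the cone energy of the velocity of `sweep` exactly. -/
lemma sweep_density (hA : ACon G s μ K R) {a y : E} (ha : ‖a‖ = 1) (hy : ‖y‖ = 1) (hay : ⟪a, y⟫ = 0)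
    {σ κ r : ℝ} (hσ : 0 < σ) (hσ1 : σ ≤ 1) (hr : 0 < r) (hκ : ∀ z : E, σ * r / 2 ≤ ‖z‖ → R ≤ ‖z‖ ∧ K * ‖z‖ ^ (-μ) ≤ κ)
    {t ε : ℝ} (ht : t ∈ Icc (0:ℝ) 1) (hε : ε ^ 2 = 1) (hεt : ε * (1 - 2 * t) = |2 * t - 1|) :
    ⟪G (sweep a r σ y t) (r • ((-2 : ℝ) • a + (ε * 2 * σ) • y)), r • ((-2 : ℝ) • a + (ε * 2 * σ) • y)⟫ ≤
      4 * r ^ 2 * (1 + σ ^ 2 + 2 * κ - if |2 * t - 1| ≤ σ then (1 - s ^ 2) / 2 else 0) := by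
  set w := sweep a r σ y t with hw
  set v := r • ((-2 : ℝ) • a + (ε * 2 * σ) • y) with hv
  set b := |2 * t - 1| with hb
  have hb0 : 0 ≤ b := abs_nonneg _
  have hb1 : b ≤ 1 := abs_le.mpr ⟨by linarith [ht.1], by linarith [ht.2]⟩
  have hbs : (1 - 2 * t) ^ 2 = b ^ 2 := by rw [hb, sq_abs]; ring
  have haa : ⟪a, a⟫ = 1 := by rw [real_inner_self_eq_norm_sq, ha]; norm_num
  have hyy : ⟪y, y⟫ = 1 := by rw [real_inner_self_eq_norm_sq, hy]; norm_num
  have hya : ⟪y, a⟫ = 0 := by rw [real_inner_comm]; exact hay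
  set D := b ^ 2 + σ ^ 2 * (1 - b) ^ 2 with hD
  have hww : ‖w‖ ^ 2 = r ^ 2 * D := by
    rw [← real_inner_self_eq_norm_sq, hw]
    simp only [sweep, inner_add_left, inner_add_right, real_inner_smul_left, real_inner_smul_right, haa, hyy,
      hya, hay, hD, ← hbs]
    rw [hb]; ring
  have hvv : ‖v‖ ^ 2 = 4 * r ^ 2 * (1 + σ ^ 2) := by
    rw [← real_inner_self_eq_norm_sq, hv]
    simp only [inner_add_left, inner_add_right, real_inner_smul_left, real_inner_smul_right, haa, hyy,
      hya, hay]
    linear_combination 4 * r ^ 2 * σ ^ 2 * hε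
  have hwv : ⟪w, v⟫ = r ^ 2 * (-2 * (1 - 2 * t) + 2 * ε * σ ^ 2 * (1 - b)) := by
    rw [hw, hv]
    simp only [sweep, inner_add_left, inner_add_right, real_inner_smul_left, real_inner_smul_right, haa, hyy,
      hya, hay]
    rw [hb]; ring
  have hlag : ⟪w, v⟫ * ⟪w, v⟫ = ‖w‖ ^ 2 * ‖v‖ ^ 2 - 4 * r ^ 4 * σ ^ 2 := by
    have h1 : (1 - 2 * t) = ε * b := by rw [← hεt]; linear_combination -(1 - 2 * t) * hε
    rw [hwv, hww, hvv, h1, hD]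
    linear_combination (4 * r ^ 4 * (b - σ ^ 2 * (1 - b)) ^ 2) * hε
  have hDlow : σ ^ 2 / 4 ≤ D := by
    have h1 : σ ^ 2 * b ^ 2 ≤ 1 * b ^ 2 := by gcongr; nlinarith
    nlinarith [mul_nonneg (sq_nonneg σ) (sq_nonneg (2 * b - 1))]
  have hDpos : 0 < D := lt_of_lt_of_le (by positivity) hDlow
  have hwn : σ * r / 2 ≤ ‖w‖ := by
    refine abs_le_of_sq_le_sq' ?_ (norm_nonneg _) |>.2
    rw [hww]; nlinarith [mul_le_mul_of_nonneg_left hDlow (sq_nonneg r)]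
  obtain ⟨hRw, hKw⟩ := hκ w hwn
  have hnear := (abs_le.mp (hA.near w v v hRw)).2
  have hs2 : 0 ≤ 1 - s ^ 2 := by nlinarith [hA.s_pos, hA.s_lt]
  have hwp : ‖w‖ ^ 2 ≠ 0 := by rw [hww]; positivity
  have hq : ⟪w, v⟫ * ⟪w, v⟫ / ‖w‖ ^ 2 = ‖v‖ ^ 2 - 4 * r ^ 2 * (σ ^ 2 / D) := by
    rw [hlag, sub_div, mul_div_cancel_left₀ _ hwp, hww]; field_simp
  have hκv : K * ‖w‖ ^ (-μ) * ‖v‖ * ‖v‖ ≤ κ * (8 * r ^ 2) := by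
    have hκ0 : 0 ≤ κ := le_trans (mul_nonneg hA.K_pos.le (rpow_nonneg (norm_nonneg _) _)) hKw
    rw [mul_assoc, ← sq, hvv]
    refine mul_le_mul hKw ?_ (by positivity) hκ0
    nlinarith [mul_le_mul_of_nonneg_left (show σ ^ 2 ≤ 1 by nlinarith) (sq_nonneg r)]
  rw [hq, real_inner_self_eq_norm_sq] at hnear
  have hfin : (if b ≤ σ then (1 - s ^ 2) / 2 else 0) ≤ (1 - s ^ 2) * (σ ^ 2 / D) := by
    split_ifs with h
    · have h1 : D ≤ 2 * σ ^ 2 := by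
        have e1 : b ^ 2 ≤ σ ^ 2 := by gcongr
        have e2 : (1 - b) ^ 2 ≤ 1 := by nlinarith
        have e3 : σ ^ 2 * (1 - b) ^ 2 ≤ σ ^ 2 * 1 := by gcongr
        linarith
      have h2 : 1 / 2 ≤ σ ^ 2 / D := by rw [le_div_iff₀ hDpos]; linarith
      have := mul_le_mul_of_nonneg_left h2 hs2
      linarith
    · positivity
  have := mul_le_mul_of_nonneg_left hfin (show 0 ≤ 4 * r ^ 2 by positivity)
  rw [hvv] at hnear
  linarith

lemma dvel_sweep (a : E) (r σ : ℝ) (y : E) {H : ℕ} (hH : 0 < H) {x : ℕ → E}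
    (hx : ∀ j ≤ 2 * H, x j = sweep a r σ y (j / (2 * H : ℕ))) (j : ℕ) (hj : j < 2 * H) :
    dvel (2 * H) x j = r • ((-2 : ℝ) • a + ((if j < H then 1 else -1) * 2 * σ) • y) := by
  have h0 : ((2 * H : ℕ) : ℝ) ≠ 0 := by positivity
  rw [dvel, hx j hj.le, hx (j + 1) hj, sweep_diff a r σ y hH, smul_smul, mul_one_div_cancel h0,
    one_smul]

/-- With `σ = 1 / q` the polygons on the boundary of the sweepout are shorter than `2r`
by a definite factor. -/
lemma sweep_energy (hA : ACon G s μ K R) {a y : E} (ha : ‖a‖ = 1) (hy : ‖y‖ = 1) (hay : ⟪a, y⟫ = 0)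
    {q M : ℕ} (hq : 0 < q) (hM : 0 < M) {σ r : ℝ} (hqσ : q * σ = 1)
    (hσs : σ ≤ (1 - s ^ 2) / 8) (hr : 0 < r)
    (hκ : ∀ z : E, σ * r / 2 ≤ ‖z‖ → R ≤ ‖z‖ ∧ K * ‖z‖ ^ (-μ) ≤ σ ^ 2 / 4) {x : ℕ → E}
    (hx : ∀ j ≤ 2 * (q * M), x j = sweep a r σ y (j / (2 * (q * M) : ℕ))) :
    dE G (2 * (q * M)) x ≤ 4 * r ^ 2 * (1 - σ ^ 2 / 2) := by
  have hq' : (0:ℝ) < q := by exact_mod_cast hq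
  have hσ : 0 < σ := pos_of_mul_pos_right (by rw [hqσ]; exact one_pos) hq'.le
  have hσ1 : σ ≤ 1 := by nlinarith [sq_nonneg s]
  have hH : 0 < q * M := by positivity
  have hH' : (0:ℝ) < ((q * M : ℕ) : ℝ) := by positivity
  have hs2 : 0 ≤ 1 - s ^ 2 := by nlinarith [hA.s_pos, hA.s_lt]
  set H := q * M with hHd
  set A := 1 + σ ^ 2 + 2 * (σ ^ 2 / 4) with hAd
  set B := (1 - s ^ 2) / 2 with hBd
  have hterm j (hj : j ∈ Finset.range (2 * H)) : ⟪G (x j) (dvel (2 * H) x j), dvel (2 * H) x j⟫ ≤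
      4 * r ^ 2 * A - (if j ∈ Finset.Ico H (H + M) then 4 * r ^ 2 * B else 0) := by
    have hj' := Finset.mem_range.mp hj
    have hjr : (j : ℝ) ≤ ((2 * H : ℕ) : ℝ) := by exact_mod_cast hj'.le
    rw [dvel_sweep a r σ y hH hx j hj', hx j hj'.le]
    have e1 : 2 * (j / (2 * H : ℕ) : ℝ) - 1 = (j - H) / H := by push_cast; field_simp
    have h1 := sweep_density hA ha hy hay hσ hσ1 hr hκ (t := j / (2 * H : ℕ))
      (ε := if j < H then 1 else -1) ⟨by positivity, by rw [div_le_one (by positivity)]; exact hjr⟩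
      (by split_ifs <;> norm_num) (by
        rw [show (1 - 2 * (j / (2 * H : ℕ) : ℝ)) = -(2 * (j / (2 * H : ℕ) : ℝ) - 1) by ring, e1]
        split_ifs with h
        · have : (j : ℝ) ≤ H := by exact_mod_cast h.le
          rw [abs_of_nonpos (div_nonpos_of_nonpos_of_nonneg (by linarith) hH'.le)]; ring
        · have : (H : ℝ) ≤ j := by exact_mod_cast not_lt.mp h
          rw [abs_of_nonneg (div_nonneg (by linarith) hH'.le)]; ring)
    refine h1.trans ?_
    rw [mul_sub]
    gcongr
    split_ifs with h2 h3
    · exact le_rfl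
    · exfalso; apply h3
      rw [Finset.mem_Ico] at h2
      have a1 : (H : ℝ) ≤ j := by exact_mod_cast h2.1
      have a2 : (j : ℝ) ≤ H + M := by exact_mod_cast h2.2.le
      rw [e1, abs_of_nonneg (div_nonneg (by linarith) hH'.le), div_le_iff₀ hH']
      have : σ * (H : ℝ) = M := by rw [hHd]; push_cast; linear_combination (M : ℝ) * hqσ
      linarith
    · positivity
    · simp
  have hsum := sum_le_sum hterm
  rw [sum_sub_distrib, sum_const, card_range, Finset.sum_ite_mem,
    Finset.inter_eq_right.mpr, sum_const, Nat.card_Ico] at hsum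
  · rw [dE, div_le_iff₀ (by positivity)]
    refine hsum.trans ?_
    simp only [nsmul_eq_mul, Nat.add_sub_cancel_left]
    have hMH : (M : ℝ) = σ * H := by rw [hHd]; push_cast; linear_combination -(M : ℝ) * hqσ
    rw [hMH]; push_cast
    have : A - σ * B / 2 ≤ 1 - σ ^ 2 / 2 := by
      rw [hAd, hBd]; nlinarith
    have h3 : 0 ≤ 4 * r ^ 2 * (2 * (H : ℝ)) := by positivity
    nlinarith [mul_le_mul_of_nonneg_left this h3]
  · intro j hj
    rw [Finset.mem_Ico] at hj
    rw [Finset.mem_range]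
    have : M ≤ H := by rw [hHd]; exact Nat.le_mul_of_pos_left M hq
    omega

/-- The interior nodes of the polygons of the sweepout. -/
def swNode (a : E) (r σ : ℝ) (m : ℕ) (y : (ℝ ∙ a)ᗮ) : PiLp 2 (fun _ : Fin m => E) :=
  WithLp.toLp 2 fun i => sweep a r σ (y : E) (((i : ℕ) + 1 : ℕ) / (m + 1 : ℕ))

lemma node_swNode (a : E) (r σ : ℝ) (m : ℕ) (y : (ℝ ∙ a)ᗮ) (j : ℕ) (hj : j ≤ m + 1) :
    node (r • a) (-(r • a)) (swNode a r σ m y) j = sweep a r σ (y : E) (j / (m + 1 : ℕ)) := by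
  rw [node]
  split_ifs with h1 h2
  · subst h1; simp [sweep]
  · simp only [swNode]
    rw [Nat.sub_add_cancel (by omega)]
  · have : j = m + 1 := by omega
    subst this
    rw [div_self (by positivity)]
    simp only [sweep]
    norm_num

lemma lipschitz_swNode (a : E) (r σ : ℝ) (m : ℕ) : ∃ K, LipschitzWith K (swNode a r σ m) := by
  let L : (ℝ ∙ a)ᗮ →ₗ[ℝ] PiLp 2 (fun _ : Fin m => E) :=
    { toFun := fun y => WithLp.toLp 2 fun i : Fin m =>
        (r * (σ * (1 - |2 * ((((i : ℕ) + 1 : ℕ) : ℝ) / (m + 1 : ℕ)) - 1|))) • (y : E)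
      map_add' := fun y z => by ext i; simp [smul_add]
      map_smul' := fun k y => by ext i; simp [smul_comm k] }
  refine ⟨_, ((L.toContinuousLinearMap.lipschitz).dist_le_mul |> fun h => LipschitzWith.of_dist_le_mul
    (K := ‖L.toContinuousLinearMap‖₊) fun y z => ?_)⟩
  have h1 := h y z
  rw [dist_eq_norm] at h1 ⊢
  have h2 : swNode a r σ m y - swNode a r σ m z =
      L.toContinuousLinearMap y - L.toContinuousLinearMap z := by
    ext i
    simp only [swNode, sweep, LinearMap.coe_toContinuousLinearMap', L, LinearMap.coe_mk, AddHom.coe_mk,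
      PiLp.sub_apply, smul_add, smul_smul]
    abel
  rw [h2]
  exact h1

lemma continuous_poly_node {X : Type*} [TopologicalSpace X] (p q : E) (m : ℕ)
    {H : X → PiLp 2 (fun _ : Fin m => E)} (hH : Continuous H) {w : X → ℝ} (hw : Continuous w) :
    Continuous fun z => poly (m + 1) (node p q (H z)) (w z) := by
  have hn i : Continuous fun z => node p q (H z) i :=
    (contDiff_node p q i).continuous.comp hH
  unfold poly
  refine (hn 0).add (continuous_finsetSum _ fun j _ => ?_)
  have := hn (j + 1)
  have := hn j
  fun_prop

/-- Any deformation of the sweepout relative to its boundary contains a polygon through the origin. -/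
lemma exists_poly_zero {a : E} (ha : ‖a‖ = 1) {r σ : ℝ} (hr : 0 < r) (hσ : 0 < σ) {m H : ℕ}
    (hH : 0 < H) (hm : m + 1 = 2 * H) {F : (ℝ ∙ a)ᗮ → PiLp 2 (fun _ : Fin m => E)}
    (hF : Continuous F) (hb : ∀ y, ‖y‖ = 1 → F y = swNode a r σ m y) :
    ∃ y, ‖y‖ ≤ 1 ∧ ∃ i < m + 1, ∃ τ ∈ Icc (0:ℝ) 1,
      node (r • a) (-(r • a)) (F y) i + τ • (node (r • a) (-(r • a)) (F y) (i + 1) -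
        node (r • a) (-(r • a)) (F y) i) = 0 := by
  classical
  let P : E →L[ℝ] (ℝ ∙ a)ᗮ := ((ℝ ∙ a)ᗮ).orthogonalProjectionOnto
  let cy : E → (ℝ ∙ a)ᗮ := fun z => (max 1 ‖P z‖)⁻¹ • P z
  let w : E → ℝ := fun z => (m + 1 : ℕ) * ((1 - max (-1) (min 1 ⟪a, z⟫)) / 2)
  have hcyc : Continuous cy := by
    refine Continuous.smul (Continuous.inv₀ (continuous_const.max P.continuous.norm) fun z => ?_) P.continuous
    have := le_max_left 1 ‖P z‖
    positivity
  have hcy1 z : ‖cy z‖ ≤ 1 := by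
    have h1 : 0 < max 1 ‖P z‖ := lt_of_lt_of_le one_pos (le_max_left 1 ‖P z‖)
    simp only [cy]
    rw [norm_smul, norm_inv, norm_eq_abs, abs_of_pos h1, inv_mul_le_iff₀ h1, mul_one]
    exact le_max_right _ _
  have hwc : Continuous w := by
    have : Continuous fun z : E => ⟪a, z⟫ := continuous_const.inner continuous_id
    simp only [w]
    fun_prop
  have hf := continuous_poly_node (r • a) (-(r • a)) m (hF.comp hcyc) hwc
  set f : E → E := fun z => poly (m + 1) (node (r • a) (-(r • a)) ((F ∘ cy) z)) (w z) with hfd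
  have hw0 z : 0 ≤ w z := by
    have : max (-1) (min 1 ⟪a, z⟫) ≤ 1 := max_le (by norm_num) (min_le_left _ _)
    simp only [w]
    exact mul_nonneg (by positivity) (by linarith)
  have haa : ⟪a, a⟫ = 1 := by rw [real_inner_self_eq_norm_sq, ha]; norm_num
  have hH0 : (0:ℝ) < H := by exact_mod_cast hH
  have hdec (z : E) : z = ⟪a, z⟫ • a + (P z : E) := by
    have h1 := Submodule.starProjection_add_starProjection_orthogonal (K := ℝ ∙ a) z
    rw [Submodule.starProjection_unit_singleton ℝ ha] at h1
    exact h1.symm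
  have hPa : ∀ y : (ℝ ∙ a)ᗮ, ⟪a, (y : E)⟫ = 0 := fun y =>
    Submodule.mem_orthogonal_singleton_iff_inner_right.mp y.2
  have hbd z (hz : ‖z‖ = 2) : 0 < ⟪f z, z⟫ := by
    rcases le_or_gt 1 ⟪a, z⟫ with h1 | h1
    · have : w z = 0 := by simp only [w]; rw [min_eq_left h1]; norm_num
      simp only [hfd, this]
      rw [poly_of_le _ _ le_rfl, node_zero, real_inner_smul_left]
      positivity
    rcases le_or_gt ⟪a, z⟫ (-1) with h2 | h2
    · have : w z = (m + 1 : ℕ) := by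
        simp only [w]; rw [min_eq_right h1.le, max_eq_left h2]; norm_num
      simp only [hfd, this]
      rw [poly_of_ge _ _ le_rfl, node_last, inner_neg_left, real_inner_smul_left]
      nlinarith
    set u := ⟪a, z⟫ with hu
    have hwz : w z = H * (1 - u) := by
      simp only [w]; rw [← hu, min_eq_right h1.le, max_eq_right h2.le, hm]; push_cast; ring
    have hnz : ‖z‖ ^ 2 = u ^ 2 + ‖P z‖ ^ 2 := by
      rw [← real_inner_self_eq_norm_sq]
      conv_lhs => rw [hdec z]
      simp only [inner_add_left, inner_add_right, real_inner_smul_left, real_inner_smul_right, haa,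
        hPa, real_inner_comm (a : E), ← hu]
      rw [real_inner_self_eq_norm_sq, Submodule.coe_norm]; ring
    have hP1 : 1 ≤ ‖P z‖ := by
      rw [hz] at hnz
      nlinarith [norm_nonneg (P z)]
    have hPp : 0 < ‖P z‖ := by linarith
    have hcyz : cy z = ‖P z‖⁻¹ • P z := by simp only [cy]; rw [max_eq_right hP1]
    have hcyn : ‖cy z‖ = 1 := by
      rw [hcyz, norm_smul, norm_inv, norm_norm, inv_mul_cancel₀ hPp.ne']
    have hcz : ⟪(cy z : E), z⟫ = ‖P z‖ := by
      have h3 : ⟪(cy z : E), z⟫ = ⟪(cy z : E), ⟪a, z⟫ • a + (P z : E)⟫ := by rw [← hdec z]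
      rw [h3, inner_add_right, real_inner_smul_right, real_inner_comm a, hPa, mul_zero, zero_add,
        hcyz, Submodule.coe_smul, real_inner_smul_left, real_inner_self_eq_norm_sq,
        Submodule.coe_norm]
      rw [Submodule.coe_norm] at hPp
      field_simp
    have hx j (hj : j ≤ 2 * H) : node (r • a) (-(r • a)) (F (cy z)) j =
        sweep a r σ (cy z : E) (j / (2 * H : ℕ)) := by
      rw [hb _ hcyn, node_swNode _ _ _ _ _ _ (by omega), hm]
    set x := node (r • a) (-(r • a)) (F (cy z)) with hxd
    have hval : f z = poly (2 * H) x (w z) := by simp only [hfd, hxd, hm, Function.comp]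
    set cl : ℕ → ℝ := fun j => max 0 (min 1 (w z - j)) with hcl
    have hterm j (hj : j ∈ Finset.range (2 * H)) : ⟪cl j • (x (j + 1) - x j), z⟫ =
        cl j * (r * (-u + (if j < H then 1 else -1) * σ * ‖P z‖) / H) := by
      have hj' := Finset.mem_range.mp hj
      rw [hx j hj'.le, hx (j + 1) hj', sweep_diff a r σ _ hH]
      simp only [real_inner_smul_left, inner_add_left, ← hu, hcz]
      push_cast
      field_simp
    have t4 : ⟪x 0, z⟫ = r * u := by
      rw [hx 0 (by omega)]
      simp [sweep, real_inner_smul_left, hu]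
    rw [hval, poly, inner_add_left, sum_inner, sum_congr rfl hterm, t4]
    have hs1 := sum_clamp (hw0 z) H
    have hs2 := sum_clamp (hw0 z) (2 * H)
    rw [two_mul, Finset.sum_range_add, hs1] at hs2
    rw [two_mul, Finset.sum_range_add]
    have t1 : ∑ j ∈ Finset.range H, cl j * (r * (-u + (if j < H then 1 else -1) * σ * ‖P z‖) / H) =
        min (H : ℝ) (w z) * (r * (-u + σ * ‖P z‖) / H) := by
      rw [← hs1, sum_mul]
      refine sum_congr rfl fun j hj => ?_
      rw [if_pos (Finset.mem_range.mp hj), one_mul]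
    have t2 : ∑ j ∈ Finset.range H, cl (H + j) * (r * (-u + (if H + j < H then 1 else -1) * σ * ‖P z‖) / H) =
        (min ((H + H : ℕ) : ℝ) (w z) - min (H : ℝ) (w z)) * (r * (-u - σ * ‖P z‖) / H) := by
      rw [← hs2, add_sub_cancel_left, sum_mul]
      refine sum_congr rfl fun j hj => ?_
      rw [if_neg (by omega)]
      simp only [hcl]
      ring
    rw [t1, t2]
    have t3 : min ((H + H : ℕ) : ℝ) (w z) = w z := by
      apply min_eq_right; rw [hwz]; push_cast; nlinarith
    rw [t3, hwz]
    have t5 : r * u + (min (H : ℝ) (H * (1 - u)) * (r * (-u + σ * ‖P z‖) / H) +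
        (H * (1 - u) - min (H : ℝ) (H * (1 - u))) * (r * (-u - σ * ‖P z‖) / H)) =
        r * u ^ 2 + r * σ * ‖P z‖ * (2 * min (H : ℝ) (H * (1 - u)) - H * (1 - u)) / H := by
      field_simp; ring
    rw [t5]
    have t6 : 0 < 2 * min (H : ℝ) (H * (1 - u)) - H * (1 - u) := by
      rcases min_choice (H : ℝ) (H * (1 - u)) with h | h <;> rw [h] <;> nlinarith
    positivity
  obtain ⟨z, -, hz⟩ := exists_zero_of_boundary hf (R := 2) (by norm_num) (by
    intro z hz l hl he
    have h1 := hbd z hz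
    have he' : f z = -(l • z) := he
    rw [he', inner_neg_left, real_inner_smul_left, real_inner_self_eq_norm_sq] at h1
    have : 0 ≤ l * ‖z‖ ^ 2 := by positivity
    linarith)
  obtain ⟨i, hi, τ, hτ, h1⟩ := poly_seg (node (r • a) (-(r • a)) ((F ∘ cy) z)) (hw0 z) (m + 1) (by omega)
  exact ⟨cy z, hcy1 z, i, hi, τ, hτ, h1.symm.trans hz⟩

/-- For every large `r` the min-max construction joins `r a` to `-r a` by a geodesic of length close
to `2r` and index at most `finrank E - 1`. -/
theorem sweep_geo (hG : RMet G c C) (hA : ACon G s μ K R) {ε : ℝ} (hε : 0 < ε) (hε1 : ε < 1) {n : ℕ}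
    (hn : finrank ℝ E = n) {a : E} (ha : ‖a‖ = 1) :
    ∃ r0, ∀ r ≥ r0, ∃ x v, IsGeo G x v ∧ x 0 = r • a ∧ x 1 = -(r • a) ∧
      (2 * r * (1 - ε)) ^ 2 ≤ ⟪G (x 0) (v 0), v 0⟫ ∧
      ∀ s t, 0 ≤ s → s < t → t ≤ 1 → IndexProp G n x v s t := by
  have hs2 : 0 < 1 - s ^ 2 := by nlinarith [hA.s_pos, hA.s_lt]
  obtain ⟨q, hq⟩ := exists_nat_gt (8 / (1 - s ^ 2))
  have hq0 : (0:ℝ) < q := lt_trans (by positivity) hq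
  have hqn : 0 < q := by exact_mod_cast hq0
  set σ : ℝ := 1 / q with hσ
  have hσ0 : 0 < σ := by positivity
  have hqσ : q * σ = 1 := by rw [hσ]; field_simp
  have hσs : σ ≤ (1 - s ^ 2) / 8 := by
    rw [div_lt_iff₀ hs2] at hq
    rw [hσ, div_le_iff₀ hq0]; linarith
  have hσ1 : σ ≤ 1 := by nlinarith [sq_nonneg s]
  set η := min (ε / 2) (σ ^ 2 / 6) with hη
  have hη0 : 0 < η := by positivity
  have hηε : 2 * η ≤ ε := by have := min_le_left (ε / 2) (σ ^ 2 / 6); linarith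
  have hησ : 6 * η ≤ σ ^ 2 := by have := min_le_right (ε / 2) (σ ^ 2 / 6); linarith
  obtain ⟨r1, hr₁⟩ := link_bound hG hA hη0 (by linarith : η < 1)
  obtain ⟨M1, hRM, hM1, hM⟩ := exists_rpow_small hA.μ_pos K R (σ ^ 2 / 4) (by positivity)
  refine ⟨max (max 1 r1) (2 * M1 / σ), fun r hr => ?_⟩
  have hr1 : 1 ≤ r := ((le_max_left _ _).trans (le_max_left _ _)).trans hr
  have hr2 : r1 ≤ r := ((le_max_right _ _).trans (le_max_left _ _)).trans hr
  have hr3 : 2 * M1 ≤ r * σ := (div_le_iff₀ hσ0).1 ((le_max_right _ _).trans hr)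
  have hr0 : 0 < r := by linarith
  have hκ (z : E) : σ * r / 2 ≤ ‖z‖ → R ≤ ‖z‖ ∧ K * ‖z‖ ^ (-μ) ≤ σ ^ 2 / 4 := fun hz =>
    ⟨by linarith, hM _ (by linarith)⟩
  obtain ⟨N0, hN0⟩ := hr₁ r hr2
  have hPa : ∀ y : (ℝ ∙ a)ᗮ, ⟪a, (y : E)⟫ = 0 := fun y =>
    Submodule.mem_orthogonal_singleton_iff_inner_right.mp y.2
  let m : ℕ → ℕ := fun k => 2 * (q * (k + N0 + 1)) - 1
  have hm k : m k + 1 = 2 * (q * (k + N0 + 1)) := by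
    have : 0 < q * (k + N0 + 1) := by positivity
    simp only [m]; omega
  have hmk k : k + N0 + 1 ≤ m k + 1 := by
    rw [hm]
    have : k + N0 + 1 ≤ q * (k + N0 + 1) := Nat.le_mul_of_pos_left _ hqn
    omega
  have hmt : Tendsto m atTop atTop := tendsto_atTop_mono (fun k => by have := hmk k; simp only [id]; omega)
    tendsto_id
  choose Kl hKl using fun k => lipschitz_swNode a r σ (m k)
  have hY : finrank ℝ (ℝ ∙ a)ᗮ + 1 ≤ n := by
    have h1 := Submodule.finrank_add_finrank_orthogonal (ℝ ∙ a)
    have ha0 : a ≠ 0 := by intro h; rw [h, norm_zero] at ha; norm_num at ha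
    rw [finrank_span_singleton ha0, hn] at h1
    omega
  have hx : ∀ k (y : (ℝ ∙ a)ᗮ), ∀ j ≤ 2 * (q * (k + N0 + 1)),
      node (r • a) (-(r • a)) (swNode a r σ (m k) y) j =
        sweep a r σ (y : E) (j / (2 * (q * (k + N0 + 1)) : ℕ)) := by
    intro k y j hj
    rw [node_swNode _ _ _ _ _ _ (by rw [hm]; exact hj), hm]
  obtain ⟨x, v, h1, h2, h3, h4, h5⟩ := minmax_geo hG (Y := (ℝ ∙ a)ᗮ) (n := n) hY (p := r • a)
    (q := -(r • a)) hmt (b := C * (4 * r) ^ 2) (e := 4 * r ^ 2 * (1 - η)) (δ := 4 * r ^ 2 * η) (by positivity)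
    (h := fun k => swNode a r σ (m k)) (K := Kl) hKl
    (by
      intro k y hy
      have hH : 0 < q * (k + N0 + 1) := by positivity
      rw [hm, dE, div_le_iff₀ (by positivity)]
      refine (sum_le_sum (g := fun _ => C * (4 * r) ^ 2) fun j hj => ?_).trans ?_
      · rw [dvel_sweep a r σ _ hH (hx k y) j (Finset.mem_range.mp hj)]
        refine (le_abs_self _).trans ((hG.upper _ _ _).trans ?_)
        rw [mul_assoc, ← sq]
        have hC := hG.Cpos
        gcongr
        rw [norm_smul, norm_eq_abs, abs_of_pos hr0, mul_comm]
        gcongr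
        refine (norm_add_le _ _).trans ?_
        rw [norm_smul, norm_smul, ha]
        have e1 : ‖((if j < q * (k + N0 + 1) then 1 else -1) * 2 * σ : ℝ)‖ = 2 * σ := by
          split_ifs <;> simp [abs_of_pos hσ0]
        have e2 : ‖(y : E)‖ ≤ 1 := hy
        rw [e1]
        norm_num
        nlinarith [norm_nonneg (y : E)]
      · rw [sum_const, card_range, nsmul_eq_mul, mul_comm])
    (by
      intro k y hy
      rw [hm]
      refine (sweep_energy hA ha (y := (y : E)) hy (hPa y) hqn (Nat.succ_pos _) hqσ hσs hr0 hκ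
        (hx k y)).trans ?_
      have : 4 * r ^ 2 * (1 - σ ^ 2 / 2) ≤ 4 * r ^ 2 * (1 - 3 * η) := by gcongr; linarith
      linarith)
    (by
      intro k H hH hb
      obtain ⟨y, hy, i, hi, τ, hτ, h0⟩ := exists_poly_zero ha hr0 hσ0 (H := q * (k + N0 + 1))
        (by positivity) (hm k) hH hb
      refine ⟨y, hy, hN0 (m k + 1) (by have := hmk k; omega) _ ?_ ?_ i hi τ hτ h0⟩
      · rw [node_zero, norm_smul, ha, norm_eq_abs, abs_of_pos hr0, mul_one]
      · rw [node_last, norm_neg, norm_smul, ha, norm_eq_abs, abs_of_pos hr0, mul_one])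
  refine ⟨x, v, h1, h2, h3, le_trans ?_ h4, h5⟩
  have e1 : (1 - ε) ^ 2 ≤ 1 - 2 * η := by nlinarith
  have e2 : 4 * r ^ 2 * (1 - ε) ^ 2 ≤ 4 * r ^ 2 * (1 - 2 * η) := by gcongr
  linarith

/-! ### Limits of index bounds and the end of the proof -/

lemma qf_scale (x v V δ : E) (k : ℝ) : qf G x (k • v) V (k • δ) = k ^ 2 * qf G x v V δ := by
  simp only [qf, map_smul, real_inner_smul_left, real_inner_smul_right]; ring

/-- The index bound is invariant under affine reparametrisation. -/
lemma IndexProp.scale {n : ℕ} {x v : ℝ → E} {k d a b : ℝ} (hk : 0 < k)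
    (h : IndexProp G n x v (k * a + d) (k * b + d)) :
    IndexProp G n (fun t => x (k * t + d)) (fun t => k • v (k * t + d)) a b := by
  intro V hV ha hb
  have hinv t : k⁻¹ * (k * t + d - d) = t := by field_simp; ring
  obtain ⟨α, hα, hint⟩ := h (fun i t => V i (k⁻¹ * (t - d))) (fun i => (hV i).comp (by fun_prop))
    (fun i => by simp only [hinv, ha]) (fun i => by simp only [hinv, hb])
  refine ⟨α, hα, ?_⟩
  have hd : ∀ i t, k • deriv (fun t => V i (k⁻¹ * (t - d))) (k * t + d) = deriv (V i) t := by
    intro i t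
    have h1 : HasDerivAt (fun t : ℝ => k⁻¹ * (t - d)) k⁻¹ (k * t + d) := by
      simpa using ((hasDerivAt_id (k * t + d)).sub_const d).const_mul k⁻¹
    have h2 : HasDerivAt (V i) (deriv (V i) t) (k⁻¹ * (k * t + d - d)) := by
      rw [hinv]; exact ((hV i).differentiable one_ne_zero t).hasDerivAt
    have h3 := (h2.scomp (k * t + d) h1).deriv
    have h4 : deriv (fun t => V i (k⁻¹ * (t - d))) (k * t + d) = k⁻¹ • deriv (V i) t := h3
    rw [h4, smul_smul, mul_inv_cancel₀ hk.ne', one_smul]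
  let f : ℝ → ℝ := fun t => qf G (x t) (v t)
    (∑ i, α i • V i (k⁻¹ * (t - d))) (∑ i, α i • deriv (fun t => V i (k⁻¹ * (t - d))) t)
  have key t : qf G (x (k * t + d)) (k • v (k * t + d)) (∑ i, α i • V i t)
      (∑ i, α i • deriv (V i) t) = k ^ 2 * f (k * t + d) := by
    have e1 : ∑ i, α i • deriv (V i) t =
        k • ∑ i, α i • deriv (fun t => V i (k⁻¹ * (t - d))) (k * t + d) := by
      rw [smul_sum]
      exact sum_congr rfl fun i _ => by rw [smul_comm, hd]
    rw [e1, qf_scale]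
    simp only [f, hinv]
  rw [integral_congr (fun t _ => key t), integral_const_mul,
    integral_comp_mul_add f hk.ne', smul_eq_mul]
  exact mul_nonneg (sq_nonneg k) (mul_nonneg (inv_nonneg.mpr hk.le) hint)

lemma UGeo.tendsto_of (hG : RMet G c C) {x v : ℕ → ℝ → E} {y w : ℝ → E}
    (hx : ∀ k, UGeo G (x k) (v k)) (hy : UGeo G y w)
    (h0 : Tendsto (fun k => x k 0) atTop (nhds (y 0))) (h1 : Tendsto (fun k => v k 0) atTop (nhds (w 0)))
    (t : ℝ) : Tendsto (fun k => x k t) atTop (nhds (y t)) ∧ Tendsto (fun k => v k t) atTop (nhds (w t)) := by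
  obtain ⟨K, hK0, hK⟩ := IsGeo.close_vel hG 1 |t|
  have e0 : Tendsto (fun k => K * (‖x k 0 - y 0‖ + ‖v k 0 - w 0‖)) atTop (nhds 0) := by
    simpa using ((tendsto_iff_norm_sub_tendsto_zero.mp h0).add
      (tendsto_iff_norm_sub_tendsto_zero.mp h1)).const_mul K
  have h := fun k => hK _ _ _ _ (hx k).1 hy.1 (hx k).2.le hy.2.le t le_rfl
  exact ⟨tendsto_iff_norm_sub_tendsto_zero.mpr (squeeze_zero (fun k => norm_nonneg _) (fun k => (h k).1) e0),
    tendsto_iff_norm_sub_tendsto_zero.mpr (squeeze_zero (fun k => norm_nonneg _) (fun k => (h k).2) e0)⟩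

/-- The index bound passes to limits of unit speed geodesics. -/
lemma IndexProp.limit (hG : RMet G c C) {n : ℕ} {x v : ℕ → ℝ → E} {y w : ℝ → E}
    (hx : ∀ k, UGeo G (x k) (v k)) (hy : UGeo G y w)
    (h0 : Tendsto (fun k => x k 0) atTop (nhds (y 0))) (h1 : Tendsto (fun k => v k 0) atTop (nhds (w 0)))
    {a b : ℝ} (hab : a ≤ b) (h : ∀ᶠ k in atTop, IndexProp G n (x k) (v k) a b) : IndexProp G n y w a b := by
  intro V hV ha hb
  obtain ⟨N, hN⟩ := eventually_atTop.mp h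
  have hex k : ∃ α : Fin n → ℝ, ‖α‖ = 1 ∧ 0 ≤ ∫ t in a..b, qf G (x (k + N) t) (v (k + N) t)
      (∑ i, α i • V i t) (∑ i, α i • deriv (V i) t) := hN (k + N) (by omega) V hV ha hb
  choose α hα hint using hex
  obtain ⟨α', hα', φ, hφ, hlim⟩ := (isCompact_sphere (0 : Fin n → ℝ) 1).tendsto_subseq
    (x := α) (fun k => by simp [hα k])
  refine ⟨α', by simpa using hα', ?_⟩
  have hφN : Tendsto (fun k => φ k + N) atTop atTop :=
    tendsto_atTop_mono (fun k => Nat.le_add_right _ _) hφ.tendsto_atTop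
  have hconv := UGeo.tendsto_of hG (fun k => hx (φ k + N)) hy (h0.comp hφN) (h1.comp hφN)
  have hαi i : Tendsto (fun k => α (φ k) i) atTop (nhds (α' i)) :=
    (tendsto_pi_nhds.mp hlim) i
  have hcV i : Continuous (V i) := (hV i).continuous
  have hcD i : Continuous (deriv (V i)) := (hV i).continuous_deriv le_rfl
  have hbd (f : ℝ → E) : Continuous f → ∃ B, ∀ t ∈ Ioo a b, ‖f t‖ ≤ B := fun hf => by
    obtain ⟨B, hB⟩ := isCompact_Icc.exists_bound_of_continuousOn (s := Icc a b) hf.continuousOn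
    exact ⟨B, fun t ht => hB t (Ioo_subset_Icc_self ht)⟩
  choose B1 hB1 using fun i => hbd (V i) (hcV i)
  choose B2 hB2 using fun i => hbd (deriv (V i)) (hcD i)
  obtain ⟨X0, hX0⟩ := (isBounded_range_of_tendsto _ h0).exists_norm_le
  set Sv := √(1 / c)
  set Mx := X0 + Sv * max |a| |b|
  set M := max (max Mx Sv) (max (∑ i, B1 i) (∑ i, B2 i))
  have hfin := qf_limit hG (a := a) (b := b) (M := M) (x := fun k => x (φ k + N)) (v := fun k => v (φ k + N))
    (V := fun k t => ∑ i, α (φ k) i • V i t) (δ := fun k t => ∑ i, α (φ k) i • deriv (V i) t)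
    (x' := y) (v' := w) (V' := fun t => ∑ i, α' i • V i t) (δ' := fun t => ∑ i, α' i • deriv (V i) t)
    (fun k => ⟨(hx _).1.continuous_x.stronglyMeasurable, ((hx _).1.continuous_v hG).stronglyMeasurable,
      (continuous_finsetSum _ fun i _ => (hcV i).const_smul _).stronglyMeasurable,
      (continuous_finsetSum _ fun i _ => (hcD i).const_smul _).stronglyMeasurable⟩)
    (Eventually.of_forall fun k t ht => by
      have hα1 i : |α (φ k) i| ≤ 1 := by
        rw [← hα (φ k)]; exact norm_le_pi_norm (α (φ k)) i
      refine ⟨?_, ?_, ?_, ?_⟩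
      · refine le_trans ?_ ((le_max_left Mx Sv).trans (le_max_left _ _))
        have e1 := Convex.norm_image_sub_le_of_norm_hasDerivWithin_le (s := univ) (C := Sv)
          (fun t _ => ((hx (φ k + N)).1 t).1.hasDerivWithinAt)
          (fun t _ => (hx (φ k + N)).norm_v hG t) convex_univ (mem_univ 0) (mem_univ t)
        have e2 : ‖x (φ k + N) 0‖ ≤ X0 := hX0 _ (mem_range_self _)
        have e3 : ‖t - 0‖ ≤ max |a| |b| := by
          rw [sub_zero, norm_eq_abs]; exact abs_le_max_abs_abs ht.1.le ht.2.le
        have e4 : ‖x (φ k + N) t‖ ≤ ‖x (φ k + N) t - x (φ k + N) 0‖ + ‖x (φ k + N) 0‖ := by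
          simpa using norm_add_le (x (φ k + N) t - x (φ k + N) 0) (x (φ k + N) 0)
        have e5 : Sv * ‖t - 0‖ ≤ Sv * max |a| |b| := mul_le_mul_of_nonneg_left e3 (sqrt_nonneg _)
        linarith
      · exact ((hx _).norm_v hG t).trans ((le_max_right Mx Sv).trans (le_max_left _ _))
      · refine le_trans ?_ ((le_max_left (∑ i, B1 i) _).trans (le_max_right _ _))
        refine norm_sum_le_of_le _ fun i _ => ?_
        rw [norm_smul]
        exact (mul_le_of_le_one_left (norm_nonneg _) (hα1 i)).trans (hB1 i t ht)
      · refine le_trans ?_ ((le_max_right _ (∑ i, B2 i)).trans (le_max_right _ _))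
        refine norm_sum_le_of_le _ fun i _ => ?_
        rw [norm_smul]
        exact (mul_le_of_le_one_left (norm_nonneg _) (hα1 i)).trans (hB2 i t ht))
    hab countable_empty
    (fun t _ _ => ⟨(hconv t).1, (hconv t).2,
      tendsto_finsetSum _ fun i _ => (hαi i).smul_const _,
      tendsto_finsetSum _ fun i _ => (hαi i).smul_const _⟩)
  exact ge_of_tendsto' hfin fun k => hint (φ k)

lemma hasDerivAt_integral_cont {F F' : ℝ → ℝ → ℝ} (hF : ∀ s, Continuous (F s))
    (hF' : Continuous fun z : ℝ × ℝ => F' z.1 z.2) (hd : ∀ s t, HasDerivAt (fun s => F s t) (F' s t) s)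
    (a b s0 : ℝ) : HasDerivAt (fun s => ∫ t in a..b, F s t) (∫ t in a..b, F' s0 t) s0 := by
  obtain ⟨B, hB⟩ := ((isCompact_closedBall s0 1).prod (isCompact_uIcc (a := a) (b := b))).exists_bound_of_continuousOn
    hF'.continuousOn
  refine (hasDerivAt_integral_of_dominated_loc_of_deriv_le (bound := fun _ => B)
    (closedBall_mem_nhds s0 one_pos) (Eventually.of_forall fun s => (hF s).aestronglyMeasurable)
    ((hF s0).intervalIntegrable _ _) ?_ ?_ (by simp) ?_).2
  · exact (hF'.comp (by fun_prop : Continuous fun t : ℝ => (s0, t))).aestronglyMeasurable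
  · exact Eventually.of_forall fun t ht s hs => hB (s, t) ⟨hs, uIoc_subset_uIcc ht⟩
  · exact Eventually.of_forall fun t _ s _ => hd s t

lemma IsAsympConical.rdist_eq (hg : IsAsympConical n g α μ) : rdist g = rd (opOf g) := by
  funext p q
  simp only [rdist, rd, clen, glen, hg.inner_opOf]

lemma IsAsympConical.secondVar_eq (hg : IsAsympConical n g α μ) (hG : RMet (opOf g) c C)
    {x v V : ℝ → En n} (hx : IsGeo (opOf g) x v) (hV : ContDiff ℝ 1 V) (a b : ℝ) :
    secondVar g x V a b = ∫ t in a..b, qf (opOf g) (x t) (v t) (V t) (deriv V t) := by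
  have hcx := hx.continuous_x
  have hcv := hx.continuous_v hG
  have hcV := hV.continuous
  have hG0 : Continuous (opOf g) := hG.smooth.continuous
  have hG1 : Continuous (fderiv ℝ (opOf g)) := hG.contDiff_fderiv.continuous
  have hder (s t : ℝ) : deriv (fun t => x t + s • V t) t = v t + s • deriv V t :=
    ((hx t).1.fun_add ((hV.differentiable one_ne_zero t).hasDerivAt.fun_const_smul s)).deriv
  let F : ℝ → ℝ → ℝ := fun s t => ⟪opOf g (x t + s • V t) (v t + s • deriv V t), v t + s • deriv V t⟫
  let F1 : ℝ → ℝ → ℝ := fun s t => ⟪fderiv ℝ (opOf g) (x t + s • V t) (V t) (v t + s • deriv V t),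
    v t + s • deriv V t⟫ + 2 * ⟪opOf g (x t + s • V t) (v t + s • deriv V t), deriv V t⟫
  let F2 : ℝ → ℝ → ℝ := fun s t => qf (opOf g) (x t + s • V t) (v t + s • deriv V t) (V t) (deriv V t)
  have hp : Continuous fun z : ℝ × ℝ => x z.2 + z.1 • V z.2 := by fun_prop
  have hq : Continuous fun z : ℝ × ℝ => v z.2 + z.1 • deriv V z.2 := by fun_prop
  have hV2 : Continuous fun z : ℝ × ℝ => V z.2 := by fun_prop
  have hD2 : Continuous fun z : ℝ × ℝ => deriv V z.2 := by fun_prop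
  have hF : Continuous fun z : ℝ × ℝ => F z.1 z.2 := ((hG0.comp hp).clm_apply hq).inner hq
  have hF1 : Continuous fun z : ℝ × ℝ => F1 z.1 z.2 :=
    ((((hG1.comp hp).clm_apply hV2).clm_apply hq).inner hq).add
      ((((hG0.comp hp).clm_apply hq).inner hD2).const_mul 2)
  have hF2 : Continuous fun z : ℝ × ℝ => F2 z.1 z.2 := by
    have := hG.continuous_qf.comp (hp.prodMk (hq.prodMk (hV2.prodMk hD2)))
    exact this
  have hsl : ∀ {f : ℝ → ℝ → ℝ}, (Continuous fun z : ℝ × ℝ => f z.1 z.2) → ∀ s, Continuous (f s) :=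
    fun hf s => hf.comp (by fun_prop : Continuous fun t : ℝ => (s, t))
  have hE : (fun s : ℝ => cenergy g (fun t => x t + s • V t) a b) = fun s => ∫ t in a..b, F s t := by
    funext s
    simp only [cenergy, hder, F, hg.inner_opOf]
  have hE1 : deriv (fun s => ∫ t in a..b, F s t) = fun s => ∫ t in a..b, F1 s t := by
    funext s
    exact (hasDerivAt_integral_cont (hsl hF) hF1 (fun s t => phi_deriv hG _ _ _ _ s) a b s).deriv
  rw [secondVar, hE, iteratedDeriv_succ, iteratedDeriv_one, hE1,
    (hasDerivAt_integral_cont (hsl hF1) hF2 (fun s t => phi_deriv2 hG _ _ _ _ s) a b 0).deriv]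
  simp only [F2, zero_smul, add_zero]

lemma IsAsympConical.morse (hg : IsAsympConical n g α μ) (hG : RMet (opOf g) c C) (hn : 1 ≤ n)
    {x v : ℝ → En n} (hx : IsGeo (opOf g) x v) {a b : ℝ} (h : IndexProp (opOf g) n x v a b) :
    MorseIndexLEOn g x a b (n - 1) := by
  intro W hW hneg
  refine rank_le fun S hS => ?_
  by_contra! hlt
  have hcard : n ≤ S.card := by omega
  let f : Fin n → W := fun i => (S.equivFin.symm (Fin.castLE hcard i) : W)
  have hf : LinearIndependent ℝ f :=
    hS.comp (fun i : Fin n => S.equivFin.symm (Fin.castLE hcard i))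
      (S.equivFin.symm.injective.comp (Fin.castLE_injective hcard))
  obtain ⟨β, hβ, hint⟩ := h (fun i => (f i : ℝ → En n)) (fun i => (hW _ (f i).2).1)
    (fun i => (hW _ (f i).2).2.1) (fun i => (hW _ (f i).2).2.2)
  let U : W := ∑ i, β i • f i
  have hUt t : (U : ℝ → En n) t = ∑ i, β i • (f i : ℝ → En n) t := by
    simp [U, Finset.sum_apply]
  have hU0 : (U : ℝ → En n) ≠ 0 := by
    intro h0
    have h1 : U = 0 := Subtype.ext h0
    have h2 : β = 0 := funext fun i => Fintype.linearIndependent_iff.mp hf β h1 i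
    rw [h2, norm_zero] at hβ
    exact zero_ne_one hβ
  have hneg' := hneg U U.2 hU0
  have hd t : deriv (U : ℝ → En n) t = ∑ i, β i • deriv (f i : ℝ → En n) t := by
    have h1 : (U : ℝ → En n) = fun t => ∑ i, β i • (f i : ℝ → En n) t := funext hUt
    rw [h1]
    exact (HasDerivAt.fun_sum fun i _ =>
      (((hW _ (f i).2).1.differentiable one_ne_zero t).hasDerivAt.const_smul (β i))).deriv
  rw [hg.secondVar_eq hG hx (hW U U.2).1] at hneg'
  simp only [hUt, hd] at hneg'
  exact absurd hint (not_le.mpr hneg')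

/-- Properness of the exponential map at one point of a geodesic makes both ends leave
every compact set. -/
lemma IsAsympConical.escape (hg : IsAsympConical n g α μ) (hG : RMet (opOf g) c C)
    (hproper : ProperExpAll g) {x v : ℝ → En n} (hx : UGeo (opOf g) x v) (B : ℝ) :
    ∃ T, ∀ t, T ≤ |t| → B < ‖x t‖ := by
  obtain ⟨ex, hex, hK⟩ := hproper (x 0)
  obtain ⟨D, hD⟩ := (hK _ (isCompact_closedBall 0 B)).isBounded.exists_norm_le
  have hv0 : v 0 ≠ 0 := by
    intro h
    have := hx.2
    rw [h, map_zero, inner_zero_left] at this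
    exact zero_ne_one this
  have hexp t (ht : t ≠ 0) : ex (t • v 0) = x t := by
    obtain ⟨γ, h0, h1, h2, h3⟩ := hex (t • v 0)
    have hκ : √(g (x 0) (t • v 0) (t • v 0)) = |t| := by
      rw [← hg.inner_opOf, map_smul, real_inner_smul_left, real_inner_smul_right, hx.2, mul_one,
        sqrt_mul_self_eq_abs]
    rw [hκ, hg.rdist_eq] at h2
    obtain ⟨w, hw⟩ := metric_geo_is_geo hG (abs_pos.mpr ht) (γ := γ) (fun s => by
      obtain ⟨δ, hδ, h⟩ := h2 s (mem_univ s)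
      exact ⟨δ, hδ, fun s' u hs hu => h s' (mem_univ _) u (mem_univ _) hs hu⟩)
    have h4 := (IsGeo.unique hG hw (hx.1.scale t 0) (by simp [h0]) (by
      have := (hw 0).1.deriv
      simp [← this, h1])).1
    rw [h3, h4]; simp
  refine ⟨(|D| + 1) / ‖v 0‖, fun t ht => ?_⟩
  have hvp := norm_pos_iff.mpr hv0
  rw [div_le_iff₀ hvp] at ht
  have ht0 : t ≠ 0 := by
    rintro rfl
    rw [abs_zero, zero_mul] at ht
    linarith [abs_nonneg D]
  by_contra! hle
  have := hD (t • v 0) (by simpa [hexp t ht0] using hle)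
  rw [norm_smul, norm_eq_abs] at this
  linarith [le_abs_self D]

lemma UGeo.time_tendsto (hG : RMet G c C) {x v : ℕ → ℝ → E} {p b : E} (hx : ∀ k, UGeo G (x k) (v k))
    (h0 : Tendsto (fun k => x k 0) atTop (nhds p)) (hb : ‖b‖ = 1) {r τ : ℕ → ℝ}
    (hr : Tendsto r atTop atTop) (hτ : ∀ k, 0 ≤ τ k) (hend : ∀ k, x k (τ k) = r k • b) :
    Tendsto τ atTop atTop := by
  obtain ⟨X0, hX0⟩ := (isBounded_range_of_tendsto _ h0).exists_norm_le
  refine tendsto_atTop_mono (fun k => ?_)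
    ((tendsto_atTop_add_const_right _ (-X0) hr).atTop_div_const (show 0 < √(1 / c) + 1 by positivity))
  rw [div_le_iff₀ (by positivity)]
  have e1 := Convex.norm_image_sub_le_of_norm_hasDerivWithin_le (s := univ) (C := √(1 / c))
    (fun t _ => ((hx k).1 t).1.hasDerivWithinAt)
    (fun t _ => (hx k).norm_v hG t) convex_univ (mem_univ 0) (mem_univ (τ k))
  have e2 : ‖x k 0‖ ≤ X0 := hX0 _ (mem_range_self _)
  have e3 : ‖x k (τ k)‖ ≤ ‖x k (τ k) - x k 0‖ + ‖x k 0‖ := by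
    simpa using norm_add_le (x k (τ k) - x k 0) (x k 0)
  rw [hend, norm_smul, hb, mul_one, norm_eq_abs] at e3
  rw [hend, sub_zero, norm_eq_abs, abs_of_nonneg (hτ k)] at e1
  linarith [le_abs_self (r k), hτ k]

/-- If unit speed geodesics ending on the ray of direction `b`, further and further out, converge to
a geodesic that escapes to infinity, then the limit has asymptotic direction `b`: the direction
of an outgoing geodesic varies little after time `τ1`, uniformly along the sequence. -/
lemma UGeo.tendsto_dir (hG : RMet G c C) (hA : ACon G s μ K R) {x v : ℕ → ℝ → E} {y w : ℝ → E}
    (hx : ∀ k, UGeo G (x k) (v k)) (hy : UGeo G y w)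
    (h0 : Tendsto (fun k => x k 0) atTop (nhds (y 0))) (h1 : Tendsto (fun k => v k 0) atTop (nhds (w 0)))
    {b : E} (hb : ‖b‖ = 1) {r τ : ℕ → ℝ} (hr : Tendsto r atTop atTop) (hτ : ∀ k, 0 ≤ τ k)
    (hend : ∀ k, x k (τ k) = r k • b) (hinf : Tendsto (fun t => ‖y t‖) atTop atTop) :
    Tendsto (fun t => dir (y t)) atTop (nhds b) := by
  obtain ⟨B, M, hB, hM, hdir⟩ := UGeo.out_dir hG hA
  have hM0 : 0 < M := by linarith [hA.one_le_R]
  have hconv := UGeo.tendsto_of hG hx hy h0 h1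
  obtain ⟨N, hN⟩ := eventually_atTop.mp (hinf.eventually_ge_atTop (M + 1))
  obtain ⟨T, hTN, hT⟩ : ∃ T, N ≤ T ∧ 0 < ⟪y T, w T⟫ := by
    by_contra! hneg
    have hd t : HasDerivAt (fun t => ‖y t‖ ^ 2) (2 * ⟪y t, w t⟫) t := (hy.1 t).1.norm_sq
    have hanti : AntitoneOn (fun t => ‖y t‖ ^ 2) (Ici N) :=
      antitoneOn_of_deriv_nonpos (convex_Ici N) (fun t _ => (hd t).continuousAt.continuousWithinAt)
        (fun t _ => (hd t).differentiableAt.differentiableWithinAt)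
        (fun t ht => by
          rw [(hd t).deriv]
          rw [interior_Ici] at ht
          linarith [hneg t (le_of_lt ht)])
    obtain ⟨t, ht, hlt⟩ := ((eventually_ge_atTop N).and (hinf.eventually_gt_atTop ‖y N‖)).exists
    exact absurd (pow_lt_pow_left₀ hlt (norm_nonneg _) two_ne_zero)
      (not_lt.mpr (hanti self_mem_Ici ht ht))
  set ρ := ‖y T‖
  have hρM : M + 1 ≤ ρ := hN T hTN
  have hev : ∀ᶠ k in atTop, M ≤ ‖x k T‖ ∧ ‖x k T‖ ≤ ρ + 1 ∧ 0 ≤ ⟪x k T, v k T⟫ := by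
    have e1 := (hconv T).1.norm
    filter_upwards [e1.eventually_const_le (show M < ‖y T‖ by linarith),
      e1.eventually_le_const (show ‖y T‖ < ρ + 1 by linarith),
      ((hconv T).1.inner (hconv T).2).eventually_const_le hT] with k a1 a2 a3 using ⟨a1, a2, a3⟩
  have hτinf := UGeo.time_tendsto hG hx h0 hb hr hτ hend
  have hω : Tendsto (fun t : ℝ => B * ((ρ + 1) / t + t ^ (-μ))) atTop (nhds 0) := by
    simpa using ((tendsto_id.const_div_atTop (ρ + 1)).add (tendsto_rpow_neg_atTop hA.μ_pos)).const_mul B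
  have hbound t (ht : 0 < t) : ‖dir (y (t + T)) - b‖ ≤ B * ((ρ + 1) / t + t ^ (-μ)) := by
    have hy0 : y (t + T) ≠ 0 := by
      rw [← norm_pos_iff]; linarith [hN (t + T) (by linarith)]
    have hl : Tendsto (fun k => ‖dir (x k (t + T)) - b‖) atTop (nhds ‖dir (y (t + T)) - b‖) :=
      ((((hconv (t + T)).1.norm.inv₀ (norm_ne_zero_iff.mpr hy0)).smul (hconv (t + T)).1).sub_const b).norm
    refine le_of_tendsto hl ?_
    filter_upwards [hev, hτinf.eventually_ge_atTop (t + T), hr.eventually_gt_atTop 0] with k hk hk2 hk3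
    have e := hdir _ _ ((hx k).shift hG T) (by simpa using hk.1) (by simpa using hk.2.2) t (τ k - T)
      ht.le (by linarith)
    have e2 : dir (r k • b) = b := by
      rw [dir, norm_smul, hb, mul_one, norm_eq_abs, abs_of_pos hk3, smul_smul,
        inv_mul_cancel₀ hk3.ne', one_smul]
    simp only [zero_add, sub_add_cancel, hend, e2] at e
    rw [norm_sub_rev]
    refine e.trans (mul_le_mul_of_nonneg_left (add_le_add ?_ ?_) hB.le)
    · exact div_le_div₀ (by linarith) hk.2.1 ht (by linarith)
    · exact rpow_le_rpow_of_nonpos ht (by linarith) (by linarith [hA.μ_pos])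
  have hfin : Tendsto (fun t => dir (y (t + T))) atTop (nhds b) :=
    tendsto_iff_norm_sub_tendsto_zero.mpr (squeeze_zero' (Eventually.of_forall fun _ => norm_nonneg _)
      ((eventually_gt_atTop 0).mono hbound) hω)
  simpa [Function.comp_def] using hfin.comp (tendsto_atTop_add_const_right _ (-T) tendsto_id)

/-- The min-max geodesics, parametrised by arc length and shifted so that they start in a fixed
compact set. -/
lemma exists_approx (hG : RMet G c C) (hA : ACon G s μ K R) (hcos : cos (π / 2 / s) ≠ 0) {n : ℕ}
    (hn : finrank ℝ E = n) {a : E} (ha : ‖a‖ = 1) :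
    ∃ R2 r1 : ℝ, ∀ r ≥ r1, ∃ (x v : ℝ → E) (A B : ℝ), UGeo G x v ∧ ‖x 0‖ ≤ R2 ∧ 0 ≤ A ∧ 0 ≤ B ∧
      x (-A) = r • a ∧ x B = r • (-a) ∧
      ∀ p q, -A ≤ p → p < q → q ≤ B → IndexProp G n x v p q := by
  obtain ⟨R2, ε, hε, hR2, hvis⟩ := UGeo.visits hG hA hcos
  obtain ⟨r0, hr0⟩ := sweep_geo hG hA (ε := min ε (1 / 2)) (by positivity)
    (lt_of_le_of_lt (min_le_right _ _) (by norm_num)) hn ha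
  refine ⟨R2, max r0 R2, fun r hr => ?_⟩
  have hrR : R2 ≤ r := (le_max_right _ _).trans hr
  obtain ⟨x, v, hx, hx0, hx1, hen, hind⟩ := hr0 r ((le_max_left _ _).trans hr)
  set L := √⟪G (x 0) (v 0), v 0⟫
  have h2 : 2 * r * (1 - ε) ≤ 2 * r * (1 - min ε (1 / 2)) :=
    mul_le_mul_of_nonneg_left (by linarith [min_le_left ε (1 / 2)]) (by linarith)
  have h3 : 0 < 2 * r * (1 - min ε (1 / 2)) :=
    mul_pos (by linarith) (by linarith [min_le_right ε (1 / 2)])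
  have h4 : 2 * r * (1 - min ε (1 / 2)) ≤ L := le_sqrt_of_sq_le hen
  have hL0 : 0 < L := h3.trans_le h4
  have hLL : L ^ 2 = ⟪G (x 0) (v 0), v 0⟫ := sq_sqrt ((sq_nonneg _).trans hen)
  have hLi : 0 < L⁻¹ := inv_pos.mpr hL0
  have hU t : UGeo G (fun u => x (L⁻¹ * u + t)) (fun u => L⁻¹ • v (L⁻¹ * u + t)) := by
    refine ⟨hx.scale _ _, ?_⟩
    simp only [map_smul, real_inner_smul_left, real_inner_smul_right]
    rw [hx.energy hG, ← hLL]
    field_simp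
  obtain ⟨t, ht, htR⟩ := hvis _ _ (hU 0) a ha r L hrR (by simpa using hx0)
    (by simpa [inv_mul_cancel₀ hL0.ne'] using hx1) (h2.trans h4)
  refine ⟨_, _, t, L - t, hU (L⁻¹ * t), by simpa using htR, ht.1, by linarith [ht.2], ?_, ?_, ?_⟩
  · simpa using hx0
  · have : L⁻¹ * (L - t) + L⁻¹ * t = 1 := by field_simp; ring
    simp only [this, hx1, smul_neg]
  · intro p q hp hpq hq
    refine IndexProp.scale hLi (hind _ _ ?_ ?_ ?_)
    · rw [← mul_add]; exact mul_nonneg hLi.le (by linarith)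
    · gcongr
    · rw [← mul_add, inv_mul_le_iff₀ hL0]; linarith

lemma cos_ne_zero_of_angle {α : ℝ} (hα : α ∈ Ioo 0 (π / 2))
    (hαk : ∀ k : ℕ, α ≠ arcsin (1 / (2 * k + 1))) : cos (π / 2 / sin α) ≠ 0 := by
  have hs : 0 < sin α := sin_pos_of_pos_of_lt_pi hα.1 (by linarith [hα.2, pi_pos])
  rw [Ne, Real.cos_eq_zero_iff]
  rintro ⟨k, hk⟩
  have h1 : 1 = (2 * (k : ℝ) + 1) * sin α := by
    field_simp at hk
    linarith
  have hk0 : 0 ≤ k := by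
    by_contra! hlt
    have : (k : ℝ) ≤ -1 := by exact_mod_cast (by omega : k ≤ -1)
    nlinarith
  lift k to ℕ using hk0
  refine hαk k ?_
  have h2 : 1 / (2 * (k : ℝ) + 1) = sin α := by
    rw [div_eq_iff (by positivity)]; push_cast at h1; linarith
  rw [h2, arcsin_sin (by linarith [hα.1, pi_pos]) hα.2.le]

end

/-- main theorem. Let `(ℝⁿ, g)`, `n ≥ 2`, be an asymptotically conical
Riemannian manifold with opening angle `α ∈ (0,π/2) \ {arcsin (1/(2k+1))}` and positive
asymptotic decay rate `μ`, whose exponential map is proper at every point. Then for every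
pair of antipodal ideal boundary points `a, -a ∈ S^{n-1}` there is a geodesic line `Γ`
(arc-length parametrised local isometry `ℝ → (M, d_g)`) with `Γ(t)/|Γ(t)| → a` as
`t → -∞`, `Γ(t)/|Γ(t)| → -a` as `t → +∞`, and Morse index at most `n-1`. -/
theorem statement_0 (n : ℕ) (hn : 2 ≤ n) (g : MetricTensor n) (α μ : ℝ)
    (hα : α ∈ Set.Ioo 0 (π / 2))
    (hαk : ∀ k : ℕ, α ≠ Real.arcsin (1 / (2 * (k : ℝ) + 1)))
    (hμ : 0 < μ) (hg : IsAsympConical n g α μ)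
    (hproper : ProperExpAll g)
    (a : En n) (ha : ‖a‖ = 1) :
    ∃ Γ : ℝ → En n,
      IsGeodesicOn (rdist g) Γ 1 Set.univ ∧
      Filter.Tendsto (fun t => ‖Γ t‖⁻¹ • Γ t) Filter.atBot (nhds a) ∧
      Filter.Tendsto (fun t => ‖Γ t‖⁻¹ • Γ t) Filter.atTop (nhds (-a)) ∧
      ∀ c d : ℝ, c < d → MorseIndexLEOn g Γ c d (n - 1) := by
  have hs : 0 < sin α := sin_pos_of_pos_of_lt_pi hα.1 (by linarith [hα.2, pi_pos])
  have hs1 : sin α < 1 := by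
    rw [← sin_pi_div_two]
    exact sin_lt_sin_of_lt_of_le_pi_div_two (by linarith [hα.1, pi_pos]) le_rfl hα.2
  obtain ⟨c, C, hG⟩ := hg.rmet hμ hs
  obtain ⟨K, R, hA⟩ := hg.acon hμ hs hs1
  obtain ⟨R₂, r₁, happ⟩ := exists_approx hG hA (cos_ne_zero_of_angle hα hαk) (n := n) (by simp [En]) ha
  choose x v A B hU hx0 hA0 hB0 hxA hxB hind using fun k : ℕ => happ (r₁ + k) (by simp)
  obtain ⟨⟨p, w₀⟩, -, φ, hφ, hlim⟩ := ((isCompact_closedBall (0 : En n) R₂).prod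
    (isCompact_closedBall (0 : En n) √(1 / c))).tendsto_subseq (x := fun k => (x k 0, v k 0))
    (fun k => ⟨by simpa using hx0 k, by simpa using (hU k).norm_v hG 0⟩)
  rw [nhds_prod_eq, tendsto_prod_iff'] at hlim
  obtain ⟨Γ, w, hΓ0, hw0, hΓ⟩ := exists_geo hG p w₀
  subst hΓ0 hw0
  obtain ⟨h0, h1⟩ : Tendsto (fun k => x (φ k) 0) atTop (nhds (Γ 0)) ∧
      Tendsto (fun k => v (φ k) 0) atTop (nhds (w 0)) := hlim
  have hUΓ : UGeo (opOf g) Γ w := by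
    refine ⟨hΓ, tendsto_nhds_unique
      ((((hG.smooth.continuous.comp continuous_fst).clm_apply continuous_snd).inner
        continuous_snd).tendsto (Γ 0, w 0) |>.comp (h0.prodMk_nhds h1)) ?_⟩
    exact tendsto_const_nhds.congr fun k => (hU (φ k)).2.symm
  have hr : Tendsto (fun k => r₁ + (φ k : ℝ)) atTop atTop :=
    tendsto_atTop_add_const_left _ _ (tendsto_natCast_atTop_atTop.comp hφ.tendsto_atTop)
  have hesc (σ : ℝ) (hσ : |σ| = 1) : Tendsto (fun t => ‖Γ (σ * t)‖) atTop atTop := by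
    refine tendsto_atTop.mpr fun D => ?_
    obtain ⟨T, hT⟩ := hg.escape hG hproper hUΓ D
    filter_upwards [eventually_ge_atTop T] with t ht
    exact (hT _ (by rw [abs_mul, hσ, one_mul]; exact ht.trans (le_abs_self t))).le
  have hdirT := UGeo.tendsto_dir hG hA (fun k => hU (φ k)) hUΓ h0 h1 (b := -a) (by simpa using ha) hr
    (fun k => hB0 (φ k)) (fun k => hxB (φ k)) (by simpa using hesc 1 (by simp))
  have hdirB := UGeo.tendsto_dir hG hA (fun k => (hU (φ k)).reverse hG 0) (hUΓ.reverse hG 0)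
    (by simpa using h0) (by simpa using h1.neg) ha hr (fun k => hA0 (φ k))
    (fun k => by simpa using hxA (φ k)) (by simpa using hesc (-1) (by simp))
  have hinfB := UGeo.time_tendsto hG (fun k => hU (φ k)) h0 (b := -a) (by simpa using ha) hr
    (fun k => hB0 (φ k)) (fun k => hxB (φ k))
  have hinfA := UGeo.time_tendsto hG (fun k => (hU (φ k)).reverse hG 0) (by simpa using h0) ha hr
    (fun k => hA0 (φ k)) (fun k => by simpa using hxA (φ k))
  refine ⟨Γ, ?_, ?_, hdirT, fun p q hpq => hg.morse hG (by omega) hΓ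
    (IndexProp.limit hG (fun k => hU (φ k)) hUΓ h0 h1 hpq.le ?_)⟩
  · obtain ⟨ℓ, hℓ, hrd⟩ := rd_geo hG
    intro t _
    refine ⟨ℓ / 2, by positivity, fun s _ u _ hs hu => ?_⟩
    rw [hg.rdist_eq, one_mul]
    refine hrd Γ w hΓ hUΓ.2 s u ?_
    have := abs_sub_le s t u
    rw [abs_sub_comm t u] at this
    linarith
  · simpa [Function.comp_def, dir] using hdirB.comp tendsto_neg_atBot_atTop
  · filter_upwards [hinfA.eventually_ge_atTop (-p), hinfB.eventually_ge_atTop q] with k hk1 hk2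
    exact hind (φ k) p q (by linarith) hpq hk2
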